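/- Every triconnected planar simple graph with maximum degree at most 5 on n vertices admits a planar octilinear drawing whose total number of bends is at most 2n − 2. -/

import Mathlib

/-!
The drawing is built from bottom to top along a canonical ordering of `G`.

*Planarity.* The Jordan curve theorem is avoided: planarity is only used through the mod-2 van Kampen
equations. In a polyline drawing with pairwise different abscissas, record which vertices
are to the left of which, and the parities of the numbers of points of edges below vertices
(`VKdata`, `exists_vk`). Two disjoint edges cross an even number of times, which gives one linear
equation per pair of disjoint edges, and summing these equations shows that the graph has no `K₃,₃`
minor (`VKdata.no_K33`). Looking at the order of the edges around a vertex `v1`, one finds two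
neighbours `v2` and `t` such that the equations stay solvable for the graph with an
additional vertex adjacent to `v1`, `v2` and `t` (`exists_star`). This replaces the choice of an outer
face containing `v2`, `v1` and `t`.

*Ordering.* Starting from the edge `v1 v2`, triconnectivity always provides an ear avoiding `t`: either
a vertex with at least two neighbours among the vertices already taken, or an induced path whose ends
have one such neighbour each (`exists_ear`). The vertices which still have neighbours
outside form a path from `v1` to `v2`, the contour. The absence of `K₃,₃` minors in the extended graph
shows that an ear covers an interval of the contour (`Contour.below`, `Contour.step`). The
sequence of these steps is the inductive predicate `Comp`, in which a vertex with `2`, `3`, `4` lower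
neighbours costs `1`, `2`, `4` bends, a path costs nothing, and the last vertex `t` costs `5` bends if
it has degree `5`. With the weight of a contour vertex being its number of upper neighbours, plus one
if this is not zero, the number `c` of bends still to come satisfies
`2 c + 4 |S| + 4 ≤ 4 n + (sum of weights)`, where `S` is the set of vertices already taken
(`Contour.exists_comp`). At the base path, of weight at most `4 |S|`, this yields `c ≤ 2 n - 2`; a
look at the next ear saves one bend (`exists_startData`), which pays for the edge `v1 v2`.

*Drawing.* A partial drawing (`St`) lies below a horizontal line, which is crossed by the edges to
vertices not yet placed. From each vertex, the leftmost of these goes to the upper left, the rightmost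
to the upper right, the middle one straight up; a single one has a prescribed slope. If
these lines are sufficiently far apart, the next vertex or path fits into a horizontal strip, and
its edges arrive with the stated numbers of bends (`St.place`, `St.row`). The distances needed
are found by induction from the end of the construction (`Cpl`, `Comp.cpl`). The base path is a row of
vertices, arbitrarily far apart, and the edge `v1 v2` is a `V` with one bend below it
(`StartData.drawing`).
-/

/-!
Common definitions: polylines, octilinear drawings, planarity, triconnectivity.
-/

/-- A polyline: a sequence of `len + 1` points `pt 0, pt 1, …, pt len`,
consisting of `len ≥ 1` segments. (Values of `pt` beyond `len` are irrelevant.) -/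
structure Polyline where
  len : ℕ
  len_pos : 1 ≤ len
  pt : ℕ → ℝ × ℝ

namespace Polyline

/-- The number of bends of a polyline (its interior points `pt 1, …, pt (len-1)`). -/
def bends (P : Polyline) : ℕ := P.len - 1

/-- Piecewise-linear parametrization of the polyline on the interval `[0, len]`. -/
noncomputable def param (P : Polyline) (s : ℝ) : ℝ × ℝ :=
  P.pt ⌊s⌋.toNat + (s - (⌊s⌋.toNat : ℝ)) • (P.pt (⌊s⌋.toNat + 1) - P.pt ⌊s⌋.toNat)

/-- The image (trace) of the polyline in the plane. -/
noncomputable def image (P : Polyline) : Set (ℝ × ℝ) :=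
  P.param '' Set.Icc 0 (P.len : ℝ)

/-- The polyline is a simple curve. -/
def Simple (P : Polyline) : Prop :=
  Set.InjOn P.param (Set.Icc 0 (P.len : ℝ))

/-- Every segment is nondegenerate, and no two consecutive segments are collinear. -/
def Proper (P : Polyline) : Prop :=
  (∀ i < P.len, P.pt i ≠ P.pt (i + 1)) ∧
  (∀ i, i + 1 < P.len → ¬ Collinear ℝ ({P.pt i, P.pt (i + 1), P.pt (i + 2)} : Set (ℝ × ℝ)))

/-- The segment from `a` to `b` is horizontal, vertical, or diagonal at `45°`. -/
def OctiSeg (a b : ℝ × ℝ) : Prop :=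
  b.2 - a.2 = 0 ∨ b.1 - a.1 = 0 ∨ b.2 - a.2 = b.1 - a.1 ∨ b.2 - a.2 = -(b.1 - a.1)

/-- The polyline is octilinear: proper, with all segments in octilinear directions. -/
def Octilinear (P : Polyline) : Prop :=
  P.Proper ∧ ∀ i < P.len, OctiSeg (P.pt i) (P.pt (i + 1))

end Polyline

/-- Embedding of the integer grid into the real plane. -/
def toR (p : ℤ × ℤ) : ℝ × ℝ := ((p.1 : ℝ), (p.2 : ℝ))

/-- A polyline drawing of a simple graph `G` in the plane:
an injective placement of the vertices and, for each edge, a polyline whose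
endpoints are the points of the edge's endvertices, with nondegenerate segments
and no two consecutive segments collinear. -/
structure PolyDrawing {V : Type*} (G : SimpleGraph V) where
  pos : V → ℝ × ℝ
  inj : Function.Injective pos
  poly : Sym2 V → Polyline
  ends : ∀ u v, G.Adj u v →
    ({(poly s(u, v)).pt 0, (poly s(u, v)).pt (poly s(u, v)).len} : Set (ℝ × ℝ)) =
      {pos u, pos v}
  proper : ∀ e ∈ G.edgeSet, (poly e).Proper

/-- A polyline drawing is planar: every edge-polyline is a simple curve meeting the
vertex points exactly in its two endpoints, and polylines of distinct edges intersect
only in images of common endvertices. -/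
def PolyDrawing.IsPlanar {V : Type*} {G : SimpleGraph V} (D : PolyDrawing G) : Prop :=
  (∀ e ∈ G.edgeSet, (D.poly e).Simple) ∧
  (∀ u v, G.Adj u v →
    (D.poly s(u, v)).image ∩ Set.range D.pos = {D.pos u, D.pos v}) ∧
  (∀ e ∈ G.edgeSet, ∀ e' ∈ G.edgeSet, e ≠ e' →
    (D.poly e).image ∩ (D.poly e').image ⊆ D.pos '' {w | w ∈ e ∧ w ∈ e'})

/-- A simple graph is planar if it admits a planar polyline drawing in `ℝ²`. -/
def GraphPlanar {V : Type*} (G : SimpleGraph V) : Prop :=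
  ∃ D : PolyDrawing G, D.IsPlanar

/-- An octilinear drawing of a simple graph `G`: vertices are placed injectively on the
integer grid and each edge is drawn as an octilinear polyline between its endvertices. -/
structure OctiDrawing {V : Type*} (G : SimpleGraph V) where
  pos : V → ℤ × ℤ
  inj : Function.Injective pos
  poly : Sym2 V → Polyline
  ends : ∀ u v, G.Adj u v →
    ({(poly s(u, v)).pt 0, (poly s(u, v)).pt (poly s(u, v)).len} : Set (ℝ × ℝ)) =
      {toR (pos u), toR (pos v)}
  octi : ∀ e ∈ G.edgeSet, (poly e).Octilinear

/-- An octilinear drawing is planar: every edge-polyline is a simple curve meeting the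
vertex points exactly in its two endpoints, and polylines of distinct edges intersect
only in images of common endvertices. -/
def OctiDrawing.IsPlanar {V : Type*} {G : SimpleGraph V} (D : OctiDrawing G) : Prop :=
  (∀ e ∈ G.edgeSet, (D.poly e).Simple) ∧
  (∀ u v, G.Adj u v →
    (D.poly s(u, v)).image ∩ Set.range (fun w => toR (D.pos w)) =
      {toR (D.pos u), toR (D.pos v)}) ∧
  (∀ e ∈ G.edgeSet, ∀ e' ∈ G.edgeSet, e ≠ e' →
    (D.poly e).image ∩ (D.poly e').image ⊆
      (fun w => toR (D.pos w)) '' {w | w ∈ e ∧ w ∈ e'})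

/-- The total number of bends of an octilinear drawing. -/
noncomputable def OctiDrawing.totalBends {V : Type*} [Fintype V] {G : SimpleGraph V}
    (D : OctiDrawing G) : ℕ :=
  ∑ e ∈ G.edgeSet.toFinite.toFinset, (D.poly e).bends

/-- The union of the images of the polylines of a set `S` of edges. -/
noncomputable def edgesImage {V : Type*} {G : SimpleGraph V} (D : OctiDrawing G)
    (S : Set (Sym2 V)) : Set (ℝ × ℝ) :=
  ⋃ e ∈ S, (D.poly e).image

/-- The interior (in the drawing `D`) of the closed curve formed by the edges in `S`:
the union of the bounded connected components of the complement of the curve. -/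
noncomputable def interiorOf {V : Type*} {G : SimpleGraph V} (D : OctiDrawing G)
    (S : Set (Sym2 V)) : Set (ℝ × ℝ) :=
  {z | z ∉ edgesImage D S ∧ Bornology.IsBounded (connectedComponentIn (edgesImage D S)ᶜ z)}

/-- A graph is triconnected if it has at least `4` vertices and deleting
any at most `2` vertices leaves it connected. -/
def Triconnected {V : Type*} [Fintype V] (G : SimpleGraph V) : Prop :=
  4 ≤ Fintype.card V ∧ ∀ S : Set V, S.ncard ≤ 2 → (G.induce Sᶜ).Connected

/-- The maximum degree of `G` is at most `k`. -/
def MaxDegLE {V : Type*} (G : SimpleGraph V) (k : ℕ) : Prop :=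
  ∀ v, (G.neighborSet v).ncard ≤ k

set_option linter.unusedSectionVars false

/-! ### Connected vertex sets -/

section Conn
variable {U : Type*} {H : SimpleGraph U}

/-- One step along an edge of `H` staying inside `B`. -/
def StepIn (H : SimpleGraph U) (B : Set U) (a b : U) : Prop := H.Adj a b ∧ a ∈ B ∧ b ∈ B

/-- `u` and `v` are joined by a path of `H` all of whose edges lie inside `B`. -/
def LinkIn (H : SimpleGraph U) (B : Set U) : U → U → Prop := Relation.ReflTransGen (StepIn H B)

/-- The vertex set `B` induces a connected (possibly empty) subgraph of `H`. -/
def Conn (H : SimpleGraph U) (B : Set U) : Prop := ∀ u ∈ B, ∀ v ∈ B, LinkIn H B u v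

lemma StepIn.symm {B : Set U} {a b : U} (h : StepIn H B a b) : StepIn H B b a :=
  ⟨h.1.symm, h.2.2, h.2.1⟩

lemma LinkIn.symm {B : Set U} {a b : U} (h : LinkIn H B a b) : LinkIn H B b a := by
  induction h with
  | refl => exact .refl
  | tail _ h ih => exact Relation.ReflTransGen.head h.symm ih

lemma LinkIn.mono {B B' : Set U} (hB : B ⊆ B') {a b : U} (h : LinkIn H B a b) :
    LinkIn H B' a b :=
  Relation.ReflTransGen.mono (fun _ _ h => ⟨h.1, hB h.2.1, hB h.2.2⟩) _ _ h

lemma LinkIn.mem {B : Set U} {a b : U} (h : LinkIn H B a b) (ha : a ∈ B) : b ∈ B := by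
  induction h with
  | refl => exact ha
  | tail _ h _ => exact h.2.2

lemma LinkIn.exists_walk {B : Set U} {a b : U} (h : LinkIn H B a b) (ha : a ∈ B) :
    ∃ p : H.Walk a b, ∀ x ∈ p.support, x ∈ B := by
  induction h using Relation.ReflTransGen.head_induction_on with
  | refl => exact ⟨.nil, by simpa using ha⟩
  | head h _ ih =>
    obtain ⟨p, hp⟩ := ih h.2.2
    refine ⟨.cons h.1 p, ?_⟩
    intro x hx
    rw [SimpleGraph.Walk.support_cons, List.mem_cons] at hx
    rcases hx with rfl | hx
    · exact ha
    · exact hp x hx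

lemma conn_singleton (u : U) : Conn H {u} := by
  rintro a rfl b rfl; exact .refl

lemma conn_of_root {B : Set U} (r : U) (h : ∀ u ∈ B, LinkIn H B r u) : Conn H B :=
  fun u hu v hv => (h u hu).symm.trans (h v hv)

lemma Conn.union_adj {B C : Set U} (hB : Conn H B) (hC : Conn H C) {b c : U}
    (hb : b ∈ B) (hc : c ∈ C) (h : H.Adj b c) : Conn H (B ∪ C) := by
  apply conn_of_root b
  rintro u (hu | hu)
  · exact (hB b hb u hu).mono Set.subset_union_left
  · exact Relation.ReflTransGen.head ⟨h, Or.inl hb, Or.inr hc⟩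
      ((hC c hc u hu).mono Set.subset_union_right)

lemma Conn.union_mem {B C : Set U} (hB : Conn H B) (hC : Conn H C) {b : U}
    (hb : b ∈ B) (hc : b ∈ C) : Conn H (B ∪ C) := by
  apply conn_of_root b
  rintro u (hu | hu)
  · exact (hB b hb u hu).mono Set.subset_union_left
  · exact (hC b hc u hu).mono Set.subset_union_right

/-- The connected component of `u` in the subgraph induced by `B`. -/
def compOf (H : SimpleGraph U) (B : Set U) (u : U) : Set U := {v | LinkIn H B u v}

lemma mem_compOf_self {B : Set U} {u : U} : u ∈ compOf H B u := Relation.ReflTransGen.refl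

lemma compOf_subset {B : Set U} {u : U} (hu : u ∈ B) : compOf H B u ⊆ B :=
  fun _ hv => LinkIn.mem hv hu

lemma linkIn_compOf {B : Set U} {u v : U} (hv : LinkIn H B u v) :
    LinkIn H (compOf H B u) u v := by
  induction hv with
  | refl => exact .refl
  | tail h1 h2 ih =>
    exact ih.tail ⟨h2.1, h1, Relation.ReflTransGen.tail h1 h2⟩

lemma conn_compOf {B : Set U} {u : U} : Conn H (compOf H B u) :=
  conn_of_root u fun _ hv => linkIn_compOf hv

lemma Conn.subset_compOf {B K : Set U} {u : U} (hK : Conn H K) (hKB : K ⊆ B) (hu : u ∈ K) :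
    K ⊆ compOf H B u := fun v hv => (hK u hu v hv).mono hKB

lemma adj_mem_compOf {B : Set U} {u v w : U} (hu : u ∈ B) (hv : v ∈ compOf H B u) (hw : w ∈ B)
    (h : H.Adj v w) : w ∈ compOf H B u :=
  Relation.ReflTransGen.tail hv ⟨h, compOf_subset hu hv, hw⟩

/-- A connected set meeting a proper subset `A` has an edge leaving `A`. -/
lemma Conn.exists_adj {B A : Set U} (hB : Conn H B) {a b : U} (ha : a ∈ B) (haA : a ∈ A)
    (hb : b ∈ B) (hbA : b ∉ A) : ∃ x ∈ B, ∃ y ∈ B, x ∈ A ∧ y ∉ A ∧ H.Adj x y := by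
  have h := hB a ha b hb
  by_contra hcon
  push Not at hcon
  have : ∀ c, LinkIn H B a c → c ∈ A := by
    intro c hc
    induction hc with
    | refl => exact haA
    | tail _ h2 ih =>
      by_contra hn
      exact hcon _ h2.2.1 _ h2.2.2 ih hn h2.1
  exact hbA (this b h)

lemma conn_of_induce {B : Set U} (h : (H.induce B).Preconnected) : Conn H B := by
  intro u hu v hv
  obtain ⟨p⟩ := h ⟨u, hu⟩ ⟨v, hv⟩
  have : ∀ {x y : B}, (H.induce B).Walk x y → LinkIn H B x y := by
    intro x y p
    induction p with
    | nil => exact .refl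
    | cons h _ ih => exact Relation.ReflTransGen.head ⟨h, Subtype.coe_prop _, Subtype.coe_prop _⟩ ih
  exact this p

end Conn

/-! ### The mod-2 van Kampen system and `K₃,₃` minors -/

section VK
variable {U : Type*}

/-- The combinatorial shadow of a planar drawing, with respect to a generic projection direction:
`O u v` records whether `u` is to the left of `v`, and `A v a b` counts (mod 2) the points of the
edge `ab` lying below the vertex `v`.  The last field says that two vertex-disjoint edges
cross an even number of times. -/
structure VKdata (H : SimpleGraph U) (A : U → U → U → ZMod 2) (O : U → U → ZMod 2) : Prop where
  symm : ∀ v a b, A v a b = A v b a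
  anti : ∀ u v, u ≠ v → O u v + O v u = 1
  eq : ∀ a b c d, H.Adj a b → H.Adj c d → a ≠ c → a ≠ d → b ≠ c → b ≠ d →
    A a c d + A b c d + A c a b + A d a b + O a c + O a d + O b c + O b d = 0

/-- Sum of `A v` over the edges of a walk. -/
def walkSum {H : SimpleGraph U} (A : U → U → U → ZMod 2) (v : U) :
    ∀ {a b : U}, H.Walk a b → ZMod 2
  | _, _, .nil => 0
  | a, _, .cons (v := c) _ p => A v a c + walkSum A v p

variable {H : SimpleGraph U} {A : U → U → U → ZMod 2} {O : U → U → ZMod 2}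

lemma VKdata.edge_walk (h : VKdata H A O) {a b : U} (hab : H.Adj a b) {c d : U}
    (q : H.Walk c d) (ha : a ∉ q.support) (hb : b ∉ q.support) :
    walkSum A a q + walkSum A b q + A c a b + A d a b + O a c + O a d + O b c + O b d = 0 := by
  have two : ∀ x : ZMod 2, x + x = 0 := CharTwo.add_self_eq_zero
  induction q with
  | nil =>
    simp only [walkSum]
    rename_i u
    linear_combination two (A u a b) + two (O a u) + two (O b u)
  | @cons c e d hce q ih =>
    simp only [SimpleGraph.Walk.support_cons, List.mem_cons, not_or] at ha hb
    have h1 := ih ha.2 hb.2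
    have hae : a ≠ e := fun h => ha.2 (h ▸ q.start_mem_support)
    have hbe : b ≠ e := fun h => hb.2 (h ▸ q.start_mem_support)
    have h2 := h.eq a b c e hab hce ha.1 hae hb.1 hbe
    simp only [walkSum]
    linear_combination h1 + h2 - two (A e a b) - two (O a e) - two (O b e)

lemma VKdata.walk_walk (h : VKdata H A O) {a b : U} (p : H.Walk a b) {c d : U}
    (q : H.Walk c d) (hpq : ∀ x ∈ p.support, x ∉ q.support) :
    walkSum A a q + walkSum A b q + walkSum A c p + walkSum A d p
      + O a c + O a d + O b c + O b d = 0 := by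
  have two : ∀ x : ZMod 2, x + x = 0 := CharTwo.add_self_eq_zero
  induction p with
  | nil =>
    simp only [walkSum]
    rename_i u
    linear_combination two (walkSum A u q) + two (O u c) + two (O u d)
  | @cons a e b hae p ih =>
    have h1 := ih fun x hx => hpq x (by simp [hx])
    have h2 := h.edge_walk hae q (hpq a (by simp)) (hpq e (by simp))
    simp only [walkSum]
    linear_combination h1 + h2 - two (walkSum A e q) - two (O e c) - two (O e d)

set_option maxHeartbeats 1000000 in
/-- A graph with a van Kampen system has no `K₃,₃` minor. -/
lemma VKdata.no_K33 (h : VKdata H A O) (B C : Fin 3 → Set U)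
    (hBc : ∀ i, Conn H (B i)) (hCc : ∀ i, Conn H (C i))
    (hBB : ∀ i j, i ≠ j → Disjoint (B i) (B j)) (hCC : ∀ i j, i ≠ j → Disjoint (C i) (C j))
    (hBC : ∀ i j, Disjoint (B i) (C j))
    (hadj : ∀ i j, ∃ b ∈ B i, ∃ c ∈ C j, H.Adj b c) : False := by
  have two : ∀ x : ZMod 2, x + x = 0 := CharTwo.add_self_eq_zero
  have hb : ∀ i, ∃ b, b ∈ B i := fun i => by obtain ⟨b, hb, -⟩ := hadj i 0; exact ⟨b, hb⟩
  have hc : ∀ i, ∃ c, c ∈ C i := fun i => by obtain ⟨_, _, c, hc, -⟩ := hadj 0 i; exact ⟨c, hc⟩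
  choose b hb using hb
  choose c hc using hc
  have hP : ∀ i j, ∃ p : H.Walk (b i) (c j), ∀ x ∈ p.support, x ∈ B i ∪ C j := by
    intro i j
    obtain ⟨x, hx, y, hy, hxy⟩ := hadj i j
    have := (hBc i).union_adj (hCc j) hx hy hxy
    exact (this (b i) (Or.inl (hb i)) (c j) (Or.inr (hc j))).exists_walk (Or.inl (hb i))
  choose P hP using hP
  have key : ∀ i j k l, i ≠ k → j ≠ l →
      walkSum A (b i) (P k l) + walkSum A (c j) (P k l) + walkSum A (b k) (P i j)
        + walkSum A (c l) (P i j) + O (b i) (b k) + O (b i) (c l) + O (c j) (b k)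
        + O (c j) (c l) = 0 := by
    intro i j k l hik hjl
    apply h.walk_walk
    intro x hx hx'
    rcases hP i j x hx with h1 | h1 <;> rcases hP k l x hx' with h2 | h2
    · exact Set.disjoint_left.1 (hBB i k hik) h1 h2
    · exact Set.disjoint_left.1 (hBC i l) h1 h2
    · exact Set.disjoint_left.1 (hBC k j) h2 h1
    · exact Set.disjoint_left.1 (hCC j l hjl) h1 h2
  have hcc : ∀ j l, j ≠ l → O (c j) (c l) + O (c l) (c j) = 1 := by
    intro j l hjl
    exact h.anti _ _ fun he => Set.disjoint_left.1 (hCC j l hjl) (hc j) (he ▸ hc l)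
  have row : ∀ i k, i ≠ k → ∑ j, ∑ l, (if j ≠ l then
      (walkSum A (b i) (P k l) + walkSum A (c j) (P k l) + walkSum A (b k) (P i j)
        + walkSum A (c l) (P i j) + O (b i) (b k) + O (b i) (c l) + O (c j) (b k)
        + O (c j) (c l)) else 0) = 0 := by
    intro i k hik
    apply Finset.sum_eq_zero; intro j _
    apply Finset.sum_eq_zero; intro l _
    split_ifs with hjl
    · exact key i j k l hik hjl
    · rfl
  have e1 := row 0 1 (by decide)
  have e2 := row 0 2 (by decide)
  have e3 := row 1 2 (by decide)
  have f1 := hcc 0 1 (by decide)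
  have f2 := hcc 0 2 (by decide)
  have f3 := hcc 1 2 (by decide)
  simp [Fin.sum_univ_three] at e1 e2 e3
  have tot := congrArg₂ (· + ·) (congrArg₂ (· + ·) e1 e2) e3
  have tot2 := congrArg₂ (· + ·) (congrArg₂ (· + ·) f1 f2) f3
  have t0 : (2 : ZMod 2) = 0 := rfl
  have : (1 : ZMod 2) = 0 := by grind
  exact absurd this (by decide)

end VK

/-! ### The van Kampen system of a planar polyline drawing -/

section Geo

/-- The point at parameter `t` of the segment from `a` to `b`. -/
def segPt (a b : ℝ × ℝ) (t : ℝ) : ℝ × ℝ := a + t • (b - a)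

/-- The cross product `(b - a) × (p - a)`. -/
def crs (a b p : ℝ × ℝ) : ℝ := (b.1 - a.1) * (p.2 - a.2) - (b.2 - a.2) * (p.1 - a.1)

/-- `p` lies strictly above an interior point of the segment `ab`. -/
def IsAbove (p a b : ℝ × ℝ) : Prop :=
  (a.1 < p.1 ∧ p.1 < b.1 ∧ 0 < crs a b p) ∨ (b.1 < p.1 ∧ p.1 < a.1 ∧ crs a b p < 0)

open Classical in
/-- The mod-2 indicator of `IsAbove`. -/
noncomputable def abv (p a b : ℝ × ℝ) : ZMod 2 := if IsAbove p a b then 1 else 0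

open Classical in
/-- The mod-2 indicator of being to the left. -/
noncomputable def lft (p q : ℝ × ℝ) : ZMod 2 := if p.1 < q.1 then 1 else 0

lemma crs_swap (a b p : ℝ × ℝ) : crs b a p = - crs a b p := by unfold crs; ring

lemma abv_symm (p a b : ℝ × ℝ) : abv p a b = abv p b a := by
  have : IsAbove p a b ↔ IsAbove p b a := by
    unfold IsAbove; rw [crs_swap a b p]; constructor <;> rintro (h | h)
    · right; exact ⟨h.1, h.2.1, by linarith [h.2.2]⟩
    · left; exact ⟨h.1, h.2.1, by linarith [h.2.2]⟩
    · right; exact ⟨h.1, h.2.1, by linarith [h.2.2]⟩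
    · left; exact ⟨h.1, h.2.1, by linarith [h.2.2]⟩
  unfold abv
  by_cases h : IsAbove p a b
  · rw [if_pos h, if_pos (this.1 h)]
  · rw [if_neg h, if_neg (fun h' => h (this.2 h'))]

lemma lft_anti {p q : ℝ × ℝ} (h : p.1 ≠ q.1) : lft p q + lft q p = 1 := by
  unfold lft
  rcases lt_or_gt_of_ne h with h | h
  · rw [if_pos h, if_neg (not_lt.2 h.le)]; rfl
  · rw [if_neg (not_lt.2 h.le), if_pos h]; rfl

/-- The defect of a pair of segments: the parity of their number of crossings. -/
noncomputable def crossTerm (a b c d : ℝ × ℝ) : ZMod 2 :=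
  abv a c d + abv b c d + abv c a b + abv d a b + lft a c + lft a d + lft b c + lft b d

/-- Two segments that are ordinates of affine functions with a sign change meet. -/
lemma meet_of_signs {a b c d : ℝ × ℝ} (hab : a.1 < b.1) (hcd : c.1 < d.1) {l r : ℝ} (hlr : l ≤ r)
    (hal : a.1 ≤ l) (hrb : r ≤ b.1) (hcl : c.1 ≤ l) (hrd : r ≤ d.1)
    (f : ℝ → ℝ) (hf : ∀ x, f x = (c.2 + (x - c.1) / (d.1 - c.1) * (d.2 - c.2)) -
      (a.2 + (x - a.1) / (b.1 - a.1) * (b.2 - a.2)))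
    (hs : f l * f r ≤ 0) :
    ∃ s ∈ Set.Icc (0:ℝ) 1, ∃ t ∈ Set.Icc (0:ℝ) 1, segPt a b s = segPt c d t := by
  have hcont : ContinuousOn f (Set.Icc l r) := by
    have : f = fun x => (c.2 + (x - c.1) / (d.1 - c.1) * (d.2 - c.2)) -
      (a.2 + (x - a.1) / (b.1 - a.1) * (b.2 - a.2)) := funext hf
    rw [this]; fun_prop
  have hx : ∃ x ∈ Set.Icc l r, f x = 0 := by
    rcases mul_nonpos_iff.1 hs with h | h
    · have := intermediate_value_Icc' hlr hcont (show (0:ℝ) ∈ Set.Icc (f r) (f l) from ⟨h.2, h.1⟩)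
      simpa using this
    · have := intermediate_value_Icc hlr hcont (show (0:ℝ) ∈ Set.Icc (f l) (f r) from ⟨h.1, h.2⟩)
      simpa using this
  obtain ⟨x, ⟨hxl, hxr⟩, hx⟩ := hx
  have h1 : 0 < b.1 - a.1 := by linarith
  have h2 : 0 < d.1 - c.1 := by linarith
  refine ⟨(x - a.1) / (b.1 - a.1), ⟨by apply div_nonneg <;> linarith, by rw [div_le_one h1]; linarith⟩,
    (x - c.1) / (d.1 - c.1), ⟨by apply div_nonneg <;> linarith, by rw [div_le_one h2]; linarith⟩, ?_⟩
  rw [hf] at hx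
  ext
  · simp only [segPt, Prod.fst_add, Prod.smul_fst, Prod.fst_sub, smul_eq_mul]
    field_simp; ring
  · simp only [segPt, Prod.snd_add, Prod.smul_snd, Prod.snd_sub, smul_eq_mul]
    linarith

lemma abv_lr {p a b : ℝ × ℝ} (h1 : a.1 < p.1) (h2 : p.1 < b.1) [Decidable (0 < crs a b p)] :
    abv p a b = if 0 < crs a b p then 1 else 0 := by
  unfold abv IsAbove
  by_cases h : 0 < crs a b p
  · rw [if_pos h, if_pos (Or.inl ⟨h1, h2, h⟩)]
  · rw [if_neg h, if_neg]; rintro (h' | h')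
    · exact h h'.2.2
    · linarith [h'.1, h'.2.1]

lemma abv_out_l {p a b : ℝ × ℝ} (h1 : p.1 ≤ a.1) (h2 : p.1 ≤ b.1) : abv p a b = 0 := by
  unfold abv IsAbove
  rw [if_neg]; rintro (h' | h') <;> linarith [h'.1, h'.2.1]

lemma abv_out_r {p a b : ℝ × ℝ} (h1 : a.1 ≤ p.1) (h2 : b.1 ≤ p.1) : abv p a b = 0 := by
  unfold abv IsAbove
  rw [if_neg]; rintro (h' | h') <;> linarith [h'.1, h'.2.1]

lemma lft_one {p q : ℝ × ℝ} (h : p.1 < q.1) : lft p q = 1 := by unfold lft; rw [if_pos h]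
lemma lft_zero {p q : ℝ × ℝ} (h : q.1 ≤ p.1) : lft p q = 0 := by
  unfold lft; rw [if_neg (not_lt.2 h)]

lemma crossTerm_zero_aux {a b c d : ℝ × ℝ} (hab : a.1 < b.1) (hcd : c.1 < d.1) (hac : a.1 < c.1)
    (hbc : b.1 ≠ c.1) (hbd : b.1 ≠ d.1)
    (hdis : ∀ s ∈ Set.Icc (0:ℝ) 1, ∀ t ∈ Set.Icc (0:ℝ) 1, segPt a b s ≠ segPt c d t) :
    crossTerm a b c d = 0 := by
  classical
  have h1 : 0 < b.1 - a.1 := by linarith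
  have h2 : 0 < d.1 - c.1 := by linarith
  unfold crossTerm
  rw [abv_out_l hac.le (hac.trans hcd).le, lft_one hac, lft_one (hac.trans hcd)]
  rcases lt_or_gt_of_ne hbc with hbc | hbc
  · rw [abv_out_l hbc.le (hbc.trans hcd).le, abv_out_r hac.le hbc.le,
      abv_out_r (hac.trans hcd).le (hbc.trans hcd).le, lft_one hbc, lft_one (hbc.trans hcd)]
    decide
  set f : ℝ → ℝ := fun x => (c.2 + (x - c.1) / (d.1 - c.1) * (d.2 - c.2)) -
      (a.2 + (x - a.1) / (b.1 - a.1) * (b.2 - a.2)) with hf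
  have fc : f c.1 * (b.1 - a.1) = crs a b c := by
    simp only [hf, crs]; field_simp; ring
  rcases lt_or_gt_of_ne hbd with hbd | hbd
  · have fb : f b.1 * (d.1 - c.1) = - crs c d b := by
      simp only [hf, crs]; field_simp; ring
    have hs : 0 < f c.1 * f b.1 := by
      by_contra hn
      obtain ⟨s, hs, t, ht, h⟩ := meet_of_signs hab hcd hbc.le hac.le le_rfl le_rfl hbd.le f
        (fun _ => rfl) (not_lt.1 hn)
      exact hdis s hs t ht h
    rw [abv_lr hbc hbd, abv_lr hac hbc, abv_out_r (hac.trans hcd).le hbd.le, lft_zero hbc.le,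
      lft_one hbd]
    rcases mul_pos_iff.1 hs with h | h
    · have e1 : 0 < crs a b c := by rw [← fc]; exact mul_pos h.1 h1
      have e2 : ¬ 0 < crs c d b := by
        have := mul_pos h.2 h2
        linarith
      rw [if_pos e1, if_neg e2]; decide
    · have e1 : ¬ 0 < crs a b c := by
        rw [← fc]; exact not_lt.2 (mul_nonpos_of_nonpos_of_nonneg h.1.le h1.le)
      have e2 : 0 < crs c d b := by
        have := mul_neg_of_neg_of_pos h.2 h2
        linarith
      rw [if_neg e1, if_pos e2]; decide
  · have fd : f d.1 * (b.1 - a.1) = crs a b d := by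
      simp only [hf, crs]; field_simp; ring
    have hs : 0 < f c.1 * f d.1 := by
      by_contra hn
      obtain ⟨s, hs, t, ht, h⟩ := meet_of_signs hab hcd hcd.le hac.le hbd.le le_rfl le_rfl f
        (fun _ => rfl) (not_lt.1 hn)
      exact hdis s hs t ht h
    rw [abv_out_r hbc.le hbd.le, abv_lr hac hbc, abv_lr (hac.trans hcd) hbd, lft_zero hbc.le,
      lft_zero hbd.le]
    rcases mul_pos_iff.1 hs with h | h
    · have e1 : 0 < crs a b c := by rw [← fc]; exact mul_pos h.1 h1
      have e2 : 0 < crs a b d := by rw [← fd]; exact mul_pos h.2 h1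
      rw [if_pos e1, if_pos e2]; decide
    · have e1 : ¬ 0 < crs a b c := by
        rw [← fc]; exact not_lt.2 (mul_nonpos_of_nonpos_of_nonneg h.1.le h1.le)
      have e2 : ¬ 0 < crs a b d := by
        rw [← fd]; exact not_lt.2 (mul_nonpos_of_nonpos_of_nonneg h.2.le h1.le)
      rw [if_neg e1, if_neg e2]; decide

lemma segPt_swap (a b : ℝ × ℝ) (t : ℝ) : segPt b a t = segPt a b (1 - t) := by
  unfold segPt; ext <;> simp <;> ring

lemma crossTerm_swap₁ (a b c d : ℝ × ℝ) : crossTerm b a c d = crossTerm a b c d := by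
  unfold crossTerm; rw [abv_symm c b a, abv_symm d b a]; ring

lemma crossTerm_swap₂ (a b c d : ℝ × ℝ) : crossTerm a b d c = crossTerm a b c d := by
  unfold crossTerm; rw [abv_symm a d c, abv_symm b d c]; ring

lemma crossTerm_comm {a b c d : ℝ × ℝ} (hac : a.1 ≠ c.1) (had : a.1 ≠ d.1)
    (hbc : b.1 ≠ c.1) (hbd : b.1 ≠ d.1) : crossTerm c d a b = crossTerm a b c d := by
  have two : (2 : ZMod 2) = 0 := rfl
  unfold crossTerm
  linear_combination -lft_anti hac - lft_anti had - lft_anti hbc - lft_anti hbd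
     + (lft c a + lft d a + lft c b + lft d b - 2) * two

lemma Icc_flip {t : ℝ} (ht : t ∈ Set.Icc (0:ℝ) 1) : 1 - t ∈ Set.Icc (0:ℝ) 1 :=
  ⟨by linarith [ht.2], by linarith [ht.1]⟩

/-- Disjoint segments with four different abscissae cross an even number of times. -/
lemma crossTerm_zero {a b c d : ℝ × ℝ} (hab : a.1 ≠ b.1) (hcd : c.1 ≠ d.1) (hac : a.1 ≠ c.1)
    (had : a.1 ≠ d.1) (hbc : b.1 ≠ c.1) (hbd : b.1 ≠ d.1)
    (hdis : ∀ s ∈ Set.Icc (0:ℝ) 1, ∀ t ∈ Set.Icc (0:ℝ) 1, segPt a b s ≠ segPt c d t) :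
    crossTerm a b c d = 0 := by
  wlog h1 : a.1 < b.1 generalizing a b
  · rw [← crossTerm_swap₁]
    refine this hab.symm hbc hbd hac had ?_ (lt_of_le_of_ne (not_lt.1 h1) hab.symm)
    intro s hs t ht; rw [segPt_swap]; exact hdis _ (Icc_flip hs) t ht
  wlog h2 : c.1 < d.1 generalizing c d
  · rw [← crossTerm_swap₂]
    refine this hcd.symm had hac hbd hbc ?_ (lt_of_le_of_ne (not_lt.1 h2) hcd.symm)
    intro s hs t ht; rw [segPt_swap c d]; exact hdis _ hs _ (Icc_flip ht)
  rcases lt_or_gt_of_ne hac with h3 | h3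
  · exact crossTerm_zero_aux h1 h2 h3 hbc hbd hdis
  · rw [← crossTerm_comm hac had hbc hbd]
    exact crossTerm_zero_aux h2 h1 h3 had.symm hbd.symm fun s hs t ht => (hdis t ht s hs).symm

lemma sum_tel (F : ℕ → ZMod 2) (n : ℕ) :
    ∑ i ∈ Finset.range n, (F i + F (i + 1)) = F 0 + F n := by
  have two : ∀ x : ZMod 2, x + x = 0 := CharTwo.add_self_eq_zero
  induction n with
  | zero => simp [two]
  | succ n ih => rw [Finset.sum_range_succ, ih]; linear_combination two (F n)

/-- Mod-2 number of points of the polygonal chain `X 0, …, X n` below `p`. -/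
noncomputable def chainSum (p : ℝ × ℝ) (X : ℕ → ℝ × ℝ) (n : ℕ) : ZMod 2 :=
  ∑ i ∈ Finset.range n, abv p (X i) (X (i + 1))

/-- Telescoping of the crossing terms of two chains. -/
lemma crossTerm_sum (X Y : ℕ → ℝ × ℝ) (n m : ℕ) :
    ∑ i ∈ Finset.range n, ∑ j ∈ Finset.range m, crossTerm (X i) (X (i+1)) (Y j) (Y (j+1)) =
    chainSum (X 0) Y m + chainSum (X n) Y m + chainSum (Y 0) X n + chainSum (Y m) X n +
      lft (X 0) (Y 0) + lft (X 0) (Y m) + lft (X n) (Y 0) + lft (X n) (Y m) := by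
  have h1 : ∀ i, ∑ j ∈ Finset.range m, crossTerm (X i) (X (i+1)) (Y j) (Y (j+1)) =
      (chainSum (X i) Y m + chainSum (X (i+1)) Y m) + (abv (Y 0) (X i) (X (i+1)) +
      abv (Y m) (X i) (X (i+1))) + ((lft (X i) (Y 0) + lft (X i) (Y m)) +
       (lft (X (i+1)) (Y 0) + lft (X (i+1)) (Y m))) := by
    intro i
    have e1 := sum_tel (fun j => abv (Y j) (X i) (X (i+1))) m
    have e2 := sum_tel (fun j => lft (X i) (Y j)) m
    have e3 := sum_tel (fun j => lft (X (i+1)) (Y j)) m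
    rw [← e1, ← e2, ← e3]
    simp only [chainSum, crossTerm, ← Finset.sum_add_distrib]
    apply Finset.sum_congr rfl; intros; ring
  simp only [h1]
  rw [Finset.sum_add_distrib, Finset.sum_add_distrib, sum_tel (fun i => chainSum (X i) Y m),
    sum_tel (fun i => lft (X i) (Y 0) + lft (X i) (Y m)), Finset.sum_add_distrib]
  simp only [chainSum]; ring

lemma chainSum_rev (p : ℝ × ℝ) (X : ℕ → ℝ × ℝ) (n : ℕ) :
    chainSum p (fun i => X (n - i)) n = chainSum p X n := by
  unfold chainSum
  rw [← Finset.sum_range_reflect]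
  apply Finset.sum_congr rfl
  intro i hi
  rw [Finset.mem_range] at hi
  beta_reduce
  rw [abv_symm, show n - (n - 1 - i + 1) = i by omega, show n - (n - 1 - i) = i + 1 by omega]

/-- A horizontal shear. -/
def shear (l : ℝ) (p : ℝ × ℝ) : ℝ × ℝ := (p.1 + l * p.2, p.2)

lemma shear_inj (l : ℝ) : Function.Injective (shear l) := by
  intro p q h
  simp only [shear, Prod.mk.injEq] at h
  ext
  · have := h.1; rw [h.2] at this; linarith
  · exact h.2

lemma shear_segPt (l : ℝ) (a b : ℝ × ℝ) (t : ℝ) :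
    shear l (segPt a b t) = segPt (shear l a) (shear l b) t := by
  unfold shear segPt; ext <;> simp; ring

/-- A shear that gives different abscissae to different points of a finite set. -/
lemma exists_generic (F : Set (ℝ × ℝ)) (hF : F.Finite) :
    ∃ l : ℝ, ∀ p ∈ F, ∀ q ∈ F, (shear l p).1 = (shear l q).1 → p = q := by
  have hfin : ((fun pq : (ℝ × ℝ) × (ℝ × ℝ) => (pq.2.1 - pq.1.1) / (pq.1.2 - pq.2.2)) ''
      (F ×ˢ F)).Finite := (hF.prod hF).image _
  obtain ⟨l, hl⟩ := hfin.infinite_compl.nonempty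
  refine ⟨l, ?_⟩
  intro p hp q hq h
  simp only [shear] at h
  by_cases h2 : p.2 = q.2
  · ext
    · rw [h2] at h; linarith
    · exact h2
  · exfalso; apply hl
    refine ⟨(p, q), ⟨hp, hq⟩, ?_⟩
    have : p.2 - q.2 ≠ 0 := sub_ne_zero.2 h2
    simp only; field_simp; linarith

lemma param_segPt (P : Polyline) (i : ℕ) {t : ℝ} (ht : t ∈ Set.Icc (0:ℝ) 1) :
    P.param (i + t) = segPt (P.pt i) (P.pt (i + 1)) t := by
  unfold Polyline.param segPt
  rcases eq_or_lt_of_le ht.2 with h | h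
  · subst h
    have : ⌊(i:ℝ) + 1⌋ = ((i + 1 : ℕ) : ℤ) := by
      rw [show (i:ℝ) + 1 = ((i + 1 : ℕ) : ℝ) by push_cast; ring, Int.floor_natCast]
    rw [this, Int.toNat_natCast]; push_cast; simp
  · have : ⌊(i:ℝ) + t⌋ = (i : ℤ) := by
      rw [Int.floor_eq_iff]; push_cast; exact ⟨by linarith [ht.1], by linarith⟩
    rw [this, Int.toNat_natCast]; simp

lemma segPt_mem_image (P : Polyline) {i : ℕ} (hi : i < P.len) {t : ℝ} (ht : t ∈ Set.Icc (0:ℝ) 1) :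
    segPt (P.pt i) (P.pt (i + 1)) t ∈ P.image := by
  rw [← param_segPt P i ht]
  refine ⟨_, ⟨by linarith [ht.1, (Nat.cast_nonneg i : (0:ℝ) ≤ i)], ?_⟩, rfl⟩
  have : ((i + 1 : ℕ) : ℝ) ≤ P.len := by exact_mod_cast hi
  push_cast at this; linarith [ht.2]

lemma segPt_zero (a b : ℝ × ℝ) : segPt a b 0 = a := by simp [segPt]
lemma segPt_one (a b : ℝ × ℝ) : segPt a b 1 = b := by simp [segPt]

lemma simple_avoid_start (P : Polyline) (hP : P.Simple) {i : ℕ} (hi : i < P.len) (h0 : 1 ≤ i)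
    {t : ℝ} (ht : t ∈ Set.Icc (0:ℝ) 1) : segPt (P.pt i) (P.pt (i + 1)) t ≠ P.pt 0 := by
  intro h
  rw [← param_segPt P i ht, ← segPt_zero (P.pt 0) (P.pt (0+1)),
    ← param_segPt P 0 ⟨le_rfl, zero_le_one⟩] at h
  have h1 : ((i + 1 : ℕ) : ℝ) ≤ P.len := by exact_mod_cast hi
  have h2 : (1:ℝ) ≤ i := by exact_mod_cast h0
  push_cast at h1
  have := hP ⟨by linarith [ht.1], by linarith [ht.2]⟩ ⟨by simp, by simp⟩ h
  push_cast at this; linarith [ht.1]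

lemma simple_avoid_end (P : Polyline) (hP : P.Simple) {i : ℕ} (hi : i + 1 < P.len)
    {t : ℝ} (ht : t ∈ Set.Icc (0:ℝ) 1) : segPt (P.pt i) (P.pt (i + 1)) t ≠ P.pt P.len := by
  intro h
  obtain ⟨k, hk⟩ : ∃ k, P.len = k + 1 := ⟨P.len - 1, by omega⟩
  have hkl : (P.len : ℝ) = k + 1 := by rw [hk]; push_cast; ring
  rw [← param_segPt P i ht, hk, ← segPt_one (P.pt k) (P.pt (k+1)),
    ← param_segPt P k ⟨zero_le_one, le_rfl⟩] at h
  have h1 : ((i + 1 + 1 : ℕ) : ℝ) ≤ P.len := by exact_mod_cast hi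
  push_cast at h1
  have := hP ⟨by linarith [ht.1, (Nat.cast_nonneg i : (0:ℝ) ≤ i)], by linarith [ht.2]⟩
    ⟨by positivity, by rw [hkl]⟩ h
  linarith [ht.2]

end Geo

/-! ### Edges with a common endvertex -/

section Geo2

open Classical in
/-- Sorts the directions from `p` counterclockwise starting from the downward one: first the
points to the right of `p` by slope, then those to the left by slope. -/
noncomputable def angKey (p q : ℝ × ℝ) : ℕ ×ₗ ℝ :=
  toLex (if q.1 < p.1 then 1 else 0, (q.2 - p.2) / (q.1 - p.1))

lemma overlap_of_crs {p X Z : ℝ × ℝ} (h : 0 < (X.1 - p.1) * (Z.1 - p.1))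
    (h2 : (X.1 - p.1) * (X.1 - p.1) ≤ (X.1 - p.1) * (Z.1 - p.1)) (hc : crs p X Z = 0) :
    ∃ t ∈ Set.Ioc (0:ℝ) 1, segPt p X 1 = segPt p Z t := by
  have hX : X.1 - p.1 ≠ 0 := fun h0 => by simp [h0] at h
  have hZ : Z.1 - p.1 ≠ 0 := fun h0 => by simp [h0] at h
  have hq : (X.1 - p.1) / (Z.1 - p.1) = (X.1 - p.1) * (X.1 - p.1) / ((X.1 - p.1) * (Z.1 - p.1)) := by
    field_simp
  have hXX : 0 < (X.1 - p.1) * (X.1 - p.1) := mul_self_pos.2 hX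
  refine ⟨(X.1 - p.1) / (Z.1 - p.1), ⟨?_, ?_⟩, ?_⟩
  · rw [hq]; positivity
  · rw [hq, div_le_one h]; exact h2
  · unfold crs at hc
    ext
    · simp only [segPt, Prod.fst_add, Prod.smul_fst, Prod.fst_sub, smul_eq_mul]
      field_simp
    · simp only [segPt, Prod.snd_add, Prod.smul_snd, Prod.snd_sub, smul_eq_mul]
      field_simp
      linarith

lemma crossTerm_common {p X Z : ℝ × ℝ} (hX : X.1 ≠ p.1) (hZ : Z.1 ≠ p.1) (hXZ : X.1 ≠ Z.1)
    (hdis : ∀ s ∈ Set.Ioc (0:ℝ) 1, ∀ t ∈ Set.Ioc (0:ℝ) 1, segPt p X s ≠ segPt p Z t)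
    (hk : angKey p X ≤ angKey p Z) : crossTerm p X p Z = 0 := by
  classical
  have h01 : (1:ℝ) ∈ Set.Ioc (0:ℝ) 1 := ⟨one_pos, le_rfl⟩
  have e0 : abv p p Z = 0 := by
    unfold abv IsAbove; rw [if_neg]; rintro (h | h) <;> linarith [h.1, h.2.1]
  have e1 : abv p p X = 0 := by
    unfold abv IsAbove; rw [if_neg]; rintro (h | h) <;> linarith [h.1, h.2.1]
  have cc : crs p Z X = - crs p X Z := by unfold crs; ring
  have key : 0 < (X.1 - p.1) * (Z.1 - p.1) → crs p X Z ≠ 0 := by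
    intro h hc
    rcases le_total ((X.1 - p.1) * (X.1 - p.1)) ((X.1 - p.1) * (Z.1 - p.1)) with h2 | h2
    · obtain ⟨t, ht, h⟩ := overlap_of_crs h h2 hc
      exact hdis 1 h01 t ht h
    · have h3 : (Z.1 - p.1) * (Z.1 - p.1) ≤ (Z.1 - p.1) * (X.1 - p.1) := by
        rcases lt_or_gt_of_ne hX with h5 | h5 <;> nlinarith
      obtain ⟨t, ht, h⟩ := overlap_of_crs (p := p) (X := Z) (Z := X) (by linarith) h3 (by linarith)
      exact hdis t ht 1 h01 h.symm
  rw [angKey, angKey, Prod.Lex.toLex_le_toLex] at hk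
  unfold crossTerm
  rw [e0, e1, lft_zero (le_refl p.1)]
  rcases lt_or_gt_of_ne hX with hx | hx <;> rcases lt_or_gt_of_ne hZ with hz | hz
  · rw [if_pos hx, if_pos hz] at hk
    have hk2 : (X.2 - p.2) / (X.1 - p.1) ≤ (Z.2 - p.2) / (Z.1 - p.1) := by simpa using hk
    have hpos : 0 < (X.1 - p.1) * (Z.1 - p.1) := mul_pos_of_neg_of_neg (by linarith) (by linarith)
    have hc0 := key hpos
    have hc : 0 ≤ crs p X Z := by
      have h1 : X.1 - p.1 ≠ 0 := by linarith
      have h2 : Z.1 - p.1 ≠ 0 := by linarith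
      have := mul_le_mul_of_nonneg_left hk2 hpos.le
      have a1 : (X.1 - p.1) * (Z.1 - p.1) * ((X.2 - p.2) / (X.1 - p.1))
        = (Z.1 - p.1) * (X.2 - p.2) := by field_simp
      have a2 : (X.1 - p.1) * (Z.1 - p.1) * ((Z.2 - p.2) / (Z.1 - p.1))
        = (X.1 - p.1) * (Z.2 - p.2) := by field_simp
      rw [a1, a2] at this; unfold crs; linarith
    have hc1 : 0 < crs p X Z := lt_of_le_of_ne hc (Ne.symm hc0)
    rw [lft_zero hz.le, lft_one hx]
    rcases lt_or_gt_of_ne hXZ with h | h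
    · rw [lft_one h, abv_out_l hx.le h.le, abv_symm, abv_lr h hz, crs_swap, if_neg (by linarith)]
      decide
    · rw [lft_zero h.le, abv_out_l hz.le h.le, abv_symm, abv_lr h hx, crs_swap, if_pos (by linarith)]
      decide
  · rw [if_pos hx, if_neg (by linarith)] at hk
    simp at hk
  · rw [lft_zero hz.le, lft_zero hx.le, lft_zero (hz.trans hx).le, abv_out_r hx.le (hz.trans hx).le,
      abv_out_l hz.le (hz.trans hx).le]
    decide
  · rw [if_neg (by linarith), if_neg (by linarith)] at hk
    have hk2 : (X.2 - p.2) / (X.1 - p.1) ≤ (Z.2 - p.2) / (Z.1 - p.1) := by simpa using hk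
    have hpos : 0 < (X.1 - p.1) * (Z.1 - p.1) := mul_pos (by linarith) (by linarith)
    have hc0 := key hpos
    have hc : 0 ≤ crs p X Z := by
      have h1 : X.1 - p.1 ≠ 0 := by linarith
      have h2 : Z.1 - p.1 ≠ 0 := by linarith
      have := mul_le_mul_of_nonneg_left hk2 hpos.le
      have a1 : (X.1 - p.1) * (Z.1 - p.1) * ((X.2 - p.2) / (X.1 - p.1))
        = (Z.1 - p.1) * (X.2 - p.2) := by field_simp
      have a2 : (X.1 - p.1) * (Z.1 - p.1) * ((Z.2 - p.2) / (Z.1 - p.1))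
        = (X.1 - p.1) * (Z.2 - p.2) := by field_simp
      rw [a1, a2] at this; unfold crs; linarith
    have hc1 : 0 < crs p X Z := lt_of_le_of_ne hc (Ne.symm hc0)
    rw [lft_one hz, lft_zero hx.le]
    rcases lt_or_gt_of_ne hXZ with h | h
    · rw [lft_one h, abv_out_r hz.le h.le, abv_lr hx h, if_neg (by linarith)]
      decide
    · rw [lft_zero h.le, abv_out_r hx.le h.le, abv_lr hz h, if_pos hc1]
      decide

variable {V : Type*} {G : SimpleGraph V}

/-- The polyline of an edge, oriented from its endvertex `u`. -/
lemma exists_dart (D : PolyDrawing G) (hD : D.IsPlanar) {u v : V} (h : G.Adj u v) :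
    ∃ X : ℕ → ℝ × ℝ, X 0 = D.pos u ∧ X (D.poly s(u, v)).len = D.pos v ∧
      (∀ i ≤ (D.poly s(u, v)).len, ∃ j ≤ (D.poly s(u, v)).len, X i = (D.poly s(u, v)).pt j) ∧
      (∀ i < (D.poly s(u, v)).len, X i ≠ X (i + 1)) ∧
      (∀ i < (D.poly s(u, v)).len, ∀ t ∈ Set.Icc (0:ℝ) 1,
        segPt (X i) (X (i + 1)) t ∈ (D.poly s(u, v)).image) ∧
      (∀ i < (D.poly s(u, v)).len, 1 ≤ i → ∀ t ∈ Set.Icc (0:ℝ) 1,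
        segPt (X i) (X (i + 1)) t ≠ D.pos u) ∧
      (∀ l p, chainSum p (fun i => shear l (X i)) (D.poly s(u, v)).len =
        chainSum p (fun i => shear l ((D.poly s(u, v)).pt i)) (D.poly s(u, v)).len) := by
  have hs := hD.1 s(u, v) h
  have hpr := (D.proper s(u, v) h).1
  set P := D.poly s(u, v) with hP
  have hends := D.ends u v h
  rw [← hP, Set.pair_eq_pair_iff] at hends
  rcases hends with ⟨h0, h1⟩ | ⟨h0, h1⟩
  · refine ⟨P.pt, h0, h1, fun i hi => ⟨i, hi, rfl⟩, hpr, fun i hi t ht => segPt_mem_image P hi ht,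
      ?_, fun l p => rfl⟩
    intro i hi hi1 t ht
    rw [← h0]; exact simple_avoid_start P hs hi hi1 ht
  · have hsub : ∀ i < P.len, ∃ k, k < P.len ∧ P.len - (i + 1) = k ∧ P.len - i = k + 1 :=
      fun i hi => ⟨P.len - (i + 1), by omega, rfl, by omega⟩
    refine ⟨fun i => P.pt (P.len - i), by simpa using h1, by simpa using h0,
      fun i hi => ⟨P.len - i, Nat.sub_le _ _, rfl⟩, ?_, ?_, ?_, ?_⟩
    · intro i hi
      obtain ⟨k, hk, e1, e2⟩ := hsub i hi
      simp only [e1, e2]; exact (hpr k hk).symm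
    · intro i hi t ht
      obtain ⟨k, hk, e1, e2⟩ := hsub i hi
      simp only [e1, e2]; rw [segPt_swap]; exact segPt_mem_image P hk (Icc_flip ht)
    · intro i hi hi1 t ht
      obtain ⟨k, hk, e1, e2⟩ := hsub i hi
      simp only [e1, e2]; rw [segPt_swap, ← h1]
      exact simple_avoid_end P hs (by omega) (Icc_flip ht)
    · intro l p
      exact chainSum_rev p (fun i => shear l (P.pt i)) P.len

/-- A planar polyline drawing gives a van Kampen system, after a generic shear. The analogous
expression for two edges `px`, `pz` with a common endvertex need not vanish, but, up to terms `α`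
depending on one edge only, it just records the order of the edges around `p`, which is given by
`key`. -/
theorem exists_vk [Finite V] (D : PolyDrawing G) (hD : D.IsPlanar) :
    ∃ (A : V → V → V → ZMod 2) (O : V → V → ZMod 2), VKdata G A O ∧
      ∀ p, ∃ (α : V → ZMod 2) (key : V → ℕ ×ₗ ℝ), ∀ x z, G.Adj p x → G.Adj p z → x ≠ z →
        key x ≤ key z → A x p z + A z p x + O x z + O x p + O p z = α x + α z := by
  have two : ∀ x : ZMod 2, x + x = 0 := CharTwo.add_self_eq_zero
  set F : Set (ℝ × ℝ) := Set.range D.pos ∪ ⋃ e : Sym2 V, (D.poly e).pt '' Set.Iic (D.poly e).len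
    with hF
  have hFfin : F.Finite :=
    (Set.finite_range _).union (Set.finite_iUnion fun e => (Set.finite_Iic _).image _)
  have hFv : ∀ v, D.pos v ∈ F := fun v => Or.inl ⟨v, rfl⟩
  have hFe : ∀ e i, i ≤ (D.poly e).len → (D.poly e).pt i ∈ F :=
    fun e i hi => Or.inr (Set.mem_iUnion.2 ⟨e, i, hi, rfl⟩)
  obtain ⟨l, hl⟩ := exists_generic F hFfin
  have hl' : ∀ p ∈ F, ∀ q ∈ F, p ≠ q → (shear l p).1 ≠ (shear l q).1 :=
    fun p hp q hq h h' => h (hl p hp q hq h')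
  have hX : ∀ u v, ∃ X : ℕ → ℝ × ℝ, G.Adj u v → (X 0 = D.pos u ∧ X (D.poly s(u, v)).len = D.pos v ∧
      (∀ i ≤ (D.poly s(u, v)).len, ∃ j ≤ (D.poly s(u, v)).len, X i = (D.poly s(u, v)).pt j) ∧
      (∀ i < (D.poly s(u, v)).len, X i ≠ X (i + 1)) ∧
      (∀ i < (D.poly s(u, v)).len, ∀ t ∈ Set.Icc (0:ℝ) 1,
        segPt (X i) (X (i + 1)) t ∈ (D.poly s(u, v)).image) ∧
      (∀ i < (D.poly s(u, v)).len, 1 ≤ i → ∀ t ∈ Set.Icc (0:ℝ) 1,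
        segPt (X i) (X (i + 1)) t ≠ D.pos u) ∧
      (∀ l p, chainSum p (fun i => shear l (X i)) (D.poly s(u, v)).len =
        chainSum p (fun i => shear l ((D.poly s(u, v)).pt i)) (D.poly s(u, v)).len)) := by
    intro u v
    by_cases h : G.Adj u v
    · obtain ⟨X, hX⟩ := exists_dart D hD h; exact ⟨X, fun _ => hX⟩
    · exact ⟨fun _ => 0, fun h' => absurd h' h⟩
  choose X hX using hX
  have hXF : ∀ u v, G.Adj u v → ∀ i ≤ (D.poly s(u, v)).len, X u v i ∈ F := by
    intro u v h i hi
    obtain ⟨j, hj, e⟩ := (hX u v h).2.2.1 i hi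
    rw [e]; exact hFe _ _ hj
  -- crossing terms of disjoint segments vanish
  have hzero : ∀ u v, G.Adj u v → ∀ u' v', G.Adj u' v' →
      ∀ i < (D.poly s(u, v)).len, ∀ j < (D.poly s(u', v')).len,
      (∀ s ∈ Set.Icc (0:ℝ) 1, ∀ t ∈ Set.Icc (0:ℝ) 1,
        segPt (X u v i) (X u v (i+1)) s ≠ segPt (X u' v' j) (X u' v' (j+1)) t) →
      crossTerm (shear l (X u v i)) (shear l (X u v (i+1))) (shear l (X u' v' j))
        (shear l (X u' v' (j+1))) = 0 := by
    intro u v h u' v' h' i hi j hj hdis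
    have i0 : (0:ℝ) ∈ Set.Icc (0:ℝ) 1 := ⟨le_rfl, zero_le_one⟩
    have i1 : (1:ℝ) ∈ Set.Icc (0:ℝ) 1 := ⟨zero_le_one, le_rfl⟩
    have m1 := hXF u v h i hi.le
    have m2 := hXF u v h (i+1) hi
    have m3 := hXF u' v' h' j hj.le
    have m4 := hXF u' v' h' (j+1) hj
    apply crossTerm_zero
    · exact hl' _ m1 _ m2 ((hX u v h).2.2.2.1 i hi)
    · exact hl' _ m3 _ m4 ((hX u' v' h').2.2.2.1 j hj)
    · exact hl' _ m1 _ m3 (by simpa [segPt_zero, segPt_one] using hdis 0 i0 0 i0)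
    · exact hl' _ m1 _ m4 (by simpa [segPt_zero, segPt_one] using hdis 0 i0 1 i1)
    · exact hl' _ m2 _ m3 (by simpa [segPt_zero, segPt_one] using hdis 1 i1 0 i0)
    · exact hl' _ m2 _ m4 (by simpa [segPt_zero, segPt_one] using hdis 1 i1 1 i1)
    · intro s hs t ht
      rw [← shear_segPt, ← shear_segPt]
      exact fun e => hdis s hs t ht (shear_inj l e)
  have hsum : ∀ u v, G.Adj u v → ∀ u' v', G.Adj u' v' →
      ∑ i ∈ Finset.range (D.poly s(u, v)).len, ∑ j ∈ Finset.range (D.poly s(u', v')).len,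
        crossTerm (shear l (X u v i)) (shear l (X u v (i+1))) (shear l (X u' v' j))
        (shear l (X u' v' (j+1))) =
      chainSum (shear l (D.pos u)) (fun i => shear l ((D.poly s(u', v')).pt i)) (D.poly s(u', v')).len
      + chainSum (shear l (D.pos v)) (fun i => shear l ((D.poly s(u', v')).pt i)) (D.poly s(u', v')).len
      + chainSum (shear l (D.pos u')) (fun i => shear l ((D.poly s(u, v)).pt i)) (D.poly s(u, v)).len
      + chainSum (shear l (D.pos v')) (fun i => shear l ((D.poly s(u, v)).pt i)) (D.poly s(u, v)).len
      + lft (shear l (D.pos u)) (shear l (D.pos u')) + lft (shear l (D.pos u)) (shear l (D.pos v'))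
      + lft (shear l (D.pos v)) (shear l (D.pos u')) + lft (shear l (D.pos v)) (shear l (D.pos v')) := by
    intro u v h u' v' h'
    have := crossTerm_sum (fun i => shear l (X u v i)) (fun i => shear l (X u' v' i))
      (D.poly s(u, v)).len (D.poly s(u', v')).len
    obtain ⟨a0, a1, -, -, -, -, a2⟩ := hX u v h
    obtain ⟨b0, b1, -, -, -, -, b2⟩ := hX u' v' h'
    simp only [a0, a1, b0, b1, a2, b2] at this
    exact this
  refine ⟨fun v a b => chainSum (shear l (D.pos v)) (fun i => shear l ((D.poly s(a, b)).pt i))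
    (D.poly s(a, b)).len, fun u v => lft (shear l (D.pos u)) (shear l (D.pos v)), ⟨?_, ?_, ?_⟩, ?_⟩
  · intro v a b; simp only [Sym2.eq_swap]
  · intro u v huv
    exact lft_anti (hl' _ (hFv u) _ (hFv v) (D.inj.ne huv))
  · intro a b c d hab hcd hac had hbc hbd
    rw [← hsum a b hab c d hcd]
    apply Finset.sum_eq_zero; intro i hi
    apply Finset.sum_eq_zero; intro j hj
    rw [Finset.mem_range] at hi hj
    apply hzero a b hab c d hcd i hi j hj
    intro s hs t ht he
    have h1 := (hX a b hab).2.2.2.2.1 i hi s hs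
    have h2 := (hX c d hcd).2.2.2.2.1 j hj t ht
    rw [← he] at h2
    have hne : s(a, b) ≠ s(c, d) := by
      intro h; rw [Sym2.eq_iff] at h
      rcases h with h | h
      · exact hac h.1
      · exact had h.1
    obtain ⟨w, ⟨hw1, hw2⟩, -⟩ := hD.2.2 _ hab _ hcd hne ⟨h1, h2⟩
    rw [Sym2.mem_iff] at hw1 hw2
    rcases hw1 with rfl | rfl <;> rcases hw2 with h | h <;> contradiction
  · intro p
    refine ⟨fun x => chainSum (shear l (D.pos p)) (fun i => shear l ((D.poly s(p, x)).pt i))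
      (D.poly s(p, x)).len, fun x => angKey (shear l (D.pos p)) (shear l (X p x 1)), ?_⟩
    intro x z hx hz hxz hk
    have hne : s(p, x) ≠ s(p, z) := by
      intro h; rw [Sym2.eq_iff] at h
      rcases h with h | h
      · exact hxz h.2
      · exact hz.ne h.1
    have hmeet : ∀ y, y ∈ (D.poly s(p, x)).image → y ∈ (D.poly s(p, z)).image → y = D.pos p := by
      intro y h1 h2
      obtain ⟨w, ⟨hw1, hw2⟩, rfl⟩ := hD.2.2 _ hx _ hz hne ⟨h1, h2⟩
      rw [Sym2.mem_iff] at hw1 hw2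
      rcases hw1 with rfl | rfl
      · rfl
      · rcases hw2 with h | h
        · rw [h]
        · exact absurd h hxz
    have h := hsum p x hx p z hz
    obtain ⟨x0, -, -, xne, xim, xav, -⟩ := hX p x hx
    obtain ⟨z0, -, -, zne, zim, zav, -⟩ := hX p z hz
    have lx := (D.poly s(p, x)).len_pos
    have lz := (D.poly s(p, z)).len_pos
    have i1 : (1:ℝ) ∈ Set.Icc (0:ℝ) 1 := ⟨zero_le_one, le_rfl⟩
    have hXF1 := hXF p x hx 1 lx
    have hZF1 := hXF p z hz 1 lz
    have hterm : ∑ i ∈ Finset.range (D.poly s(p, x)).len, ∑ j ∈ Finset.range (D.poly s(p, z)).len,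
        crossTerm (shear l (X p x i)) (shear l (X p x (i+1))) (shear l (X p z j))
        (shear l (X p z (j+1))) = 0 := by
      apply Finset.sum_eq_zero; intro i hi
      apply Finset.sum_eq_zero; intro j hj
      rw [Finset.mem_range] at hi hj
      by_cases hij : i = 0 ∧ j = 0
      · obtain ⟨rfl, rfl⟩ := hij
        have x1 : X p x 1 ≠ D.pos p := by rw [← x0]; exact (xne 0 hi).symm
        have z1 : X p z 1 ≠ D.pos p := by rw [← z0]; exact (zne 0 hj).symm
        simp only [zero_add] at xim zim ⊢
        rw [x0, z0]
        refine crossTerm_common (hl' _ hXF1 _ (hFv p) x1) (hl' _ hZF1 _ (hFv p) z1) ?_ ?_ hk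
        · apply hl' _ hXF1 _ hZF1
          intro he
          apply x1
          apply hmeet
          · simpa [segPt_one] using xim 0 hi 1 i1
          · rw [he]; simpa [segPt_one] using zim 0 hj 1 i1
        · intro s hs t ht he
          rw [← shear_segPt, ← shear_segPt] at he
          have he := shear_inj l he
          have h1 := xim 0 hi s ⟨hs.1.le, hs.2⟩
          have h2 := zim 0 hj t ⟨ht.1.le, ht.2⟩
          rw [zero_add, x0] at h1
          rw [zero_add, z0, ← he] at h2
          have h3 := hmeet _ h1 h2
          apply x1
          simp only [segPt] at h3
          have h4 : s • (X p x 1 - D.pos p) = 0 := by simpa using h3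
          rcases smul_eq_zero.1 h4 with h5 | h5
          · exact absurd h5 hs.1.ne'
          · exact sub_eq_zero.1 h5
      · apply hzero p x hx p z hz i hi j hj
        intro s hs t ht he
        have h1 := xim i hi s hs
        have h2 := zim j hj t ht
        have h3 := hmeet _ h1 (by rw [he]; exact h2)
        rcases Nat.eq_zero_or_pos i with hi0 | hi0
        · exact zav j hj (by omega) t ht (by rw [← he]; exact h3)
        · exact xav i hi hi0 s hs h3
    rw [hterm, lft_zero (le_refl (shear l (D.pos p)).1)] at h
    simp only
    linear_combination -h
      - two (chainSum (shear l (D.pos p)) (fun i => shear l ((D.poly s(p, x)).pt i))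
          (D.poly s(p, x)).len)
      - two (chainSum (shear l (D.pos p)) (fun i => shear l ((D.poly s(p, z)).pt i))
          (D.poly s(p, z)).len)

end Geo2

/-! ### Adding a vertex next to two consecutive edges -/

section Star
variable {V : Type*}

/-- `G` with a new vertex `none` joined to `p`, `x` and `y`. -/
def starGraph (G : SimpleGraph V) (p x y : V) : SimpleGraph (Option V) where
  Adj a b := match a, b with
    | some a, some b => G.Adj a b
    | none, some b => b = p ∨ b = x ∨ b = y
    | some a, none => a = p ∨ a = x ∨ a = y
    | none, none => False
  symm := ⟨fun a b h => by
    cases a <;> cases b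
    · exact h
    · exact h
    · exact h
    · exact G.symm.1 _ _ h⟩
  loopless := ⟨fun a h => by
    cases a
    · exact h
    · exact G.loopless.1 _ h⟩

variable {G : SimpleGraph V}

@[simp] lemma starGraph_some {p x y a b : V} :
    (starGraph G p x y).Adj (some a) (some b) ↔ G.Adj a b := Iff.rfl
@[simp] lemma starGraph_none {p x y b : V} :
    (starGraph G p x y).Adj none (some b) ↔ b = p ∨ b = x ∨ b = y := Iff.rfl
@[simp] lemma starGraph_none' {p x y b : V} :
    (starGraph G p x y).Adj (some b) none ↔ b = p ∨ b = x ∨ b = y := Iff.rfl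

/-- The van Kampen equations of the star graph extend those of `G`, placing the new vertex close
to `p`, as soon as the local terms `ψ` at `p` can be split. -/
lemma star_vk {A : V → V → V → ZMod 2} {O : V → V → ZMod 2} (h : VKdata G A O) {p x y : V}
    (hpx : G.Adj p x) (hpy : G.Adj p y) (β γ : V → ZMod 2)
    (hψ : ∀ w, w = x ∨ w = y → ∀ z, G.Adj p z → z ≠ w →
      A w p z + A z p w + O w z + O w p + O p z = β z + γ w) :
    ∃ A' O', VKdata (starGraph G p x y) A' O' := by
  classical
  have two : ∀ x : ZMod 2, x + x = 0 := CharTwo.add_self_eq_zero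
  -- value of the new vertex on the edge `ab` of `G`
  let N : V → V → ZMod 2 := fun a b => if a = p then β b else if b = p then β a else A p a b
  -- value of `v` on the new edge `none w`
  let M : V → V → ZMod 2 := fun v w => if w = p then 0 else if v = p then γ w else A v p w
  let A' : Option V → Option V → Option V → ZMod 2 := fun v a b => match v, a, b with
    | some v, some a, some b => A v a b
    | none, some a, some b => N a b
    | some v, none, some w => M v w
    | some v, some w, none => M v w
    | _, _, _ => 0
  let O' : Option V → Option V → ZMod 2 := fun u v => match u, v with
    | some u, some v => O u v
    | none, some v => if v = p then 0 else O p v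
    | some u, none => if u = p then 1 else O u p
    | none, none => 0
  have hanti : ∀ u v, u ≠ v → O' u v + O' v u = 1 := by
    intro u v huv
    cases u <;> cases v
    · exact absurd rfl huv
    · rename_i v
      by_cases hv : v = p
      · simp [O', hv]
      · simp only [O', if_neg hv]; exact h.anti _ _ (Ne.symm hv)
    · rename_i v
      by_cases hv : v = p
      · simp [O', hv]
      · simp only [O', if_neg hv]; exact h.anti _ _ hv
    · exact h.anti _ _ (by simpa using huv)
  have hsymm : ∀ v a b, A' v a b = A' v b a := by
    intro v a b
    cases v <;> cases a <;> cases b <;> try rfl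
    · rename_i a b
      simp only [A', N]
      by_cases ha : a = p <;> by_cases hb : b = p
      · simp [ha, hb]
      · simp [ha, hb]
      · simp [ha, hb]
      · simp only [if_neg ha, if_neg hb]; exact h.symm _ _ _
    · exact h.symm _ _ _
  -- the equations for a new edge against an old one
  have main : ∀ w c d, (w = p ∨ w = x ∨ w = y) → G.Adj c d → w ≠ c → w ≠ d →
      N c d + A w c d + M c w + M d w + (if c = p then 0 else O p c) + (if d = p then 0 else O p d)
        + O w c + O w d = 0 := by
    intro w c d hw hcd hwc hwd
    by_cases hwp : w = p
    · subst hwp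
      simp only [N, M, if_true, if_neg hwc.symm, if_neg hwd.symm]
      linear_combination two (A w c d) + two (O w c) + two (O w d)
    · have hw' : w = x ∨ w = y := by tauto
      have hpw : G.Adj p w := by rcases hw' with rfl | rfl <;> assumption
      by_cases hcp : c = p
      · subst hcp
        have hdc : d ≠ c := hcd.ne'
        have := hψ w hw' d hcd hwd.symm
        simp only [N, M, if_neg hwp, if_true, if_neg hdc]
        linear_combination this + two (γ w) + two (β d)
      · by_cases hdp : d = p
        · subst hdp
          have := hψ w hw' c hcd.symm hwc.symm
          simp only [N, M, if_neg hwp, if_true, if_neg hcp]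
          rw [h.symm w c d]
          linear_combination this + two (γ w) + two (β c)
        · have := h.eq p w c d hpw hcd (Ne.symm hcp) (Ne.symm hdp) hwc hwd
          simp only [N, M, if_neg hwp, if_neg hcp, if_neg hdp]
          linear_combination this
  refine ⟨A', O', hsymm, hanti, ?_⟩
  have case1 : ∀ b c d : V, (starGraph G p x y).Adj none (some b) → G.Adj c d → b ≠ c → b ≠ d →
      A' none (some c) (some d) + A' (some b) (some c) (some d) + A' (some c) none (some b)
       + A' (some d) none (some b) + O' none (some c) + O' none (some d) + O' (some b) (some c)
       + O' (some b) (some d) = 0 := by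
    intro b c d hb hcd hbc hbd
    exact main b c d hb hcd hbc hbd
  have hflip : ∀ a b c d : Option V, a ≠ c → a ≠ d → b ≠ c → b ≠ d →
    A' c a b + A' d a b + A' a c d + A' b c d + O' c a + O' c b + O' d a + O' d b = 0 →
    A' a c d + A' b c d + A' c a b + A' d a b + O' a c + O' a d + O' b c + O' b d = 0 := by
    intro a b c d hac had hbc hbd he
    linear_combination he + hanti a c hac + hanti a d had + hanti b c hbc + hanti b d hbd
      + two 1 + two 1 - two (O' c a) - two (O' d a) - two (O' c b) - two (O' d b)
  have case2 : ∀ (a : V) (c d : Option V), (starGraph G p x y).Adj none (some a) →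
      (starGraph G p x y).Adj c d → none ≠ c → none ≠ d → some a ≠ c → some a ≠ d →
      A' none c d + A' (some a) c d + A' c none (some a) + A' d none (some a)
        + O' none c + O' none d + O' (some a) c + O' (some a) d = 0 := by
    intro a c d ha hcd hc hd hac had
    cases c with
    | none => exact absurd rfl hc
    | some c =>
      cases d with
      | none => exact absurd rfl hd
      | some d => exact case1 a c d ha hcd (by simpa using hac) (by simpa using had)
  have case3 : ∀ (a c d : Option V), (starGraph G p x y).Adj none a →
      (starGraph G p x y).Adj c d → none ≠ c → none ≠ d → a ≠ c → a ≠ d →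
      A' none c d + A' a c d + A' c none a + A' d none a
        + O' none c + O' none d + O' a c + O' a d = 0 := by
    intro a c d ha hcd hc hd hac had
    cases a with
    | none => exact absurd ha (by exact fun h => h)
    | some a => exact case2 a c d ha hcd hc hd hac had
  intro a b c d hab hcd hac had hbc hbd
  by_cases ha : a = none
  · subst ha; exact case3 b c d hab hcd hac had hbc hbd
  by_cases hb : b = none
  · subst hb
    have := case3 a c d hab.symm hcd hbc hbd hac had
    rw [hsymm c a none, hsymm d a none]
    linear_combination this
  apply hflip a b c d hac had hbc hbd
  by_cases hc : c = none
  · subst hc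
    exact case3 d a b hcd hab hac.symm hbc.symm had.symm hbd.symm
  by_cases hd : d = none
  · subst hd
    have := case3 c a b hcd.symm hab had.symm hbd.symm hac.symm hbc.symm
    rw [hsymm a c none, hsymm b c none]
    linear_combination this
  obtain ⟨a, rfl⟩ := Option.ne_none_iff_exists'.1 ha
  obtain ⟨b, rfl⟩ := Option.ne_none_iff_exists'.1 hb
  obtain ⟨c, rfl⟩ := Option.ne_none_iff_exists'.1 hc
  obtain ⟨d, rfl⟩ := Option.ne_none_iff_exists'.1 hd
  exact h.eq c d a b hcd hab (by simpa using hac.symm) (by simpa using hbc.symm)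
    (by simpa using had.symm) (by simpa using hbd.symm)

/-- In a planar graph, every vertex `p` of degree at least two has two neighbours `x`, `y`
(consecutive around `p`) such that a new vertex adjacent to `p`, `x` and `y` can be added without
violating the van Kampen equations. -/
theorem exists_star [Finite V] (hp : GraphPlanar G) (p : V) {a b : V} (hab : a ≠ b)
    (ha : G.Adj p a) (hb : G.Adj p b) :
    ∃ x y, x ≠ y ∧ G.Adj p x ∧ G.Adj p y ∧ ∃ A O, VKdata (starGraph G p x y) A O := by
  classical
  obtain ⟨D, hD⟩ := hp
  obtain ⟨A, O, hVK, hloc⟩ := exists_vk D hD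
  obtain ⟨α, key, hk⟩ := hloc p
  have hfin : (G.neighborSet p).Finite := Set.toFinite _
  obtain ⟨x, hx, hxmin⟩ := hfin.toFinset.exists_min_image key ⟨a, by simpa using ha⟩
  have hne : (hfin.toFinset.erase x).Nonempty := by
    by_cases hax : a = x
    · exact ⟨b, by simp [hb]; rintro rfl; exact hab hax⟩
    · exact ⟨a, by simp [ha, hax]⟩
  obtain ⟨y, hy, hymin⟩ := (hfin.toFinset.erase x).exists_min_image key hne
  simp only [Set.Finite.mem_toFinset, SimpleGraph.mem_neighborSet, Finset.mem_erase] at hx hy hxmin hymin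
  refine ⟨x, y, hy.1.symm, hx, hy.2, ?_⟩
  have two : ∀ x : ZMod 2, x + x = 0 := CharTwo.add_self_eq_zero
  let ψ : V → V → ZMod 2 := fun w z => A w p z + A z p w + O w z + O w p + O p z
  apply star_vk hVK hx hy.2
    (fun z => if z = y then ψ x y + α x else if z = x then ψ y x + α y else α z) α
  intro w hw z hz hzw
  rcases hw with rfl | rfl
  · by_cases hzy : z = y
    · subst hzy
      simp only [if_true, ψ]
      linear_combination - two (α w)
    · simp only [if_neg hzy, if_neg hzw]
      have := hk w z hx hz hzw.symm (hxmin z hz)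
      linear_combination this
  · by_cases hzx : z = x
    · subst hzx
      simp only [if_true, if_neg hzw, ψ]
      linear_combination - two (α w)
    · simp only [if_neg hzx, if_neg hzw]
      have := hk w z hy.2 hz hzw.symm (hymin z ⟨hzx, hz⟩)
      linear_combination this

end Star

/-! ### Ears of a triconnected graph -/

section Lists
variable {α : Type*}

lemma exists_first {φ : α → Prop} {L : List α} (h : ∃ x ∈ L, φ x) :
    ∃ l₁ x l₂, L = l₁ ++ x :: l₂ ∧ φ x ∧ ∀ y ∈ l₁, ¬ φ y := by
  induction L with
  | nil => simp at h
  | cons a L ih =>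
    by_cases ha : φ a
    · exact ⟨[], a, L, rfl, ha, by simp⟩
    · have : ∃ x ∈ L, φ x := by
        obtain ⟨x, hx, hφ⟩ := h
        rcases List.mem_cons.1 hx with rfl | hx
        · exact absurd hφ ha
        · exact ⟨x, hx, hφ⟩
      obtain ⟨l₁, x, l₂, rfl, hx, hl⟩ := ih this
      refine ⟨a :: l₁, x, l₂, rfl, hx, ?_⟩
      intro y hy
      rcases List.mem_cons.1 hy with rfl | hy
      · exact ha
      · exact hl y hy

lemma exists_last {φ : α → Prop} {L : List α} (h : ∃ x ∈ L, φ x) :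
    ∃ l₁ x l₂, L = l₁ ++ x :: l₂ ∧ φ x ∧ ∀ y ∈ l₂, ¬ φ y := by
  obtain ⟨l₁, x, l₂, h1, h2, h3⟩ := exists_first (φ := φ) (L := L.reverse) (by simpa using h)
  refine ⟨l₂.reverse, x, l₁.reverse, ?_, h2, by simpa using h3⟩
  have := congrArg List.reverse h1
  simpa using this

end Lists

section Ear
variable {V : Type*} {G : SimpleGraph V}

lemma conn_of_chain {L : List V} (h : L.IsChain G.Adj) : Conn G {x | x ∈ L} := by
  induction L with
  | nil => intro u hu; simp at hu
  | cons a L ih =>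
    cases L with
    | nil =>
      have : {x | x ∈ [a]} = ({a} : Set V) := by ext; simp
      rw [this]; exact conn_singleton a
    | cons b L =>
      rw [List.isChain_cons_cons] at h
      have e : {x | x ∈ a :: b :: L} = ({a} : Set V) ∪ {x | x ∈ b :: L} := by
        ext; simp
      rw [e]
      exact (conn_singleton a).union_adj (ih h.2) rfl (by simp) h.1

/-- `K` has two different neighbours in `S`. -/
def TwoNbr (G : SimpleGraph V) (S K : Set V) : Prop :=
  ∃ a ∈ S, ∃ b ∈ S, a ≠ b ∧ (∃ x ∈ K, G.Adj x a) ∧ ∃ x ∈ K, G.Adj x b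

lemma TwoNbr.mono {S K K' : Set V} (h : TwoNbr G S K) (hK : K ⊆ K') : TwoNbr G S K' := by
  obtain ⟨a, ha, b, hb, hab, ⟨x, hx, hxa⟩, ⟨y, hy, hyb⟩⟩ := h
  exact ⟨a, ha, b, hb, hab, ⟨x, hK hx, hxa⟩, ⟨y, hK hy, hyb⟩⟩

/-- A set of at most two vertices cannot separate a nonempty set `K` from anything. -/
lemma sep_cover (h3 : ∀ T : Set V, T.ncard ≤ 2 → Conn G Tᶜ) {K T : Set V} (hT : T.ncard ≤ 2)
    (hKT : Disjoint K T) {k : V} (hk : k ∈ K) (hN : ∀ x ∈ K, ∀ y, G.Adj x y → y ∈ K ∪ T) (y : V) :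
    y ∈ K ∪ T := by
  by_contra hy
  rw [Set.mem_union, not_or] at hy
  obtain ⟨a, ha, b, hb, haK, hbK, hab⟩ := (h3 T hT).exists_adj (A := K) (a := k) (b := y)
    (Set.disjoint_left.1 hKT hk) hk hy.2 hy.1
  rcases hN a haK b hab with h | h
  · exact hbK h
  · exact hb h

/-- The attachments of an ear `zs` to the set `S` of already placed vertices: either a single
vertex with at least two neighbours in `S`, or an induced path only whose ends have neighbours
in `S`, one each. -/
def EarAttach (G : SimpleGraph V) (S : Set V) (zs : List V) : Prop :=
  (∃ z, zs = [z] ∧ TwoNbr G S {z}) ∨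
  (2 ≤ zs.length ∧ ∃ a ∈ S, ∃ b ∈ S, a ≠ b ∧
    (∀ z ∈ zs, ∀ x ∈ S, G.Adj z x ↔ (zs.head? = some z ∧ x = a) ∨ (zs.getLast? = some z ∧ x = b)) ∧
    ∀ x ∈ zs, ∀ y ∈ zs, G.Adj x y →
      (∃ l₁ l₂, zs = l₁ ++ x :: y :: l₂) ∨ (∃ l₁ l₂, zs = l₁ ++ y :: x :: l₂))

/-- An ear of the complement of `S` avoiding `t`, whose removal leaves a connected set and every
vertex of which is adjacent to the rest. -/
structure IsEar (G : SimpleGraph V) (S : Set V) (t : V) (zs : List V) : Prop where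
  nodup : zs.Nodup
  notMem : ∀ z ∈ zs, z ∉ S
  ne_t : ∀ z ∈ zs, z ≠ t
  chain : zs.IsChain G.Adj
  conn : Conn G (Sᶜ \ {z | z ∈ zs})
  up : ∀ z ∈ zs, ∃ r, r ∉ S ∧ r ∉ zs ∧ G.Adj z r
  attach : EarAttach G S zs

lemma exists_chain_of_linkIn {B : Set V} {a b : V} (h : LinkIn G B a b) (ha : a ∈ B) :
    ∃ L : List V, L.IsChain G.Adj ∧ (∀ x ∈ L, x ∈ B) ∧ L.head? = some a ∧ L.getLast? = some b := by
  induction h using Relation.ReflTransGen.head_induction_on with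
  | refl => exact ⟨[b], by simp, by simpa using ha, rfl, rfl⟩
  | head h _ ih =>
    rename_i a c _
    obtain ⟨L, h1, h2, h3, h4⟩ := ih h.2.2
    refine ⟨a :: L, ?_, ?_, rfl, ?_⟩
    · cases L with
      | nil => simp
      | cons d L =>
        simp at h3; subst h3
        exact List.IsChain.cons_cons h.1 h1
    · intro x hx
      rcases List.mem_cons.1 hx with rfl | hx
      · exact ha
      · exact h2 x hx
    · cases L with
      | nil => simp at h3
      | cons d L => simpa [List.getLast?_cons_cons] using h4

/-- A shortest path inside `Q` between vertices with different neighbours in `S` is induced and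
only its ends have neighbours in `S`. -/
lemma exists_shortest {S Q : Set V} (hQ : Conn G Q) (h2 : TwoNbr G S Q)
    (h1 : ∀ z ∈ Q, ¬ TwoNbr G S {z}) :
    ∃ L : List V, L.IsChain G.Adj ∧ L.Nodup ∧ (∀ x ∈ L, x ∈ Q) ∧ 2 ≤ L.length ∧
    ∃ a ∈ S, ∃ b ∈ S, a ≠ b ∧
    (∀ z ∈ L, ∀ x ∈ S, G.Adj z x ↔ (L.head? = some z ∧ x = a) ∨ (L.getLast? = some z ∧ x = b)) ∧
    ∀ x ∈ L, ∀ y ∈ L, G.Adj x y →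
      (∃ l₁ l₂, L = l₁ ++ x :: y :: l₂) ∨ (∃ l₁ l₂, L = l₁ ++ y :: x :: l₂) := by
  classical
  let Good : List V → Prop := fun L => L.IsChain G.Adj ∧ (∀ x ∈ L, x ∈ Q) ∧
    ∃ a ∈ S, ∃ b ∈ S, a ≠ b ∧ ∃ x y, L.head? = some x ∧ L.getLast? = some y ∧ G.Adj x a ∧ G.Adj y b
  have hex : ∃ n, ∃ L, Good L ∧ L.length = n := by
    obtain ⟨a, ha, b, hb, hab, ⟨x, hx, hxa⟩, ⟨y, hy, hyb⟩⟩ := h2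
    obtain ⟨L, c1, c2, c3, c4⟩ := exists_chain_of_linkIn (hQ x hx y hy) hx
    exact ⟨_, L, ⟨c1, c2, a, ha, b, hb, hab, x, y, c3, c4, hxa, hyb⟩, rfl⟩
  obtain ⟨L, ⟨hch, hLQ, a, ha, b, hb, hab, x, y, hx, hy, hxa, hyb⟩, hlen⟩ := Nat.find_spec hex
  have hmin : ∀ L', Good L' → L.length ≤ L'.length := by
    intro L' hL'
    rw [hlen]; exact Nat.find_min' hex ⟨L', hL', rfl⟩
  have hxL : x ∈ L := List.mem_of_mem_head? hx
  have hyL : y ∈ L := List.mem_of_mem_getLast? hy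
  have nb : ∀ z ∈ Q, ∀ c ∈ S, ∀ d ∈ S, G.Adj z c → G.Adj z d → c = d := by
    intro z hz c hc d hd hzc hzd
    by_contra hcd
    exact h1 z hz ⟨c, hc, d, hd, hcd, ⟨z, rfl, hzc⟩, ⟨z, rfl, hzd⟩⟩
  have hxy : x ≠ y := by
    rintro rfl
    exact hab (nb x (hLQ x hxL) a ha b hb hxa hyb)
  have hhead : ∀ l₁ z l₂, L = l₁ ++ z :: l₂ → (l₁ ++ [z]).head? = some x := by
    intro l₁ z l₂ h; rw [h] at hx; cases l₁ <;> simpa using hx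
  have hlast : ∀ l₁ z l₂, L = l₁ ++ z :: l₂ → (z :: l₂).getLast? = some y := by
    intro l₁ z l₂ h; rw [h] at hy; simpa using hy
  refine ⟨L, hch, ?_, hLQ, ?_, a, ha, b, hb, hab, ?_, ?_⟩
  · -- a repeated vertex would give a shortcut
    by_contra hnd
    obtain ⟨z, hz⟩ : ∃ z, List.Duplicate z L := by
      by_contra hcon
      push Not at hcon
      exact hnd (List.nodup_iff_forall_not_duplicate.2 hcon)
    rw [List.duplicate_iff_two_le_count] at hz
    have hzL : z ∈ L := List.count_pos_iff.1 (by omega)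
    obtain ⟨l₁, l₂, e1⟩ := List.append_of_mem hzL
    have hz2 : ∃ l₁ l₂ l₃, L = l₁ ++ z :: l₂ ++ z :: l₃ := by
      obtain ⟨l₁, w, l₂, e, rfl, hno⟩ := exists_first (φ := (· = z)) ⟨z, hzL, rfl⟩
      have : w ∈ l₂ := by
        rw [e] at hz
        have h0 : List.count w l₁ = 0 := List.count_eq_zero.2 fun h => hno w h rfl
        rw [List.count_append, h0, List.count_cons_self] at hz
        exact List.count_pos_iff.1 (by omega)
      obtain ⟨m₁, m₂, e2⟩ := List.append_of_mem this
      exact ⟨l₁, m₁, m₂, by rw [e, e2]; simp⟩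
    obtain ⟨l₁, l₂, l₃, e⟩ := hz2
    have hg : Good (l₁ ++ z :: l₃) := by
      refine ⟨?_, ?_, a, ha, b, hb, hab, x, y, ?_, ?_, hxa, hyb⟩
      · rw [e, List.append_assoc, List.cons_append, List.isChain_split] at hch
        rw [List.isChain_split]
        refine ⟨hch.1, ?_⟩
        have := hch.2
        rw [← List.cons_append, List.isChain_split] at this
        exact this.2
      · intro w hw; apply hLQ; rw [e]; simp at hw ⊢; tauto
      · have := hhead l₁ z (l₂ ++ z :: l₃) (by rw [e]; simp)
        cases l₁ <;> simpa using this
      · have := hlast (l₁ ++ z :: l₂) z l₃ e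
        rw [List.getLast?_append, this]; rfl
    have := hmin _ hg
    rw [e] at this; simp at this; omega
  · match L, hx, hy with
    | [], hx, _ => simp at hx
    | [z], hx, hy => simp at hx hy; exact absurd (hx.symm.trans hy) hxy
    | _ :: _ :: _, _, _ => simp
  · intro z hz c hc
    constructor
    · intro hzc
      obtain ⟨l₁, l₂, e⟩ := List.append_of_mem hz
      by_cases hca : c = a
      · left
        refine ⟨?_, hca⟩
        subst hca
        have hg : Good (z :: l₂) := by
          refine ⟨?_, ?_, c, ha, b, hb, hab, z, y, rfl, hlast _ _ _ e, hzc, hyb⟩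
          · rw [e, List.isChain_split] at hch; exact hch.2
          · intro w hw; apply hLQ; rw [e]; simp at hw ⊢; tauto
        have := hmin _ hg
        rw [e] at this
        have hl₁ : l₁ = [] := by
          apply List.eq_nil_of_length_eq_zero; simp only [List.length_append, List.length_cons, List.length_nil] at this; omega
        rw [e, hl₁]; rfl
      · right
        have hg : Good (l₁ ++ [z]) := by
          refine ⟨?_, ?_, a, ha, c, hc, Ne.symm hca, x, z, hhead _ _ _ e, by simp, hxa, hzc⟩
          · rw [e, List.isChain_split] at hch; exact hch.1
          · intro w hw; apply hLQ; rw [e]; simp at hw ⊢; tauto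
        have := hmin _ hg
        rw [e] at this
        have hl₂ : l₂ = [] := by
          apply List.eq_nil_of_length_eq_zero; simp only [List.length_append, List.length_cons, List.length_nil] at this; omega
        have hzy : z = y := by
          have := hlast _ _ _ e
          rw [hl₂] at this; simpa using this
        refine ⟨by rw [hy, hzy], ?_⟩
        rw [hzy] at hzc
        exact nb y (hLQ y hyL) c hc b hb hzc hyb
    · rintro (⟨h1, h2⟩ | ⟨h1, h2⟩)
      · rw [hx] at h1; simp at h1; rw [← h1, h2]; exact hxa
      · rw [hy] at h1; simp at h1; rw [← h1, h2]; exact hyb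
  · -- a chord would give a shortcut
    have chord : ∀ u v, G.Adj u v → ∀ l₁ l₂ l₃, L = l₁ ++ u :: (l₂ ++ v :: l₃) → l₂ = [] := by
      intro u v huv l₁ l₂ l₃ e
      have hg : Good (l₁ ++ u :: v :: l₃) := by
        refine ⟨?_, ?_, a, ha, b, hb, hab, x, y, ?_, ?_, hxa, hyb⟩
        · rw [e, List.isChain_split] at hch
          rw [List.isChain_split]
          refine ⟨hch.1, ?_⟩
          have := hch.2
          rw [← List.cons_append, List.isChain_split] at this
          exact List.IsChain.cons_cons huv this.2
        · intro w hw; apply hLQ; rw [e]; simp at hw ⊢; tauto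
        · have := hhead l₁ u _ e
          cases l₁ <;> simpa using this
        · have := hlast (l₁ ++ u :: l₂) v l₃ (by rw [e]; simp)
          rw [List.getLast?_append, List.getLast?_cons_cons, this]; rfl
      have := hmin _ hg
      rw [e] at this
      apply List.eq_nil_of_length_eq_zero; simp only [List.length_append, List.length_cons, List.length_nil] at this; omega
    intro u hu v hv huv
    obtain ⟨l₁, l₂, e⟩ := List.append_of_mem hu
    have hv' : v ∈ l₁ ∨ v ∈ l₂ := by
      rw [e] at hv
      rcases List.mem_append.1 hv with h | h
      · exact Or.inl h
      · rcases List.mem_cons.1 h with h | h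
        · exact absurd h huv.ne'
        · exact Or.inr h
    rcases hv' with h | h
    · right
      obtain ⟨m₁, m₂, e2⟩ := List.append_of_mem h
      have e3 : L = m₁ ++ v :: (m₂ ++ u :: l₂) := by rw [e, e2]; simp
      have := chord v u huv.symm m₁ m₂ l₂ e3
      subst this
      exact ⟨m₁, l₂, e3⟩
    · left
      obtain ⟨m₁, m₂, e2⟩ := List.append_of_mem h
      have e3 : L = l₁ ++ u :: (m₁ ++ v :: m₂) := by rw [e, e2]
      have := chord u v huv l₁ m₁ m₂ e3
      subst this
      exact ⟨l₁, m₂, e3⟩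

end Ear

/-! ### Existence of ears -/

section Ear2
variable {V : Type*} {G : SimpleGraph V}

lemma ncard_pair_le_two (a b : V) : ({a, b} : Set V).ncard ≤ 2 := by
  have := Set.ncard_insert_le a {b}
  rwa [Set.ncard_singleton] at this

/-- If all neighbours of `K` lie in `K`, in `S` or are equal to `z`, and something remains outside,
then `K` has two neighbours in `S`. -/
lemma twoNbr_of_sep (h3 : ∀ T : Set V, T.ncard ≤ 2 → Conn G Tᶜ) {S K : Set V} {z k t : V}
    (hk : k ∈ K) (hKS : Disjoint K S) (hzK : z ∉ K) (ht : t ∉ S) (htK : t ∉ K) (htz : t ≠ z)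
    (hN : ∀ x ∈ K, ∀ y, G.Adj x y → y ∈ K ∨ y ∈ S ∨ y = z) : TwoNbr G S K := by
  by_contra hcon
  have huniq : ∀ a ∈ S, ∀ b ∈ S, (∃ x ∈ K, G.Adj x a) → (∃ x ∈ K, G.Adj x b) → a = b := by
    intro a ha b hb hxa hxb
    by_contra hab
    exact hcon ⟨a, ha, b, hb, hab, hxa, hxb⟩
  by_cases hs : ∃ s ∈ S, ∃ x ∈ K, G.Adj x s
  · obtain ⟨s, hs, hxs⟩ := hs
    have := sep_cover h3 (K := K) (T := {z, s}) ((ncard_pair_le_two z s)) ?_ hk ?_ t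
    · rcases this with h | h | h
      · exact htK h
      · exact htz h
      · rw [Set.mem_singleton_iff] at h; exact ht (h ▸ hs)
    · rw [Set.disjoint_left]; rintro a ha (rfl | h)
      · exact hzK ha
      · rw [Set.mem_singleton_iff] at h; subst h; exact Set.disjoint_left.1 hKS ha hs
    · intro x hx y hxy
      rcases hN x hx y hxy with h | h | h
      · exact Or.inl h
      · right; right; exact huniq y h s hs ⟨x, hx, hxy⟩ hxs
      · right; left; exact h
  · have := sep_cover h3 (K := K) (T := {z}) (by simp) ?_ hk ?_ t
    · rcases this with h | h
      · exact htK h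
      · exact htz h
    · rw [Set.disjoint_left]; rintro a ha rfl; exact hzK ha
    · intro x hx y hxy
      rcases hN x hx y hxy with h | h | h
      · exact Or.inl h
      · exact absurd ⟨y, h, x, hx, hxy⟩ hs
      · right; exact h

/-- In a triconnected graph, an ear can be added to `S` as long as the connected outside of `S` has
a vertex besides `t`. Among the connected outside sets avoiding `t` which have two
neighbours in `S`, one takes a set leaving the largest component around `t`, and finds the ear in the
rest of the outside. -/
theorem exists_ear [Finite V] (h3 : ∀ T : Set V, T.ncard ≤ 2 → Conn G Tᶜ) {S : Set V} {t : V}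
    (hS2 : ∃ a ∈ S, ∃ b ∈ S, a ≠ b) (hR : Conn G Sᶜ) (ht : t ∉ S) (hne : ∃ r, r ∉ S ∧ r ≠ t) :
    ∃ zs, IsEar G S t zs := by
  classical
  let Cand : Set (Set V) := {P | P.Nonempty ∧ Conn G P ∧ P ⊆ Sᶜ \ {t} ∧ TwoNbr G S P}
  have hCand : Cand.Nonempty := by
    obtain ⟨r, hr, hrt⟩ := hne
    have hrB : r ∈ Sᶜ \ {t} := ⟨hr, hrt⟩
    refine ⟨compOf G (Sᶜ \ {t}) r, ⟨r, mem_compOf_self⟩, conn_compOf, compOf_subset hrB, ?_⟩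
    have hsub := compOf_subset (H := G) hrB
    have hN : ∀ x ∈ compOf G (Sᶜ \ {t}) r, ∀ y, G.Adj x y →
        y ∈ compOf G (Sᶜ \ {t}) r ∨ y ∈ S ∨ y = t := by
      intro x hx y hxy
      by_cases hyS : y ∈ S
      · exact Or.inr (Or.inl hyS)
      · by_cases hyt : y = t
        · exact Or.inr (Or.inr hyt)
        · exact Or.inl (adj_mem_compOf hrB hx ⟨hyS, hyt⟩ hxy)
    -- otherwise some vertex of `S` is separated by `t` and at most one other vertex
    by_contra hcon
    have huniq : ∀ a ∈ S, ∀ b ∈ S, (∃ x ∈ compOf G (Sᶜ \ {t}) r, G.Adj x a) →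
        (∃ x ∈ compOf G (Sᶜ \ {t}) r, G.Adj x b) → a = b := by
      intro a ha b hb hxa hxb
      by_contra hab
      exact hcon ⟨a, ha, b, hb, hab, hxa, hxb⟩
    obtain ⟨a, ha, hna⟩ : ∃ a ∈ S, ¬ ∃ x ∈ compOf G (Sᶜ \ {t}) r, G.Adj x a := by
      obtain ⟨a, ha, b, hb, hab⟩ := hS2
      by_cases h : ∃ x ∈ compOf G (Sᶜ \ {t}) r, G.Adj x a
      · exact ⟨b, hb, fun h' => hab (huniq a ha b hb h h')⟩
      · exact ⟨a, ha, h⟩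
    apply hcon
    have hmain : TwoNbr G (S \ {a}) (compOf G (Sᶜ \ {t}) r) := by
      refine twoNbr_of_sep h3 (z := t) (t := a) (k := r) mem_compOf_self ?_ ?_ (by simp) ?_ ?_ ?_
      · rw [Set.disjoint_left]; intro x hx h; exact (hsub hx).1 h.1
      · intro h; exact (hsub h).2 rfl
      · intro h; exact (hsub h).1 ha
      · rintro rfl; exact ht ha
      · intro x hx y hxy
        rcases hN x hx y hxy with h | h | h
        · exact Or.inl h
        · refine Or.inr (Or.inl ⟨h, ?_⟩)
          rintro rfl; exact hna ⟨x, hx, hxy⟩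
        · exact Or.inr (Or.inr h)
    obtain ⟨a', ha', b', hb', r⟩ := hmain
    exact ⟨a', ha'.1, b', hb'.1, r⟩
  obtain ⟨P, hP, hPmax⟩ := Set.exists_max_image Cand (fun P => (compOf G (Sᶜ \ P) t).ncard)
    (Set.toFinite _) hCand
  obtain ⟨⟨p₀, hp₀⟩, hPc, hPR, hP2⟩ := hP
  have htP : t ∉ P := fun h => (hPR h).2 rfl
  have htB : t ∈ Sᶜ \ P := ⟨ht, htP⟩
  set R' := compOf G (Sᶜ \ P) t with hR'
  have htR' : t ∈ R' := mem_compOf_self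
  have hR'sub : R' ⊆ Sᶜ \ P := compOf_subset htB
  have hR'c : Conn G R' := conn_compOf
  set Q : Set V := Sᶜ \ R' with hQ
  have hPQ : P ⊆ Q := fun x hx => ⟨(hPR hx).1, fun h => (hR'sub h).2 hx⟩
  set Z : Set V := {z | z ∈ Q ∧ ∃ r ∈ R', G.Adj z r} with hZ
  have hfact : ∀ P' : Set V, P'.Nonempty → Conn G P' → P' ⊆ Q → TwoNbr G S P' → Z ⊆ P' := by
    intro P' hP'n hP'c hP'Q hP'2 z hz
    by_contra hzP'
    have hP't : t ∉ P' := fun h => (hP'Q h).2 htR'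
    have hle := hPmax P' ⟨hP'n, hP'c, fun x hx => ⟨(hP'Q hx).1, fun h => hP't (h ▸ hx)⟩, hP'2⟩
    have hsub : R' ⊆ compOf G (Sᶜ \ P') t := by
      apply hR'c.subset_compOf _ htR'
      intro x hx
      exact ⟨(hR'sub hx).1, fun h => (hP'Q h).2 hx⟩
    have heq : R' = compOf G (Sᶜ \ P') t :=
      Set.eq_of_subset_of_ncard_le hsub hle (Set.toFinite _)
    obtain ⟨hzQ, r, hr, hzr⟩ := hz
    apply hzQ.2
    rw [heq] at hr ⊢
    exact adj_mem_compOf ⟨ht, hP't⟩ hr ⟨hzQ.1, hzP'⟩ hzr.symm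
  have hQc : Conn G Q := by
    apply conn_of_root p₀
    intro q hq
    by_cases hqP : q ∈ P
    · exact (hPc p₀ hp₀ q hqP).mono hPQ
    · have hqB : q ∈ Sᶜ \ P := ⟨hq.1, hqP⟩
      set K := compOf G (Sᶜ \ P) q
      have hKQ : K ⊆ Q := by
        intro x hx
        refine ⟨(compOf_subset hqB hx).1, fun hxR => hq.2 ?_⟩
        exact Relation.ReflTransGen.trans hxR (LinkIn.symm hx)
      have htK : t ∉ K := fun h => (hKQ h).2 htR'
      obtain ⟨x, hx, y, hy, hxK, hyK, hxy⟩ := hR.exists_adj (A := K) (a := q) (b := t) hq.1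
        mem_compOf_self ht htK
      have hyP : y ∈ P := by
        by_contra hyP
        exact hyK (adj_mem_compOf hqB hxK ⟨hy, hyP⟩ hxy)
      have h1 : LinkIn G Q q x := (linkIn_compOf hxK).mono hKQ
      have h2 : LinkIn G Q p₀ y := (hPc p₀ hp₀ y hyP).mono hPQ
      exact (h2.tail ⟨hxy.symm, hPQ hyP, hKQ hxK⟩).trans h1.symm
  have hQ2 : TwoNbr G S Q := hP2.mono hPQ
  have hQS : Disjoint Q S := Set.disjoint_left.2 fun x hx h => hx.1 h
  have htQ : t ∉ Q := fun h => h.2 htR'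
  obtain ⟨z, hz⟩ : Z.Nonempty := by
    obtain ⟨x, hx, y, hy, hxQ, hyQ, hxy⟩ := hR.exists_adj (A := Q) (a := p₀) (b := t) (hPR hp₀).1
      (hPQ hp₀) ht htQ
    have hyR : y ∈ R' := by by_contra h; exact hyQ ⟨hy, h⟩
    exact ⟨x, hxQ, y, hyR, hxy⟩
  have hRQ : Sᶜ \ Q = R' := by
    rw [hQ]; ext x; constructor
    · intro h; by_contra hx; exact h.2 ⟨h.1, hx⟩
    · intro h; exact ⟨(hR'sub h).1, fun h' => h'.2 h⟩
  by_cases hZ1 : ∀ z' ∈ Z, z' = z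
  · have hQz : Q = {z} := by
      apply Set.Subset.antisymm _ (by simpa using hz.1)
      intro q hq
      by_contra hqz
      have hqB : q ∈ Q \ {z} := ⟨hq, hqz⟩
      have hKQ : compOf G (Q \ {z}) q ⊆ Q \ {z} := compOf_subset hqB
      have h2 : TwoNbr G S (compOf G (Q \ {z}) q) := by
        refine twoNbr_of_sep h3 (z := z) (t := t) (k := q) mem_compOf_self ?_ ?_ ht ?_ ?_ ?_
        · rw [Set.disjoint_left]; intro x hx; exact Set.disjoint_left.1 hQS (hKQ hx).1
        · intro h; exact (hKQ h).2 rfl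
        · intro h; exact htQ (hKQ h).1
        · rintro rfl; exact htQ hz.1
        · intro x hx y hxy
          by_cases hyS : y ∈ S
          · exact Or.inr (Or.inl hyS)
          by_cases hyz : y = z
          · exact Or.inr (Or.inr hyz)
          by_cases hyR : y ∈ R'
          · exact absurd (hZ1 x ⟨(hKQ hx).1, y, hyR, hxy⟩) (hKQ hx).2
          · exact Or.inl (adj_mem_compOf hqB hx ⟨⟨hyS, hyR⟩, hyz⟩ hxy)
      have := hfact _ ⟨q, mem_compOf_self⟩ conn_compOf (fun x hx => (hKQ hx).1) h2 hz
      exact (hKQ this).2 rfl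
    refine ⟨[z], by simp, ?_, ?_, by simp, ?_, ?_, Or.inl ⟨z, rfl, ?_⟩⟩
    · simpa using hz.1.1
    · simp only [List.mem_singleton, forall_eq]; rintro rfl; exact htQ hz.1
    · have : {x | x ∈ [z]} = Q := by rw [hQz]; ext; simp
      rw [this, hRQ]; exact hR'c
    · simp only [List.mem_singleton, forall_eq]
      obtain ⟨-, r, hr, hzr⟩ := hz
      exact ⟨r, (hR'sub hr).1, hzr.ne', hzr⟩
    · rw [← hQz]; exact hQ2
  · push Not at hZ1
    obtain ⟨z', hz', hzz'⟩ := hZ1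
    have h1 : ∀ x ∈ Q, ¬ TwoNbr G S {x} := by
      intro x hx h2
      have := hfact {x} ⟨x, rfl⟩ (conn_singleton x) (by simpa using hx) h2
      have e1 : z = x := this hz
      have e2 : z' = x := this hz'
      exact hzz' (e2.trans e1.symm)
    obtain ⟨L, hch, hnd, hLQ, hlen, a, ha, b, hb, hab, hatt, hind⟩ := exists_shortest hQc hQ2 h1
    have hLne : L ≠ [] := by rintro rfl; simp at hlen
    obtain ⟨x₁, hx₁⟩ : ∃ x, L.head? = some x := by
      cases L with
      | nil => exact absurd rfl hLne
      | cons x L => exact ⟨x, rfl⟩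
    obtain ⟨xm, hxm⟩ : ∃ x, L.getLast? = some x := ⟨_, List.getLast?_eq_some_getLast hLne⟩
    have hx₁L : x₁ ∈ L := List.mem_of_mem_head? hx₁
    have hxmL : xm ∈ L := List.mem_of_mem_getLast? hxm
    have hx₁a : G.Adj x₁ a := (hatt x₁ hx₁L a ha).2 (Or.inl ⟨hx₁, rfl⟩)
    have hxmb : G.Adj xm b := (hatt xm hxmL b hb).2 (Or.inr ⟨hxm, rfl⟩)
    have hZL : Z ⊆ {x | x ∈ L} :=
      hfact _ ⟨x₁, hx₁L⟩ (conn_of_chain hch) hLQ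
        ⟨a, ha, b, hb, hab, ⟨x₁, hx₁L, hx₁a⟩, ⟨xm, hxmL, hxmb⟩⟩
    have hQZ : Q ⊆ Z := by
      intro q hq
      by_contra hqZ
      have hqB : q ∈ Q \ Z := ⟨hq, hqZ⟩
      set K := compOf G (Q \ Z) q with hK
      have hKQ : K ⊆ Q \ Z := compOf_subset hqB
      have hKc : Conn G K := conn_compOf
      have hqK : q ∈ K := mem_compOf_self
      have hK1 : ¬ TwoNbr G S K := by
        intro h
        exact (hKQ (hfact K ⟨q, hqK⟩ hKc (fun x hx => (hKQ hx).1) h hz)).2 hz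
      have hKN : ∀ x ∈ K, ∀ y, G.Adj x y → y ∈ K ∨ y ∈ S ∨ y ∈ Z := by
        intro x hx y hxy
        by_cases hyS : y ∈ S
        · exact Or.inr (Or.inl hyS)
        by_cases hyZ : y ∈ Z
        · exact Or.inr (Or.inr hyZ)
        by_cases hyR : y ∈ R'
        · exact absurd ⟨(hKQ hx).1, y, hyR, hxy⟩ (hKQ hx).2
        · exact Or.inl (adj_mem_compOf hqB hx ⟨⟨hyS, hyR⟩, hyZ⟩ hxy)
      let φ : V → Prop := fun w => w ∈ Z ∧ ∃ x ∈ K, G.Adj x w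
      -- `K` has two neighbours in `Z`
      have hφ2 : ∃ w ∈ L, φ w ∧ ∃ w' ∈ L, φ w' ∧ w ≠ w' := by
        by_contra hcon
        push Not at hcon
        have hex : ∃ z₀, z₀ ∉ K ∧ t ≠ z₀ ∧ ∀ w, φ w → w = z₀ := by
          by_cases hw : ∃ w, φ w
          · obtain ⟨w, hw⟩ := hw
            refine ⟨w, fun h => (hKQ h).2 hw.1, ?_, ?_⟩
            · rintro rfl; exact htQ hw.1.1
            · intro w' hw'; exact hcon w' (hZL hw'.1) hw' w (hZL hw.1) hw
          · push Not at hw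
            exact ⟨z, fun h => (hKQ h).2 hz, fun h => htQ (h ▸ hz.1), fun w h => absurd h (hw w)⟩
        obtain ⟨z₀, hz₀K, htz₀, hz₀⟩ := hex
        apply hK1
        refine twoNbr_of_sep h3 (z := z₀) (t := t) (k := q) hqK ?_ hz₀K ht ?_ htz₀ ?_
        · rw [Set.disjoint_left]; intro x hx; exact Set.disjoint_left.1 hQS (hKQ hx).1
        · intro h; exact htQ (hKQ h).1
        · intro x hx y hxy
          rcases hKN x hx y hxy with h | h | h
          · exact Or.inl h
          · exact Or.inr (Or.inl h)
          · exact Or.inr (Or.inr (hz₀ y ⟨h, x, hx, hxy⟩))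
      obtain ⟨w, hwL, hw, w', hw'L, hw', hww'⟩ := hφ2
      obtain ⟨l₁, pi, l₂, e1, hpi, hl₁⟩ := exists_first (φ := φ) ⟨w, hwL, hw⟩
      have hl₂φ : ∃ x ∈ l₂, φ x := by
        have : ∀ u ∈ L, φ u → u = pi ∨ u ∈ l₂ := by
          intro u hu hφu
          rw [e1, List.mem_append, List.mem_cons] at hu
          rcases hu with h | h | h
          · exact absurd hφu (hl₁ u h)
          · exact Or.inl h
          · exact Or.inr h
        rcases this w hwL hw with h | h
        · rcases this w' hw'L hw' with h' | h'
          · exact absurd (h.trans h'.symm) hww'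
          · exact ⟨w', h', hw'⟩
        · exact ⟨w, h, hw⟩
      obtain ⟨m, pj, l₃, e2, hpj, hl₃⟩ := exists_last (φ := φ) hl₂φ
      have e3 : L = (l₁ ++ [pi]) ++ (m ++ (pj :: l₃)) := by rw [e1, e2]; simp
      have hnd' := hnd
      rw [e3, List.nodup_append'] at hnd'
      obtain ⟨-, hnd2, hdisj⟩ := hnd'
      rw [List.nodup_append'] at hnd2
      have hch1 : (l₁ ++ [pi]).IsChain G.Adj := by
        rw [e1, List.isChain_split] at hch; exact hch.1
      have hch2 : (pj :: l₃).IsChain G.Adj := by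
        rw [e1, e2, List.isChain_split] at hch
        have := hch.2
        rw [← List.cons_append, List.isChain_split] at this
        exact this.2
      have hx₁A : x₁ ∈ l₁ ++ [pi] := by
        rw [e1] at hx₁; cases l₁ <;> simp_all
      have hxmB : xm ∈ pj :: l₃ := by
        rw [e3, ← List.append_assoc, List.getLast?_append_cons] at hxm
        exact List.mem_of_getLast? hxm
      have hcA : Conn G ({x | x ∈ l₁ ++ [pi]} ∪ K) := by
        obtain ⟨-, x, hx, hxp⟩ := hpi
        exact (conn_of_chain hch1).union_adj hKc (by simp) hx hxp.symm
      have hcB : Conn G (K ∪ {x | x ∈ pj :: l₃}) := by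
        obtain ⟨-, x, hx, hxp⟩ := hpj
        exact hKc.union_adj (conn_of_chain hch2) hx (by simp) hxp
      have hAQ : {x | x ∈ l₁ ++ [pi]} ⊆ Q := by
        intro x hx; apply hLQ; rw [e3, List.mem_append]; exact Or.inl hx
      have hBQ : {x | x ∈ pj :: l₃} ⊆ Q := by
        intro x hx; apply hLQ; rw [e3, List.mem_append]; exact Or.inr (List.mem_append.2 (Or.inr hx))
      have hKQ' : K ⊆ Q := fun x hx => (hKQ hx).1
      -- no vertex of `Z` lies strictly between `pi` and `pj`
      have hall : Z ⊆ ({x | x ∈ l₁ ++ [pi]} ∪ K) ∪ (K ∪ {x | x ∈ pj :: l₃}) := by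
        apply hfact
        · exact ⟨q, Or.inl (Or.inr hqK)⟩
        · exact hcA.union_mem hcB (Or.inr hqK) (Or.inl hqK)
        · intro x hx
          rcases hx with (h | h) | (h | h)
          · exact hAQ h
          · exact hKQ' h
          · exact hKQ' h
          · exact hBQ h
        · exact ⟨a, ha, b, hb, hab, ⟨x₁, Or.inl (Or.inl hx₁A), hx₁a⟩,
            ⟨xm, Or.inr (Or.inr hxmB), hxmb⟩⟩
      have hφ' : ∀ u, φ u → u = pi ∨ u = pj := by
        intro u hu
        have huL : u ∈ L := hZL hu.1
        rw [e3] at huL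
        rcases hall hu.1 with (h | h) | (h | h)
        · have h : u ∈ l₁ ++ [pi] := h
          rw [List.mem_append, List.mem_singleton] at h
          rcases h with h | h
          · exact absurd hu (hl₁ u h)
          · exact Or.inl h
        · exact absurd hu.1 (hKQ h).2
        · exact absurd hu.1 (hKQ h).2
        · have h : u ∈ pj :: l₃ := h
          rw [List.mem_cons] at h
          rcases h with h | h
          · exact Or.inr h
          · exact absurd hu (hl₃ u h)
      have hpjA : pj ∉ l₁ ++ [pi] := fun h => hdisj h (by simp)
      have hpiB : pi ∉ pj :: l₃ := fun h => hdisj (a := pi) (by simp) (by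
        rw [List.mem_append]; exact Or.inr h)
      have hpijne : pi ≠ pj := fun h => hpiB (by simp [h])
      -- hence `K` has a neighbour in `S`
      obtain ⟨c, hc, x, hx, hxc⟩ : ∃ c ∈ S, ∃ x ∈ K, G.Adj x c := by
        by_contra hcon
        push Not at hcon
        have := sep_cover h3 (K := K) (T := {pi, pj}) (ncard_pair_le_two pi pj) ?_ hqK ?_ t
        · rcases this with h | h | h
          · exact htQ (hKQ' h)
          · exact htQ (h ▸ hpi.1.1)
          · rw [Set.mem_singleton_iff] at h; exact htQ (h ▸ hpj.1.1)
        · rw [Set.disjoint_left]; rintro u hu (rfl | h)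
          · exact (hKQ hu).2 hpi.1
          · rw [Set.mem_singleton_iff] at h; subst h; exact (hKQ hu).2 hpj.1
        · intro x hx y hxy
          rcases hKN x hx y hxy with h | h | h
          · exact Or.inl h
          · exact absurd hxy (hcon y h x hx)
          · exact Or.inr (hφ' y ⟨h, x, hx, hxy⟩)
      by_cases hca : c = a
      · have := hfact (K ∪ {x | x ∈ pj :: l₃}) ⟨q, Or.inl hqK⟩ hcB (Set.union_subset hKQ' hBQ)
          ⟨a, ha, b, hb, hab, ⟨x, Or.inl hx, hca ▸ hxc⟩, ⟨xm, Or.inr hxmB, hxmb⟩⟩ hpi.1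
        rcases this with h | h
        · exact (hKQ h).2 hpi.1
        · exact hpiB h
      · have := hfact ({x | x ∈ l₁ ++ [pi]} ∪ K) ⟨q, Or.inr hqK⟩ hcA (Set.union_subset hAQ hKQ')
          ⟨a, ha, c, hc, Ne.symm hca, ⟨x₁, Or.inl hx₁A, hx₁a⟩, ⟨x, Or.inr hx, hxc⟩⟩ hpj.1
        rcases this with h | h
        · exact hpjA h
        · exact (hKQ h).2 hpj.1
    have hLeq : {x | x ∈ L} = Q :=
      Set.Subset.antisymm hLQ (hQZ.trans hZL)
    refine ⟨L, hnd, fun x hx => (hLQ x hx).1, ?_, hch, ?_, ?_, Or.inr ⟨hlen, a, ha, b, hb, hab, hatt, hind⟩⟩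
    · rintro x hx rfl; exact htQ (hLQ x hx)
    · rw [hLeq, hRQ]; exact hR'c
    · intro x hx
      obtain ⟨-, r, hr, hxr⟩ := hQZ (hLQ x hx)
      refine ⟨r, (hR'sub hr).1, fun h => ?_, hxr⟩
      exact (hLQ r h).2 hr

end Ear2

/-! ### Contours -/

section Contours
variable {V : Type*} [DecidableEq V] {G : SimpleGraph V}

/-- `W` is a path of `G` from `v1` to `v2` inside the finite set `S` which contains every vertex of
`S` having a neighbour outside `S`; the outside is connected and contains `t`. -/
structure Contour (G : SimpleGraph V) (v1 v2 t : V) (S : Finset V) (W : List V) : Prop where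
  nodup : W.Nodup
  sub : ∀ w ∈ W, w ∈ S
  chain : W.IsChain G.Adj
  head : W.head? = some v1
  last : W.getLast? = some v2
  conn : Conn G {x | x ∉ S}
  ht : t ∉ S
  cover : ∀ w ∈ S, ∀ x, x ∉ S → G.Adj w x → w ∈ W

/-- The ear `zs` is attached to the contour `W1 ++ p :: (M ++ q :: W2)` at `p` and `q`, covering
the vertices of `M`, which are not adjacent to any vertex outside `S` and `zs`. -/
structure EarStep (G : SimpleGraph V) (v1 v2 t : V) (S : Finset V) (W1 : List V) (p : V)
    (M : List V) (q : V) (W2 zs : List V) : Prop where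
  ne : zs ≠ []
  nodup : zs.Nodup
  notMem : ∀ z ∈ zs, z ∉ S
  ne_t : ∀ z ∈ zs, z ≠ t
  chain : zs.IsChain G.Adj
  up : ∀ z ∈ zs, ∃ r, r ∉ S ∧ r ∉ zs ∧ G.Adj z r
  adjp : ∀ z ∈ zs, zs.head? = some z → G.Adj z p
  adjq : ∀ z ∈ zs, zs.getLast? = some z → G.Adj z q
  onlyM : ∀ z ∈ zs, ∀ x ∈ S, G.Adj z x → (zs.head? = some z ∧ x = p) ∨
    (zs.getLast? = some z ∧ x = q) ∨ (zs = [z] ∧ x ∈ M)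
  induced : ∀ x ∈ zs, ∀ y ∈ zs, G.Adj x y →
      (∃ l₁ l₂, zs = l₁ ++ x :: y :: l₂) ∨ (∃ l₁ l₂, zs = l₁ ++ y :: x :: l₂)
  coverM : ∀ m ∈ M, ∀ x, x ∉ S → x ∉ zs → ¬ G.Adj m x
  contour : Contour G v1 v2 t (S ∪ zs.toFinset) (W1 ++ p :: (zs ++ q :: W2))

lemma conn_some {G : SimpleGraph V} {a b c : V} {B : Set V} (h : Conn G B) :
    Conn (starGraph G a b c) (some '' B) := by
  rintro _ ⟨u, hu, rfl⟩ _ ⟨v, hv, rfl⟩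
  have h' := h u hu v hv
  unfold LinkIn at h' ⊢
  induction h' with
  | refl => exact .refl
  | tail _ h ih => exact (ih h.2.1).tail ⟨by simpa using h.1, ⟨_, h.2.1, rfl⟩, ⟨_, h.2.2, rfl⟩⟩

/-- Nothing below an ear reaches the rest of the outside: otherwise the star graph would contain a
subdivision of `K₃,₃`. -/
lemma Contour.below {v1 v2 t : V} {S : Finset V} {W1 M W2 zs : List V} {p q : V}
    {A : Option V → Option V → Option V → ZMod 2} {O : Option V → Option V → ZMod 2}
    (hvk : VKdata (starGraph G v1 v2 t) A O)
    (hW : Contour G v1 v2 t S (W1 ++ p :: (M ++ q :: W2)))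
    (hzc : zs.IsChain G.Adj) (hzS : ∀ z ∈ zs, z ∉ S) (hzt : t ∉ zs)
    (hconn : Conn G {x | x ∉ S ∧ x ∉ zs})
    (hup : ∃ z ∈ zs, ∃ r, r ∉ S ∧ r ∉ zs ∧ G.Adj z r)
    (hp : ∃ z ∈ zs, G.Adj z p) (hq : ∃ z ∈ zs, G.Adj z q) :
    ∀ m ∈ M, ∀ x, x ∉ S → x ∉ zs → ¬ G.Adj m x := by
  intro m hm x hxS hxz hmx
  obtain ⟨hnd, hsub, hch, hhd, hls, -, ht, -⟩ := hW
  have hC1 : (W1 ++ [p]).IsChain G.Adj := (List.isChain_split.1 hch).1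
  have hC2' : (p :: (M ++ q :: W2)).IsChain G.Adj := (List.isChain_split.1 hch).2
  have hC2 : (q :: W2).IsChain G.Adj := by
    rw [← List.cons_append] at hC2'; exact (List.isChain_split.1 hC2').2
  have hC3 : (p :: (M ++ [q])).IsChain G.Adj := by
    rw [← List.cons_append] at hC2'; exact (List.isChain_split.1 hC2').1
  have hCM : M.IsChain G.Adj := by
    have := hC3.tail; simp only [List.tail_cons] at this
    exact (List.isChain_append.1 this).1
  have hMne : M ≠ [] := List.ne_nil_of_mem hm
  have hv1 : v1 ∈ W1 ++ [p] := by
    cases W1 with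
    | nil => simp at hhd; simp [hhd]
    | cons a l => simp at hhd; simp [hhd]
  have hv2 : v2 ∈ q :: W2 := by
    have : W1 ++ p :: (M ++ q :: W2) = (W1 ++ p :: M) ++ q :: W2 := by simp
    rw [this, List.getLast?_append_cons] at hls
    exact List.mem_of_getLast? hls
  have hadjpM : ∃ m ∈ M, G.Adj m p := by
    obtain ⟨a, l, rfl⟩ := List.exists_cons_of_ne_nil hMne
    refine ⟨a, by simp, ?_⟩
    simp only [List.cons_append, List.isChain_cons_cons] at hC3
    exact hC3.1.symm
  have hadjqM : ∃ m ∈ M, G.Adj m q := by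
    have h := hC3.tail
    simp only [List.tail_cons] at h
    rw [List.isChain_append] at h
    refine ⟨M.getLast hMne, List.getLast_mem _, h.2.2 _ ?_ q (by simp)⟩
    simp [List.getLast?_eq_getLast_of_ne_nil hMne]
  have hsW1 : ∀ y ∈ W1 ++ [p], y ∈ S := fun y hy => hsub y (by simp at hy ⊢; tauto)
  have hsM : ∀ y ∈ M, y ∈ S := fun y hy => hsub y (by simp at hy ⊢; tauto)
  have hsW2 : ∀ y ∈ q :: W2, y ∈ S := fun y hy => hsub y (by simp at hy ⊢; tauto)
  have hnd' : (W1 ++ [p] ++ (M ++ q :: W2)).Nodup := by simpa using hnd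
  rw [List.nodup_append'] at hnd'
  obtain ⟨-, hnd2, hd1⟩ := hnd'
  rw [List.nodup_append'] at hnd2
  have d12 : ∀ y ∈ W1 ++ [p], y ∉ M := fun y hy h => hd1 hy (by simp [h])
  have d13 : ∀ y ∈ W1 ++ [p], y ∉ q :: W2 := fun y hy h =>
    hd1 hy (List.mem_append.2 (Or.inr h))
  have d23 : ∀ y ∈ M, y ∉ q :: W2 := fun y hy h => hnd2.2.2 hy h
  have dis : ∀ X Y : Set V, (∀ y ∈ X, y ∉ Y) → Disjoint (some '' X) (some '' Y) := by
    intro X Y h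
    rw [Set.disjoint_left]
    rintro _ ⟨y, hy, rfl⟩ ⟨y', hy', h'⟩
    rw [Option.some.injEq] at h'; subst h'; exact h _ hy hy'
  have disn : ∀ X : Set V, Disjoint (some '' X) ({none} : Set (Option V)) := by
    intro X; rw [Set.disjoint_left]; rintro _ ⟨y, -, rfl⟩ h; simp at h
  refine hvk.no_K33 ![some '' {x | x ∈ zs}, some '' {x | x ∈ M}, {none}]
    ![some '' {x | x ∉ S ∧ x ∉ zs}, some '' {x | x ∈ W1 ++ [p]}, some '' {x | x ∈ q :: W2}]
    ?_ ?_ ?_ ?_ ?_ ?_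
  · intro i; fin_cases i
    · exact conn_some (conn_of_chain hzc)
    · exact conn_some (conn_of_chain hCM)
    · exact conn_singleton none
  · intro i; fin_cases i
    · exact conn_some hconn
    · exact conn_some (conn_of_chain hC1)
    · exact conn_some (conn_of_chain hC2)
  · have a1 : Disjoint (some '' {x | x ∈ zs}) (some '' {x | x ∈ M}) :=
      dis _ _ fun y hy h => hzS y hy (hsM y h)
    intro i j hij
    fin_cases i <;> fin_cases j <;> first | exact absurd rfl hij | skip
    · exact a1
    · exact disn _
    · exact a1.symm
    · exact disn _
    · exact (disn _).symm
    · exact (disn _).symm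
  · have a1 : Disjoint (some '' {x | x ∉ S ∧ x ∉ zs}) (some '' {x | x ∈ W1 ++ [p]}) :=
      dis _ _ fun y hy h => hy.1 (hsW1 y h)
    have a2 : Disjoint (some '' {x | x ∉ S ∧ x ∉ zs}) (some '' {x | x ∈ q :: W2}) :=
      dis _ _ fun y hy h => hy.1 (hsW2 y h)
    have a3 : Disjoint (some '' {x | x ∈ W1 ++ [p]}) (some '' {x | x ∈ q :: W2}) :=
      dis _ _ fun y hy h => d13 y hy h
    intro i j hij
    fin_cases i <;> fin_cases j <;> first | exact absurd rfl hij | skip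
    · exact a1
    · exact a2
    · exact a1.symm
    · exact a3
    · exact a2.symm
    · exact a3.symm
  · intro i j
    fin_cases i <;> fin_cases j
    · exact dis _ _ fun y hy h => h.2 hy
    · exact dis _ _ fun y hy h => hzS y hy (hsW1 y h)
    · exact dis _ _ fun y hy h => hzS y hy (hsW2 y h)
    · exact dis _ _ fun y hy h => h.1 (hsM y hy)
    · exact dis _ _ fun y hy h => d12 y h hy
    · exact dis _ _ fun y hy h => d23 y hy h
    · exact (disn _).symm
    · exact (disn _).symm
    · exact (disn _).symm
  · have mk : ∀ X Y : Set V, (∃ a ∈ X, ∃ b ∈ Y, G.Adj a b) →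
        ∃ b ∈ some '' X, ∃ c ∈ some '' Y, (starGraph G v1 v2 t).Adj b c := by
      rintro X Y ⟨a, ha, b, hb, hab⟩
      exact ⟨some a, ⟨a, ha, rfl⟩, some b, ⟨b, hb, rfl⟩, by simpa using hab⟩
    have mkn : ∀ Y : Set V, (∃ b ∈ Y, b = v1 ∨ b = v2 ∨ b = t) →
        ∃ b ∈ ({none} : Set (Option V)), ∃ c ∈ some '' Y, (starGraph G v1 v2 t).Adj b c := by
      rintro Y ⟨b, hb, hab⟩
      exact ⟨none, rfl, some b, ⟨b, hb, rfl⟩, by simpa using hab⟩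
    intro i j
    fin_cases i <;> fin_cases j
    · obtain ⟨z, hz, r, h1, h2, h3⟩ := hup; exact mk _ _ ⟨z, hz, r, ⟨h1, h2⟩, h3⟩
    · obtain ⟨z, hz, h⟩ := hp; exact mk _ _ ⟨z, hz, p, by simp, h⟩
    · obtain ⟨z, hz, h⟩ := hq; exact mk _ _ ⟨z, hz, q, by simp, h⟩
    · exact mk _ _ ⟨m, hm, x, ⟨hxS, hxz⟩, hmx⟩
    · obtain ⟨z, hz, h⟩ := hadjpM; exact mk _ _ ⟨z, hz, p, by simp, h⟩
    · obtain ⟨z, hz, h⟩ := hadjqM; exact mk _ _ ⟨z, hz, q, by simp, h⟩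
    · exact mkn _ ⟨t, ⟨ht, hzt⟩, by simp⟩
    · exact mkn _ ⟨v1, hv1, by simp⟩
    · exact mkn _ ⟨v2, hv2, by simp⟩

/-- Assembling an ear step from an ear whose ends are attached at `p` and `q`. -/
lemma earStep_mk {v1 v2 t : V} {S : Finset V} {W1 M W2 zs : List V} {p q : V}
    {A : Option V → Option V → Option V → ZMod 2} {O : Option V → Option V → ZMod 2}
    (hvk : VKdata (starGraph G v1 v2 t) A O)
    (hW : Contour G v1 v2 t S (W1 ++ p :: (M ++ q :: W2)))
    (ne : zs ≠ []) (nodup : zs.Nodup) (notMem : ∀ z ∈ zs, z ∉ S) (ne_t : ∀ z ∈ zs, z ≠ t)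
    (chain : zs.IsChain G.Adj) (hconn : Conn G {x | x ∉ S ∧ x ∉ zs})
    (up : ∀ z ∈ zs, ∃ r, r ∉ S ∧ r ∉ zs ∧ G.Adj z r)
    (adjp : ∀ z ∈ zs, zs.head? = some z → G.Adj z p)
    (adjq : ∀ z ∈ zs, zs.getLast? = some z → G.Adj z q)
    (onlyM : ∀ z ∈ zs, ∀ x ∈ S, G.Adj z x → (zs.head? = some z ∧ x = p) ∨
      (zs.getLast? = some z ∧ x = q) ∨ (zs = [z] ∧ x ∈ M))
    (induced : ∀ x ∈ zs, ∀ y ∈ zs, G.Adj x y →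
      (∃ l₁ l₂, zs = l₁ ++ x :: y :: l₂) ∨ (∃ l₁ l₂, zs = l₁ ++ y :: x :: l₂)) :
    EarStep G v1 v2 t S W1 p M q W2 zs := by
  have hzt : t ∉ zs := fun h => ne_t t h rfl
  have hP : ∃ z ∈ zs, G.Adj z p := by
    have h := List.head?_eq_some_head ne
    exact ⟨zs.head ne, List.head_mem _, adjp _ (List.head_mem _) h⟩
  have hQ : ∃ z ∈ zs, G.Adj z q := by
    have h := List.getLast?_eq_getLast_of_ne_nil ne
    exact ⟨zs.getLast ne, List.getLast_mem _, adjq _ (List.getLast_mem _) h⟩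
  have hup : ∃ z ∈ zs, ∃ r, r ∉ S ∧ r ∉ zs ∧ G.Adj z r :=
    ⟨zs.head ne, List.head_mem _, up _ (List.head_mem _)⟩
  have hM := hW.below hvk chain notMem hzt hconn hup hP hQ
  refine ⟨ne, nodup, notMem, ne_t, chain, up, adjp, adjq, onlyM, induced, hM, ?_⟩
  have hmem : ∀ w ∈ W1 ++ p :: (zs ++ q :: W2), w ∈ zs ∨ (w ∉ zs ∧ w ∈ W1 ++ p :: (M ++ q :: W2)) := by
    intro w hw
    by_cases h : w ∈ zs
    · exact Or.inl h
    · refine Or.inr ⟨h, ?_⟩; simp at hw ⊢; tauto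
  have hS := hW.sub
  have hnd := hW.nodup
  refine ⟨?_, ?_, ?_, ?_, ?_, ?_, ?_, ?_⟩
  · have h1 : (W1 ++ [p] ++ (M ++ q :: W2)).Nodup := by simpa using hnd
    have h2 : (W1 ++ [p] ++ (zs ++ q :: W2)).Nodup := by
      rw [List.nodup_append'] at h1
      obtain ⟨a, b, c⟩ := h1
      rw [List.nodup_append'] at b
      refine List.nodup_append'.2 ⟨a, List.nodup_append'.2 ⟨nodup, b.2.1, ?_⟩, ?_⟩
      · intro y hy hy2; exact notMem y hy (hS y (by simp at hy2 ⊢; tauto))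
      · intro y hy hy2
        rw [List.mem_append] at hy2
        rcases hy2 with h | h
        · exact notMem y h (hS y (by simp at hy ⊢; tauto))
        · exact c hy (List.mem_append.2 (Or.inr h))
    simpa using h2
  · intro w hw
    rcases hmem w hw with h | h
    · simp [h]
    · simp [hS w h.2]
  · have hch := hW.chain
    rw [List.isChain_split] at hch ⊢
    refine ⟨hch.1, ?_⟩
    have h2 := hch.2
    rw [← List.cons_append, List.isChain_split] at h2 ⊢
    refine ⟨?_, h2.2⟩
    rw [List.cons_append, List.isChain_cons]
    obtain ⟨z, l, rfl⟩ := List.exists_cons_of_ne_nil ne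
    refine ⟨?_, ?_⟩
    · intro y hy
      simp at hy; subst hy
      exact (adjp _ (by simp) (by simp)).symm
    · rw [List.isChain_append]
      refine ⟨chain, by simp, ?_⟩
      intro x hx y hy
      simp only [List.head?_cons, Option.mem_def, Option.some.injEq] at hy; subst hy
      exact adjq x (List.mem_of_mem_getLast? hx) hx
  · have := hW.head; cases W1 <;> simpa using this
  · have := hW.last
    have e1 : W1 ++ p :: (M ++ q :: W2) = (W1 ++ p :: M) ++ q :: W2 := by simp
    have e2 : W1 ++ p :: (zs ++ q :: W2) = (W1 ++ p :: zs) ++ q :: W2 := by simp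
    rw [e1, List.getLast?_append_cons] at this
    rw [e2, List.getLast?_append_cons, this]
  · convert hconn using 1
    ext x; simp
  · simp [hW.ht, hzt]
  · intro w hw x hx hwx
    simp only [Finset.mem_union, List.mem_toFinset, not_or] at hw hx
    rcases hw with hw | hw
    · have h := hW.cover w hw x hx.1 hwx
      have : w ∉ M := fun h => hM w h x hx.1 hx.2 hwx
      simp at h ⊢; tauto
    · simp [hw]

/-- As long as the outside has a vertex besides `t`, an ear can be added. -/
lemma Contour.step [Finite V] (h3 : ∀ T : Set V, T.ncard ≤ 2 → Conn G Tᶜ) {v1 v2 t : V}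
    {S : Finset V} {W : List V}
    {A : Option V → Option V → Option V → ZMod 2} {O : Option V → Option V → ZMod 2}
    (hvk : VKdata (starGraph G v1 v2 t) A O) (h12 : v1 ≠ v2)
    (hW : Contour G v1 v2 t S W) (hne : ∃ r, r ∉ S ∧ r ≠ t) :
    ∃ W1 p M q W2 zs, W = W1 ++ p :: (M ++ q :: W2) ∧ EarStep G v1 v2 t S W1 p M q W2 zs := by
  have hv1 : v1 ∈ S := hW.sub _ (List.mem_of_mem_head? hW.head)
  have hv2 : v2 ∈ S := hW.sub _ (List.mem_of_getLast? hW.last)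
  obtain ⟨zs, hz⟩ := exists_ear (G := G) h3 (S := (S : Set V)) (t := t)
    ⟨v1, hv1, v2, hv2, h12⟩ (by
      have := hW.conn; exact this) hW.ht hne
  have hconn : Conn G {x | x ∉ S ∧ x ∉ zs} := by
    have h := hz.conn
    have e : (S : Set V)ᶜ \ {z | z ∈ zs} = {x | x ∉ S ∧ x ∉ zs} := by ext; simp
    rwa [e] at h
  have notMem : ∀ z ∈ zs, z ∉ S := fun z h => hz.notMem z h
  have up : ∀ z ∈ zs, ∃ r, r ∉ S ∧ r ∉ zs ∧ G.Adj z r := fun z h => hz.up z h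
  rcases hz.attach with ⟨z, rfl, ha⟩ | ⟨hlen, a, ha, b, hb, hab, hadj, hind⟩
  · obtain ⟨a, ha, b, hb, hab, ⟨x, hx, hxa⟩, ⟨y, hy, hyb⟩⟩ := ha
    rw [Set.mem_singleton_iff] at hx hy
    rw [hx] at hxa
    rw [hy] at hyb
    clear hx hy x y
    rename' z => x
    have hzS : x ∉ S := notMem x (by simp)
    have haW := hW.cover a ha x hzS hxa.symm
    have hbW := hW.cover b hb x hzS hyb.symm
    obtain ⟨W1, p, L, hL, hp, hfirst⟩ := exists_first (φ := fun w => G.Adj x w) ⟨a, haW, hxa⟩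
    have : ∃ w ∈ L, G.Adj x w := by
      by_contra hcon; push Not at hcon
      have : ∀ w ∈ W, G.Adj x w → w = p := by
        intro w hw hxw
        rw [hL, List.mem_append, List.mem_cons] at hw
        rcases hw with h | h | h
        · exact absurd hxw (hfirst w h)
        · exact h
        · exact absurd hxw (hcon w h)
      exact hab ((this a haW hxa).trans (this b hbW hyb).symm)
    obtain ⟨M, q, W2, hL2, hq, hlast⟩ := exists_last (φ := fun w => G.Adj x w) this
    refine ⟨W1, p, M, q, W2, [x], by rw [hL, hL2], ?_⟩
    rw [hL, hL2] at hW
    apply earStep_mk hvk hW (by simp) (by simp) notMem hz.ne_t (by simp) hconn up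
    · intro z hz _; rw [List.mem_singleton] at hz; subst hz; exact hp
    · intro z hz _; rw [List.mem_singleton] at hz; subst hz; exact hq
    · intro z hz w hw hzw
      rw [List.mem_singleton] at hz; subst hz
      have := hW.cover w hw z hzS hzw.symm
      simp only [List.mem_append, List.mem_cons] at this
      rcases this with h | h | h | h | h
      · exact absurd hzw (hfirst w h)
      · left; exact ⟨rfl, h⟩
      · right; right; exact ⟨rfl, h⟩
      · right; left; exact ⟨rfl, h⟩
      · exact absurd hzw (hlast w h)
    · intro u hu v hv huv
      rw [List.mem_singleton] at hu hv; subst hu; subst hv; exact absurd huv (G.loopless.irrefl _)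
  · have hzne : zs ≠ [] := by rintro rfl; simp at hlen
    have hh := List.head?_eq_some_head hzne
    have hl := List.getLast?_eq_getLast_of_ne_nil hzne
    have hha : G.Adj (zs.head hzne) a := (hadj _ (List.head_mem _) a ha).2 (Or.inl ⟨hh, rfl⟩)
    have hlb : G.Adj (zs.getLast hzne) b := (hadj _ (List.getLast_mem _) b hb).2 (Or.inr ⟨hl, rfl⟩)
    have haW := hW.cover a ha _ (notMem _ (List.head_mem hzne)) hha.symm
    have hbW := hW.cover b hb _ (notMem _ (List.getLast_mem hzne)) hlb.symm
    obtain ⟨L1, L2, hL⟩ := List.append_of_mem haW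
    rw [hL, List.mem_append, List.mem_cons] at hbW
    rcases hbW with h | h | h
    · -- `b` precedes `a`: reverse the ear
      obtain ⟨W1, M, rfl⟩ := List.append_of_mem h
      refine ⟨W1, b, M, a, L2, zs.reverse, by rw [hL]; simp, ?_⟩
      have e : W = W1 ++ b :: (M ++ a :: L2) := by rw [hL]; simp
      rw [e] at hW
      apply earStep_mk hvk hW (by simpa using hzne) (by simpa using hz.nodup)
        (by simpa using notMem) (by simpa using hz.ne_t)
        (by
          rw [List.isChain_reverse]
          exact hz.chain.imp fun _ _ h => h.symm)
        (by simpa using hconn) (by simpa using up)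
      · intro z hz hz2
        rw [List.mem_reverse] at hz; rw [List.head?_reverse] at hz2
        exact (hadj z hz b hb).2 (Or.inr ⟨hz2, rfl⟩)
      · intro z hz hz2
        rw [List.mem_reverse] at hz; rw [List.getLast?_reverse] at hz2
        exact (hadj z hz a ha).2 (Or.inl ⟨hz2, rfl⟩)
      · intro z hz x hx hzx
        rw [List.mem_reverse] at hz; rw [List.head?_reverse, List.getLast?_reverse]
        rcases (hadj z hz x hx).1 hzx with h | h
        · exact Or.inr (Or.inl h)
        · exact Or.inl h
      · intro x hx y hy hxy
        rw [List.mem_reverse] at hx hy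
        rcases hind x hx y hy hxy with ⟨l₁, l₂, h⟩ | ⟨l₁, l₂, h⟩
        · right; exact ⟨l₂.reverse, l₁.reverse, by rw [h]; simp⟩
        · left; exact ⟨l₂.reverse, l₁.reverse, by rw [h]; simp⟩
    · exact absurd h.symm hab
    · obtain ⟨M, W2, rfl⟩ := List.append_of_mem h
      refine ⟨L1, a, M, b, W2, zs, hL, ?_⟩
      rw [hL] at hW
      apply earStep_mk hvk hW hzne hz.nodup notMem hz.ne_t hz.chain hconn up
      · intro z hz hz2; exact (hadj z hz a ha).2 (Or.inl ⟨hz2, rfl⟩)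
      · intro z hz hz2; exact (hadj z hz b hb).2 (Or.inr ⟨hz2, rfl⟩)
      · intro z hz x hx hzx
        rcases (hadj z hz x hx).1 hzx with h | h
        · exact Or.inl h
        · exact Or.inr (Or.inl h)
      · exact hind

end Contours

/-! ### The order of construction and the number of bends -/

section CompDef
variable {V : Type*} [DecidableEq V] [Fintype V] {G : SimpleGraph V}

/-- The edges leaving the vertices of `W`, in order, when `f w` lists the upper neighbours of `w`
from left to right. -/
def outL (W : List V) (f : V → List V) : List (V × V) := W.flatMap fun w => (f w).map fun x => (w, x)

@[simp] lemma outL_nil (f : V → List V) : outL [] f = [] := rfl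

@[simp] lemma outL_cons (w : V) (W : List V) (f : V → List V) :
    outL (w :: W) f = ((f w).map fun x => (w, x)) ++ outL W f := rfl

@[simp] lemma outL_append (W W' : List V) (f : V → List V) :
    outL (W ++ W') f = outL W f ++ outL W' f := by simp [outL]

lemma outL_congr {W : List V} {f f' : V → List V} (h : ∀ w ∈ W, f w = f' w) :
    outL W f = outL W f' := by
  induction W with
  | nil => rfl
  | cons a W ih =>
    rw [outL_cons, outL_cons, h a (by simp), ih fun w hw => h w (by simp [hw])]

/-- `Comp G τ S Λ c`: starting from a drawing of the graph induced by `S` with the edges `Λ`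
(pairs of a placed and a not yet placed endpoint) sticking out upwards in this order from left to
right, the remaining vertices can be added one after the other from bottom to top, with
`c` further bends.

* `single` adds a vertex with 2, 3 or 4 lower neighbours, whose edges are consecutive in `Λ`; this
  takes 1, 2 or 4 bends;
* `chain` adds a path between two consecutive edges of `Λ`, which needs no bend;
* `five` adds the last vertex if it has degree 5.

The number `τ u w` prescribes the slope of an edge `uw` which is the only edge leaving `u` upwards. -/
inductive Comp (G : SimpleGraph V) (τ : V → V → ℤ) : Finset V → List (V × V) → ℕ → Prop
  | done : Comp G τ Finset.univ [] 0
  | single (S : Finset V) (A C : List (V × V)) (v : V) (us ts : List V) (k c : ℕ)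
      (hv : v ∉ S) (hus : us.Nodup) (hmem : ∀ x, x ∈ us ↔ x ∈ S ∧ G.Adj v x)
      (hk : us.length = 2 ∧ k = 1 ∨ us.length = 3 ∧ k = 2 ∨ us.length = 4 ∧ k = 4)
      (hτ : ∀ u ∈ us, τ u v = 0) (hts : ts.Nodup)
      (htm : ∀ x ∈ ts, G.Adj v x ∧ x ∉ insert v S) (htl : ts.length ≤ 3)
      (hne : ts ≠ [] ∨ A = [] ∧ C = [])
      (h : Comp G τ (insert v S) (A ++ outL [v] (fun _ => ts) ++ C) c) :
      Comp G τ S (A ++ us.map (fun u => (u, v)) ++ C) (c + k)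
  | chain (S : Finset V) (A C : List (V × V)) (zs : List V) (u1 u2 z1 zr : V) (ts : V → List V)
      (c : ℕ) (hlen : 2 ≤ zs.length) (hnd : zs.Nodup) (hzS : ∀ z ∈ zs, z ∉ S)
      (hz1 : zs.head? = some z1) (hzr : zs.getLast? = some zr) (hu1 : u1 ∈ S) (hu2 : u2 ∈ S)
      (hadj : ∀ z ∈ zs, ∀ x ∈ S, G.Adj z x ↔ (z = z1 ∧ x = u1) ∨ (z = zr ∧ x = u2))
      (hch : zs.IsChain G.Adj)
      (hind : ∀ x ∈ zs, ∀ y ∈ zs, G.Adj x y →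
        (∃ l₁ l₂, zs = l₁ ++ x :: y :: l₂) ∨ (∃ l₁ l₂, zs = l₁ ++ y :: x :: l₂))
      (hts : ∀ z ∈ zs, (ts z).Nodup)
      (htm : ∀ z ∈ zs, ∀ x ∈ ts z, G.Adj z x ∧ x ∉ S ∪ zs.toFinset)
      (htl : ∀ z ∈ zs, ts z ≠ [] ∧ (ts z).length ≤ 3)
      (h : Comp G τ (S ∪ zs.toFinset) (A ++ outL zs ts ++ C) c) :
      Comp G τ S (A ++ [(u1, z1), (u2, zr)] ++ C) c
  | five (S : Finset V) (t u1 u2 u3 u4 u5 : V) (ht : t ∉ S) (hS : insert t S = Finset.univ)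
      (hus : [u1, u2, u3, u4, u5].Nodup)
      (hmem : ∀ x, x ∈ [u1, u2, u3, u4, u5] ↔ x ∈ S ∧ G.Adj t x)
      (h1 : τ u1 t = 0) (h2 : τ u2 t = 1) (h3 : τ u3 t = 0) (h4 : τ u4 t = -1) (h5 : τ u5 t = 0) :
      Comp G τ S [(u1, t), (u2, t), (u3, t), (u4, t), (u5, t)] 5

/-- The weight of a contour vertex in the bend count, where `l` lists its upper neighbours: their
number, plus one if there are any. -/
def gL (l : List V) : ℕ := l.length + if l = [] then 0 else 1

/-- `f w` enumerates the neighbours outside `S` of the vertices `w` of `W`. -/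
structure IsOut (G : SimpleGraph V) (S : Finset V) (W : List V) (f : V → List V) : Prop where
  mem : ∀ w ∈ W, ∀ x, x ∈ f w ↔ G.Adj w x ∧ x ∉ S
  nodup : ∀ w ∈ W, (f w).Nodup

/-- The upper neighbours before an ear with end vertices `z1`, `zr` is added, in terms of those
after it is added. -/
def backF (G : SimpleGraph V) [DecidableRel G.Adj] (p q : V) (M : List V) (z1 zr : V)
    (f' : V → List V) : V → List V := fun w =>
  if w = p then f' p ++ [z1] else if w = q then zr :: f' q else
    if w ∈ M then (if z1 = zr ∧ G.Adj z1 w then [z1] else []) else f' w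

lemma length_le_of_adj (hd : MaxDegLE G 5) {v : V} {L : List V} (hL : L.Nodup)
    (h : ∀ x ∈ L, G.Adj v x) : L.length ≤ 5 := by
  have h1 : (L.toFinset : Set V) ⊆ G.neighborSet v := by
    intro x hx; simp at hx; exact h x hx
  have h2 := Set.ncard_le_ncard h1 (Set.toFinite _)
  rw [Set.ncard_coe_finset, List.toFinset_card_of_nodup hL] at h2
  exact h2.trans (hd v)

variable [DecidableRel G.Adj] {v1 v2 t : V} {S : Finset V} {W1 M W2 zs : List V} {p q : V}

lemma EarStep.notMem_of (hW : Contour G v1 v2 t S (W1 ++ p :: (M ++ q :: W2))) :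
    p ≠ q ∧ p ∉ M ∧ q ∉ M ∧ (∀ w ∈ W1, w ≠ p ∧ w ≠ q ∧ w ∉ M) ∧
      ∀ w ∈ W2, w ≠ p ∧ w ≠ q ∧ w ∉ M := by
  have h := hW.nodup
  simp only [List.nodup_append', List.nodup_cons, List.mem_append, List.mem_cons,
    List.disjoint_cons_right, List.disjoint_append_right, not_or] at h
  obtain ⟨-, ⟨⟨h1, h2, h3⟩, h4, h5, h6, h7⟩, h8, h9, h10, h11⟩ := h
  refine ⟨h2, h1, h6, fun w hw => ⟨?_, ?_, ?_⟩, fun w hw => ⟨?_, ?_, ?_⟩⟩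
  · rintro rfl; exact h8 hw
  · rintro rfl; exact h10 hw
  · intro h; exact h9 hw h
  · rintro rfl; exact h3 hw
  · rintro rfl; exact h5.1 hw
  · intro h; exact h7 h hw

lemma outL_backF (hW : Contour G v1 v2 t S (W1 ++ p :: (M ++ q :: W2))) (f' : V → List V)
    (z1 zr : V) :
    outL (W1 ++ p :: (M ++ q :: W2)) (backF G p q M z1 zr f') =
      outL (W1 ++ [p]) f' ++ ((p, z1) :: (outL M (backF G p q M z1 zr f') ++ [(q, zr)]))
        ++ outL (q :: W2) f' := by
  obtain ⟨h1, h2, h3, h4, h5⟩ := EarStep.notMem_of hW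
  have e1 : outL W1 (backF G p q M z1 zr f') = outL W1 f' := outL_congr fun w hw => by
    obtain ⟨a, b, c⟩ := h4 w hw; simp [backF, a, b, c]
  have e2 : outL W2 (backF G p q M z1 zr f') = outL W2 f' := outL_congr fun w hw => by
    obtain ⟨a, b, c⟩ := h5 w hw; simp [backF, a, b, c]
  have e3 : backF G p q M z1 zr f' p = f' p ++ [z1] := by simp [backF]
  have e4 : backF G p q M z1 zr f' q = zr :: f' q := by simp [backF, h1.symm]
  simp [e1, e2, e3, e4]

lemma sum_backF (hW : Contour G v1 v2 t S (W1 ++ p :: (M ++ q :: W2))) (f' : V → List V)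
    (z1 zr : V) (zs : List V) :
    ((W1 ++ p :: (zs ++ q :: W2)).map fun w => gL (f' w)).sum + 2
      + (M.map fun w => gL (backF G p q M z1 zr f' w)).sum ≤
    ((W1 ++ p :: (M ++ q :: W2)).map fun w => gL (backF G p q M z1 zr f' w)).sum
      + (zs.map fun w => gL (f' w)).sum := by
  obtain ⟨h1, h2, h3, h4, h5⟩ := EarStep.notMem_of hW
  have e1 : (W1.map fun w => gL (backF G p q M z1 zr f' w)) = W1.map fun w => gL (f' w) :=
    List.map_congr_left fun w hw => by
      obtain ⟨a, b, c⟩ := h4 w hw; simp [backF, a, b, c]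
  have e2 : (W2.map fun w => gL (backF G p q M z1 zr f' w)) = W2.map fun w => gL (f' w) :=
    List.map_congr_left fun w hw => by
      obtain ⟨a, b, c⟩ := h5 w hw; simp [backF, a, b, c]
  have e3 : backF G p q M z1 zr f' p = f' p ++ [z1] := by simp [backF]
  have e4 : backF G p q M z1 zr f' q = zr :: f' q := by simp [backF, h1.symm]
  have g3 : gL (f' p) + 1 ≤ gL (f' p ++ [z1]) := by
    unfold gL; split_ifs <;> simp_all
  have g4 : gL (f' q) + 1 ≤ gL (zr :: f' q) := by
    unfold gL; split_ifs <;> simp_all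
  simp only [List.map_append, List.map_cons, List.sum_append, List.sum_cons, e1, e2, e3, e4]
  omega

lemma isOut_backF (hW : Contour G v1 v2 t S (W1 ++ p :: (M ++ q :: W2)))
    (h : EarStep G v1 v2 t S W1 p M q W2 zs) {f' : V → List V}
    (hf : IsOut G (S ∪ zs.toFinset) (W1 ++ p :: (zs ++ q :: W2)) f') {z1 zr : V}
    (hz1 : zs.head? = some z1) (hzr : zs.getLast? = some zr)
    (h1r : z1 = zr → zs = [z1]) :
    IsOut G S (W1 ++ p :: (M ++ q :: W2)) (backF G p q M z1 zr f') := by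
  obtain ⟨h1, h2, h3, h4, h5⟩ := EarStep.notMem_of hW
  have e3 : backF G p q M z1 zr f' p = f' p ++ [z1] := by simp [backF]
  have e4 : backF G p q M z1 zr f' q = zr :: f' q := by simp [backF, h1.symm]
  have hS := hW.sub
  have hz1m := List.mem_of_mem_head? hz1
  have hzrm := List.mem_of_getLast? hzr
  have hp1 := h.adjp z1 hz1m hz1
  have hqr := h.adjq zr hzrm hzr
  -- vertices of the contour outside `p`, `M`, `q` are not adjacent to the ear
  have out : ∀ w ∈ S, w ≠ p → w ≠ q → w ∉ M → ∀ z ∈ zs, ¬ G.Adj w z := by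
    intro w hw a b c z hz hwz
    rcases h.onlyM z hz w hw hwz.symm with h | h | h
    · exact a h.2
    · exact b h.2
    · exact c h.2
  have gen : ∀ w ∈ S, w ≠ p → w ≠ q → w ∉ M → w ∈ W1 ++ p :: (zs ++ q :: W2) → ∀ x,
      x ∈ f' w ↔ G.Adj w x ∧ x ∉ S := by
    intro w hwS a b c hw x
    rw [hf.mem w hw x]
    have := out w hwS a b c
    constructor
    · rintro ⟨h1, h2⟩; exact ⟨h1, fun h => h2 (by simp [h])⟩
    · rintro ⟨h1, h2⟩
      refine ⟨h1, ?_⟩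
      simp only [Finset.mem_union, List.mem_toFinset, not_or]
      exact ⟨h2, fun h => this x h h1⟩
  have hpS : p ∈ S := hS p (by simp)
  have hqS : q ∈ S := hS q (by simp)
  have hpm : ∀ x, x ∈ f' p ++ [z1] ↔ G.Adj p x ∧ x ∉ S := by
    intro x
    rw [List.mem_append, List.mem_singleton, hf.mem p (by simp) x]
    simp only [Finset.mem_union, List.mem_toFinset, not_or]
    constructor
    · rintro (⟨a, b, -⟩ | rfl)
      · exact ⟨a, b⟩
      · exact ⟨hp1.symm, h.notMem _ hz1m⟩
    · rintro ⟨a, b⟩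
      by_cases hx : x ∈ zs
      · right
        rcases h.onlyM x hx p hpS a.symm with h | h | h
        · exact Option.some.inj (h.1.symm.trans hz1)
        · exact absurd h.2 h1
        · exact absurd h.2 h2
      · exact Or.inl ⟨a, b, hx⟩
  have hqm : ∀ x, x ∈ zr :: f' q ↔ G.Adj q x ∧ x ∉ S := by
    intro x
    rw [List.mem_cons, hf.mem q (by simp) x]
    simp only [Finset.mem_union, List.mem_toFinset, not_or]
    constructor
    · rintro (rfl | ⟨a, b, -⟩)
      · exact ⟨hqr.symm, h.notMem _ hzrm⟩
      · exact ⟨a, b⟩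
    · rintro ⟨a, b⟩
      by_cases hx : x ∈ zs
      · left
        rcases h.onlyM x hx q hqS a.symm with h | h | h
        · exact absurd h.2.symm h1
        · exact Option.some.inj (h.1.symm.trans hzr)
        · exact absurd h.2 h3
      · exact Or.inr ⟨a, b, hx⟩
  constructor
  · intro w hw x
    by_cases hwp : w = p
    · subst hwp; rw [e3]; exact hpm x
    by_cases hwq : w = q
    · subst hwq; rw [e4]; exact hqm x
    by_cases hwM : w ∈ M
    · simp only [backF, hwp, hwq, hwM, if_true, if_false]
      split_ifs with hh
      · rw [List.mem_singleton]
        constructor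
        · rintro rfl; exact ⟨hh.2.symm, h.notMem _ hz1m⟩
        · rintro ⟨a, b⟩
          by_contra hx
          have : x ∉ zs := by rw [h1r hh.1]; simpa using hx
          exact h.coverM w hwM x b this a
      · simp only [List.not_mem_nil, false_iff, not_and]
        intro a b
        by_cases hx : x ∈ zs
        · rcases h.onlyM x hx w (hS w hw) a.symm with h' | h' | h'
          · exact hwp h'.2
          · exact hwq h'.2
          · have hz := h'.1
            rw [hz] at hz1 hzr
            simp at hz1 hzr
            apply hh
            rw [← hz1, ← hzr]; exact ⟨rfl, a.symm⟩
        · exact h.coverM w hwM x b hx a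
    · simp only [backF, hwp, hwq, hwM, if_false]
      refine gen w (hS w hw) hwp hwq hwM ?_ x
      simp at hw ⊢; tauto
  · intro w hw
    by_cases hwp : w = p
    · subst hwp; rw [e3, List.nodup_append']
      refine ⟨hf.nodup w (by simp), by simp, ?_⟩
      rw [List.disjoint_singleton]
      intro hx
      have := ((hf.mem w (by simp) z1).1 hx).2
      exact this (by simp [hz1m])
    by_cases hwq : w = q
    · subst hwq; rw [e4, List.nodup_cons]
      refine ⟨fun hx => ?_, hf.nodup w (by simp)⟩
      have := ((hf.mem w (by simp) zr).1 hx).2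
      exact this (by simp [hzrm])
    by_cases hwM : w ∈ M
    · simp only [backF, hwp, hwq, hwM, if_true, if_false]
      split_ifs <;> simp
    · simp only [backF, hwp, hwq, hwM, if_false]
      apply hf.nodup; simp at hw ⊢; tauto

/-- A vertex of an ear has between one and three upper neighbours. -/
lemma EarStep.up_le (hd : MaxDegLE G 5)
    (h : EarStep G v1 v2 t S W1 p M q W2 zs) {f' : V → List V}
    (hf : IsOut G (S ∪ zs.toFinset) (W1 ++ p :: (zs ++ q :: W2)) f') {z : V} (hz : z ∈ zs) :
    f' z ≠ [] ∧ (f' z).length ≤ 3 := by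
  have hzW : z ∈ W1 ++ p :: (zs ++ q :: W2) := by simp [hz]
  constructor
  · obtain ⟨r, h1, h2, h3⟩ := h.up z hz
    have := (hf.mem z hzW r).2 ⟨h3, by simp [h1, h2]⟩
    exact List.ne_nil_of_mem this
  · obtain ⟨l1, l2, e⟩ := List.append_of_mem hz
    obtain ⟨L1, a, hL1⟩ : ∃ L1 a, W1 ++ p :: l1 = L1 ++ [a] :=
      ⟨(W1 ++ p :: l1).dropLast, (W1 ++ p :: l1).getLast (by simp),
        (List.dropLast_append_getLast (by simp)).symm⟩
    obtain ⟨b, L2, hL2⟩ : ∃ b L2, l2 ++ q :: W2 = b :: L2 :=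
      List.exists_cons_of_ne_nil (by simp)
    have e2 : W1 ++ p :: (zs ++ q :: W2) = L1 ++ a :: z :: b :: L2 := by
      have : W1 ++ p :: (zs ++ q :: W2) = (W1 ++ p :: l1) ++ z :: (l2 ++ q :: W2) := by
        rw [e]; simp
      rw [this, hL1, hL2]; simp
    have hnd := h.contour.nodup
    have hch := h.contour.chain
    have hsub := h.contour.sub
    rw [e2] at hnd hch hsub
    have haz : G.Adj a z := by
      rw [List.isChain_split] at hch; exact (List.isChain_cons_cons.1 hch.2).1
    have hzb : G.Adj z b := by
      rw [List.isChain_split] at hch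
      exact (List.isChain_cons_cons.1 (List.isChain_cons_cons.1 hch.2).2).1
    have hab : a ≠ b := by
      rw [List.nodup_append'] at hnd
      have := hnd.2.1
      simp at this; tauto
    have ha := hsub a (by simp)
    have hb := hsub b (by simp)
    have := length_le_of_adj hd (v := z) (L := a :: b :: f' z) (by
      rw [List.nodup_cons, List.nodup_cons]
      refine ⟨?_, ?_, hf.nodup z hzW⟩
      · rw [List.mem_cons, not_or]
        exact ⟨hab, fun hx => ((hf.mem z hzW a).1 hx).2 ha⟩
      · exact fun hx => ((hf.mem z hzW b).1 hx).2 hb) (by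
      intro x hx
      simp only [List.mem_cons] at hx
      rcases hx with rfl | rfl | hx
      · exact haz.symm
      · exact hzb
      · exact ((hf.mem z hzW x).1 hx).1)
    simp only [List.length_cons] at this
    omega

lemma sum_gL_le {l : List V} {f : V → List V} (h : ∀ z ∈ l, (f z).length ≤ 3) :
    (l.map fun w => gL (f w)).sum ≤ 4 * l.length := by
  classical
  induction l with
  | nil => simp
  | cons a l ih =>
    have h1 := h a (by simp)
    have h2 := ih fun z hz => h z (by simp [hz])
    have : gL (f a) ≤ 4 := by unfold gL; split_ifs <;> omega
    simp only [List.map_cons, List.sum_cons, List.length_cons]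
    omega

/-- Adding a path saves two units of the bound. -/
lemma EarStep.back_chain (hd : MaxDegLE G 5)
    (hW : Contour G v1 v2 t S (W1 ++ p :: (M ++ q :: W2)))
    (h : EarStep G v1 v2 t S W1 p M q W2 zs) (hlen : 2 ≤ zs.length) {f' : V → List V}
    (hf : IsOut G (S ∪ zs.toFinset) (W1 ++ p :: (zs ++ q :: W2)) f') {τ : V → V → ℤ} {c : ℕ}
    (hc : Comp G τ (S ∪ zs.toFinset) (outL (W1 ++ p :: (zs ++ q :: W2)) f') c)
    (hb : 2 * c + 4 * (S ∪ zs.toFinset).card + 4 ≤ 4 * Fintype.card V +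
      ((W1 ++ p :: (zs ++ q :: W2)).map fun w => gL (f' w)).sum) :
    ∃ f, IsOut G S (W1 ++ p :: (M ++ q :: W2)) f ∧
      Comp G τ S (outL (W1 ++ p :: (M ++ q :: W2)) f) c ∧
      2 * c + 2 + 4 * S.card + 4 ≤ 4 * Fintype.card V +
        ((W1 ++ p :: (M ++ q :: W2)).map fun w => gL (f w)).sum := by
  obtain ⟨z1, hz1⟩ : ∃ z, zs.head? = some z := ⟨_, List.head?_eq_some_head h.ne⟩
  obtain ⟨zr, hzr⟩ : ∃ z, zs.getLast? = some z := ⟨_, List.getLast?_eq_getLast_of_ne_nil h.ne⟩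
  have hne : z1 ≠ zr := by
    rintro rfl
    obtain ⟨a, l, rfl⟩ := List.exists_cons_of_ne_nil h.ne
    simp at hz1; subst hz1
    cases l with
    | nil => simp at hlen
    | cons b l =>
      rw [List.getLast?_cons_cons] at hzr
      have := List.mem_of_getLast? hzr
      have hn := h.nodup
      rw [List.nodup_cons] at hn; exact hn.1 this
  have hz1m := List.mem_of_mem_head? hz1
  have hzrm := List.mem_of_getLast? hzr
  have hpS : p ∈ S := hW.sub p (by simp)
  have hqS : q ∈ S := hW.sub q (by simp)
  have hM0 : outL M (backF G p q M z1 zr f') = [] := by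
    obtain ⟨h1, h2, h3, h4, h5⟩ := EarStep.notMem_of hW
    rw [outL_congr (f' := fun _ => [])]
    · simp [outL]
    · intro w hw
      have hwp : w ≠ p := by rintro rfl; exact h2 hw
      have hwq : w ≠ q := by rintro rfl; exact h3 hw
      simp [backF, hw, hwp, hwq, hne]
  refine ⟨backF G p q M z1 zr f', isOut_backF hW h hf hz1 hzr (fun h => absurd h hne), ?_, ?_⟩
  · rw [outL_backF hW, hM0]
    have := Comp.chain (G := G) (τ := τ) S (outL (W1 ++ [p]) f') (outL (q :: W2) f') zs p q z1 zr f' c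
      hlen h.nodup h.notMem hz1 hzr hpS hqS ?_ h.chain h.induced ?_ ?_ ?_ ?_
    · simpa using this
    · intro z hz x hx
      constructor
      · intro hzx
        rcases h.onlyM z hz x hx hzx with h | h | h
        · left; exact ⟨Option.some.inj (h.1.symm.trans hz1), h.2⟩
        · right; exact ⟨Option.some.inj (h.1.symm.trans hzr), h.2⟩
        · rw [h.1] at hlen; simp at hlen
      · rintro (⟨rfl, rfl⟩ | ⟨rfl, rfl⟩)
        · exact h.adjp _ hz hz1
        · exact h.adjq _ hz hzr
    · intro z hz; exact hf.nodup z (by simp [hz])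
    · intro z hz x hx; exact (hf.mem z (by simp [hz]) x).1 hx
    · intro z hz; exact h.up_le hd hf hz
    · simpa using hc
  · have hs := sum_backF hW f' z1 zr zs
    have hz := sum_gL_le (l := zs) (f := f') fun z hz => (h.up_le hd hf hz).2
    have hcard : (S ∪ zs.toFinset).card = S.card + zs.length := by
      rw [Finset.card_union_of_disjoint, List.toFinset_card_of_nodup h.nodup]
      rw [Finset.disjoint_left]
      intro a ha hb
      exact h.notMem a (by simpa using hb) ha
    omega

/-- Adding a single vertex preserves the bound: its `k` bends and its own weight are paid for by the
weights of its lower neighbours. -/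
lemma EarStep.back_single (hd : MaxDegLE G 5) {z : V}
    (hW : Contour G v1 v2 t S (W1 ++ p :: (M ++ q :: W2)))
    (h : EarStep G v1 v2 t S W1 p M q W2 [z]) {f' : V → List V}
    (hf : IsOut G (S ∪ [z].toFinset) (W1 ++ p :: ([z] ++ q :: W2)) f') {τ : V → V → ℤ}
    (hτ : ∀ u w, w ≠ t → τ u w = 0) {c : ℕ}
    (hc : Comp G τ (S ∪ [z].toFinset) (outL (W1 ++ p :: ([z] ++ q :: W2)) f') c)
    (hb : 2 * c + 4 * (S ∪ [z].toFinset).card + 4 ≤ 4 * Fintype.card V +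
      ((W1 ++ p :: ([z] ++ q :: W2)).map fun w => gL (f' w)).sum) :
    IsOut G S (W1 ++ p :: (M ++ q :: W2)) (backF G p q M z z f') ∧
    ∃ k, 1 ≤ k ∧
      Comp G τ S (outL (W1 ++ p :: (M ++ q :: W2)) (backF G p q M z z f')) (c + k) ∧
      2 * (c + k) + 4 * S.card + 4 ≤ 4 * Fintype.card V +
        ((W1 ++ p :: (M ++ q :: W2)).map fun w => gL (backF G p q M z z f' w)).sum := by
  refine ⟨isOut_backF hW h hf rfl rfl (fun _ => rfl), ?_⟩
  obtain ⟨h1, h2, h3, h4, h5⟩ := EarStep.notMem_of hW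
  have hzS : z ∉ S := h.notMem z (by simp)
  have hSe : S ∪ [z].toFinset = insert z S := by ext; simp
  have hcard : (S ∪ [z].toFinset).card = S.card + 1 := by
    rw [hSe, Finset.card_insert_of_notMem hzS]
  have hzW : z ∈ W1 ++ p :: ([z] ++ q :: W2) := by simp
  set us := p :: (M.filter (fun w => G.Adj z w) ++ [q]) with hus
  have hbM : ∀ w ∈ M, backF G p q M z z f' w = if G.Adj z w then [z] else [] := by
    intro w hw
    have hwp : w ≠ p := by rintro rfl; exact h2 hw
    have hwq : w ≠ q := by rintro rfl; exact h3 hw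
    simp [backF, hw, hwp, hwq]
  have hMo : outL M (backF G p q M z z f') =
      (M.filter (fun w => G.Adj z w)).map (fun u => (u, z)) := by
    rw [outL_congr hbM]
    clear_value us
    clear hW h h2 h3 h4 h5 hf hc hb hus hbM hzW
    induction M with
    | nil => rfl
    | cons a M ih =>
      rw [outL_cons, ih, List.filter_cons]
      by_cases ha : G.Adj z a <;> simp [ha]
  have hMs : (M.map fun w => gL (backF G p q M z z f' w)).sum =
      2 * (M.filter (fun w => G.Adj z w)).length := by
    rw [List.map_congr_left (g := fun w => if G.Adj z w then 2 else 0)]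
    · clear_value us
      clear hW h h2 h3 h4 h5 hf hc hb hus hbM hzW hMo
      induction M with
      | nil => rfl
      | cons a M ih =>
        rw [List.map_cons, List.sum_cons, ih, List.filter_cons]
        by_cases ha : G.Adj z a <;> simp [ha]; ring
    · intro w hw
      simp only [hbM w hw]
      split_ifs <;> simp [gL]
  have husmem : ∀ x, x ∈ us ↔ x ∈ S ∧ G.Adj z x := by
    intro x
    have hS := hW.sub
    simp only [hus, List.mem_cons, List.mem_append, List.mem_filter, decide_eq_true_eq,
      List.not_mem_nil, or_false]
    constructor
    · rintro (rfl | ⟨hx, hx2⟩ | rfl)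
      · exact ⟨hS _ (by simp), h.adjp z (by simp) rfl⟩
      · exact ⟨hS _ (by simp [hx]), hx2⟩
      · exact ⟨hS _ (by simp), h.adjq z (by simp) rfl⟩
    · rintro ⟨hx, hx2⟩
      rcases h.onlyM z (by simp) x hx hx2 with h | h | h
      · exact Or.inl h.2
      · exact Or.inr (Or.inr h.2)
      · exact Or.inr (Or.inl ⟨h.2, hx2⟩)
  have husnd : us.Nodup := by
    have hnd := hW.nodup
    have hs : us.Sublist (W1 ++ p :: (M ++ q :: W2)) := by
      refine List.Sublist.trans ?_ (List.sublist_append_right _ _)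
      refine List.Sublist.cons_cons _ (List.Sublist.append List.filter_sublist ?_)
      exact List.Sublist.cons_cons _ (List.nil_sublist _)
    exact hnd.sublist hs
  obtain ⟨hup1, hup3⟩ := h.up_le hd hf (z := z) (by simp)
  have hlen : us.length + (f' z).length ≤ 5 := by
    rw [← List.length_append]
    apply length_le_of_adj hd (v := z)
    · rw [List.nodup_append']
      refine ⟨husnd, hf.nodup z hzW, ?_⟩
      intro x hx hx2
      have := ((hf.mem z hzW x).1 hx2).2
      exact this (by simp [((husmem x).1 hx).1])
    · intro x hx
      rcases List.mem_append.1 hx with hx | hx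
      · exact ((husmem x).1 hx).2
      · exact ((hf.mem z hzW x).1 hx).1
  have hlz : 1 ≤ (f' z).length := List.length_pos_iff.2 hup1
  have hus2 : us.length = (M.filter (fun w => G.Adj z w)).length + 2 := by simp [hus]
  obtain ⟨k, hk, hkl⟩ : ∃ k, (us.length = 2 ∧ k = 1 ∨ us.length = 3 ∧ k = 2 ∨
      us.length = 4 ∧ k = 4) ∧ 2 * k + (f' z).length + 1 ≤ 2 * us.length + 2 := by
    have : us.length = 2 ∨ us.length = 3 ∨ us.length = 4 := by omega
    rcases this with h | h | h
    · exact ⟨1, Or.inl ⟨h, rfl⟩, by omega⟩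
    · exact ⟨2, Or.inr (Or.inl ⟨h, rfl⟩), by omega⟩
    · exact ⟨4, Or.inr (Or.inr ⟨h, rfl⟩), by omega⟩
  refine ⟨k, by omega, ?_, ?_⟩
  · have := Comp.single (G := G) (τ := τ) S (outL (W1 ++ [p]) f') (outL (q :: W2) f') z us (f' z) k c
      hzS husnd husmem hk (fun u _ => hτ u z (h.ne_t z (by simp))) (hf.nodup z hzW)
      (fun x hx => by rw [← hSe]; exact (hf.mem z hzW x).1 hx) hup3 (Or.inl hup1)
      (by rw [← hSe]; simpa using hc)
    rw [outL_backF hW, hMo]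
    simpa [hus] using this
  · have hs := sum_backF hW f' z z [z]
    have hg : ([z].map fun w => gL (f' w)).sum = (f' z).length + 1 := by
      simp [gL, hup1]
    omega

end CompDef

/-! ### The last and the first step -/

section Start
variable {V : Type*} [DecidableEq V] [Fintype V] {G : SimpleGraph V} [DecidableRel G.Adj]
  {v1 v2 t : V}

lemma three_le_deg (h3 : ∀ T : Set V, T.ncard ≤ 2 → Conn G Tᶜ) (hn : 4 ≤ Fintype.card V) (v : V)
    {L : List V} (hL : ∀ x, G.Adj v x → x ∈ L) : 3 ≤ L.length := by
  by_contra hcon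
  have h1 : ((L.toFinset : Finset V) : Set V).ncard ≤ 2 := by
    rw [Set.ncard_coe_finset]
    have := L.toFinset_card_le; omega
  have h2 : ((L.toFinset.erase v : Finset V) : Set V).ncard ≤ 2 := by
    refine le_trans (Set.ncard_le_ncard ?_ (Set.toFinite _)) h1
    intro x hx; simp at hx ⊢; exact hx.1
  have key := sep_cover h3 (K := {v}) h2 (by simp) (k := v) rfl (by
    rintro x rfl y hxy
    right; simp [hL y hxy, hxy.ne'])
  have h4 : (Finset.univ : Finset V) ⊆ insert v (L.toFinset.erase v) := by
    intro y _
    have := key y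
    simp at this ⊢; tauto
  have h5 := (Finset.card_le_card h4).trans (Finset.card_insert_le _ _)
  rw [Set.ncard_coe_finset] at h2
  rw [Finset.card_univ] at h5
  omega

/-- The last step: only `t` remains. -/
lemma Contour.terminal (h3 : ∀ T : Set V, T.ncard ≤ 2 → Conn G Tᶜ) (hn : 4 ≤ Fintype.card V)
    (hd : MaxDegLE G 5) {S : Finset V} {W : List V} (hW : Contour G v1 v2 t S W)
    (hR : ∀ r, r ∉ S → r = t) :
    ∃ (τ : V → V → ℤ) (f : V → List V) (c : ℕ), (∀ u w, |τ u w| ≤ 1) ∧ (∀ u w, w ≠ t → τ u w = 0) ∧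
      IsOut G S W f ∧ Comp G τ S (outL W f) c ∧
      2 * c + 4 * S.card + 4 ≤ 4 * Fintype.card V + (W.map fun w => gL (f w)).sum := by
  have hSu : insert t S = Finset.univ := by
    ext x; simp only [Finset.mem_insert, Finset.mem_univ, iff_true]
    by_cases h : x ∈ S
    · exact Or.inr h
    · exact Or.inl (hR x h)
  have hcard : S.card + 1 = Fintype.card V := by
    rw [← Finset.card_insert_of_notMem hW.ht, hSu, Finset.card_univ]
  set us := W.filter (fun w => G.Adj t w) with hus
  have husnd : us.Nodup := hW.nodup.filter _
  have husmem : ∀ x, x ∈ us ↔ x ∈ S ∧ G.Adj t x := by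
    intro x
    simp only [hus, List.mem_filter, decide_eq_true_eq]
    constructor
    · rintro ⟨a, b⟩; exact ⟨hW.sub x a, b⟩
    · rintro ⟨a, b⟩; exact ⟨hW.cover x a t hW.ht b.symm, b⟩
  have hl3 : 3 ≤ us.length := three_le_deg h3 hn t (L := us) fun x hx => by
    rw [husmem]; refine ⟨?_, hx⟩
    by_contra h
    exact hx.ne' (hR x h)
  have hl5 : us.length ≤ 5 := length_le_of_adj hd husnd fun x hx => ((husmem x).1 hx).2
  have hout : IsOut G S W (fun w => if G.Adj t w then [t] else []) := by
    constructor
    · intro w hw x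
      by_cases ha : G.Adj t w
      · simp only [ha, if_true, List.mem_singleton]
        constructor
        · rintro rfl; exact ⟨ha.symm, hW.ht⟩
        · rintro ⟨_, b⟩; exact hR x b
      · simp only [ha, if_false, List.not_mem_nil, false_iff, not_and]
        intro hwx hxS
        rw [hR x hxS] at hwx; exact ha hwx.symm
    · intro w _; split_ifs <;> simp
  have hMo : outL W (fun w => if G.Adj t w then [t] else []) = us.map (fun u => (u, t)) := by
    clear_value us
    subst hus
    clear hl3 hl5 husmem husnd hout hR hW
    induction W with
    | nil => rfl
    | cons a M ih =>
      rw [outL_cons, ih, List.filter_cons]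
      by_cases ha : G.Adj t a <;> simp [ha]
  have hMs : (W.map fun w => gL (if G.Adj t w then [t] else [])).sum = 2 * us.length := by
    clear_value us
    subst hus
    clear hl3 hl5 husmem husnd hout hR hW hMo
    induction W with
    | nil => rfl
    | cons a M ih =>
      rw [List.map_cons, List.sum_cons, ih, List.filter_cons]
      by_cases ha : G.Adj t a <;> simp [ha, gL]; ring
  have small : ∀ k, (us.length = 2 ∧ k = 1 ∨ us.length = 3 ∧ k = 2 ∨ us.length = 4 ∧ k = 4) →
      Comp G (fun _ _ => 0) S (us.map (fun u => (u, t))) k := by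
    intro k hk
    have := Comp.single (G := G) (τ := fun _ _ => 0) S [] [] t us [] k 0 hW.ht husnd husmem hk
      (by simp) (by simp) (by simp) (by simp) (by simp) (by
        rw [hSu]; exact Comp.done)
    simpa using this
  have : us.length = 3 ∨ us.length = 4 ∨ us.length = 5 := by omega
  rcases this with h | h | h
  · refine ⟨fun _ _ => 0, _, 2, by simp, by simp, hout, ?_, ?_⟩
    · rw [hMo]; exact small 2 (by simp [h])
    · rw [hMs]; omega
  · refine ⟨fun _ _ => 0, _, 4, by simp, by simp, hout, ?_, ?_⟩
    · rw [hMo]; exact small 4 (by simp [h])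
    · rw [hMs]; omega
  · clear_value us
    obtain ⟨u1, u2, u3, u4, u5, rfl⟩ : ∃ u1 u2 u3 u4 u5, us = [u1, u2, u3, u4, u5] := by
      match us, h with
      | [u1, u2, u3, u4, u5], _ => exact ⟨u1, u2, u3, u4, u5, rfl⟩
    refine ⟨fun u w => if w = t then (if u = u2 then 1 else if u = u4 then -1 else 0) else 0, _, 5,
      ?_, ?_, hout, ?_, ?_⟩
    · intro u w; dsimp only; split_ifs <;> simp
    · intro u w hw; simp [hw]
    · rw [hMo]
      have hnd := husnd
      simp only [List.nodup_cons, List.mem_cons, List.not_mem_nil, or_false, not_or] at hnd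
      obtain ⟨⟨n1, n2, n3, n4⟩, ⟨m1, m2, m3⟩, ⟨k1, k2⟩, j, -⟩ := hnd
      refine Comp.five S t u1 u2 u3 u4 u5 hW.ht hSu husnd husmem ?_ ?_ ?_ ?_ ?_
      · simp [n1, n3]
      · simp
      · simp [Ne.symm m1, k1]
      · simp [Ne.symm m2]
      · simp [Ne.symm m3, Ne.symm j]
    · rw [hMs]; simp only [List.length_cons, List.length_nil]; omega

/-- The canonical ordering: every contour can be completed, with a bound on the number of bends. -/
lemma Contour.exists_comp (h3 : ∀ T : Set V, T.ncard ≤ 2 → Conn G Tᶜ) (hn : 4 ≤ Fintype.card V)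
    (hd : MaxDegLE G 5) {A : Option V → Option V → Option V → ZMod 2}
    {O : Option V → Option V → ZMod 2}
    (hvk : VKdata (starGraph G v1 v2 t) A O) (h12 : v1 ≠ v2) :
    ∀ (k : ℕ) {S : Finset V} {W : List V}, Sᶜ.card = k → Contour G v1 v2 t S W →
    ∃ (τ : V → V → ℤ) (f : V → List V) (c : ℕ), (∀ u w, |τ u w| ≤ 1) ∧ (∀ u w, w ≠ t → τ u w = 0) ∧
      IsOut G S W f ∧ Comp G τ S (outL W f) c ∧
      2 * c + 4 * S.card + 4 ≤ 4 * Fintype.card V + (W.map fun w => gL (f w)).sum := by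
  intro k
  induction k using Nat.strong_induction_on with
  | _ k ih =>
  intro S W hk hW
  by_cases hR : ∀ r, r ∉ S → r = t
  · exact hW.terminal h3 hn hd hR
  push Not at hR
  obtain ⟨W1, p, M, q, W2, zs, rfl, hE⟩ := hW.step h3 hvk h12 hR
  have hlt : (S ∪ zs.toFinset)ᶜ.card < k := by
    rw [← hk]
    apply Finset.card_lt_card
    obtain ⟨z, hz⟩ := List.exists_mem_of_ne_nil _ hE.ne
    rw [Finset.ssubset_iff_of_subset]
    · exact ⟨z, by simpa using hE.notMem z hz, by simp [hz]⟩
    · intro x hx; simp at hx ⊢; exact hx.1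
  obtain ⟨τ, f', c, h1, hτ, hf, hc, hb⟩ := ih _ hlt rfl hE.contour
  by_cases hlen : 2 ≤ zs.length
  · obtain ⟨f, h2, h4, h5⟩ := hE.back_chain hd hW hlen hf hc hb
    exact ⟨τ, f, c, h1, hτ, h2, h4, by omega⟩
  · obtain ⟨z, rfl⟩ : ∃ z, zs = [z] := by
      rw [← List.length_eq_one_iff]
      have := List.length_pos_iff.2 hE.ne; omega
    obtain ⟨h2, k, -, h4, h5⟩ := hE.back_single hd hW hf hτ hc hb
    exact ⟨τ, _, c + k, h1, hτ, h2, h4, h5⟩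

lemma sum_gL_lt {l : List V} {f : V → List V} (h : ∀ z ∈ l, (f z).length ≤ 3)
    (h' : ∃ z ∈ l, (f z).length ≤ 2) :
    (l.map fun w => gL (f w)).sum + 1 ≤ 4 * l.length := by
  obtain ⟨z, hz, hz2⟩ := h'
  obtain ⟨l1, l2, rfl⟩ := List.append_of_mem hz
  have h1 := sum_gL_le (l := l1) (f := f) fun z hz => h z (by simp [hz])
  have h2 := sum_gL_le (l := l2) (f := f) fun z hz => h z (by simp [hz])
  have : gL (f z) ≤ 3 := by unfold gL; split_ifs <;> omega
  simp only [List.map_append, List.map_cons, List.sum_append, List.sum_cons, List.length_append,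
    List.length_cons]
  omega

/-- The initial configuration: a path `W` from `v1` to `v2`, closed by the edge `v1 v2`, from which
the drawing is completed from bottom to top. In the second alternative, the first step is the
addition of a vertex `z` over two consecutive vertices `p`, `q` of `W`, which needs no bend. -/
structure StartData (G : SimpleGraph V) (W : List V) (v1 v2 : V) (τ : V → V → ℤ)
    (f : V → List V) (c : ℕ) : Prop where
  len : 3 ≤ W.length
  nodup : W.Nodup
  chain : W.IsChain G.Adj
  head : W.head? = some v1
  last : W.getLast? = some v2
  base : G.Adj v1 v2
  induced : ∀ x ∈ W, ∀ y ∈ W, G.Adj x y →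
      (∃ l₁ l₂, W = l₁ ++ x :: y :: l₂) ∨ (∃ l₁ l₂, W = l₁ ++ y :: x :: l₂) ∨
      s(x, y) = s(v1, v2)
  out : IsOut G W.toFinset W f
  outne : ∀ w ∈ W, f w ≠ []
  outle : ∀ w ∈ W, (f w).length ≤ 3
  hτ : ∀ u w, |τ u w| ≤ 1
  bound : c + 1 ≤ 2 * Fintype.card V - 2
  comp : Comp G τ W.toFinset (outL W f) c ∨
    ∃ (W1 : List V) (p q : V) (W2 : List V) (z : V) (fp fq ts : List V),
      W = W1 ++ p :: q :: W2 ∧ f p = fp ++ [z] ∧ f q = z :: fq ∧ fp ≠ [] ∧ fq ≠ [] ∧ z ∉ W ∧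
      (∀ x ∈ W, G.Adj z x ↔ x = p ∨ x = q) ∧ ts.Nodup ∧
      (∀ x ∈ ts, G.Adj z x ∧ x ∉ insert z W.toFinset) ∧ ts ≠ [] ∧ ts.length ≤ 3 ∧
      Comp G τ (insert z W.toFinset)
        ((outL W1 f ++ outL [p] (fun _ => fp)) ++ outL [z] (fun _ => ts) ++
          (outL [q] (fun _ => fq) ++ outL W2 f)) c

/-- The first ear over the edge `v1 v2` is the base path. If some vertex of it has weight less than
four, or if the second ear is a path, then the bound on the bends has a unit to spare. Otherwise the
second ear is a vertex over two consecutive vertices of the base path; it is drawn without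
the bend which `Comp.single` would charge for it. -/
theorem exists_startData (h3 : ∀ T : Set V, T.ncard ≤ 2 → Conn G Tᶜ) (hn : 4 ≤ Fintype.card V)
    (hd : MaxDegLE G 5) {A : Option V → Option V → Option V → ZMod 2}
    {O : Option V → Option V → ZMod 2}
    (hvk : VKdata (starGraph G v1 v2 t) A O) (h12 : G.Adj v1 v2) (ht1 : t ≠ v1) (ht2 : t ≠ v2) :
    ∃ W τ f c, StartData G W v1 v2 τ f c := by
  have hC0 : Contour G v1 v2 t {v1, v2} [v1, v2] := by
    refine ⟨by simp [h12.ne], by simp, by simp [h12], rfl, rfl, ?_, by simp [ht1, ht2], by simp⟩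
    convert h3 {v1, v2} (ncard_pair_le_two _ _) using 1
    ext; simp
  have hr : ∃ r, r ∉ ({v1, v2} : Finset V) ∧ r ≠ t := by
    by_contra hcon
    push Not at hcon
    have : (Finset.univ : Finset V) ⊆ {v1, v2, t} := by
      intro x _
      by_cases h : x ∈ ({v1, v2} : Finset V)
      · simp at h ⊢; tauto
      · simp [hcon x h]
    have := (Finset.card_le_card this).trans Finset.card_le_three
    rw [Finset.card_univ] at this
    omega
  obtain ⟨W1, p, M, q, W2, zs, he, hE⟩ := hC0.step h3 hvk h12.ne hr
  obtain ⟨rfl, rfl, rfl, rfl, rfl⟩ : W1 = [] ∧ p = v1 ∧ M = [] ∧ q = v2 ∧ W2 = [] := by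
    have hl := congrArg List.length he
    simp only [List.length_append, List.length_cons, List.length_nil] at hl
    have a1 : W1 = [] := List.length_eq_zero_iff.1 (by omega)
    have a2 : M = [] := List.length_eq_zero_iff.1 (by omega)
    have a3 : W2 = [] := List.length_eq_zero_iff.1 (by omega)
    subst a1; subst a2; subst a3
    simp at he
    exact ⟨rfl, he.1.symm, rfl, he.2.symm, rfl⟩
  have hCW := hE.contour
  simp only [List.nil_append] at hCW
  set W := p :: (zs ++ [q]) with hWdef
  have hSW : {p, q} ∪ zs.toFinset = W.toFinset := by
    ext x; simp [hWdef]
  rw [hSW] at hCW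
  have hind : ∀ x ∈ W, ∀ y ∈ W, G.Adj x y →
      (∃ l₁ l₂, W = l₁ ++ x :: y :: l₂) ∨ (∃ l₁ l₂, W = l₁ ++ y :: x :: l₂) ∨
      s(x, y) = s(p, q) := by
    have hz : ∀ z ∈ zs, ∀ x, (x = p ∨ x = q) → G.Adj z x →
        (∃ l₁ l₂, W = l₁ ++ x :: z :: l₂) ∨ (∃ l₁ l₂, W = l₁ ++ z :: x :: l₂) := by
      intro z hz x hx hzx
      rcases hE.onlyM z hz x (by simpa using hx) hzx with h | h | h
      · obtain ⟨h, rfl⟩ := h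
        obtain ⟨l, hl⟩ := List.head?_eq_some_iff.1 h
        left; exact ⟨[], l ++ [q], by rw [hWdef, hl]; simp⟩
      · obtain ⟨h, rfl⟩ := h
        obtain ⟨l, hl⟩ := List.getLast?_eq_some_iff.1 h
        right; exact ⟨p :: l, [], by rw [hWdef, hl]; simp⟩
      · simp at h
    intro x hx y hy hxy
    simp only [hWdef, List.mem_cons, List.mem_append, List.not_mem_nil, or_false] at hx hy
    have hx' : (x = p ∨ x = q) ∨ x ∈ zs := by tauto
    have hy' : (y = p ∨ y = q) ∨ y ∈ zs := by tauto
    rcases hx' with hx' | hx' <;> rcases hy' with hy' | hy'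
    · right; right
      rcases hx' with rfl | rfl <;> rcases hy' with rfl | rfl
      · exact absurd hxy (G.loopless.irrefl _)
      · rfl
      · exact Sym2.eq_swap
      · exact absurd hxy (G.loopless.irrefl _)
    · rcases hz y hy' x hx' hxy.symm with h | h
      · exact Or.inl h
      · exact Or.inr (Or.inl h)
    · rcases hz x hx' y hy' hxy with h | h
      · exact Or.inr (Or.inl h)
      · exact Or.inl h
    · rcases hE.induced x hx' y hy' hxy with ⟨l₁, l₂, h⟩ | ⟨l₁, l₂, h⟩
      · left; exact ⟨p :: l₁, l₂ ++ [q], by rw [hWdef, h]; simp⟩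
      · right; left; exact ⟨p :: l₁, l₂ ++ [q], by rw [hWdef, h]; simp⟩
  -- the number of upper neighbours of the vertices of `W`
  have hup : ∀ f, IsOut G W.toFinset W f → ∀ w ∈ W, f w ≠ [] ∧ (f w).length ≤ 3 := by
    intro f hf w hw
    have hend : ∀ x y z : V, x ∈ W → y ∈ W → z ∈ zs → G.Adj x y → G.Adj x z → y ∉ zs →
        (∀ u ∈ W, G.Adj x u → u = y ∨ u = z) → f x ≠ [] ∧ (f x).length ≤ 3 := by
      intro x y z hx hy hz hxy hxz hyz hall
      have hzW : z ∈ W := by simp [hWdef, hz]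
      constructor
      · intro h0
        have := three_le_deg h3 hn x (L := [y, z]) (by
          intro u hu
          by_cases huW : u ∈ W
          · rcases hall u huW hu with h | h <;> simp [h]
          · have := (hf.mem x hx u).2 ⟨hu, by simpa using huW⟩
            rw [h0] at this; simp at this)
        simp at this
      · have := length_le_of_adj hd (v := x) (L := y :: z :: f x) (by
          rw [List.nodup_cons, List.nodup_cons]
          refine ⟨?_, ?_, hf.nodup x hx⟩
          · rw [List.mem_cons, not_or]
            refine ⟨?_, fun h => ((hf.mem x hx y).1 h).2 (by simpa using hy)⟩
            rintro rfl; exact hyz hz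
          · exact fun h => ((hf.mem x hx z).1 h).2 (by simpa using hzW)) (by
          intro u hu
          simp only [List.mem_cons] at hu
          rcases hu with rfl | rfl | hu
          · exact hxy
          · exact hxz
          · exact ((hf.mem x hx u).1 hu).1)
        simp only [List.length_cons] at this
        omega
    obtain ⟨z1, hz1⟩ : ∃ z, zs.head? = some z := ⟨_, List.head?_eq_some_head hE.ne⟩
    obtain ⟨zr, hzr⟩ : ∃ z, zs.getLast? = some z := ⟨_, List.getLast?_eq_getLast_of_ne_nil hE.ne⟩
    have hz1m := List.mem_of_mem_head? hz1
    have hzrm := List.mem_of_getLast? hzr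
    have hpz : p ∉ zs := fun h => hE.notMem p h (by simp)
    have hqz : q ∉ zs := fun h => hE.notMem q h (by simp)
    have hw' := hw
    simp only [hWdef, List.mem_cons, List.mem_append, List.not_mem_nil, or_false] at hw'
    have hWmem : ∀ u ∈ W, u = p ∨ u ∈ zs ∨ u = q := by
      intro u hu
      simpa [hWdef] using hu
    rcases hw' with rfl | hw' | rfl
    · refine hend w q z1 (by simp [hWdef]) (by simp [hWdef]) hz1m h12 (hE.adjp z1 hz1m hz1).symm hqz ?_
      intro u hu hwu
      rcases hWmem u hu with rfl | h | h
      · exact absurd hwu (G.loopless.irrefl _)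
      · rcases hE.onlyM u h w (by simp) hwu.symm with h' | h' | h'
        · right; exact Option.some.inj (h'.1.symm.trans hz1)
        · exact absurd h'.2 h12.ne
        · simp at h'
      · exact Or.inl h
    · refine hE.up_le hd (f' := f) ?_ hw'
      simp only [List.nil_append]
      rw [hSW]; exact hf
    · refine hend w p zr (by simp [hWdef]) (by simp [hWdef]) hzrm h12.symm
        (hE.adjq zr hzrm hzr).symm hpz ?_
      intro u hu hwu
      rcases hWmem u hu with rfl | h | h
      · exact Or.inl rfl
      · rcases hE.onlyM u h w (by simp) hwu.symm with h' | h' | h'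
        · exact absurd h'.2.symm h12.ne
        · right; exact Option.some.inj (h'.1.symm.trans hzr)
        · simp at h'
      · subst h; exact absurd hwu (G.loopless.irrefl _)
  have hWl : 3 ≤ W.length := by
    have := List.length_pos_iff.2 hE.ne
    simp [hWdef]; omega
  have hWc : W.toFinset.card = W.length := List.toFinset_card_of_nodup hCW.nodup
  -- the easy case: the bound has some slack
  have easy : ∀ τ f c, (∀ u w, |τ u w| ≤ 1) → IsOut G W.toFinset W f →
      Comp G τ W.toFinset (outL W f) c →
      2 * c + 4 * W.length + 5 ≤ 4 * Fintype.card V + 4 * W.length →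
      ∃ W τ f c, StartData G W p q τ f c := by
    intro τ f c h1 hf hc hb
    exact ⟨W, τ, f, c, hWl, hCW.nodup, hCW.chain, hCW.head, hCW.last, h12, hind, hf,
      fun w hw => (hup f hf w hw).1, fun w hw => (hup f hf w hw).2, h1, by omega, Or.inl hc⟩
  by_cases hR : ∀ r, r ∉ W.toFinset → r = t
  · obtain ⟨τ, f, c, h1, hτ, hf, hc, hb⟩ := hCW.terminal h3 hn hd hR
    apply easy τ f c h1 hf hc
    have := sum_gL_lt (l := W) (f := f) (fun w hw => (hup f hf w hw).2) ⟨p, by simp [hWdef], by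
      have hnd := hf.nodup p (by simp [hWdef])
      have hall : ∀ x ∈ f p, x = t := fun x hx => hR x ((hf.mem p (by simp [hWdef]) x).1 hx).2
      rcases hfp : f p with _ | ⟨a, _ | ⟨b, l⟩⟩
      · simp
      · simp
      · rw [hfp] at hnd hall
        have e1 := hall a (by simp)
        have e2 := hall b (by simp)
        rw [e1, e2] at hnd; simp at hnd⟩
    omega
  push Not at hR
  obtain ⟨W1, p', M, q', W2, zs', hWe, hE'⟩ := hCW.step h3 hvk h12.ne hR
  obtain ⟨τ, f', c, h1, hτ, hf, hc, hb⟩ :=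
    Contour.exists_comp h3 hn hd hvk h12.ne _ rfl hE'.contour
  clear_value W
  subst hWe
  by_cases hlen : 2 ≤ zs'.length
  · obtain ⟨f, h2, h4, h5⟩ := hE'.back_chain hd hCW hlen hf hc hb
    apply easy τ f c h1 h2 h4
    have := sum_gL_le (f := f) (fun w hw => (hup f h2 w hw).2)
    omega
  · obtain ⟨z, rfl⟩ : ∃ z, zs' = [z] := by
      rw [← List.length_eq_one_iff]
      have := List.length_pos_iff.2 hE'.ne; omega
    obtain ⟨h2, k, hk, h4, h5⟩ := hE'.back_single hd hCW hf hτ hc hb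
    by_cases hsm : ∃ w ∈ W1 ++ p' :: (M ++ q' :: W2), (backF G p' q' M z z f' w).length ≤ 2
    · apply easy τ _ _ h1 h2 h4
      have := sum_gL_lt (fun w hw => (hup _ h2 w hw).2) hsm
      omega
    push Not at hsm
    obtain ⟨n1, n2, n3, n4, n5⟩ := EarStep.notMem_of hCW
    have hM : M = [] := by
      rcases M with _ | ⟨m, M⟩
      · rfl
      · exfalso
        have := hsm m (by simp)
        have hmp : m ≠ p' := by rintro rfl; simp at n2
        have hmq : m ≠ q' := by rintro rfl; simp at n3
        have hmm : m ∈ m :: M := by simp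
        simp only [backF, hmp, hmq, hmm, if_true, if_false] at this
        split_ifs at this <;> simp at this
    subst hM
    simp only [List.nil_append] at *
    have e3 : backF G p' q' [] z z f' p' = f' p' ++ [z] := by simp [backF]
    have e4 : backF G p' q' [] z z f' q' = z :: f' q' := by simp [backF, n1.symm]
    have hSe : (W1 ++ p' :: q' :: W2).toFinset ∪ [z].toFinset
        = insert z (W1 ++ p' :: q' :: W2).toFinset := by ext; simp; tauto
    have hz : z ∉ W1 ++ p' :: q' :: W2 := by
      have := hE'.notMem z (by simp); rwa [List.mem_toFinset] at this
    have hzW : z ∈ W1 ++ p' :: ([z] ++ q' :: W2) := by simp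
    obtain ⟨hup1, hup3⟩ := hE'.up_le hd hf (z := z) (by simp)
    have hs4 := sum_gL_le (fun w hw => (hup _ h2 w hw).2)
    refine ⟨_, τ, _, c, hWl, hCW.nodup, hCW.chain, hCW.head, hCW.last, h12, hind, h2,
      fun w hw => (hup _ h2 w hw).1, fun w hw => (hup _ h2 w hw).2, h1, by omega, Or.inr ?_⟩
    refine ⟨W1, p', q', W2, z, f' p', f' q', f' z, rfl, e3, e4, ?_, ?_, hz, ?_, hf.nodup z hzW, ?_,
      hup1, hup3, ?_⟩
    · intro h0
      have := hsm p' (by simp)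
      rw [e3, h0] at this; simp at this
    · intro h0
      have := hsm q' (by simp)
      rw [e4, h0] at this; simp at this
    · intro x hx
      constructor
      · intro hzx
        rcases hE'.onlyM z (by simp) x (List.mem_toFinset.2 hx) hzx with h | h | h
        · exact Or.inl h.2
        · exact Or.inr h.2
        · simp at h
      · rintro (rfl | rfl)
        · exact hE'.adjp z (by simp) rfl
        · exact hE'.adjq z (by simp) rfl
    · intro x hx
      have := (hf.mem z hzW x).1 hx
      rwa [hSe] at this
    · rw [← hSe]
      have o1 : outL W1 (backF G p' q' [] z z f') = outL W1 f' := outL_congr fun w hw => by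
        obtain ⟨a, b, c⟩ := n4 w hw; simp [backF, a, b]
      have o2 : outL W2 (backF G p' q' [] z z f') = outL W2 f' := outL_congr fun w hw => by
        obtain ⟨a, b, c⟩ := n5 w hw; simp [backF, a, b]
      rw [o1, o2]
      simpa using hc

end Start

/-! ### Octilinear arcs -/

section Arcs

/-- The segment from `a` to `b`. -/
def sg (a b : ℝ × ℝ) : Set (ℝ × ℝ) := segPt a b '' Set.Icc 0 1

/-- The part up to height `y` of the upward ray from `a` moving `s` to the right per unit of
height. -/
def ray (a : ℝ × ℝ) (s y : ℝ) : Set (ℝ × ℝ) :=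
  {p | a.2 ≤ p.2 ∧ p.2 ≤ y ∧ p.1 = a.1 + s * (p.2 - a.2)}

/-- The horizontal segment at height `y` between the abscissas `x` and `x'`. -/
def hor (y x x' : ℝ) : Set (ℝ × ℝ) :=
  {p | p.2 = y ∧ (x ≤ p.1 ∧ p.1 ≤ x' ∨ x' ≤ p.1 ∧ p.1 ≤ x)}

/-- `C` is a simple octilinear polyline between `a` and `b` with at most `k` bends. -/
def Arc (C : Set (ℝ × ℝ)) (a b : ℝ × ℝ) (k : ℕ) : Prop :=
  ∃ P : Polyline, P.Octilinear ∧ P.Simple ∧ ({P.pt 0, P.pt P.len} : Set (ℝ × ℝ)) = {a, b} ∧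
    P.image = C ∧ P.bends ≤ k

lemma Arc.symm {C : Set (ℝ × ℝ)} {a b : ℝ × ℝ} {k : ℕ} (h : Arc C a b k) : Arc C b a k := by
  obtain ⟨P, h1, h2, h3, h4, h5⟩ := h
  exact ⟨P, h1, h2, by rw [h3, Set.pair_comm], h4, h5⟩

lemma Arc.mono {C : Set (ℝ × ℝ)} {a b : ℝ × ℝ} {k k' : ℕ} (h : Arc C a b k) (hk : k ≤ k') :
    Arc C a b k' := by
  obtain ⟨P, h1, h2, h3, h4, h5⟩ := h
  exact ⟨P, h1, h2, h3, h4, h5.trans hk⟩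

lemma image_eq_iUnion (P : Polyline) :
    P.image = {p | ∃ i < P.len, p ∈ sg (P.pt i) (P.pt (i + 1))} := by
  ext p
  constructor
  · rintro ⟨s, ⟨hs0, hs1⟩, rfl⟩
    rcases eq_or_lt_of_le hs1 with h | h
    · refine ⟨P.len - 1, by have := P.len_pos; omega, 1, by simp, ?_⟩
      have h1 : P.len - 1 + 1 = P.len := by have := P.len_pos; omega
      rw [← param_segPt P _ (by simp)]
      congr 1
      rw [h, ← h1]; push_cast; simp
    · refine ⟨⌊s⌋.toNat, ?_, s - (⌊s⌋.toNat : ℝ), ?_, rfl⟩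
      · have : (⌊s⌋.toNat : ℤ) = ⌊s⌋ := Int.toNat_of_nonneg (Int.floor_nonneg.2 hs0)
        have h2 : ⌊s⌋ < P.len := Int.floor_lt.2 (by exact_mod_cast h)
        omega
      · have : (⌊s⌋.toNat : ℤ) = ⌊s⌋ := Int.toNat_of_nonneg (Int.floor_nonneg.2 hs0)
        have h2 : (⌊s⌋.toNat : ℝ) = (⌊s⌋ : ℝ) := by exact_mod_cast this
        rw [h2]
        exact ⟨by linarith [Int.floor_le s], by linarith [Int.lt_floor_add_one s]⟩
  · rintro ⟨i, hi, t, ht, rfl⟩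
    exact segPt_mem_image P hi ht

/-- A polyline along which some linear functional increases strictly is simple. -/
lemma simple_of_functional (P : Polyline) (u v : ℝ)
    (h : ∀ i < P.len, u * (P.pt i).1 + v * (P.pt i).2 <
      u * (P.pt (i + 1)).1 + v * (P.pt (i + 1)).2) : P.Simple := by
  let φ : ℝ × ℝ → ℝ := fun p => u * p.1 + v * p.2
  have key : ∀ n ≤ P.len, StrictMonoOn (fun s => φ (P.param s)) (Set.Icc 0 (n : ℝ)) := by
    intro n
    induction n with
    | zero =>
      intro _ a ha b hb hab
      simp at ha hb
      exact absurd hab (by rw [ha, hb]; simp)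
    | succ n ih =>
      intro hn
      have h1 := ih (by omega)
      have h2 : StrictMonoOn (fun s => φ (P.param s)) (Set.Icc (n : ℝ) ((n : ℝ) + 1)) := by
        intro a ha b hb hab
        have ea := param_segPt P n (t := a - n) ⟨by linarith [ha.1], by linarith [ha.2]⟩
        have eb := param_segPt P n (t := b - n) ⟨by linarith [hb.1], by linarith [hb.2]⟩
        rw [add_sub_cancel] at ea eb
        have := h n (by omega)
        simp only [ea, eb, φ, segPt, Prod.fst_add, Prod.snd_add, Prod.smul_fst, Prod.smul_snd,
          Prod.fst_sub, Prod.snd_sub, smul_eq_mul]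
        nlinarith
      have h3 := h1.union h2 (isGreatest_Icc (by positivity)) (isLeast_Icc (by linarith))
      rw [Set.Icc_union_Icc_eq_Icc (by positivity) (by linarith)] at h3
      push_cast
      exact h3
  intro a ha b hb hab
  exact (key _ le_rfl).injOn ha hb (by simp only [hab])

lemma not_collinear_of_crs {a b c : ℝ × ℝ} (h : crs a b c ≠ 0) :
    ¬ Collinear ℝ ({a, b, c} : Set (ℝ × ℝ)) := by
  intro hc
  rw [collinear_iff_of_mem (p₀ := a) (by simp)] at hc
  obtain ⟨w, hw⟩ := hc
  obtain ⟨r, hr⟩ := hw b (by simp)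
  obtain ⟨t, ht⟩ := hw c (by simp)
  apply h
  have b1 : b.1 = r * w.1 + a.1 := by rw [hr]; simp
  have b2 : b.2 = r * w.2 + a.2 := by rw [hr]; simp
  have c1 : c.1 = t * w.1 + a.1 := by rw [ht]; simp
  have c2 : c.2 = t * w.2 + a.2 := by rw [ht]; simp
  unfold crs
  rw [b1, b2, c1, c2]; ring

lemma arc_one {a b : ℝ × ℝ} (hab : a ≠ b) (ho : Polyline.OctiSeg a b) : Arc (sg a b) a b 0 := by
  let P : Polyline := ⟨1, le_rfl, fun i => if i = 0 then a else b⟩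
  have h01 : ∀ i < P.len, i = 0 := fun i hi => by simpa [P] using hi
  refine ⟨P, ⟨⟨?_, ?_⟩, ?_⟩, ?_, by simp [P], ?_, by simp [P, Polyline.bends]⟩
  · intro i hi; rw [h01 i hi]; simpa [P] using hab
  · intro i hi; simp [P] at hi
  · intro i hi; rw [h01 i hi]; simpa [P] using ho
  · -- the functional `(b - a) · x`
    refine simple_of_functional P (b.1 - a.1) (b.2 - a.2) ?_
    intro i hi
    rw [h01 i hi]
    simp only [P, if_true, zero_add, one_ne_zero, if_false]
    have : 0 < (b.1 - a.1) ^ 2 + (b.2 - a.2) ^ 2 := by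
      by_contra hc
      apply hab
      have h1 : b.1 - a.1 = 0 := by nlinarith [sq_nonneg (b.1 - a.1), sq_nonneg (b.2 - a.2)]
      have h2 : b.2 - a.2 = 0 := by nlinarith [sq_nonneg (b.1 - a.1), sq_nonneg (b.2 - a.2)]
      exact Prod.ext (by linarith) (by linarith)
    nlinarith
  · rw [image_eq_iUnion]
    ext p
    constructor
    · rintro ⟨i, hi, h⟩
      rw [h01 i hi] at h; simpa [P] using h
    · intro h; exact ⟨0, by simp [P], by simpa [P] using h⟩

lemma arc_two {a b c : ℝ × ℝ} (u v : ℝ) (h1 : u * a.1 + v * a.2 < u * b.1 + v * b.2)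
    (h2 : u * b.1 + v * b.2 < u * c.1 + v * c.2) (ho1 : Polyline.OctiSeg a b)
    (ho2 : Polyline.OctiSeg b c) (hc : crs a b c ≠ 0) : Arc (sg a b ∪ sg b c) a c 1 := by
  let P : Polyline := ⟨2, by norm_num, fun i => if i = 0 then a else if i = 1 then b else c⟩
  have h01 : ∀ i < P.len, i = 0 ∨ i = 1 := fun i hi => by simp [P] at hi; omega
  refine ⟨P, ⟨⟨?_, ?_⟩, ?_⟩, ?_, by simp [P], ?_, by simp [P, Polyline.bends]⟩
  · intro i hi
    rcases h01 i hi with rfl | rfl <;> simp only [P] <;> norm_num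
    · rintro rfl; exact absurd h1 (lt_irrefl _)
    · rintro rfl; exact absurd h2 (lt_irrefl _)
  · intro i hi
    have : i = 0 := by simp [P] at hi; omega
    subst this
    simpa [P] using not_collinear_of_crs hc
  · intro i hi
    rcases h01 i hi with rfl | rfl <;> simp only [P] <;> norm_num <;> assumption
  · refine simple_of_functional P u v ?_
    intro i hi
    rcases h01 i hi with rfl | rfl <;> simp only [P] <;> norm_num <;> assumption
  · rw [image_eq_iUnion]
    ext p
    constructor
    · rintro ⟨i, hi, h⟩
      rcases h01 i hi with rfl | rfl
      · left; simpa [P] using h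
      · right; simpa [P] using h
    · rintro (h | h)
      · exact ⟨0, by simp [P], by simpa [P] using h⟩
      · exact ⟨1, by simp [P], by simpa [P] using h⟩

lemma arc_three {a b c d : ℝ × ℝ} (u v : ℝ) (h1 : u * a.1 + v * a.2 < u * b.1 + v * b.2)
    (h2 : u * b.1 + v * b.2 < u * c.1 + v * c.2) (h3 : u * c.1 + v * c.2 < u * d.1 + v * d.2)
    (ho1 : Polyline.OctiSeg a b) (ho2 : Polyline.OctiSeg b c) (ho3 : Polyline.OctiSeg c d)
    (hc : crs a b c ≠ 0) (hd : crs b c d ≠ 0) : Arc (sg a b ∪ sg b c ∪ sg c d) a d 2 := by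
  let P : Polyline := ⟨3, by norm_num,
    fun i => if i = 0 then a else if i = 1 then b else if i = 2 then c else d⟩
  have h01 : ∀ i < P.len, i = 0 ∨ i = 1 ∨ i = 2 := fun i hi => by simp [P] at hi; omega
  refine ⟨P, ⟨⟨?_, ?_⟩, ?_⟩, ?_, by simp [P], ?_, by simp [P, Polyline.bends]⟩
  · intro i hi
    rcases h01 i hi with rfl | rfl | rfl <;> simp only [P] <;> norm_num
    · rintro rfl; exact absurd h1 (lt_irrefl _)
    · rintro rfl; exact absurd h2 (lt_irrefl _)
    · rintro rfl; exact absurd h3 (lt_irrefl _)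
  · intro i hi
    have : i = 0 ∨ i = 1 := by simp [P] at hi; omega
    rcases this with rfl | rfl
    · simpa [P] using not_collinear_of_crs hc
    · simpa [P] using not_collinear_of_crs hd
  · intro i hi
    rcases h01 i hi with rfl | rfl | rfl <;> simp only [P] <;> norm_num <;> assumption
  · refine simple_of_functional P u v ?_
    intro i hi
    rcases h01 i hi with rfl | rfl | rfl <;> simp only [P] <;> norm_num <;> assumption
  · rw [image_eq_iUnion]
    ext p
    constructor
    · rintro ⟨i, hi, h⟩
      rcases h01 i hi with rfl | rfl | rfl
      · left; left; simpa [P] using h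
      · left; right; simpa [P] using h
      · right; simpa [P] using h
    · rintro ((h | h) | h)
      · exact ⟨0, by simp [P], by simpa [P] using h⟩
      · exact ⟨1, by simp [P], by simpa [P] using h⟩
      · exact ⟨2, by simp [P], by simpa [P] using h⟩

lemma sg_eq_ray {a b : ℝ × ℝ} {s : ℝ} (h : a.2 < b.2) (hb : b.1 = a.1 + s * (b.2 - a.2)) :
    sg a b = ray a s b.2 := by
  ext p
  constructor
  · rintro ⟨t, ⟨h0, h1⟩, rfl⟩
    simp only [ray, segPt, Set.mem_ofPred_eq, Prod.fst_add, Prod.snd_add, Prod.smul_fst,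
      Prod.smul_snd, Prod.fst_sub, Prod.snd_sub, smul_eq_mul]
    refine ⟨by nlinarith, by nlinarith, ?_⟩
    rw [hb]; ring
  · rintro ⟨h1, h2, h3⟩
    have hne : b.2 - a.2 ≠ 0 := by linarith
    refine ⟨(p.2 - a.2) / (b.2 - a.2), ⟨div_nonneg (by linarith) (by linarith),
      (div_le_one (by linarith)).2 (by linarith)⟩, ?_⟩
    apply Prod.ext
    · simp only [segPt, Prod.fst_add, Prod.smul_fst, Prod.fst_sub, smul_eq_mul]
      rw [hb, h3]; field_simp; ring
    · simp only [segPt, Prod.snd_add, Prod.smul_snd, Prod.snd_sub, smul_eq_mul]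
      field_simp; ring

lemma sg_eq_hor {a b : ℝ × ℝ} (h : a.2 = b.2) : sg a b = hor a.2 a.1 b.1 := by
  ext p
  constructor
  · rintro ⟨t, ⟨h0, h1⟩, rfl⟩
    simp only [hor, segPt, Set.mem_ofPred_eq, Prod.fst_add, Prod.snd_add, Prod.smul_fst,
      Prod.smul_snd, Prod.fst_sub, Prod.snd_sub, smul_eq_mul]
    refine ⟨by rw [h]; ring, ?_⟩
    rcases le_total a.1 b.1 with h2 | h2
    · left; constructor <;> nlinarith
    · right; constructor <;> nlinarith
  · rintro ⟨h1, h2⟩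
    by_cases hne : b.1 - a.1 = 0
    · refine ⟨0, by simp, ?_⟩
      rw [segPt_zero]
      exact Prod.ext (by rcases h2 with h2 | h2 <;> linarith [h2.1, h2.2]) h1.symm
    · refine ⟨(p.1 - a.1) / (b.1 - a.1), ?_, ?_⟩
      · rcases h2 with h2 | h2
        · have : 0 < b.1 - a.1 := lt_of_le_of_ne (by linarith [h2.1, h2.2]) (Ne.symm hne)
          exact ⟨div_nonneg (by linarith) this.le, (div_le_one this).2 (by linarith)⟩
        · have : b.1 - a.1 < 0 := lt_of_le_of_ne (by linarith [h2.1, h2.2]) hne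
          exact ⟨div_nonneg_of_nonpos (by linarith) this.le,
            (div_le_one_of_neg this).2 (by linarith)⟩
      · apply Prod.ext
        · simp only [segPt, Prod.fst_add, Prod.smul_fst, Prod.fst_sub, smul_eq_mul]
          field_simp; ring
        · simp only [segPt, Prod.snd_add, Prod.smul_snd, Prod.snd_sub, smul_eq_mul]
          rw [← h, h1]; ring

/-- The three admissible slopes. -/
def IsSlope (s : ℝ) : Prop := s = -1 ∨ s = 0 ∨ s = 1

lemma octi_ray {a b : ℝ × ℝ} {s : ℝ} (hs : IsSlope s) (hb : b.1 = a.1 + s * (b.2 - a.2)) :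
    Polyline.OctiSeg a b := by
  unfold Polyline.OctiSeg
  rcases hs with rfl | rfl | rfl
  · right; right; right; linarith
  · right; left; linarith
  · right; right; left; linarith

/-- A sloped segment. -/
lemma arc_r {a : ℝ × ℝ} {s y : ℝ} (hs : IsSlope s) (hy : a.2 < y) :
    Arc (ray a s y) a (a.1 + s * (y - a.2), y) 0 := by
  have h := arc_one (a := a) (b := (a.1 + s * (y - a.2), y))
    (by intro h; rw [h] at hy; exact absurd hy (lt_irrefl _)) (octi_ray (s := s) hs rfl)
  rwa [sg_eq_ray (s := s) hy rfl] at h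

lemma arc_h {a b : ℝ × ℝ} (h2 : a.2 = b.2) (h1 : a.1 ≠ b.1) : Arc (hor a.2 a.1 b.1) a b 0 := by
  have h := arc_one (a := a) (b := b) (fun h => h1 (by rw [h])) (Or.inl (by linarith))
  rwa [sg_eq_hor h2] at h

lemma slope_bound {s : ℝ} (hs : IsSlope s) : -1 ≤ s ∧ s ≤ 1 := by
  rcases hs with rfl | rfl | rfl <;> norm_num

/-- A sloped segment followed by a horizontal one. -/
lemma arc_rh {a : ℝ × ℝ} {s y x : ℝ} (hs : IsSlope s) (hy : a.2 < y) :
    Arc (ray a s y ∪ hor y (a.1 + s * (y - a.2)) x) a (x, y) 1 := by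
  by_cases hx : x = a.1 + s * (y - a.2)
  · have := (arc_r hs hy).mono (Nat.zero_le 1)
    rw [← hx] at this ⊢
    convert this using 1
    rw [Set.union_eq_left]
    rintro p ⟨h1, h2⟩
    have : p.1 = x := by rcases h2 with h2 | h2 <;> linarith [h2.1, h2.2]
    exact ⟨by rw [h1]; exact hy.le, h1.le, by rw [this, h1]; exact hx⟩
  · have hb := slope_bound hs
    have hm : 0 < y - a.2 := by linarith
    have h := arc_two (a := a) (b := (a.1 + s * (y - a.2), y)) (c := (x, y))
      (if a.1 + s * (y - a.2) < x then 1 else -1) 2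
      (by split_ifs <;> simp only <;> nlinarith)
      (by
        split_ifs with h
        · simp only; linarith
        · have := lt_of_le_of_ne (not_lt.1 h) hx
          simp only; linarith)
      (octi_ray (s := s) hs rfl) (Or.inl (by simp))
      (by
        simp only [crs]
        have : (a.1 + s * (y - a.2) - a.1) * (y - a.2) - (y - a.2) * (x - a.1) =
          (y - a.2) * (a.1 + s * (y - a.2) - x) := by ring
        rw [this]
        exact mul_ne_zero (by linarith) (sub_ne_zero.2 (Ne.symm hx)))
    rwa [sg_eq_ray (s := s) hy rfl, sg_eq_hor (a := (a.1 + s * (y - a.2), y)) (b := (x, y)) rfl] at h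

/-- A sloped segment, a horizontal one and a sloped one. -/
lemma arc_rhr {a : ℝ × ℝ} {s r y x y' : ℝ} (hs : IsSlope s) (hr : IsSlope r) (hy : a.2 < y)
    (hy' : y < y') (k : ℕ)
    (hk : 2 ≤ k ∨ x = a.1 + s * (y - a.2) ∧ (1 ≤ k ∨ s = r)) :
    Arc (ray a s y ∪ hor y (a.1 + s * (y - a.2)) x ∪ ray (x, y) r y') a
      (x + r * (y' - y), y') k := by
  have hb := slope_bound hs
  have hb' := slope_bound hr
  have hm : 0 < y - a.2 := by linarith
  have hm' : 0 < y' - y := by linarith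
  by_cases hx : x = a.1 + s * (y - a.2)
  · have e1 : ray a s y ∪ hor y (a.1 + s * (y - a.2)) x ∪ ray (x, y) r y' =
        ray a s y ∪ ray (x, y) r y' := by
      congr 1
      rw [Set.union_eq_left]
      rintro p ⟨h1, h2⟩
      have : p.1 = x := by rcases h2 with h2 | h2 <;> linarith [h2.1, h2.2]
      exact ⟨by rw [h1]; exact hy.le, h1.le, by rw [this, h1]; exact hx⟩
    rw [e1]
    by_cases hsr : s = r
    · subst hsr
      have := (arc_r (a := a) (y := y') hs (by linarith)).mono (Nat.zero_le k)
      convert this using 1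
      · ext p
        constructor
        · rintro (⟨h1, h2, h3⟩ | ⟨h1, h2, h3⟩)
          · exact ⟨h1, by linarith, h3⟩
          · simp only at h1 h2 h3
            exact ⟨by linarith, h2, by rw [h3, hx]; ring⟩
        · rintro ⟨h1, h2, h3⟩
          rcases le_total p.2 y with h | h
          · exact Or.inl ⟨h1, h, h3⟩
          · exact Or.inr ⟨h, h2, by rw [h3, hx]; ring⟩
      · rw [hx]; congr 1; ring
    · have hk1 : 1 ≤ k := by
        rcases hk with hk | ⟨_, hk | hk⟩
        · omega
        · exact hk
        · exact absurd hk hsr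
      refine Arc.mono ?_ hk1
      have h := arc_two (a := a) (b := (x, y)) (c := (x + r * (y' - y), y')) 0 1
        (by simp only; linarith) (by simp only; linarith)
        (octi_ray (s := s) hs hx) (octi_ray (s := r) hr rfl)
        (by
          simp only [crs]
          have : (x - a.1) * (y' - a.2) - (y - a.2) * (x + r * (y' - y) - a.1) =
            (y - a.2) * (y' - y) * (s - r) := by rw [hx]; ring
          rw [this]
          exact mul_ne_zero (mul_ne_zero hm.ne' hm'.ne') (sub_ne_zero.2 hsr))
      rwa [sg_eq_ray (s := s) hy hx, sg_eq_ray (s := r) hy' rfl] at h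
  · have hk2 : 2 ≤ k := by
      rcases hk with hk | ⟨h, _⟩
      · exact hk
      · exact absurd h hx
    refine Arc.mono ?_ hk2
    have h := arc_three (a := a) (b := (a.1 + s * (y - a.2), y)) (c := (x, y))
      (d := (x + r * (y' - y), y'))
      (if a.1 + s * (y - a.2) < x then 1 else -1) 2
      (by split_ifs <;> simp only <;> nlinarith)
      (by
        split_ifs with h
        · simp only; linarith
        · have := lt_of_le_of_ne (not_lt.1 h) hx
          simp only; linarith)
      (by split_ifs <;> simp only <;> nlinarith)
      (octi_ray (s := s) hs rfl) (Or.inl (by simp)) (octi_ray (s := r) hr rfl)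
      (by
        simp only [crs]
        have : (a.1 + s * (y - a.2) - a.1) * (y - a.2) - (y - a.2) * (x - a.1) =
          (y - a.2) * (a.1 + s * (y - a.2) - x) := by ring
        rw [this]
        exact mul_ne_zero (by linarith) (sub_ne_zero.2 (Ne.symm hx)))
      (by
        simp only [crs]
        have : (x - (a.1 + s * (y - a.2))) * (y' - y) - (y - y) *
            (x + r * (y' - y) - (a.1 + s * (y - a.2))) =
          (x - (a.1 + s * (y - a.2))) * (y' - y) := by ring
        rw [this]
        exact mul_ne_zero (sub_ne_zero.2 hx) hm'.ne')
    rwa [sg_eq_ray (s := s) hy rfl,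
      sg_eq_hor (a := (a.1 + s * (y - a.2), y)) (b := (x, y)) rfl, sg_eq_ray (s := r) hy' rfl] at h

/-- The `V`-shaped arc below a horizontal segment. -/
def vee (x x' : ℝ) : Set (ℝ × ℝ) :=
  {p | x ≤ p.1 ∧ p.1 ≤ x' ∧ (p.2 = x - p.1 ∧ p.1 ≤ (x + x') / 2 ∨
    p.2 = p.1 - x' ∧ (x + x') / 2 ≤ p.1)}

lemma sg_graph {a b : ℝ × ℝ} {s : ℝ} (h : a.1 < b.1) (hb : b.2 = a.2 + s * (b.1 - a.1)) :
    sg a b = {p | a.1 ≤ p.1 ∧ p.1 ≤ b.1 ∧ p.2 = a.2 + s * (p.1 - a.1)} := by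
  ext p
  constructor
  · rintro ⟨t, ⟨h0, h1⟩, rfl⟩
    simp only [segPt, Set.mem_ofPred_eq, Prod.fst_add, Prod.snd_add, Prod.smul_fst,
      Prod.smul_snd, Prod.fst_sub, Prod.snd_sub, smul_eq_mul]
    refine ⟨by nlinarith, by nlinarith, ?_⟩
    rw [hb]; ring
  · rintro ⟨h1, h2, h3⟩
    have hne : b.1 - a.1 ≠ 0 := by linarith
    refine ⟨(p.1 - a.1) / (b.1 - a.1), ⟨div_nonneg (by linarith) (by linarith),
      (div_le_one (by linarith)).2 (by linarith)⟩, ?_⟩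
    apply Prod.ext
    · simp only [segPt, Prod.fst_add, Prod.smul_fst, Prod.fst_sub, smul_eq_mul]
      field_simp; ring
    · simp only [segPt, Prod.snd_add, Prod.smul_snd, Prod.snd_sub, smul_eq_mul]
      rw [hb, h3]; field_simp; ring

lemma arc_vee {x x' : ℝ} (h : x < x') : Arc (vee x x') (x, 0) (x', 0) 1 := by
  have h := arc_two (a := (x, 0)) (b := ((x + x') / 2, (x - x') / 2)) (c := (x', 0)) 1 0
    (by simp only; linarith) (by simp only; linarith)
    (by right; right; right; simp only; ring) (by right; right; left; simp only; ring)
    (by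
      simp only [crs]
      have : ((x + x') / 2 - x) * (0 - 0) - ((x - x') / 2 - 0) * (x' - x) = (x' - x) ^ 2 / 2 := by
        ring
      rw [this]
      have : 0 < x' - x := by linarith
      positivity)
  rw [sg_graph (s := -1) (by simp only; linarith) (by simp only; ring),
    sg_graph (s := 1) (by simp only; linarith) (by simp only; ring)] at h
  convert h using 1
  ext p
  simp only [vee, Set.mem_ofPred_eq, Set.mem_union]
  constructor
  · rintro ⟨h1, h2, ⟨h3, h4⟩ | ⟨h3, h4⟩⟩
    · exact Or.inl ⟨h1, h4, by linarith⟩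
    · exact Or.inr ⟨h4, h2, by linarith⟩
  · rintro (⟨h1, h2, h3⟩ | ⟨h1, h2, h3⟩)
    · exact ⟨h1, by linarith, Or.inl ⟨by linarith, h2⟩⟩
    · exact ⟨by linarith, h2, Or.inr ⟨by linarith, h1⟩⟩

lemma Arc.ends_mem {C : Set (ℝ × ℝ)} {a b : ℝ × ℝ} {k : ℕ} (h : Arc C a b k) :
    a ∈ C ∧ b ∈ C := by
  obtain ⟨P, h1, h2, h3, h4, h5⟩ := h
  have h0 : P.pt 0 ∈ C := by
    rw [← h4, image_eq_iUnion]
    exact ⟨0, P.len_pos, 0, by simp, segPt_zero _ _⟩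
  have hl : P.pt P.len ∈ C := by
    rw [← h4, image_eq_iUnion]
    have := P.len_pos
    refine ⟨P.len - 1, by omega, 1, by simp, ?_⟩
    rw [segPt_one]; congr 1; omega
  have : ({a, b} : Set (ℝ × ℝ)) ⊆ C := by
    rw [← h3]; rintro p (rfl | rfl) <;> assumption
  exact ⟨this (by simp), this (by simp)⟩

end Arcs

/-! ### Partial drawings and their extension by a horizontal strip -/

/-- A pending edge: `src` is already drawn, `tgt` is not. The flags record whether the edge is the
leftmost, respectively the rightmost, among the edges leaving `src` upwards. -/
structure Ln (V : Type*) where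
  src : V
  tgt : V
  fst : Bool
  lst : Bool

/-- The edge of a pending line. -/
def Ln.e {V : Type*} (l : Ln V) : Sym2 V := s(l.src, l.tgt)

/-- The slope of a pending line: the leftmost line leaves to the upper left, the rightmost line to
the upper right, lines in the middle are vertical; a line which is alone has slope `τ`. -/
def Ln.sl {V : Type*} (τ : V → V → ℤ) (l : Ln V) : ℤ :=
  if l.fst then (if l.lst then τ l.src l.tgt else -1) else if l.lst then 1 else 0

/-- The abscissa at height `y` of the ray carrying a pending line. -/
def rx {V : Type*} (pos : V → ℤ × ℤ) (τ : V → V → ℤ) (l : Ln V) (y : ℝ) : ℝ :=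
  ((pos l.src).1 : ℝ) + (l.sl τ : ℝ) * (y - ((pos l.src).2 : ℝ))

section State
variable {V : Type*} [DecidableEq V] [Fintype V] {G : SimpleGraph V} {τ : V → V → ℤ}

lemma Ln.isSlope (hτ : ∀ u w, |τ u w| ≤ 1) (l : Ln V) : IsSlope (l.sl τ : ℝ) := by
  have h : l.sl τ = -1 ∨ l.sl τ = 0 ∨ l.sl τ = 1 := by
    unfold Ln.sl
    have := abs_le.1 (hτ l.src l.tgt)
    split_ifs <;> omega
  rcases h with h | h | h <;> rw [h] <;> simp [IsSlope]

/-- A partial drawing, at height `Y`: the vertices of `S` are placed at `pos` and the edges between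
them are drawn with `b` bends in total, the pending lines `L` are drawn as rays up to height `Y`.
The set `C e` is the part of the edge `e` drawn so far and `β e` bounds its number of bends. -/
structure St (G : SimpleGraph V) (τ : V → V → ℤ) (S : Finset V) (L : List (Ln V)) (Y : ℤ)
    (pos : V → ℤ × ℤ) (C : Sym2 V → Set (ℝ × ℝ)) (β : Sym2 V → ℕ) (b : ℕ) : Prop where
  vY : ∀ w ∈ S, (pos w).2 ≤ Y
  inj : ∀ w ∈ S, ∀ w' ∈ S, pos w = pos w' → w = w'
  le : ∀ e, ∀ p ∈ C e, p.2 ≤ (Y : ℝ)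
  emp : ∀ e, (∀ w ∈ e, w ∉ S) → C e = ∅
  vert : ∀ e, ∀ w ∈ S, toR (pos w) ∈ C e → w ∈ e
  meet : ∀ e e', e ≠ e' → ∀ p ∈ C e, p ∈ C e' → ∃ w ∈ S, w ∈ e ∧ w ∈ e' ∧ p = toR (pos w)
  arc : ∀ u ∈ S, ∀ v ∈ S, G.Adj u v → Arc (C s(u, v)) (toR (pos u)) (toR (pos v)) (β s(u, v))
  line : ∀ l ∈ L, l.src ∈ S ∧ l.tgt ∉ S ∧ G.Adj l.src l.tgt ∧
    C l.e = ray (toR (pos l.src)) (l.sl τ) Y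
  bend : ∑ e, β e ≤ b

lemma rx_congr {pos pos' : V → ℤ × ℤ} {l : Ln V} (h : pos' l.src = pos l.src) (y : ℝ) :
    rx pos' τ l y = rx pos τ l y := by unfold rx; rw [h]

lemma toR_inj {p q : ℤ × ℤ} (h : toR p = toR q) : p = q := by
  have h1 := congrArg Prod.fst h
  have h2 := congrArg Prod.snd h
  simp only [toR] at h1 h2
  exact Prod.ext (by exact_mod_cast h1) (by exact_mod_cast h2)

lemma Ln.e_inj {S : Finset V} {l l' : Ln V} (h1 : l.src ∈ S) (h2' : l'.tgt ∉ S) (h : l.e = l'.e) : l.src = l'.src ∧ l.tgt = l'.tgt := by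
  unfold Ln.e at h
  rw [Sym2.eq_iff] at h
  rcases h with h | ⟨h, h'⟩
  · exact h
  · rw [h] at h1; exact absurd h1 h2'

lemma pairwise_or {α : Type*} {R : α → α → Prop} {L : List α} (h : L.Pairwise R) {a b : α}
    (ha : a ∈ L) (hb : b ∈ L) (hab : a ≠ b) : R a b ∨ R b a := by
  induction h with
  | nil => simp at ha
  | cons h1 _ ih =>
    rcases List.mem_cons.1 ha with h2 | h2 <;> rcases List.mem_cons.1 hb with h3 | h3
    · exact absurd (h2.trans h3.symm) hab
    · exact Or.inl (h2 ▸ h1 _ h3)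
    · exact Or.inr (h3 ▸ h1 _ h2)
    · exact ih h2 h3

/-- Extension of a partial drawing by the strip between the heights `Y` and `Y'`. The new vertices
`Z` are placed at height `Y'`; the lines in `A` (left) and `D` (right) are prolonged; the lines
in `B` are completed, and `Bl e` is the part of the edge `e` in the strip if `e` has an endpoint
in `Z`. -/
theorem St.extend {S : Finset V} {A B D : List (Ln V)} {Y : ℤ} {pos : V → ℤ × ℤ}
    {C : Sym2 V → Set (ℝ × ℝ)} {β : Sym2 V → ℕ} {b : ℕ}
    (h : St G τ S (A ++ B ++ D) Y pos C β b)
    (Z : Finset V) (hZS : ∀ z ∈ Z, z ∉ S) (pos' : V → ℤ × ℤ) (hpos : ∀ w ∈ S, pos' w = pos w)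
    (Y' : ℤ) (hY : Y < Y')
    (hZy : ∀ z ∈ Z, (pos' z).2 = Y')
    (hZi : ∀ z ∈ Z, ∀ z' ∈ Z, pos' z = pos' z' → z = z')
    (hAC : (A ++ D).Pairwise fun l l' => ¬ (l.src = l'.src ∧ l.tgt = l'.tgt) ∧
      ∀ y : ℝ, (Y : ℝ) < y → y ≤ Y' → rx pos τ l y < rx pos τ l' y)
    (htgt : ∀ l ∈ A ++ D, l.tgt ∉ Z)
    (Bl : Sym2 V → Set (ℝ × ℝ))
    (hBl : ∀ e, ∀ p ∈ Bl e, (Y : ℝ) < p.2 ∧ p.2 ≤ Y' ∧ (∀ w ∈ e, w ∈ S ∨ w ∈ Z) ∧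
      (∃ w ∈ e, w ∈ Z) ∧ (∀ l ∈ A, rx pos τ l p.2 < p.1) ∧ (∀ l ∈ D, p.1 < rx pos τ l p.2))
    (hZA : ∀ z ∈ Z, (∀ l ∈ A, rx pos τ l Y' < (pos' z).1) ∧ (∀ l ∈ D, (pos' z).1 < rx pos τ l Y'))
    (hBZ : ∀ e, ∀ z ∈ Z, toR (pos' z) ∈ Bl e → z ∈ e)
    (hBB : ∀ e e', e ≠ e' → ∀ p ∈ Bl e, p ∈ Bl e' → ∃ z ∈ Z, z ∈ e ∧ z ∈ e' ∧ p = toR (pos' z))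
    (β' : Sym2 V → ℕ) (hβ : ∀ e, β e ≤ β' e) (b' : ℕ) (hb : ∑ e, β' e ≤ b')
    (harc : ∀ u v, (u ∈ S ∨ u ∈ Z) → v ∈ Z → G.Adj u v →
      Arc (C s(u, v) ∪ Bl s(u, v)) (toR (pos' u)) (toR (pos' v)) (β' s(u, v)))
    (N : List (Ln V)) (hN : ∀ l ∈ N, l.src ∈ Z ∧ l.tgt ∉ S ∧ l.tgt ∉ Z ∧ G.Adj l.src l.tgt) :
    ∃ C', St G τ (S ∪ Z) (A ++ N ++ D) Y' pos' C' β' b' := by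
  have hYr : (Y : ℝ) < Y' := by exact_mod_cast hY
  have hold : ∀ l ∈ A ++ D, l ∈ A ++ B ++ D := by
    intro l hl; simp only [List.mem_append] at hl ⊢; tauto
  let R : Sym2 V → Set (ℝ × ℝ) := fun e =>
    {p | ∃ l ∈ A ++ D, e = l.e ∧ (Y : ℝ) < p.2 ∧ p.2 ≤ Y' ∧ p.1 = rx pos τ l p.2}
  let Q : Sym2 V → Set (ℝ × ℝ) := fun e => {p | ∃ z ∈ Z, z ∈ e ∧ p = toR (pos' z)}
  let N' : Sym2 V → Set (ℝ × ℝ) := fun e => R e ∪ Bl e ∪ Q e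
  have hQy : ∀ z ∈ Z, (toR (pos' z)).2 = (Y' : ℝ) := fun z hz => by simp [toR, hZy z hz]
  have hNy : ∀ e, ∀ p ∈ N' e, (Y : ℝ) < p.2 ∧ p.2 ≤ Y' := by
    rintro e p ((⟨l, _, _, h1, h2, _⟩ | hp) | ⟨z, hz, _, rfl⟩)
    · exact ⟨h1, h2⟩
    · exact ⟨(hBl e p hp).1, (hBl e p hp).2.1⟩
    · rw [hQy z hz]; exact ⟨hYr, le_rfl⟩
  have hRQ : ∀ e, ∀ z ∈ Z, toR (pos' z) ∉ R e := by
    rintro e z hz ⟨l, hl, _, _, _, h3⟩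
    rw [hQy z hz] at h3
    have h4 : ((pos' z).1 : ℝ) = rx pos τ l Y' := h3
    rcases List.mem_append.1 hl with hl | hl
    · exact absurd ((hZA z hz).1 l hl) (by rw [h4]; exact lt_irrefl _)
    · exact absurd ((hZA z hz).2 l hl) (by rw [h4]; exact lt_irrefl _)
  have hRB : ∀ e e' p, p ∈ R e → p ∉ Bl e' := by
    rintro e e' p ⟨l, hl, _, _, _, h3⟩ hp
    obtain ⟨_, _, _, _, h5, h6⟩ := hBl _ _ hp
    rcases List.mem_append.1 hl with hl | hl
    · exact absurd (h5 l hl) (by rw [h3]; exact lt_irrefl _)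
    · exact absurd (h6 l hl) (by rw [h3]; exact lt_irrefl _)
  have hRR : ∀ e e' p, e ≠ e' → p ∈ R e → p ∉ R e' := by
    rintro e e' p hne ⟨l, hl, rfl, h1, h2, h3⟩ ⟨l', hl', rfl, _, _, h3'⟩
    rcases pairwise_or hAC hl hl' (fun hh => hne (by rw [hh])) with h4 | h4
    · exact (h4.2 p.2 h1 h2).ne (by rw [← h3, ← h3'])
    · exact (h4.2 p.2 h1 h2).ne (by rw [← h3, ← h3'])
  have hQv : ∀ e, ∀ z ∈ Z, toR (pos' z) ∈ Q e → z ∈ e := by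
    rintro e z hz ⟨z', hz', hze, heq⟩
    rw [hZi z hz z' hz' (toR_inj heq)]; exact hze
  have hNv : ∀ e, ∀ z ∈ Z, toR (pos' z) ∈ N' e → z ∈ e := by
    rintro e z hz ((hp | hp) | hp)
    · exact absurd hp (hRQ e z hz)
    · exact hBZ e z hz hp
    · exact hQv e z hz hp
  have hNN : ∀ e e', e ≠ e' → ∀ p ∈ N' e, p ∈ N' e' →
      ∃ z ∈ Z, z ∈ e ∧ z ∈ e' ∧ p = toR (pos' z) := by
    intro e e' hne p hp hp'
    by_cases hz : ∃ z ∈ Z, p = toR (pos' z)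
    · obtain ⟨z, hz, rfl⟩ := hz
      exact ⟨z, hz, hNv e z hz hp, hNv e' z hz hp', rfl⟩
    · push Not at hz
      rcases hp with (hp | hp) | ⟨z, hzZ, _, hp⟩
      · rcases hp' with (hp' | hp') | ⟨z, hzZ, _, hp'⟩
        · exact absurd hp' (hRR e e' p hne hp)
        · exact absurd hp' (hRB e e' p hp)
        · exact absurd hp' (hz z hzZ)
      · rcases hp' with (hp' | hp') | ⟨z, hzZ, _, hp'⟩
        · exact absurd hp (hRB e' e p hp')
        · exact hBB e e' hne p hp hp'
        · exact absurd hp' (hz z hzZ)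
      · exact absurd hp (hz z hzZ)
  have hvS : ∀ w ∈ S, (toR (pos' w)).2 ≤ (Y : ℝ) := by
    intro w hw
    rw [hpos w hw]
    simp only [toR]
    exact_mod_cast h.vY w hw
  refine ⟨fun e => C e ∪ N' e, ?_, ?_, ?_, ?_, ?_, ?_, ?_, ?_, hb⟩
  · intro w hw
    rcases Finset.mem_union.1 hw with hw | hw
    · rw [hpos w hw]; exact (h.vY w hw).trans hY.le
    · exact (hZy w hw).le
  · intro w hw w' hw' heq
    have hmix : ∀ w ∈ S, ∀ z ∈ Z, pos' w ≠ pos' z := by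
      intro w hw z hz heq
      have := h.vY w hw
      rw [← hpos w hw, heq, hZy z hz] at this
      omega
    rcases Finset.mem_union.1 hw with hw | hw <;> rcases Finset.mem_union.1 hw' with hw' | hw'
    · rw [hpos w hw, hpos w' hw'] at heq; exact h.inj w hw w' hw' heq
    · exact absurd heq (hmix w hw w' hw')
    · exact absurd heq.symm (hmix w' hw' w hw)
    · exact hZi w hw w' hw' heq
  · rintro e p (hp | hp)
    · exact (h.le e p hp).trans hYr.le
    · exact (hNy e p hp).2
  · intro e he
    have heS : ∀ w ∈ e, w ∉ S := fun w hw hS => he w hw (Finset.mem_union_left _ hS)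
    have heZ : ∀ w ∈ e, w ∉ Z := fun w hw hS => he w hw (Finset.mem_union_right _ hS)
    rw [h.emp e heS, Set.empty_union, Set.eq_empty_iff_forall_notMem]
    rintro p ((⟨l, hl, rfl, _⟩ | hp) | ⟨z, hz, hze, _⟩)
    · exact heS _ (by simp [Ln.e]) (h.line l (hold l hl)).1
    · obtain ⟨w, hw, hwZ⟩ := (hBl e p hp).2.2.2.1
      exact heZ w hw hwZ
    · exact heZ z hze hz
  · rintro e w hw (hp | hp)
    · rcases Finset.mem_union.1 hw with hw | hw
      · rw [hpos w hw] at hp; exact h.vert e w hw hp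
      · have := h.le _ _ hp
        rw [hQy w hw] at this; linarith
    · rcases Finset.mem_union.1 hw with hw | hw
      · have := (hNy e _ hp).1
        linarith [hvS w hw]
      · exact hNv e w hw hp
  · rintro e e' hne p (hp | hp) (hp' | hp')
    · obtain ⟨w, hw, h1, h2, h3⟩ := h.meet e e' hne p hp hp'
      exact ⟨w, Finset.mem_union_left _ hw, h1, h2, by rw [hpos w hw]; exact h3⟩
    · linarith [h.le _ _ hp, (hNy _ _ hp').1]
    · linarith [h.le _ _ hp', (hNy _ _ hp).1]
    · obtain ⟨w, hw, h1⟩ := hNN e e' hne p hp hp'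
      exact ⟨w, Finset.mem_union_right _ hw, h1⟩
  · have key : ∀ u v, (u ∈ S ∨ u ∈ Z) → v ∈ Z → G.Adj u v →
        Arc (C s(u, v) ∪ N' s(u, v)) (toR (pos' u)) (toR (pos' v)) (β' s(u, v)) := by
      intro u v hu hv huv
      have ha := harc u v hu hv huv
      convert ha using 1
      have hR : R s(u, v) = ∅ := by
        rw [Set.eq_empty_iff_forall_notMem]
        rintro p ⟨l, hl, he, _⟩
        have h1 := (h.line l (hold l hl)).2.1
        have h2 := htgt l hl
        have : l.tgt ∈ s(u, v) := by rw [he]; simp [Ln.e]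
        rcases Sym2.mem_iff.1 this with h3 | h3
        · rw [h3] at h1 h2; tauto
        · rw [h3] at h1 h2; tauto
      ext p
      constructor
      · rintro (hp | (hp | hp) | ⟨z, hz, hze, rfl⟩)
        · exact Or.inl hp
        · rw [hR] at hp; exact absurd hp (Set.notMem_empty p)
        · exact Or.inr hp
        · rcases Sym2.mem_iff.1 hze with rfl | rfl
          · exact ha.ends_mem.1
          · exact ha.ends_mem.2
      · rintro (hp | hp)
        · exact Or.inl hp
        · exact Or.inr (Or.inl (Or.inr hp))
    intro u hu v hv huv
    rcases Finset.mem_union.1 hv with hvS | hvZ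
    · rcases Finset.mem_union.1 hu with huS | huZ
      · have ha := (h.arc u huS v hvS huv).mono (hβ _)
        rw [hpos u huS, hpos v hvS]
        convert ha using 1
        rw [Set.union_eq_left]
        have hno : ∀ z ∈ Z, z ∉ s(u, v) := by
          intro z hz hze
          rcases Sym2.mem_iff.1 hze with rfl | rfl
          · exact hZS _ hz huS
          · exact hZS _ hz hvS
        rintro p ((⟨l, hl, he, _⟩ | hp) | ⟨z, hz, hze, _⟩)
        · exfalso
          have h1 := (h.line l (hold l hl)).2.1
          have : l.tgt ∈ s(u, v) := by rw [he]; simp [Ln.e]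
          rcases Sym2.mem_iff.1 this with h3 | h3 <;> rw [h3] at h1 <;> tauto
        · obtain ⟨w, hw, hwZ⟩ := (hBl _ p hp).2.2.2.1
          exact absurd hw (hno w hwZ)
        · exact absurd hze (hno z hz)
      · have := (key v u (Or.inl hvS) huZ huv.symm).symm
        rwa [Sym2.eq_swap] at this
    · exact key u v (Finset.mem_union.1 hu) hvZ huv
  · intro l hl
    have hlc : l ∈ A ++ D ∨ l ∈ N := by simp only [List.mem_append] at hl ⊢; tauto
    rcases hlc with hl | hl
    · obtain ⟨h1, h2, h3, h4⟩ := h.line l (hold l hl)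
      have hT : l.tgt ∉ S ∪ Z := by
        rw [Finset.mem_union]; rintro (h5 | h5)
        · exact h2 h5
        · exact htgt l hl h5
      refine ⟨Finset.mem_union_left _ h1, hT, h3, ?_⟩
      rw [h4, hpos _ h1]
      have hsy : ((pos l.src).2 : ℝ) ≤ Y := by exact_mod_cast h.vY _ h1
      ext p
      constructor
      · rintro (⟨h5, h6, h7⟩ | (⟨l', hl', he, h5, h6, h7⟩ | hp) | ⟨z, hz, hze, _⟩)
        · exact ⟨h5, h6.trans hYr.le, h7⟩
        · have h8 := h.line l' (hold l' hl')
          have hll : l = l' := by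
            by_contra hll
            have h9 := Ln.e_inj h1 h8.2.1 he
            rcases pairwise_or hAC hl hl' hll with h4 | h4
            · exact h4.1 h9
            · exact h4.1 ⟨h9.1.symm, h9.2.symm⟩
          subst hll
          exact ⟨by simp only [toR]; linarith, h6, h7⟩
        · exact absurd ((hBl _ p hp).2.2.1 l.tgt (by simp [Ln.e])) (by
            rintro (h9 | h9)
            · exact h2 h9
            · exact htgt l hl h9)
        · exfalso
          rcases Sym2.mem_iff.1 hze with rfl | rfl
          · exact hZS _ hz h1
          · exact htgt l hl hz
      · rintro ⟨h5, h6, h7⟩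
        rcases le_or_gt p.2 Y with h8 | h8
        · exact Or.inl ⟨h5, h8, h7⟩
        · exact Or.inr (Or.inl (Or.inl ⟨l, hl, rfl, h8, h6, h7⟩))
    · obtain ⟨h1, h2, h3, h4⟩ := hN l hl
      have hT : l.tgt ∉ S ∪ Z := by
        rw [Finset.mem_union]; tauto
      refine ⟨Finset.mem_union_right _ h1, hT, h4, ?_⟩
      have hCe : C l.e = ∅ := h.emp _ (by
        intro w hw
        rcases Sym2.mem_iff.1 hw with rfl | rfl
        · exact hZS _ h1
        · exact h2)
      ext p
      constructor
      · rintro (hp | (⟨l', hl', he, h5, h6, h7⟩ | hp) | ⟨z, hz, hze, rfl⟩)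
        · rw [hCe] at hp; exact absurd hp (Set.notMem_empty p)
        · exfalso
          have h8 := (h.line l' (hold l' hl')).1
          have : l'.src ∈ l.e := by rw [he]; simp [Ln.e]
          rcases Sym2.mem_iff.1 this with h9 | h9
          · rw [h9] at h8; exact hZS _ h1 h8
          · rw [h9] at h8; exact h2 h8
        · exact absurd ((hBl _ p hp).2.2.1 l.tgt (by simp [Ln.e])) (by tauto)
        · rcases Sym2.mem_iff.1 hze with rfl | rfl
          · refine ⟨le_rfl, ?_, ?_⟩
            · rw [hQy _ h1]
            · ring
          · exact absurd hz h3
      · rintro ⟨h5, h6, h7⟩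
        refine Or.inr (Or.inr ⟨l.src, h1, by simp [Ln.e], ?_⟩)
        rw [hQy _ h1] at h5
        have h8 : p.2 = Y' := le_antisymm h6 h5
        refine Prod.ext ?_ ?_
        · rw [h7, h8, hQy _ h1]; ring
        · rw [h8, hQy _ h1]

end State

section State
variable {V : Type*} [DecidableEq V] [Fintype V] {G : SimpleGraph V} {τ : V → V → ℤ}

/-- A partial drawing in which all vertices are placed is an octilinear drawing. -/
theorem St.finish {L : List (Ln V)} {Y : ℤ} {pos : V → ℤ × ℤ}
    {C : Sym2 V → Set (ℝ × ℝ)} {β : Sym2 V → ℕ} {b : ℕ} (h : St G τ Finset.univ L Y pos C β b) :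
    ∃ D : OctiDrawing G, D.IsPlanar ∧ D.totalBends ≤ b := by
  have hex : ∀ e : Sym2 V, ∃ P : Polyline, ∀ u v, e = s(u, v) → G.Adj u v →
      P.Octilinear ∧ P.Simple ∧ ({P.pt 0, P.pt P.len} : Set (ℝ × ℝ)) =
        {toR (pos u), toR (pos v)} ∧ P.image = C e ∧ P.bends ≤ β e := by
    intro e
    induction e using Sym2.ind with
    | _ u v =>
      by_cases huv : G.Adj u v
      · obtain ⟨P, h1, h2, h3, h4, h5⟩ := h.arc u (Finset.mem_univ _) v (Finset.mem_univ _) huv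
        refine ⟨P, ?_⟩
        intro u' v' he _
        refine ⟨h1, h2, ?_, h4, h5⟩
        rcases Sym2.eq_iff.1 he with ⟨rfl, rfl⟩ | ⟨rfl, rfl⟩
        · exact h3
        · rw [h3, Set.pair_comm]
      · refine ⟨⟨1, le_rfl, fun _ => 0⟩, ?_⟩
        intro u' v' he hadj
        exfalso
        have : s(u, v) ∈ G.edgeSet := by rw [he]; exact hadj
        exact huv this
  choose poly hpoly using hex
  have hE : ∀ e ∈ G.edgeSet, ∃ u v, e = s(u, v) ∧ G.Adj u v := by
    intro e
    induction e using Sym2.ind with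
    | _ u v => intro he; exact ⟨u, v, rfl, he⟩
  have hinj : Function.Injective pos := fun w w' hw =>
    h.inj w (Finset.mem_univ _) w' (Finset.mem_univ _) hw
  refine ⟨⟨pos, hinj, poly, fun u v huv => (hpoly _ u v rfl huv).2.2.1, ?_⟩, ⟨?_, ?_, ?_⟩, ?_⟩
  · intro e he
    obtain ⟨u, v, rfl, huv⟩ := hE e he
    exact (hpoly _ u v rfl huv).1
  · intro e he
    obtain ⟨u, v, rfl, huv⟩ := hE e he
    exact (hpoly _ u v rfl huv).2.1
  · intro u v huv
    have him := (hpoly _ u v rfl huv).2.2.2.1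
    have ha := (h.arc u (Finset.mem_univ _) v (Finset.mem_univ _) huv).ends_mem
    simp only [him]
    ext p
    constructor
    · rintro ⟨hp, w, rfl⟩
      rcases Sym2.mem_iff.1 (h.vert _ w (Finset.mem_univ _) hp) with rfl | rfl <;> simp
    · rintro (rfl | rfl)
      · exact ⟨ha.1, u, rfl⟩
      · exact ⟨ha.2, v, rfl⟩
  · intro e he e' he' hne p hp
    obtain ⟨u, v, rfl, huv⟩ := hE e he
    obtain ⟨u', v', rfl, huv'⟩ := hE e' he'
    rw [(hpoly _ u v rfl huv).2.2.2.1, (hpoly _ u' v' rfl huv').2.2.2.1] at hp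
    obtain ⟨w, _, h1, h2, h3⟩ := h.meet _ _ hne p hp.1 hp.2
    exact ⟨w, ⟨h1, h2⟩, h3.symm⟩
  · unfold OctiDrawing.totalBends
    refine le_trans (le_trans (Finset.sum_le_sum (g := β) ?_)
      (Finset.sum_le_sum_of_subset (Finset.subset_univ _))) h.bend
    intro e he
    rw [Set.Finite.mem_toFinset] at he
    obtain ⟨u, v, rfl, huv⟩ := hE e he
    exact (hpoly _ u v rfl huv).2.2.2.2

/-! ### Pending lines -/

/-- Two pending lines which are edges with different ends. -/
def Dif (l l' : Ln V) : Prop := ¬ (l.src = l'.src ∧ l.tgt = l'.tgt)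

/-- At height `Y` the line `l` is at distance at least `s` to the left of `l'`, or the two lines
leave the same point at height `Y` with increasing slopes. -/
def Gap (pos : V → ℤ × ℤ) (τ : V → V → ℤ) (Y s : ℤ) (l l' : Ln V) : Prop :=
  Dif l l' ∧ (rx pos τ l Y + s ≤ rx pos τ l' Y ∨
    rx pos τ l Y = rx pos τ l' Y ∧ l.sl τ + 1 ≤ l'.sl τ)

/-- The line `l` stays to the left of `l'` between the heights `Y` and `Y'`, and is at distance at
least `s` from it at height `Y'`. -/
def Wide (pos : V → ℤ × ℤ) (τ : V → V → ℤ) (Y Y' s : ℤ) (l l' : Ln V) : Prop :=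
  Dif l l' ∧ (∀ y : ℝ, (Y : ℝ) < y → y ≤ Y' → rx pos τ l y < rx pos τ l' y) ∧
    rx pos τ l Y' + s ≤ rx pos τ l' Y'

lemma rx_shift (pos : V → ℤ × ℤ) (l : Ln V) (y y' : ℝ) :
    rx pos τ l y' = rx pos τ l y + (l.sl τ : ℝ) * (y' - y) := by unfold rx; ring

lemma Gap.wide (hτ : ∀ u w, |τ u w| ≤ 1) {pos : V → ℤ × ℤ} {Y s J : ℤ} {l l' : Ln V}
    (h : Gap pos τ Y s l l') (hJ : 0 < J) (hs : 3 * J ≤ s) : Wide pos τ Y (Y + J) J l l' := by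
  have hJr : (0 : ℝ) < J := by exact_mod_cast hJ
  have hsr : 3 * (J : ℝ) ≤ s := by exact_mod_cast hs
  have b := slope_bound (l.isSlope hτ)
  have b' := slope_bound (l'.isSlope hτ)
  have key : ∀ y : ℝ, (Y : ℝ) < y → y ≤ Y + J → rx pos τ l y + (y - Y) ≤ rx pos τ l' y := by
    intro y h1 h2
    rw [rx_shift pos l Y y, rx_shift pos l' Y y]
    have hy : 0 < y - Y := by linarith
    rcases h.2 with h3 | ⟨h3, h4⟩
    · nlinarith
    · have h4' : (l.sl τ : ℝ) + 1 ≤ l'.sl τ := by exact_mod_cast h4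
      rw [h3]; nlinarith
  refine ⟨h.1, ?_, ?_⟩
  · intro y h1 h2
    push_cast at h2
    linarith [key y h1 h2]
  · have := key (Y + J) (by linarith) le_rfl
    push_cast
    linarith

/-- The lines leaving `v` to the vertices `ts`, of which there are at most three; the value for
longer lists is irrelevant. -/
def mkLn (v : V) : List V → List (Ln V)
  | [a] => [⟨v, a, true, true⟩]
  | [a, b] => [⟨v, a, true, false⟩, ⟨v, b, false, true⟩]
  | [a, b, c] => [⟨v, a, true, false⟩, ⟨v, b, false, false⟩, ⟨v, c, false, true⟩]
  | _ => []

/-- The underlying pair of vertices of a line. -/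
def Ln.pr (l : Ln V) : V × V := (l.src, l.tgt)

lemma mkLn_pr (v : V) {ts : List V} (h : ts.length ≤ 3) :
    (mkLn v ts).map Ln.pr = ts.map fun x => (v, x) := by
  match ts, h with
  | [], _ => rfl
  | [a], _ => rfl
  | [a, b], _ => rfl
  | [a, b, c], _ => rfl
  | a :: b :: c :: d :: t, h => simp at h; omega

lemma mkLn_mem {v : V} {ts : List V} {l : Ln V} (h : l ∈ mkLn v ts) : l.src = v ∧ l.tgt ∈ ts := by
  match ts, h with
  | [], h => simp [mkLn] at h
  | [a], h => simp [mkLn] at h; subst h; simp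
  | [a, b], h => simp [mkLn] at h; rcases h with rfl | rfl <;> simp
  | [a, b, c], h => simp [mkLn] at h; rcases h with rfl | rfl | rfl <;> simp
  | a :: b :: c :: d :: t, h => simp [mkLn] at h

lemma mkLn_sl (v : V) {ts : List V} (hnd : ts.Nodup) :
    (mkLn v ts).Pairwise fun l l' => Dif l l' ∧ l.sl τ + 1 ≤ l'.sl τ := by
  match ts, hnd with
  | [], _ => simp [mkLn]
  | [a], _ => simp [mkLn]
  | [a, b], h => simp [mkLn, Ln.sl, Dif] at h ⊢; exact h
  | [a, b, c], h => simp [mkLn, Ln.sl, Dif] at h ⊢; tauto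
  | a :: b :: c :: d :: t, h => simp [mkLn]

/-- If two consecutive lines have different sources, then the first one is the rightmost line of
its source or the second one is the leftmost line of its source. -/
def LInv (l l' : Ln V) : Prop := l.src = l'.src ∨ l.lst = true ∨ l'.fst = true

lemma mkLn_inv (v : V) (ts : List V) : (mkLn v ts).IsChain LInv := by
  match ts with
  | [] => simp [mkLn]
  | [a] => simp [mkLn]
  | [a, b] => simp [mkLn, LInv]
  | [a, b, c] => simp [mkLn, LInv]
  | a :: b :: c :: d :: t => simp [mkLn]

lemma mkLn_head {v : V} {ts : List V} {l : Ln V} (h : (mkLn v ts).head? = some l) :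
    l.fst = true := by
  match ts, h with
  | [], h => simp [mkLn] at h
  | [a], h => simp [mkLn] at h; subst h; rfl
  | [a, b], h => simp [mkLn] at h; subst h; rfl
  | [a, b, c], h => simp [mkLn] at h; subst h; rfl
  | a :: b :: c :: d :: t, h => simp [mkLn] at h

lemma mkLn_last {v : V} {ts : List V} {l : Ln V} (h : (mkLn v ts).getLast? = some l) :
    l.lst = true := by
  match ts, h with
  | [], h => simp [mkLn] at h
  | [a], h => simp [mkLn] at h; subst h; rfl
  | [a, b], h => simp [mkLn] at h; subst h; rfl
  | [a, b, c], h => simp [mkLn] at h; subst h; rfl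
  | a :: b :: c :: d :: t, h => simp [mkLn] at h

lemma mkLn_ne {v : V} {ts : List V} (h : ts ≠ []) (hl : ts.length ≤ 3) : mkLn v ts ≠ [] := by
  match ts, h, hl with
  | [a], _, _ => simp [mkLn]
  | [a, b], _, _ => simp [mkLn]
  | [a, b, c], _, _ => simp [mkLn]
  | a :: b :: c :: d :: t, _, h => simp at h; omega

/-- A nonempty list of lines between consistent lists preserves `LInv` if it starts with a leftmost
and ends with a rightmost line. -/
lemma inv_replace {A B D N : List (Ln V)} (h : (A ++ B ++ D).IsChain LInv) (hN : N.IsChain LInv)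
    (hne : N ≠ []) (h1 : ∀ l, N.head? = some l → l.fst = true)
    (h2 : ∀ l, N.getLast? = some l → l.lst = true) : (A ++ N ++ D).IsChain LInv := by
  rw [List.append_assoc, List.isChain_append] at h
  obtain ⟨hA, hBD, _⟩ := h
  rw [List.isChain_append] at hBD
  rw [List.append_assoc, List.isChain_append]
  refine ⟨hA, ?_, ?_⟩
  · rw [List.isChain_append]
    exact ⟨hN, hBD.2.1, fun x hx y hy => Or.inr (Or.inl (h2 x hx))⟩
  · intro x hx y hy
    refine Or.inr (Or.inr (h1 y ?_))
    rw [List.head?_append_of_ne_nil _ hne] at hy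
    exact hy

end State

/-! ### Adding a single vertex -/

section State
variable {V : Type*} [DecidableEq V] [Fintype V] {G : SimpleGraph V} {τ : V → V → ℤ}

lemma sum_list_ite {α : Type*} [Fintype α] [DecidableEq α] (B : List (α × ℕ)) :
    ∑ e, (B.map fun t => if t.1 = e then t.2 else 0).sum = (B.map Prod.snd).sum := by
  induction B with
  | nil => simp
  | cons a B ih => simp [Finset.sum_add_distrib, ih]

lemma le_sum_list_ite {α : Type*} [DecidableEq α] {B : List (α × ℕ)} {t : α × ℕ} (ht : t ∈ B) :
    t.2 ≤ (B.map fun t' => if t'.1 = t.1 then t'.2 else 0).sum := by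
  induction B with
  | nil => simp at ht
  | cons a B ih =>
    rcases List.mem_cons.1 ht with rfl | h
    · simp
    · have := ih h
      rw [List.map_cons, List.sum_cons]; omega

lemma rx_top {pos : V → ℤ × ℤ} (l : Ln V) (Y : ℤ) (h : (pos l.src).2 = Y) :
    rx pos τ l Y = (pos l.src).1 := by unfold rx; rw [h]; ring

/-- The separation of the lines after the lines between `A` and `D` have been replaced by lines
leaving new vertices at height `Y'`. -/
lemma gap_replace {A D N : List (Ln V)} {Y Y' s : ℤ} {pos pos' : V → ℤ × ℤ}
    (hs : ∀ l ∈ A ++ D, pos' l.src = pos l.src)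
    (hAD : (A ++ D).Pairwise (Wide pos τ Y Y' s))
    (hN : N.Pairwise (Gap pos' τ Y' s))
    (hA : ∀ n ∈ N, ∀ l ∈ A, Dif l n ∧ rx pos τ l Y' + s ≤ (pos' n.src).1)
    (hD : ∀ n ∈ N, ∀ l ∈ D, Dif n l ∧ (pos' n.src).1 + s ≤ rx pos τ l Y')
    (hy : ∀ n ∈ N, (pos' n.src).2 = Y') :
    (A ++ N ++ D).Pairwise (Gap pos' τ Y' s) := by
  have hg : ∀ l ∈ A ++ D, ∀ l' ∈ A ++ D, Wide pos τ Y Y' s l l' → Gap pos' τ Y' s l l' := by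
    intro l hl l' hl' hw
    refine ⟨hw.1, Or.inl ?_⟩
    rw [rx_congr (hs l hl), rx_congr (hs l' hl')]
    exact hw.2.2
  rw [List.pairwise_append] at hAD
  obtain ⟨h1, h2, h3⟩ := hAD
  have hmA : ∀ l ∈ A, l ∈ A ++ D := fun l hl => List.mem_append_left _ hl
  have hmD : ∀ l ∈ D, l ∈ A ++ D := fun l hl => List.mem_append_right _ hl
  rw [List.append_assoc, List.pairwise_append, List.pairwise_append]
  refine ⟨h1.imp_of_mem fun ha hb h => hg _ (hmA _ ha) _ (hmA _ hb) h,
    ⟨hN, h2.imp_of_mem fun ha hb h => hg _ (hmD _ ha) _ (hmD _ hb) h, ?_⟩, ?_⟩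
  · intro n hn d hd
    refine ⟨(hD n hn d hd).1, Or.inl ?_⟩
    rw [rx_top _ _ (hy n hn), rx_congr (hs d (hmD d hd))]
    exact (hD n hn d hd).2
  · intro a ha x hx
    rcases List.mem_append.1 hx with hx | hx
    · refine ⟨(hA x hx a ha).1, Or.inl ?_⟩
      rw [rx_top _ _ (hy x hx), rx_congr (hs a (hmA a ha))]
      exact (hA x hx a ha).2
    · exact hg _ (hmA _ ha) _ (hmD _ hx) (h3 a ha x hx)

lemma mkLn_gap {v : V} {ts : List V} (hnd : ts.Nodup) (pos' : V → ℤ × ℤ) (Y' s : ℤ)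
    (hy : (pos' v).2 = Y') : (mkLn v ts).Pairwise (Gap pos' τ Y' s) := by
  refine (mkLn_sl (τ := τ) v hnd).imp_of_mem ?_
  intro l l' hl hl' h
  have e1 := (mkLn_mem hl).1
  have e2 := (mkLn_mem hl').1
  refine ⟨h.1, Or.inr ⟨?_, h.2⟩⟩
  rw [rx_top _ _ (by rw [e1]; exact hy), rx_top _ _ (by rw [e2]; exact hy), e1, e2]

/-- Adding a vertex `v` at height `Y'`. The list `B` consists of the lines ending in `v`, together
with the part in the strip of the corresponding edges and their numbers of bends. -/
theorem St.single {S : Finset V} {A D : List (Ln V)} {B : List (Ln V × Set (ℝ × ℝ) × ℕ)} {Y : ℤ}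
    {pos : V → ℤ × ℤ} {C : Sym2 V → Set (ℝ × ℝ)} {β : Sym2 V → ℕ} {b : ℕ}
    (h : St G τ S (A ++ B.map Prod.fst ++ D) Y pos C β b)
    (hnd : (A ++ B.map Prod.fst ++ D).Pairwise Dif)
    {v : V} (hv : v ∉ S) (hB : ∀ t ∈ B, t.1.tgt = v)
    (hmem : ∀ x ∈ S, G.Adj v x → ∃ t ∈ B, t.1.src = x)
    {Y' xv s : ℤ} (hY : Y < Y') (hs : 0 < s)
    (hAD : (A ++ D).Pairwise (Wide pos τ Y Y' s))
    (hA : ∀ l ∈ A, rx pos τ l Y' + s ≤ xv) (hD : ∀ l ∈ D, xv + s ≤ rx pos τ l Y')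
    (hP : ∀ t ∈ B, ∀ p ∈ t.2.1, (Y : ℝ) < p.2 ∧ p.2 ≤ Y' ∧ (∀ l ∈ A, rx pos τ l p.2 < p.1) ∧
      (∀ l ∈ D, p.1 < rx pos τ l p.2))
    (hPP : B.Pairwise fun t t' => ∀ p ∈ t.2.1, p ∈ t'.2.1 → p = ((xv : ℝ), (Y' : ℝ)))
    (harc : ∀ t ∈ B, Arc (ray (toR (pos t.1.src)) (t.1.sl τ) Y ∪ t.2.1) (toR (pos t.1.src))
      ((xv : ℝ), (Y' : ℝ)) t.2.2)
    {k : ℕ} (hk : (B.map fun t => t.2.2).sum ≤ k)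
    {ts : List V} (hts : ts.Nodup) (htm : ∀ x ∈ ts, G.Adj v x ∧ x ∉ insert v S) :
    ∃ pos' C' β', St G τ (insert v S) (A ++ mkLn v ts ++ D) Y' pos' C' β' (b + k) ∧
      (A ++ mkLn v ts ++ D).Pairwise (Gap pos' τ Y' s) ∧ pos' v = (xv, Y') ∧
      ∀ w ∈ S, pos' w = pos w := by
  set pos' : V → ℤ × ℤ := fun w => if w = v then (xv, Y') else pos w with hpos'
  have hpS : ∀ w ∈ S, pos' w = pos w := by
    intro w hw
    simp only [hpos']
    rw [if_neg]; rintro rfl; exact hv hw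
  have hpv : pos' v = (xv, Y') := by simp [hpos']
  have hsr : (0 : ℝ) < s := by exact_mod_cast hs
  have hmB : ∀ t ∈ B, t.1 ∈ A ++ B.map Prod.fst ++ D := by
    intro t ht
    simp only [List.mem_append]
    exact Or.inl (Or.inr (List.mem_map.2 ⟨t, ht, rfl⟩))
  have hmAD : ∀ l ∈ A ++ D, l ∈ A ++ B.map Prod.fst ++ D := by
    intro l hl; simp only [List.mem_append] at hl ⊢; tauto
  have htgt : ∀ l ∈ A ++ D, l.tgt ≠ v := by
    intro l hl hlv
    obtain ⟨h1, _, h3, _⟩ := h.line l (hmAD l hl)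
    rw [hlv] at h3
    obtain ⟨t, ht, hts⟩ := hmem _ h1 h3.symm
    have hm : t.1 ∈ B.map Prod.fst := List.mem_map.2 ⟨t, ht, rfl⟩
    rw [List.append_assoc, List.pairwise_append, List.pairwise_append] at hnd
    rcases List.mem_append.1 hl with hl | hl
    · exact hnd.2.2 l hl t.1 (List.mem_append_left _ hm) ⟨hts.symm, by rw [hlv, hB t ht]⟩
    · exact hnd.2.1.2.2 t.1 hm l hl ⟨hts, by rw [hlv, hB t ht]⟩
  have hBd : B.Pairwise fun t t' => Dif t.1 t'.1 := by
    rw [List.append_assoc, List.pairwise_append, List.pairwise_append] at hnd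
    exact List.pairwise_map.1 hnd.2.1.1
  have hBe : ∀ t ∈ B, ∀ t' ∈ B, t.1.src = t'.1.src → t = t' := by
    intro t ht t' ht' hsrc
    by_contra hne
    rcases pairwise_or hBd ht ht' hne with h1 | h1
    · exact h1 ⟨hsrc, by rw [hB t ht, hB t' ht']⟩
    · exact h1 ⟨hsrc.symm, by rw [hB t ht, hB t' ht']⟩
  let K : List (Sym2 V × ℕ) := B.map fun t => (t.1.e, t.2.2)
  obtain ⟨C', hC'⟩ := h.extend {v} (by simpa using hv) pos' hpS Y' hY (by simp [hpv]) (by simp)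
    (hAD.imp fun hw => ⟨hw.1, hw.2.1⟩) (by simpa using htgt)
    (fun e => {p | ∃ t ∈ B, e = t.1.e ∧ p ∈ t.2.1})
    (by
      rintro e p ⟨t, ht, rfl, hp⟩
      obtain ⟨h1, h2, h3, h4⟩ := hP t ht p hp
      refine ⟨h1, h2, ?_, ⟨v, ?_, by simp⟩, h3, h4⟩
      · intro w hw
        rcases Sym2.mem_iff.1 hw with rfl | rfl
        · exact Or.inl (h.line _ (hmB t ht)).1
        · right; simp [hB t ht]
      · rw [← hB t ht]; simp [Ln.e])
    (by
      intro z hz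
      rw [Finset.mem_singleton] at hz
      subst hz
      rw [hpv]
      exact ⟨fun l hl => by linarith [hA l hl], fun l hl => by linarith [hD l hl]⟩)
    (by
      rintro e z hz ⟨t, ht, rfl, _⟩
      rw [Finset.mem_singleton] at hz
      rw [hz, ← hB t ht]; simp [Ln.e])
    (by
      rintro e e' hne p ⟨t, ht, rfl, hp⟩ ⟨t', ht', rfl, hp'⟩
      refine ⟨v, by simp, by rw [← hB t ht]; simp [Ln.e], by rw [← hB t' ht']; simp [Ln.e], ?_⟩
      have hpp : p = ((xv : ℝ), (Y' : ℝ)) := by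
        rcases pairwise_or hPP ht ht' (fun hh => hne (by rw [hh])) with h1 | h1
        · exact h1 p hp hp'
        · exact h1 p hp' hp
      rw [hpp, hpv]; rfl)
    (fun e => β e + (K.map fun t => if t.1 = e then t.2 else 0).sum)
    (fun e => Nat.le_add_right _ _) (b + k)
    (by
      rw [Finset.sum_add_distrib, sum_list_ite]
      refine Nat.add_le_add h.bend (le_trans (le_of_eq ?_) hk)
      simp only [K, List.map_map]
      rfl)
    (by
      intro u w hu hw huw
      rw [Finset.mem_singleton] at hw hu
      subst hw
      have huS : u ∈ S := by
        rcases hu with hu | hu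
        · exact hu
        · exact absurd hu huw.ne
      obtain ⟨t, ht, rfl⟩ := hmem u huS huw.symm
      have he : s(t.1.src, w) = t.1.e := by rw [Ln.e, hB t ht]
      have hl := h.line t.1 (hmB t ht)
      rw [he, hl.2.2.2, hpS _ hl.1, hpv]
      have hk' : t.2.2 ≤ (K.map fun t' => if t'.1 = t.1.e then t'.2 else 0).sum :=
        le_sum_list_ite (B := K) (t := (t.1.e, t.2.2)) (List.mem_map.2 ⟨t, ht, rfl⟩)
      convert (harc t ht).mono (hk'.trans (Nat.le_add_left _ _)) using 2
      · ext p
        constructor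
        · rintro ⟨t', ht', he', hp⟩
          have hl' := h.line t'.1 (hmB t' ht')
          rw [hBe t ht t' ht' (Ln.e_inj hl.1 hl'.2.1 he').1]
          exact hp
        · exact fun hp => ⟨t, ht, rfl, hp⟩
      · rfl
      · rfl)
    (mkLn v ts)
    (by
      intro l hl
      obtain ⟨h1, h2⟩ := mkLn_mem hl
      have h3 := htm _ h2
      rw [Finset.mem_insert, not_or] at h3
      rw [h1]
      exact ⟨by simp, h3.2.2, by simpa using h3.2.1, h3.1⟩)
  refine ⟨pos', C', _, by rw [Finset.insert_eq, Finset.union_comm]; exact hC', ?_, hpv, hpS⟩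
  have hsrc : ∀ l ∈ A ++ D, l.src ≠ v := by
    intro l hl hlv
    exact hv (hlv ▸ (h.line l (hmAD l hl)).1)
  refine gap_replace (fun l hl => hpS _ (h.line l (hmAD l hl)).1) hAD
    (mkLn_gap hts pos' Y' s (by rw [hpv])) ?_ ?_ ?_
  · intro n hn l hl
    have e1 := (mkLn_mem hn).1
    rw [e1, hpv]
    exact ⟨fun hd => hsrc l (List.mem_append_left _ hl) (hd.1.trans e1), hA l hl⟩
  · intro n hn l hl
    have e1 := (mkLn_mem hn).1
    rw [e1, hpv]
    exact ⟨fun hd => hsrc l (List.mem_append_right _ hl) (hd.1.symm.trans e1), hD l hl⟩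
  · intro n hn
    rw [(mkLn_mem hn).1, hpv]

end State

/-! ### Placing a vertex: the shapes of the edges which reach it -/

section State
variable {V : Type*} [DecidableEq V] [Fintype V] {G : SimpleGraph V} {τ : V → V → ℤ}

/-- The part of an edge in the strip between the heights `Y` and `Y'`, for an edge which reaches the
point `(xv, Y')`. For `none`, the line is prolonged up to height `Y'` and followed by a horizontal
segment. For `some r`, the line is prolonged up to height `T`, and followed by a horizontal segment
(possibly a point) and by a segment of slope `r`. -/
def pc (pos : V → ℤ × ℤ) (τ : V → V → ℤ) (Y T Y' xv : ℤ) (l : Ln V) : Option ℤ → Set (ℝ × ℝ)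
  | none => {p | (Y : ℝ) < p.2 ∧ p.2 ≤ Y' ∧ p.1 = rx pos τ l p.2} ∪ hor Y' (rx pos τ l Y') xv
  | some r => {p | (Y : ℝ) < p.2 ∧ p.2 ≤ T ∧ p.1 = rx pos τ l p.2} ∪
      hor T (rx pos τ l T) (xv - r * (Y' - T)) ∪ ray ((xv : ℝ) - r * (Y' - T), (T : ℝ)) r Y'

/-- A condition on the shapes of two edges reaching `(xv, Y')` which implies that they do not
meet before. -/
def Spl (pos : V → ℤ × ℤ) (τ : V → V → ℤ) (T Y' xv : ℤ) (l l' : Ln V) :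
    Option ℤ → Option ℤ → Prop
  | none, none => rx pos τ l Y' ≤ xv ∧ xv ≤ rx pos τ l' Y'
  | none, some r' => rx pos τ l Y' ≤ xv ∧ rx pos τ l T < xv - r' * (Y' - T)
  | some r, none => xv ≤ rx pos τ l' Y' ∧ xv - r * (Y' - T) < rx pos τ l' T
  | some r, some r' => r' < r ∧ rx pos τ l T < xv - r' * (Y' - T) ∧
      xv - r * (Y' - T) < rx pos τ l' T

lemma aff_pos {d k m t : ℝ} (hd : 0 < d) (hm : 0 ≤ d + k * m) (h0 : 0 ≤ t) (ht : t < m) :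
    0 < d + k * t := by
  rcases le_or_gt 0 k with hk | hk
  · nlinarith
  · nlinarith

/-- A line on the left of a shape at the critical heights is on its left everywhere. -/
lemma pc_left {pos : V → ℤ × ℤ} {Y T Y' xv : ℤ} {l l' : Ln V} {o : Option ℤ}
    (hT : (Y : ℝ) < T) (hT' : (T : ℝ) < Y')
    (h : ∀ y : ℝ, (Y : ℝ) < y → y ≤ Y' → (y ≤ T ∨ o = none) → rx pos τ l y < rx pos τ l' y)
    (h1 : rx pos τ l Y' ≤ xv) (h2 : ∀ r, o = some r → rx pos τ l T < xv - r * (Y' - T))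
    {p : ℝ × ℝ} (hp : p ∈ pc pos τ Y T Y' xv l' o) :
    rx pos τ l p.2 < p.1 ∨ p.2 = Y' ∧ xv ≤ p.1 ∨ p.2 = Y' ∧ rx pos τ l p.2 < p.1 := by
  match o, h, h2, hp with
  | none, h, _, hp =>
    have hY := h Y' (by linarith) le_rfl (Or.inr rfl)
    rcases hp with ⟨h3, h4, h5⟩ | ⟨h3, h4⟩
    · left; rw [h5]; exact h _ h3 h4 (Or.inr rfl)
    · rcases h4 with h4 | h4
      · right; right; exact ⟨h3, by rw [h3]; linarith [h4.1]⟩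
      · right; left; exact ⟨h3, h4.1⟩
  | some r, h, h2, hp =>
    have h2 := h2 r rfl
    have hTl := h T hT hT'.le (Or.inl le_rfl)
    rcases hp with (⟨h3, h4, h5⟩ | ⟨h3, h4⟩) | ⟨h3, h4, h5⟩
    · left; rw [h5]; exact h _ h3 (by linarith) (Or.inl h4)
    · left
      rw [h3]
      rcases h4 with h4 | h4 <;> linarith [h4.1]
    · simp only at h3 h4 h5
      rcases eq_or_lt_of_le h4 with h6 | h6
      · right; left
        refine ⟨h6, ?_⟩
        rw [h5, h6]; linarith
      · left
        have e1 := rx_shift (τ := τ) pos l T p.2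
        have e2 := rx_shift (τ := τ) pos l T Y'
        have := aff_pos (d := (xv - r * (Y' - T) : ℝ) - rx pos τ l T) (k := (r : ℝ) - l.sl τ)
          (m := (Y' : ℝ) - T) (t := p.2 - T) (by linarith) (by linarith) (by linarith) (by linarith)
        rw [h5, e1]
        linarith

lemma pc_right {pos : V → ℤ × ℤ} {Y T Y' xv : ℤ} {l l' : Ln V} {o : Option ℤ}
    (hT : (Y : ℝ) < T) (hT' : (T : ℝ) < Y')
    (h : ∀ y : ℝ, (Y : ℝ) < y → y ≤ Y' → (y ≤ T ∨ o = none) → rx pos τ l y < rx pos τ l' y)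
    (h1 : xv ≤ rx pos τ l' Y') (h2 : ∀ r, o = some r → xv - r * (Y' - T) < rx pos τ l' T)
    {p : ℝ × ℝ} (hp : p ∈ pc pos τ Y T Y' xv l o) :
    p.1 < rx pos τ l' p.2 ∨ p.2 = Y' ∧ p.1 ≤ xv ∨ p.2 = Y' ∧ p.1 < rx pos τ l' p.2 := by
  match o, h, h2, hp with
  | none, h, _, hp =>
    have hY := h Y' (by linarith) le_rfl (Or.inr rfl)
    rcases hp with ⟨h3, h4, h5⟩ | ⟨h3, h4⟩
    · left; rw [h5]; exact h _ h3 h4 (Or.inr rfl)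
    · rcases h4 with h4 | h4
      · right; left; exact ⟨h3, h4.2⟩
      · right; right; exact ⟨h3, by rw [h3]; linarith [h4.2]⟩
  | some r, h, h2, hp =>
    have h2 := h2 r rfl
    have hTl := h T hT hT'.le (Or.inl le_rfl)
    rcases hp with (⟨h3, h4, h5⟩ | ⟨h3, h4⟩) | ⟨h3, h4, h5⟩
    · left; rw [h5]; exact h _ h3 (by linarith) (Or.inl h4)
    · left
      rw [h3]
      rcases h4 with h4 | h4 <;> linarith [h4.2]
    · simp only at h3 h4 h5
      rcases eq_or_lt_of_le h4 with h6 | h6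
      · right; left
        refine ⟨h6, ?_⟩
        rw [h5, h6]; linarith
      · left
        have e1 := rx_shift (τ := τ) pos l' T p.2
        have e2 := rx_shift (τ := τ) pos l' T Y'
        have := aff_pos (d := rx pos τ l' T - (xv - r * (Y' - T) : ℝ)) (k := l'.sl τ - (r : ℝ))
          (m := (Y' : ℝ) - T) (t := p.2 - T) (by linarith) (by linarith) (by linarith) (by linarith)
        rw [h5, e1]
        linarith

/-- Two separated shapes meet in `(xv, Y')` only. -/
lemma pc_meet {pos : V → ℤ × ℤ} {Y T Y' xv : ℤ} {l l' : Ln V} {o o' : Option ℤ}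
    (hT : (Y : ℝ) < T) (hT' : (T : ℝ) < Y')
    (h : ∀ y : ℝ, (Y : ℝ) < y → y ≤ Y' → (y ≤ T ∨ o = none ∧ o' = none) →
      rx pos τ l y < rx pos τ l' y)
    (hs : Spl pos τ T Y' xv l l' o o')
    {p : ℝ × ℝ} (hp : p ∈ pc pos τ Y T Y' xv l o) (hp' : p ∈ pc pos τ Y T Y' xv l' o') :
    p = ((xv : ℝ), (Y' : ℝ)) := by
  have hTl := h T hT hT'.le (Or.inl le_rfl)
  match o, o', h, hs, hp, hp' with
  | none, none, h, hs, hp, hp' =>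
    have hY := h Y' (by linarith) le_rfl (Or.inr ⟨rfl, rfl⟩)
    obtain ⟨s1, s2⟩ := hs
    have a := pc_left hT hT' (fun y h1 h2 h3 => h y h1 h2 (h3.imp_right fun _ => ⟨rfl, rfl⟩)) s1
      (by simp) hp'
    rcases hp with ⟨h3, h4, h5⟩ | ⟨h3, h4⟩
    · rcases a with a | a | a
      · linarith
      · refine Prod.ext (le_antisymm ?_ a.2) a.1
        rw [h5, a.1]; exact s1
      · linarith
    · rcases hp' with ⟨h3', h4', h5'⟩ | ⟨h3', h4'⟩
      · rw [h3] at h5'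
        refine Prod.ext ?_ h3
        simp only
        rcases h4 with h4 | h4 <;> linarith [h4.1, h4.2]
      · refine Prod.ext ?_ h3
        simp only
        rcases h4 with h4 | h4 <;> rcases h4' with h4' | h4' <;> linarith [h4.1, h4.2, h4'.1, h4'.2]
  | none, some r', h, hs, hp, hp' =>
    obtain ⟨s1, s2⟩ := hs
    have a := pc_left hT hT' (fun y h1 h2 h3 => h y h1 h2 (h3.imp_right (by simp))) s1
      (by simpa using s2) hp'
    rcases hp with ⟨h3, h4, h5⟩ | ⟨h3, h4⟩
    · rcases a with a | a | a
      · linarith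
      · refine Prod.ext (le_antisymm ?_ a.2) a.1
        rw [h5, a.1]; exact s1
      · linarith
    · refine Prod.ext ?_ h3
      rcases hp' with (⟨h3', h4', h5'⟩ | ⟨h3', h4'⟩) | ⟨h3', h4', h5'⟩
      · linarith
      · linarith
      · simp only at h5' ⊢
        rw [h5', h3]; ring
  | some r, none, h, hs, hp, hp' =>
    obtain ⟨s1, s2⟩ := hs
    have a := pc_right hT hT' (fun y h1 h2 h3 => h y h1 h2 (h3.imp_right (by simp))) s1
      (by simpa using s2) hp
    rcases hp' with ⟨h3, h4, h5⟩ | ⟨h3, h4⟩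
    · rcases a with a | a | a
      · linarith
      · refine Prod.ext (le_antisymm a.2 ?_) a.1
        rw [h5, a.1]; exact s1
      · linarith
    · refine Prod.ext ?_ h3
      rcases hp with (⟨h3', h4', h5'⟩ | ⟨h3', h4'⟩) | ⟨h3', h4', h5'⟩
      · linarith
      · linarith
      · simp only at h5' ⊢
        rw [h5', h3]; ring
  | some r, some r', h, hs, hp, hp' =>
    obtain ⟨s0, s1, s2⟩ := hs
    have s0' : (r' : ℝ) + 1 ≤ r := by exact_mod_cast s0
    have hm : 0 < (Y' : ℝ) - T := by linarith
    have hx : (xv - r * (Y' - T) : ℝ) < xv - r' * (Y' - T) := by nlinarith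
    rcases hp with (⟨h3, h4, h5⟩ | ⟨h3, h4⟩) | ⟨h3, h4, h5⟩ <;>
      rcases hp' with (⟨h3', h4', h5'⟩ | ⟨h3', h4'⟩) | ⟨h3', h4', h5'⟩ <;>
      try dsimp only at *
    · linarith [h p.2 h3 (by linarith) (Or.inl h4)]
    · rw [h3'] at h5
      rcases h4' with h4' | h4' <;> linarith [h4'.1, h4'.2]
    · have : p.2 = T := le_antisymm h4 h3'
      rw [this] at h5 h5'
      linarith
    · rw [h3] at h5'
      rcases h4 with h4 | h4 <;> linarith [h4.1, h4.2]
    · rcases h4 with h4 | h4 <;> rcases h4' with h4' | h4' <;> linarith [h4.1, h4.2, h4'.1, h4'.2]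
    · rw [h3] at h5'
      rcases h4 with h4 | h4 <;> linarith [h4.1, h4.2]
    · have : p.2 = T := le_antisymm h4' h3
      rw [this] at h5 h5'
      linarith
    · rw [h3'] at h5
      rcases h4' with h4' | h4' <;> linarith [h4'.1, h4'.2]
    · have hy : p.2 = Y' := by nlinarith
      refine Prod.ext ?_ hy
      simp only
      rw [h5, hy]; ring

/-- The number of bends of a shape. -/
def Bd (pos : V → ℤ × ℤ) (τ : V → V → ℤ) (T Y' xv : ℤ) (l : Ln V) : Option ℤ → ℕ → Prop
  | none, k => 1 ≤ k
  | some r, k => (r = -1 ∨ r = 0 ∨ r = 1) ∧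
      (2 ≤ k ∨ xv - r * (Y' - T) = rx pos τ l T ∧ (1 ≤ k ∨ l.sl τ = r))

lemma pc_arc (hτ : ∀ u w, |τ u w| ≤ 1) {pos : V → ℤ × ℤ} {Y T Y' xv : ℤ} {l : Ln V}
    {o : Option ℤ} {k : ℕ} (hT : (Y : ℝ) < T) (hT' : (T : ℝ) < Y') (hl : (pos l.src).2 ≤ Y)
    (hb : Bd pos τ T Y' xv l o k) :
    Arc (ray (toR (pos l.src)) (l.sl τ) Y ∪ pc pos τ Y T Y' xv l o) (toR (pos l.src))
      ((xv : ℝ), (Y' : ℝ)) k := by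
  have hl' : (toR (pos l.src)).2 ≤ (Y : ℝ) := by simp only [toR]; exact_mod_cast hl
  have hrx : ∀ y : ℝ, (toR (pos l.src)).1 + (l.sl τ : ℝ) * (y - (toR (pos l.src)).2) =
      rx pos τ l y := fun y => rfl
  have hray : ∀ y : ℝ, (Y : ℝ) < y → ray (toR (pos l.src)) (l.sl τ) Y ∪
      {p | (Y : ℝ) < p.2 ∧ p.2 ≤ y ∧ p.1 = rx pos τ l p.2} = ray (toR (pos l.src)) (l.sl τ) y := by
    intro y hy
    ext p
    constructor
    · rintro (⟨h1, h2, h3⟩ | ⟨h1, h2, h3⟩)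
      · exact ⟨h1, by linarith, h3⟩
      · exact ⟨by linarith, h2, h3⟩
    · rintro ⟨h1, h2, h3⟩
      rcases le_or_gt p.2 Y with h4 | h4
      · exact Or.inl ⟨h1, h4, h3⟩
      · exact Or.inr ⟨h4, h2, h3⟩
  match o, hb with
  | none, hb =>
    have := (arc_rh (x := xv) (y := Y') (l.isSlope hτ) (a := toR (pos l.src))
      (by linarith)).mono hb
    rw [hrx] at this
    simp only [pc]
    rw [← Set.union_assoc, hray Y' (by linarith)]
    exact this
  | some r, ⟨hr, hb⟩ =>
    have hr' : IsSlope (r : ℝ) := by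
      rcases hr with rfl | rfl | rfl <;> simp [IsSlope]
    have := arc_rhr (a := toR (pos l.src)) (s := l.sl τ) (r := r) (y := T) (y' := Y')
      (x := xv - r * (Y' - T)) (l.isSlope hτ) hr' (by linarith) hT' k (by
        rw [hrx]
        rcases hb with hb | ⟨hb, hb'⟩
        · exact Or.inl hb
        · right
          refine ⟨hb, ?_⟩
          rcases hb' with hb' | hb'
          · exact Or.inl hb'
          · right; exact_mod_cast hb')
    rw [hrx] at this
    simp only [pc]
    rw [← Set.union_assoc, ← Set.union_assoc, hray T hT]
    convert this using 2
    ring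

/-- Adding a vertex which is reached by edges of the given shapes. -/
theorem St.place (hτ : ∀ u w, |τ u w| ≤ 1) {S : Finset V} {A D : List (Ln V)}
    {B : List (Ln V × Option ℤ × ℕ)} {Y : ℤ}
    {pos : V → ℤ × ℤ} {C : Sym2 V → Set (ℝ × ℝ)} {β : Sym2 V → ℕ} {b : ℕ}
    (h : St G τ S (A ++ B.map Prod.fst ++ D) Y pos C β b)
    {v : V} (hv : v ∉ S) (hB : ∀ t ∈ B, t.1.tgt = v)
    (hmem : ∀ x ∈ S, G.Adj v x → ∃ t ∈ B, t.1.src = x)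
    {T Y' xv s : ℤ} (hT : Y < T) (hT' : T < Y') (hs : 0 < s)
    (hW : (A ++ B.map Prod.fst ++ D).Pairwise fun l l' => Dif l l' ∧
      ∀ y : ℝ, (Y : ℝ) < y → y ≤ T → rx pos τ l y < rx pos τ l' y)
    (hN : (A ++ (B.filter fun t => t.2.1.isNone).map Prod.fst ++ D).Pairwise fun l l' =>
      ∀ y : ℝ, (Y : ℝ) < y → y ≤ Y' → rx pos τ l y < rx pos τ l' y)
    (hAD : (A ++ D).Pairwise (Wide pos τ Y Y' s))
    (hA : ∀ l ∈ A, rx pos τ l Y' + s ≤ xv ∧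
      ∀ t ∈ B, ∀ r, t.2.1 = some r → rx pos τ l T < xv - r * (Y' - T))
    (hD : ∀ l ∈ D, xv + s ≤ rx pos τ l Y' ∧
      ∀ t ∈ B, ∀ r, t.2.1 = some r → xv - r * (Y' - T) < rx pos τ l T)
    (hsep : B.Pairwise fun t t' => Spl pos τ T Y' xv t.1 t'.1 t.2.1 t'.2.1)
    (hbd : ∀ t ∈ B, Bd pos τ T Y' xv t.1 t.2.1 t.2.2)
    {k : ℕ} (hk : (B.map fun t => t.2.2).sum ≤ k)
    {ts : List V} (hts : ts.Nodup) (htm : ∀ x ∈ ts, G.Adj v x ∧ x ∉ insert v S) :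
    ∃ pos' C' β', St G τ (insert v S) (A ++ mkLn v ts ++ D) Y' pos' C' β' (b + k) ∧
      (A ++ mkLn v ts ++ D).Pairwise (Gap pos' τ Y' s) ∧ pos' v = (xv, Y') ∧
      ∀ w ∈ S, pos' w = pos w := by
  have hTr : (Y : ℝ) < T := by exact_mod_cast hT
  have hTr' : (T : ℝ) < Y' := by exact_mod_cast hT'
  have hsr : (0 : ℝ) < s := by exact_mod_cast hs
  let B' : List (Ln V × Set (ℝ × ℝ) × ℕ) := B.map fun t => (t.1, pc pos τ Y T Y' xv t.1 t.2.1, t.2.2)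
  have hB' : B'.map Prod.fst = B.map Prod.fst := by
    simp only [B', List.map_map]; rfl
  rw [← hB'] at h
  have hmB : ∀ t ∈ B, t.1 ∈ B.map Prod.fst := fun t ht => List.mem_map.2 ⟨t, ht, rfl⟩
  have hW' := hW
  rw [List.append_assoc, List.pairwise_append, List.pairwise_append] at hW'
  obtain ⟨_, ⟨hWB, _, hWBD⟩, hWA⟩ := hW'
  rw [List.append_assoc, List.pairwise_append, List.pairwise_append, List.pairwise_map,
    List.pairwise_filter] at hN
  obtain ⟨_, ⟨hNB, _, hNBD⟩, hNA⟩ := hN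
  have hmN : ∀ t ∈ B, t.2.1 = none → t.1 ∈ (B.filter fun t => t.2.1.isNone).map Prod.fst :=
    fun t ht h0 => List.mem_map.2 ⟨t, List.mem_filter.2 ⟨ht, by simp [h0]⟩, rfl⟩
  refine h.single (s := s) (k := k) (Y' := Y') (xv := xv) ?_ hv ?_ ?_ (by omega) hs hAD
    (fun l hl => (hA l hl).1) (fun l hl => (hD l hl).1) ?_ ?_ ?_ ?_ hts htm
  · rw [hB']; exact hW.imp fun h => h.1
  · intro t ht
    obtain ⟨t0, ht0, rfl⟩ := List.mem_map.1 ht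
    exact hB t0 ht0
  · intro x hx hvx
    obtain ⟨t, ht, h1⟩ := hmem x hx hvx
    exact ⟨_, List.mem_map.2 ⟨t, ht, rfl⟩, h1⟩
  · intro t ht p hp
    obtain ⟨t0, ht0, rfl⟩ := List.mem_map.1 ht
    simp only at hp
    have hy : (Y : ℝ) < p.2 ∧ p.2 ≤ Y' := by
      match t0.2.1, hp with
      | none, hp =>
        rcases hp with ⟨h3, h4, h5⟩ | ⟨h3, h4⟩
        · exact ⟨h3, h4⟩
        · rw [h3]; exact ⟨by linarith, le_rfl⟩
      | some r, hp =>
        rcases hp with (⟨h3, h4, h5⟩ | ⟨h3, h4⟩) | ⟨h3, h4, h5⟩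
        · exact ⟨h3, by linarith⟩
        · rw [h3]; exact ⟨by linarith, by linarith⟩
        · exact ⟨by simp only at h3; linarith, h4⟩
    refine ⟨hy.1, hy.2, ?_, ?_⟩
    · intro l hl
      have h1 := (hWA l hl t0.1 (List.mem_append_left _ (hmB t0 ht0))).2
      have h2 := (hA l hl).1
      rcases pc_left hTr hTr' (fun y a1 a2 a3 => a3.elim (h1 y a1) fun a3 =>
        hNA l hl t0.1 (List.mem_append_left _ (hmN t0 ht0 a3)) y a1 a2) (by linarith) ((hA l hl).2 t0 ht0) hp with h3 | h3 | h3
      · exact h3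
      · rw [h3.1]; linarith [h3.2]
      · exact h3.2
    · intro l hl
      have h1 := (hWBD t0.1 (hmB t0 ht0) l hl).2
      have h2 := (hD l hl).1
      rcases pc_right hTr hTr' (fun y a1 a2 a3 => a3.elim (h1 y a1) fun a3 =>
        hNBD t0.1 (hmN t0 ht0 a3) l hl y a1 a2) (by linarith) ((hD l hl).2 t0 ht0) hp with h3 | h3 | h3
      · exact h3
      · rw [h3.1]; linarith [h3.2]
      · exact h3.2
  · rw [List.pairwise_map]
    have := ((List.pairwise_map.1 hWB).and hNB).and hsep
    refine this.imp ?_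
    intro t t' h1 p hp hp'
    exact pc_meet hTr hTr' (fun y a1 a2 a3 => a3.elim (h1.1.1.2 y a1) fun a3 =>
      h1.1.2 (by simp [a3.1]) (by simp [a3.2]) y a1 a2) h1.2 hp hp'
  · intro t ht
    obtain ⟨t0, ht0, rfl⟩ := List.mem_map.1 ht
    refine pc_arc hτ hTr hTr' (h.vY _ ?_) (hbd t0 ht0)
    refine (h.line t0.1 ?_).1
    rw [hB']
    simp only [List.mem_append]
    exact Or.inl (Or.inr (hmB t0 ht0))
  · refine le_trans (le_of_eq ?_) hk
    simp only [B', List.map_map]; rfl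

end State

/-! ### Vertices with two, three or four lower neighbours -/

section State
variable {V : Type*} [DecidableEq V] [Fintype V] {G : SimpleGraph V} {τ : V → V → ℤ}

/-- All coordinates are even. This makes the midpoint of two lines a grid point. -/
def Ev (S : Finset V) (pos : V → ℤ × ℤ) (Y : ℤ) : Prop :=
  (∀ w ∈ S, Even (pos w).1 ∧ Even (pos w).2) ∧ Even Y

/-- The abscissa of a line at an integer height. -/
def tip (pos : V → ℤ × ℤ) (τ : V → V → ℤ) (l : Ln V) (y : ℤ) : ℤ :=
  (pos l.src).1 + l.sl τ * (y - (pos l.src).2)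

lemma rx_tip (pos : V → ℤ × ℤ) (l : Ln V) (y : ℤ) : rx pos τ l y = tip pos τ l y := by
  unfold rx tip; push_cast; ring

lemma tip_even {S : Finset V} {pos : V → ℤ × ℤ} {Y y : ℤ} (h : Ev S pos Y) (hy : Even y) {l : Ln V}
    (hl : l.src ∈ S) : Even (tip pos τ l y) := by
  unfold tip
  exact (h.1 _ hl).1.add ((hy.sub (h.1 _ hl).2).mul_left _)

/-- The drawing can be completed with `c` further bends from any partial drawing whose pending lines
are `Λ`, if these are sufficiently far apart. -/
def Cpl (G : SimpleGraph V) (τ : V → V → ℤ) (S : Finset V) (Λ : List (V × V)) (c : ℕ) : Prop :=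
  ∃ M : ℤ, ∀ (L : List (Ln V)) (Y : ℤ) (pos : V → ℤ × ℤ) (C : Sym2 V → Set (ℝ × ℝ))
    (β : Sym2 V → ℕ) (b : ℕ) (s : ℤ), L.map Ln.pr = Λ → St G τ S L Y pos C β b →
    L.Pairwise (Gap pos τ Y s) → L.IsChain LInv → Ev S pos Y → M ≤ s →
    ∃ D : OctiDrawing G, D.IsPlanar ∧ D.totalBends ≤ b + c

lemma Cpl.large {S : Finset V} {Λ : List (V × V)} {c : ℕ} (h : Cpl G τ S Λ c) :
    ∃ M : ℤ, 4 ≤ M ∧ Even M ∧ ∀ (L : List (Ln V)) (Y : ℤ) (pos : V → ℤ × ℤ)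
    (C : Sym2 V → Set (ℝ × ℝ))
    (β : Sym2 V → ℕ) (b : ℕ) (s : ℤ), L.map Ln.pr = Λ → St G τ S L Y pos C β b →
    L.Pairwise (Gap pos τ Y s) → L.IsChain LInv → Ev S pos Y → M ≤ s →
    ∃ D : OctiDrawing G, D.IsPlanar ∧ D.totalBends ≤ b + c := by
  obtain ⟨M, hM⟩ := h
  refine ⟨2 * (|M| + 2), by have := abs_nonneg M; omega, even_two_mul _, ?_⟩
  intro L Y pos C β b s h1 h2 h3 h4 h5 h6
  exact hM L Y pos C β b s h1 h2 h3 h4 h5 (by have := le_abs_self M; have := abs_nonneg M; omega)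

/-- Placing a vertex at height `Y + J` if the lines have distance at least `3 * J`. -/
lemma St.step (hτ : ∀ u w, |τ u w| ≤ 1) {S : Finset V} {A D : List (Ln V)}
    {B : List (Ln V × Option ℤ × ℕ)} {Y : ℤ}
    {pos : V → ℤ × ℤ} {C : Sym2 V → Set (ℝ × ℝ)} {β : Sym2 V → ℕ} {b : ℕ}
    (h : St G τ S (A ++ B.map Prod.fst ++ D) Y pos C β b) (hev : Ev S pos Y)
    {v : V} (hv : v ∉ S) (hB : ∀ t ∈ B, t.1.tgt = v)
    (hmem : ∀ x ∈ S, G.Adj v x → ∃ t ∈ B, t.1.src = x)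
    {J s xv : ℤ} (hJ : 4 ≤ J) (hJe : Even J) (hs : 3 * J ≤ s) (hxe : Even xv)
    (hg : (A ++ B.map Prod.fst ++ D).Pairwise (Gap pos τ Y s))
    (hx1 : ∃ t ∈ B, rx pos τ t.1 (Y + J : ℤ) ≤ xv) (hx2 : ∃ t ∈ B, xv ≤ rx pos τ t.1 (Y + J : ℤ))
    (hsep : B.Pairwise fun t t' => Spl pos τ (Y + J - 1) (Y + J) xv t.1 t'.1 t.2.1 t'.2.1)
    (hbd : ∀ t ∈ B, Bd pos τ (Y + J - 1) (Y + J) xv t.1 t.2.1 t.2.2)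
    {k : ℕ} (hk : (B.map fun t => t.2.2).sum ≤ k)
    {ts : List V} (hts : ts.Nodup) (htm : ∀ x ∈ ts, G.Adj v x ∧ x ∉ insert v S)
    (htl : ts.length ≤ 3) (hne : ts ≠ [] ∨ A = [] ∧ D = [])
    (hinv : (A ++ B.map Prod.fst ++ D).IsChain LInv) :
    ∃ pos' C' β', St G τ (insert v S) (A ++ mkLn v ts ++ D) (Y + J) pos' C' β' (b + k) ∧
      (A ++ mkLn v ts ++ D).Pairwise (Gap pos' τ (Y + J) J) ∧ Ev (insert v S) pos' (Y + J) ∧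
      (A ++ mkLn v ts ++ D).IsChain LInv := by
  have hw : (A ++ B.map Prod.fst ++ D).Pairwise (Wide pos τ Y (Y + J) J) :=
    hg.imp fun h => h.wide hτ (by omega) hs
  have hJr : (4 : ℝ) ≤ J := by exact_mod_cast hJ
  have hmB : ∀ t ∈ B, t.1 ∈ B.map Prod.fst := fun t ht => List.mem_map.2 ⟨t, ht, rfl⟩
  have hw' := hw
  rw [List.append_assoc, List.pairwise_append, List.pairwise_append] at hw'
  obtain ⟨hwA, ⟨_, hwD, hwBD⟩, hwAX⟩ := hw'
  have hrb : ∀ t ∈ B, ∀ r, t.2.1 = some r → -1 ≤ (r : ℝ) ∧ (r : ℝ) ≤ 1 := by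
    intro t ht r hr
    have := hbd t ht
    rw [hr] at this
    have h1 : -1 ≤ r ∧ r ≤ 1 := by have := this.1; omega
    exact ⟨by exact_mod_cast h1.1, by exact_mod_cast h1.2⟩
  have hT : ((Y + J : ℤ) : ℝ) - ((Y + J - 1 : ℤ) : ℝ) = 1 := by push_cast; ring
  obtain ⟨pos', C', β', h1, h2, h3, h4⟩ := h.place hτ hv hB hmem (T := Y + J - 1) (Y' := Y + J)
    (xv := xv) (s := J) (by omega) (by omega) (by omega)
    (hw.imp fun h => ⟨h.1, fun y h1 h2 => h.2.1 y h1 (by push_cast at h2 ⊢; linarith)⟩)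
    ((hw.imp fun h => h.2.1).sublist
      (((List.Sublist.refl A).append (List.filter_sublist.map _)).append (List.Sublist.refl D)))
    (by
      rw [List.pairwise_append]
      exact ⟨hwA, hwD, fun a ha d hd => hwAX a ha d (List.mem_append_right _ hd)⟩)
    (by
      intro l hl
      obtain ⟨t, ht, htx⟩ := hx1
      have h1 := (hwAX l hl t.1 (List.mem_append_left _ (hmB t ht))).2.2
      refine ⟨by linarith, ?_⟩
      intro t' ht' r hr
      have h2 := hrb t' ht' r hr
      have h3 := rx_shift (τ := τ) pos l (Y + J - 1 : ℤ) (Y + J : ℤ)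
      have h4 := slope_bound (l.isSlope hτ)
      rw [hT] at h3 ⊢
      linarith)
    (by
      intro l hl
      obtain ⟨t, ht, htx⟩ := hx2
      have h1 := (hwBD t.1 (hmB t ht) l hl).2.2
      refine ⟨by linarith, ?_⟩
      intro t' ht' r hr
      have h2 := hrb t' ht' r hr
      have h3 := rx_shift (τ := τ) pos l (Y + J - 1 : ℤ) (Y + J : ℤ)
      have h4 := slope_bound (l.isSlope hτ)
      rw [hT] at h3 ⊢
      linarith) hsep hbd hk hts htm
  refine ⟨pos', C', β', h1, h2, ⟨?_, hev.2.add hJe⟩, ?_⟩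
  · intro w hw
    rcases Finset.mem_insert.1 hw with rfl | hw
    · rw [h3]; exact ⟨hxe, hev.2.add hJe⟩
    · rw [h4 w hw]; exact hev.1 w hw
  · by_cases ht0 : ts = []
    · rcases hne with hne | ⟨rfl, rfl⟩
      · exact absurd ht0 hne
      · subst ht0; simp [mkLn]
    · exact inv_replace hinv (mkLn_inv v ts) (mkLn_ne ht0 htl) (fun l => mkLn_head)
        fun l => mkLn_last

/-- For lines as in `St.single`, there is a vertex position and there are shapes for its edges with
`k` bends in total, where `k` is `1`, `2`, `4` for two, three, four lines. -/
lemma shapes (hτ : ∀ u w, |τ u w| ≤ 1) {B : List (Ln V)} {Y J s : ℤ} {pos : V → ℤ × ℤ} {v : V}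
    (hB : ∀ l ∈ B, l.tgt = v) (hτ0 : ∀ l ∈ B, τ l.src l.tgt = 0)
    (hnd : (B.map Ln.src).Nodup) (hinv : B.IsChain LInv)
    (hJ : 4 ≤ J) (hs : 3 * J ≤ s) (hg : B.Pairwise (Gap pos τ Y s)) {k : ℕ}
    (hk : B.length = 2 ∧ k = 1 ∨ B.length = 3 ∧ k = 2 ∨ B.length = 4 ∧ k = 4) :
    ∃ B' : List (Ln V × Option ℤ × ℕ), B'.map Prod.fst = B ∧ ∃ l ∈ B,
      (∃ t ∈ B', rx pos τ t.1 (Y + J : ℤ) ≤ (tip pos τ l (Y + J) : ℤ)) ∧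
      (∃ t ∈ B', (tip pos τ l (Y + J) : ℤ) ≤ rx pos τ t.1 (Y + J : ℤ)) ∧
      (B'.Pairwise fun t t' => Spl pos τ (Y + J - 1) (Y + J) (tip pos τ l (Y + J))
        t.1 t'.1 t.2.1 t'.2.1) ∧
      (∀ t ∈ B', Bd pos τ (Y + J - 1) (Y + J) (tip pos τ l (Y + J)) t.1 t.2.1 t.2.2) ∧
      (B'.map fun t => t.2.2).sum ≤ k := by
  have hw : B.Pairwise (Wide pos τ Y (Y + J) J) := hg.imp fun h => h.wide hτ (by omega) hs
  have hJr : (4 : ℝ) ≤ J := by exact_mod_cast hJ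
  have hT : ((Y + J : ℤ) : ℝ) - ((Y + J - 1 : ℤ) : ℝ) = 1 := by push_cast; ring
  have hww : ∀ l l', Wide pos τ Y (Y + J) J l l' →
      rx pos τ l (Y + J - 1 : ℤ) < rx pos τ l' (Y + J - 1 : ℤ) ∧
      rx pos τ l (Y + J : ℤ) + J ≤ rx pos τ l' (Y + J : ℤ) := by
    intro l l' h
    exact ⟨h.2.1 _ (by push_cast; linarith) (by push_cast; linarith), h.2.2⟩
  have hsh : ∀ l : Ln V, rx pos τ l (Y + J : ℤ) = rx pos τ l (Y + J - 1 : ℤ) + l.sl τ := by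
    intro l
    have := rx_shift (τ := τ) pos l (Y + J - 1 : ℤ) (Y + J : ℤ)
    rw [hT, mul_one] at this
    exact this
  have hsb : ∀ l : Ln V, -1 ≤ (l.sl τ : ℝ) ∧ (l.sl τ : ℝ) ≤ 1 :=
    fun l => slope_bound (l.isSlope hτ)
  have hsl : ∀ l : Ln V, l.sl τ = -1 ∨ l.sl τ = 0 ∨ l.sl τ = 1 := by
    intro l
    rcases l.isSlope hτ with h | h | h
    · left; exact_mod_cast h
    · right; left; exact_mod_cast h
    · right; right; exact_mod_cast h
  rcases hk with ⟨hl, rfl⟩ | ⟨hl, rfl⟩ | ⟨hl, rfl⟩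
  · match B, hl with
    | [l1, l2], _ =>
      simp only [List.pairwise_cons, List.mem_cons, List.not_mem_nil, or_false, forall_eq,
        forall_eq_or_imp] at hw
      have h12 := hww _ _ hw.1
      refine ⟨[(l1, some (l1.sl τ), 0), (l2, none, 1)], rfl, l1, by simp,
        ⟨(l1, some (l1.sl τ), 0), by simp, (rx_tip _ _ _).le⟩,
        ⟨(l1, some (l1.sl τ), 0), by simp, (rx_tip _ _ _).ge⟩, ?_, ?_, by simp⟩
      · simp only [List.pairwise_cons, List.mem_cons, List.not_mem_nil, or_false, forall_eq,
          forall_eq_or_imp, Spl, hT, ← rx_tip]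
        refine ⟨⟨by linarith, by linarith [hsh l1]⟩, by simp⟩
      · simp only [List.mem_cons, List.not_mem_nil, or_false, forall_eq,
          forall_eq_or_imp, Bd, hT, ← rx_tip]
        exact ⟨⟨hsl l1, Or.inr ⟨by linarith [hsh l1], Or.inr trivial⟩⟩, le_rfl⟩
  · match B, hl with
    | [l1, l2, l3], _ =>
      simp only [List.pairwise_cons, List.mem_cons, List.not_mem_nil, or_false, forall_eq,
        forall_eq_or_imp] at hw
      have h12 := hww _ _ hw.1.1
      have h13 := hww _ _ hw.1.2
      have h23 := hww _ _ hw.2.1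
      refine ⟨[(l1, none, 1), (l2, some (l2.sl τ), 0), (l3, none, 1)], rfl, l2, by simp,
        ⟨(l2, some (l2.sl τ), 0), by simp, (rx_tip _ _ _).le⟩,
        ⟨(l2, some (l2.sl τ), 0), by simp, (rx_tip _ _ _).ge⟩, ?_, ?_, by simp⟩
      · simp only [List.pairwise_cons, List.mem_cons, List.not_mem_nil, or_false, forall_eq,
          forall_eq_or_imp, Spl, hT, ← rx_tip]
        have e2 := hsh l2
        refine ⟨⟨⟨by linarith, by linarith⟩, by linarith, by linarith⟩,
          ⟨by linarith, by linarith⟩, by simp⟩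
      · simp only [List.mem_cons, List.not_mem_nil, or_false, forall_eq,
          forall_eq_or_imp, Bd, hT, ← rx_tip]
        exact ⟨le_rfl, ⟨hsl l2, Or.inr ⟨by linarith [hsh l2], Or.inr trivial⟩⟩, le_rfl⟩
  · match B, hl with
    | [l1, l2, l3, l4], _ =>
      simp only [List.pairwise_cons, List.mem_cons, List.not_mem_nil, or_false, forall_eq,
        forall_eq_or_imp] at hw hτ0
      have h12 := hww _ _ hw.1.1
      have h13 := hww _ _ hw.1.2.1
      have h14 := hww _ _ hw.1.2.2
      have h23 := hww _ _ hw.2.1.1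
      have h24 := hww _ _ hw.2.1.2
      have h34 := hww _ _ hw.2.2.1
      have e1 := hsh l1
      have e2 := hsh l2
      have e3 := hsh l3
      have e4 := hsh l4
      have b1 := hsb l1
      have b2 := hsb l2
      have b3 := hsb l3
      have b4 := hsb l4
      by_cases h2 : l2.sl τ = -1
      · -- the second line cannot lean to the left while the third one leans to the right
        have h3 : l3.sl τ < 1 := by
          have hi : LInv l2 l3 := by
            have := hinv.tail
            simp at this
            exact this.1
          simp at hnd
          rcases hi with hi | hi | hi
          · exact absurd hi hnd.2.1.1
          · cases hf : l2.fst <;> simp [Ln.sl, hi, hf, hτ0.2.1] at h2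
          · cases hf : l3.lst <;> simp [Ln.sl, hi, hf, hτ0.2.2.1]
        have h3r : (l3.sl τ : ℝ) ≤ 0 := by exact_mod_cast (by omega : l3.sl τ ≤ 0)
        refine ⟨[(l1, none, 1), (l2, some 1, 2), (l3, some (l3.sl τ), 0), (l4, none, 1)], rfl, l3,
          by simp, ⟨(l3, some (l3.sl τ), 0), by simp, (rx_tip _ _ _).le⟩,
          ⟨(l3, some (l3.sl τ), 0), by simp, (rx_tip _ _ _).ge⟩, ?_, ?_, by simp⟩
        · simp only [List.pairwise_cons, List.mem_cons, List.not_mem_nil, or_false, forall_eq,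
            forall_eq_or_imp, Spl, hT, ← rx_tip]
          simp only [Int.cast_one, Int.cast_neg]
          refine ⟨⟨⟨?_, ?_⟩, ⟨?_, ?_⟩, ?_, ?_⟩, ⟨⟨h3, ?_, ?_⟩, ?_, ?_⟩, ⟨?_, ?_⟩, by simp⟩ <;> linarith
        · simp only [List.mem_cons, List.not_mem_nil, or_false, forall_eq,
            forall_eq_or_imp, Bd, hT, ← rx_tip]
          exact ⟨le_rfl, ⟨by simp, Or.inl le_rfl⟩,
            ⟨hsl l3, Or.inr ⟨by linarith, Or.inr trivial⟩⟩, le_rfl⟩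
      · have h2' : -1 < l2.sl τ := by have := hsl l2; omega
        have h2r : (0 : ℝ) ≤ l2.sl τ := by exact_mod_cast (by omega : 0 ≤ l2.sl τ)
        refine ⟨[(l1, none, 1), (l2, some (l2.sl τ), 0), (l3, some (-1), 2), (l4, none, 1)], rfl, l2,
          by simp, ⟨(l2, some (l2.sl τ), 0), by simp, (rx_tip _ _ _).le⟩,
          ⟨(l2, some (l2.sl τ), 0), by simp, (rx_tip _ _ _).ge⟩, ?_, ?_, by simp⟩
        · simp only [List.pairwise_cons, List.mem_cons, List.not_mem_nil, or_false, forall_eq,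
            forall_eq_or_imp, Spl, hT, ← rx_tip]
          simp only [Int.cast_one, Int.cast_neg]
          refine ⟨⟨⟨?_, ?_⟩, ⟨?_, ?_⟩, ?_, ?_⟩, ⟨⟨h2', ?_, ?_⟩, ?_, ?_⟩, ⟨?_, ?_⟩, by simp⟩ <;> linarith
        · simp only [List.mem_cons, List.not_mem_nil, or_false, forall_eq,
            forall_eq_or_imp, Bd, hT, ← rx_tip]
          exact ⟨le_rfl, ⟨hsl l2, Or.inr ⟨by linarith, Or.inr trivial⟩⟩,
            ⟨by simp, Or.inl le_rfl⟩, le_rfl⟩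

end State

/-! ### Adding a row of vertices -/

section Row
variable {V : Type*} [DecidableEq V] [Fintype V]

/-- `a` and `b` are consecutive in the list `zs`. -/
def Consec (zs : List V) (a b : V) : Prop := ∃ l₁ l₂, zs = l₁ ++ a :: b :: l₂

/-- The horizontal segment at height `Y` representing the edge `e`, if the vertices `zs` are placed
on this height with abscissas `x`. -/
def rowSeg (zs : List V) (x : V → ℤ) (Y : ℤ) (e : Sym2 V) : Set (ℝ × ℝ) :=
  {p | ∃ a b, Consec zs a b ∧ e = s(a, b) ∧ p.2 = Y ∧ (x a : ℝ) ≤ p.1 ∧ p.1 ≤ x b}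

lemma Consec.mem {zs : List V} {a b : V} (h : Consec zs a b) : a ∈ zs ∧ b ∈ zs := by
  obtain ⟨l₁, l₂, rfl⟩ := h; simp

variable {zs : List V} {x : V → ℤ} {s Y : ℤ}

lemma Consec.sep (hs : 0 < s) (hx : zs.Pairwise fun z z' => x z + s ≤ x z') {a b c : V}
    (h : Consec zs a b) (hc : c ∈ zs) : x a < x b ∧ (x c ≤ x a ∨ x b ≤ x c) := by
  obtain ⟨l₁, l₂, rfl⟩ := h
  rw [List.pairwise_append] at hx
  simp only [List.pairwise_cons, List.mem_cons, forall_eq_or_imp] at hx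
  simp only [List.mem_append, List.mem_cons] at hc
  refine ⟨by linarith [hx.2.1.1.1], ?_⟩
  rcases hc with hc | rfl | rfl | hc
  · left; linarith [(hx.2.2 c hc).1]
  · left; rfl
  · right; rfl
  · right; linarith [hx.2.1.2.1 c hc]

lemma row_inj (hs : 0 < s) (hx : zs.Pairwise fun z z' => x z + s ≤ x z') {a b : V} (ha : a ∈ zs)
    (hb : b ∈ zs) (h : x a = x b) : a = b := by
  by_contra hab
  rcases pairwise_or hx ha hb hab with h1 | h1 <;> omega

lemma rowSeg_vert (hs : 0 < s) (hx : zs.Pairwise fun z z' => x z + s ≤ x z') {e : Sym2 V} {z : V}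
    (hz : z ∈ zs) (h : ((x z : ℝ), (Y : ℝ)) ∈ rowSeg zs x Y e) : z ∈ e := by
  obtain ⟨a, b, hab, rfl, _, h1, h2⟩ := h
  simp only [Int.cast_le] at h1 h2
  rcases (hab.sep hs hx hz).2 with h3 | h3
  · rw [row_inj hs hx hz hab.mem.1 (le_antisymm h3 h1)]; simp
  · rw [row_inj hs hx hz hab.mem.2 (le_antisymm h2 h3)]; simp

lemma rowSeg_meet (hs : 0 < s) (hx : zs.Pairwise fun z z' => x z + s ≤ x z') {e e' : Sym2 V}
    (hne : e ≠ e') {p : ℝ × ℝ} (h : p ∈ rowSeg zs x Y e) (h' : p ∈ rowSeg zs x Y e') :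
    ∃ z ∈ zs, z ∈ e ∧ z ∈ e' ∧ p = ((x z : ℝ), (Y : ℝ)) := by
  obtain ⟨a, b, hab, rfl, hy, h1, h2⟩ := h
  obtain ⟨a', b', hab', rfl, _, h1', h2'⟩ := h'
  have i1 : x a ≤ x b' := by exact_mod_cast h1.trans h2'
  have i2 : x a' ≤ x b := by exact_mod_cast h1'.trans h2
  have j1 := hab.sep hs hx hab'.mem.1
  have j2 := hab.sep hs hx hab'.mem.2
  have j3 := hab'.sep hs hx hab.mem.1
  have j4 := hab'.sep hs hx hab.mem.2
  rcases lt_or_eq_of_le i2 with i2 | i2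
  · rcases lt_or_eq_of_le i1 with i1 | i1
    · exact absurd (by rw [row_inj hs hx hab.mem.1 hab'.mem.1 (by omega),
        row_inj hs hx hab.mem.2 hab'.mem.2 (by omega)]) hne
    · have := row_inj hs hx hab.mem.1 hab'.mem.2 i1
      subst this
      exact ⟨a, hab.mem.1, by simp, by simp, Prod.ext (le_antisymm h2' h1) hy⟩
  · have := row_inj hs hx hab'.mem.1 hab.mem.2 i2
    subst this
    exact ⟨a', hab'.mem.1, by simp, by simp, Prod.ext (le_antisymm h2 h1') hy⟩

/-- The lines leaving the vertices of a row. -/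
def rowLn (zs : List V) (ts : V → List V) : List (Ln V) := zs.flatMap fun z => mkLn z (ts z)

lemma rowLn_mem {ts : V → List V} {l : Ln V} (h : l ∈ rowLn zs ts) :
    l.src ∈ zs ∧ l.tgt ∈ ts l.src := by
  obtain ⟨z, hz, hl⟩ := List.mem_flatMap.1 h
  obtain ⟨h1, h2⟩ := mkLn_mem hl
  rw [h1]; exact ⟨hz, h2⟩

lemma rowLn_append (zs zs' : List V) (ts : V → List V) :
    rowLn (zs ++ zs') ts = rowLn zs ts ++ rowLn zs' ts := List.flatMap_append

lemma rowLn_pr {ts : V → List V} (h : ∀ z ∈ zs, (ts z).length ≤ 3) :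
    (rowLn zs ts).map Ln.pr = outL zs ts := by
  induction zs with
  | nil => simp [rowLn]
  | cons z zs ih =>
    have h1 := ih fun w hw => h w (List.mem_cons_of_mem _ hw)
    simp only [rowLn, List.flatMap_cons, List.map_append, outL_cons] at h1 ⊢
    rw [h1, mkLn_pr z (h z (by simp))]

lemma rowLn_inv {ts : V → List V} (h : ∀ z ∈ zs, ts z ≠ [] ∧ (ts z).length ≤ 3) (hne : zs ≠ []) :
    (rowLn zs ts).IsChain LInv ∧ rowLn zs ts ≠ [] ∧
      (∀ l, (rowLn zs ts).head? = some l → l.fst = true) ∧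
      ∀ l, (rowLn zs ts).getLast? = some l → l.lst = true := by
  induction zs with
  | nil => exact absurd rfl hne
  | cons z zs ih =>
    have h0 := mkLn_ne (v := z) (h z (by simp)).1 (h z (by simp)).2
    by_cases hz : zs = []
    · subst hz
      have : rowLn [z] ts = mkLn z (ts z) := by simp [rowLn]
      rw [this]
      exact ⟨mkLn_inv _ _, h0, fun l => mkLn_head, fun l => mkLn_last⟩
    · obtain ⟨h1, h2, h3, h4⟩ := ih (fun w hw => h w (List.mem_cons_of_mem _ hw)) hz
      have : rowLn (z :: zs) ts = mkLn z (ts z) ++ rowLn zs ts := by simp [rowLn]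
      rw [this]
      refine ⟨?_, by simp [h0], ?_, ?_⟩
      · rw [List.isChain_append]
        exact ⟨mkLn_inv _ _, h1, fun l hl _ _ => Or.inr (Or.inl (mkLn_last hl))⟩
      · intro l hl
        rw [List.head?_append_of_ne_nil _ h0] at hl
        exact mkLn_head hl
      · intro l hl
        rw [List.getLast?_append_of_ne_nil _ h2] at hl
        exact h4 l hl

lemma rowLn_pairwise {τ : V → V → ℤ} {ts : V → List V} {R : V → V → Prop} (hnd : zs.Nodup)
    (hts : ∀ z ∈ zs, (ts z).Nodup) (hR : zs.Pairwise R) :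
    (rowLn zs ts).Pairwise fun l l' => Dif l l' ∧
      (l.src = l'.src ∧ l.sl τ + 1 ≤ l'.sl τ ∨ R l.src l'.src) := by
  rw [rowLn, List.pairwise_flatMap]
  refine ⟨?_, ?_⟩
  · intro z hz
    refine (mkLn_sl (τ := τ) z (hts z hz)).imp_of_mem ?_
    intro l l' hl hl' h
    exact ⟨h.1, Or.inl ⟨(mkLn_mem hl).1.trans (mkLn_mem hl').1.symm, h.2⟩⟩
  · refine (hR.and hnd).imp ?_
    intro z z' h l hl l' hl'
    rw [← (mkLn_mem hl).1, ← (mkLn_mem hl').1] at h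
    exact ⟨fun hd => h.2 hd.1, Or.inr h.1⟩

end Row

section State
variable {V : Type*} [DecidableEq V] [Fintype V] {G : SimpleGraph V} {τ : V → V → ℤ}

/-- Adding the vertices `zs` from left to right at height `Y'`, where consecutive vertices are
joined by horizontal segments. The set `Xl e` is the part in the strip of any other edge `e`. -/
theorem St.row {S : Finset V} {A B D : List (Ln V)} {Y : ℤ} {pos : V → ℤ × ℤ}
    {C : Sym2 V → Set (ℝ × ℝ)} {β : Sym2 V → ℕ} {b : ℕ}
    (h : St G τ S (A ++ B ++ D) Y pos C β b) {zs : List V} (hnd : zs.Nodup)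
    (hzS : ∀ z ∈ zs, z ∉ S) {x : V → ℤ} {Y' s : ℤ} (hY : Y < Y') (hs : 0 < s)
    (hx : zs.Pairwise fun z z' => x z + s ≤ x z')
    (hAD : (A ++ D).Pairwise (Wide pos τ Y Y' s))
    (hA : ∀ l ∈ A, ∀ z ∈ zs, rx pos τ l Y' + s ≤ x z)
    (hD : ∀ l ∈ D, ∀ z ∈ zs, x z + s ≤ rx pos τ l Y')
    (htgt : ∀ l ∈ A ++ D, l.tgt ∉ zs) (Xl : Sym2 V → Set (ℝ × ℝ))
    (hXl : ∀ e, ∀ p ∈ Xl e, (Y : ℝ) < p.2 ∧ p.2 ≤ Y' ∧ (∀ w ∈ e, w ∈ S ∨ w ∈ zs) ∧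
      (∃ w ∈ e, w ∈ zs) ∧ (∀ l ∈ A, rx pos τ l p.2 < p.1) ∧ (∀ l ∈ D, p.1 < rx pos τ l p.2))
    (hXt : ∀ e, ∀ p ∈ Xl e, p.2 = Y' → ∃ z ∈ zs, z ∈ e ∧ p = ((x z : ℝ), (Y' : ℝ)))
    (hXX : ∀ e e', e ≠ e' → ∀ p ∈ Xl e, p ∈ Xl e' →
      ∃ z ∈ zs, z ∈ e ∧ z ∈ e' ∧ p = ((x z : ℝ), (Y' : ℝ)))
    (hXe : ∀ a b, Consec zs a b → Xl s(a, b) = ∅)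
    (β' : Sym2 V → ℕ) (hβ : ∀ e, β e ≤ β' e) (b' : ℕ) (hb : ∑ e, β' e ≤ b')
    (harc : ∀ u v, (u ∈ S ∨ u ∈ zs) → v ∈ zs → G.Adj u v → ¬ Consec zs u v → ¬ Consec zs v u →
      Arc (C s(u, v) ∪ Xl s(u, v)) (toR (if u ∈ zs then (x u, Y') else pos u))
        ((x v : ℝ), (Y' : ℝ)) (β' s(u, v)))
    {ts : V → List V} (hts : ∀ z ∈ zs, (ts z).Nodup)
    (htm : ∀ z ∈ zs, ∀ w ∈ ts z, G.Adj z w ∧ w ∉ S ∧ w ∉ zs) :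
    ∃ pos' C', St G τ (S ∪ zs.toFinset) (A ++ rowLn zs ts ++ D) Y' pos' C' β' b' ∧
      (A ++ rowLn zs ts ++ D).Pairwise (Gap pos' τ Y' s) ∧
      (∀ z ∈ zs, pos' z = (x z, Y')) ∧ ∀ w ∈ S, pos' w = pos w := by
  set pos' : V → ℤ × ℤ := fun w => if w ∈ zs then (x w, Y') else pos w with hpos'
  have hpS : ∀ w ∈ S, pos' w = pos w := by
    intro w hw
    simp only [hpos']
    rw [if_neg fun hz => hzS w hz hw]
  have hpz : ∀ z ∈ zs, pos' z = (x z, Y') := fun z hz => by simp [hpos', hz]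
  have hpR : ∀ z ∈ zs, toR (pos' z) = ((x z : ℝ), (Y' : ℝ)) := fun z hz => by rw [hpz z hz]; rfl
  have hsr : (0 : ℝ) < s := by exact_mod_cast hs
  have hYr : (Y : ℝ) < Y' := by exact_mod_cast hY
  have hmAD : ∀ l ∈ A ++ D, l ∈ A ++ B ++ D := by
    intro l hl; simp only [List.mem_append] at hl ⊢; tauto
  have hseg : ∀ e, (∀ a b, Consec zs a b → e ≠ s(a, b)) → rowSeg zs x Y' e = ∅ := by
    intro e he
    rw [Set.eq_empty_iff_forall_notMem]
    rintro p ⟨a, b, hab, h1, _⟩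
    exact he a b hab h1
  have hcon : ∀ a b, Consec zs a b → Arc (C s(a, b) ∪ (rowSeg zs x Y' s(a, b) ∪ Xl s(a, b)))
      (toR (pos' a)) (toR (pos' b)) (β' s(a, b)) := by
    intro a b hab
    have hlt : (x a : ℝ) < x b := by exact_mod_cast (hab.sep hs hx hab.mem.1).1
    rw [hXe a b hab, h.emp, Set.empty_union, Set.union_empty, hpR _ hab.mem.1, hpR _ hab.mem.2]
    · have := (arc_h (a := ((x a : ℝ), (Y' : ℝ))) (b := ((x b : ℝ), (Y' : ℝ))) rfl
        hlt.ne).mono (Nat.zero_le (β' s(a, b)))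
      convert this using 1
      ext p
      constructor
      · rintro ⟨a', b', hab', he, h1, h2, h3⟩
        refine ⟨h1, Or.inl ?_⟩
        rcases Sym2.eq_iff.1 he with ⟨rfl, rfl⟩ | ⟨rfl, rfl⟩
        · exact ⟨h2, h3⟩
        · exfalso
          linarith
      · rintro ⟨h1, h2 | h2⟩
        · exact ⟨a, b, hab, rfl, h1, h2.1, h2.2⟩
        · exfalso
          simp only at h2
          linarith [h2.1, h2.2]
    · intro w hw
      rcases Sym2.mem_iff.1 hw with rfl | rfl
      · exact hzS _ hab.mem.1
      · exact hzS _ hab.mem.2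
  obtain ⟨C', hC'⟩ := h.extend zs.toFinset (by simpa using hzS) pos' hpS Y' hY
    (by intro z hz; rw [hpz z (by simpa using hz)])
    (by
      intro z hz z' hz' he
      rw [List.mem_toFinset] at hz hz'
      rw [hpz z hz, hpz z' hz'] at he
      exact row_inj hs hx hz hz' (congrArg Prod.fst he))
    (hAD.imp fun hw => ⟨hw.1, hw.2.1⟩) (by simpa using htgt)
    (fun e => rowSeg zs x Y' e ∪ Xl e)
    (by
      rintro e p (⟨a, b, hab, rfl, h1, h2, h3⟩ | hp)
      · rw [h1]
        refine ⟨hYr, le_rfl, ?_, ⟨a, by simp, by simpa using hab.mem.1⟩, ?_, ?_⟩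
        · intro w hw
          right
          rcases Sym2.mem_iff.1 hw with rfl | rfl
          · simpa using hab.mem.1
          · simpa using hab.mem.2
        · intro l hl; linarith [hA l hl a hab.mem.1]
        · intro l hl; linarith [hD l hl b hab.mem.2]
      · simpa using hXl e p hp)
    (by
      intro z hz
      rw [List.mem_toFinset] at hz
      rw [hpz z hz]
      exact ⟨fun l hl => by linarith [hA l hl z hz], fun l hl => by linarith [hD l hl z hz]⟩)
    (by
      rintro e z hz hp
      rw [List.mem_toFinset] at hz
      rw [hpR z hz] at hp
      rcases hp with hp | hp
      · exact rowSeg_vert hs hx hz hp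
      · obtain ⟨z', hz', h1, h2⟩ := hXt e _ hp rfl
        have : x z = x z' := Int.cast_injective (congrArg Prod.fst h2)
        rw [row_inj hs hx hz hz' this]
        exact h1)
    (by
      have key : ∀ e e', ∀ p ∈ rowSeg zs x Y' e, p ∈ Xl e' →
          ∃ z ∈ zs, z ∈ e ∧ z ∈ e' ∧ p = ((x z : ℝ), (Y' : ℝ)) := by
        intro e e' p hp hp'
        have hy : p.2 = Y' := by obtain ⟨a, b, _, _, h1, _⟩ := hp; exact h1
        obtain ⟨z, hz, h1, h2⟩ := hXt e' p hp' hy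
        rw [h2] at hp
        exact ⟨z, hz, rowSeg_vert hs hx hz hp, h1, h2⟩
      have main : ∀ e e', e ≠ e' → ∀ p ∈ rowSeg zs x Y' e ∪ Xl e, p ∈ rowSeg zs x Y' e' ∪ Xl e' →
          ∃ z ∈ zs, z ∈ e ∧ z ∈ e' ∧ p = ((x z : ℝ), (Y' : ℝ)) := by
        rintro e e' hne p (hp | hp) (hp' | hp')
        · exact rowSeg_meet hs hx hne hp hp'
        · exact key e e' p hp hp'
        · obtain ⟨z, h1, h2, h3, h4⟩ := key e' e p hp' hp
          exact ⟨z, h1, h3, h2, h4⟩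
        · exact hXX e e' hne p hp hp'
      intro e e' hne p hp hp'
      obtain ⟨z, h1, h2, h3, h4⟩ := main e e' hne p hp hp'
      exact ⟨z, by simpa using h1, h2, h3, by rw [hpR z h1]; exact h4⟩)
    β' hβ b' hb
    (by
      intro u v hu hv huv
      rw [List.mem_toFinset] at hv hu
      by_cases h1 : Consec zs u v
      · exact hcon u v h1
      by_cases h2 : Consec zs v u
      · have := (hcon v u h2).symm
        rwa [Sym2.eq_swap (a := v) (b := u)] at this
      have := harc u v hu hv huv h1 h2
      rw [hseg, Set.empty_union, hpR v hv]
      · exact this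
      · rintro a b hab he
        rcases Sym2.eq_iff.1 he with ⟨rfl, rfl⟩ | ⟨rfl, rfl⟩
        · exact h1 hab
        · exact h2 hab)
    (rowLn zs ts)
    (by
      intro l hl
      obtain ⟨h1, h2⟩ := rowLn_mem hl
      obtain ⟨h3, h4, h5⟩ := htm _ h1 _ h2
      exact ⟨by simpa using h1, h4, by simpa using h5, h3⟩)
  refine ⟨pos', C', hC', ?_, hpz, hpS⟩
  have hyn : ∀ n ∈ rowLn zs ts, (pos' n.src).2 = Y' := by
    intro n hn; rw [hpz _ (rowLn_mem hn).1]
  refine gap_replace (fun l hl => hpS _ (h.line l (hmAD l hl)).1) hAD ?_ ?_ ?_ hyn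
  · refine (rowLn_pairwise (τ := τ) hnd hts hx).imp_of_mem ?_
    intro l l' hl hl' h1
    refine ⟨h1.1, ?_⟩
    rw [rx_top _ _ (hyn l hl), rx_top _ _ (hyn l' hl')]
    rcases h1.2 with h2 | h2
    · right; rw [h2.1]; exact ⟨rfl, h2.2⟩
    · left
      rw [hpz _ (rowLn_mem hl).1, hpz _ (rowLn_mem hl').1]
      exact_mod_cast h2
  · intro n hn l hl
    have e1 := (rowLn_mem hn).1
    rw [hpz _ e1]
    refine ⟨fun hd => hzS _ e1 ?_, hA l hl _ e1⟩
    rw [← hd.1]; exact (h.line l (hmAD l (List.mem_append_left _ hl))).1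
  · intro n hn l hl
    have e1 := (rowLn_mem hn).1
    rw [hpz _ e1]
    refine ⟨fun hd => hzS _ e1 ?_, hD l hl _ e1⟩
    rw [hd.1]; exact (h.line l (hmAD l (List.mem_append_right _ hl))).1

end State

/-! ### Completing a partial drawing -/

section State
variable {V : Type*} [DecidableEq V] [Fintype V] {G : SimpleGraph V} {τ : V → V → ℤ}

lemma map_split {α γ : Type*} {f : α → γ} {L : List α} {A B D : List γ}
    (h : L.map f = A ++ B ++ D) : ∃ A' B' D', L = A' ++ B' ++ D' ∧ A'.map f = A ∧ B'.map f = B ∧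
      D'.map f = D := by
  obtain ⟨X, D', rfl, h1, h2⟩ := List.map_eq_append_iff.1 h
  obtain ⟨A', B', rfl, h3, h4⟩ := List.map_eq_append_iff.1 h1
  exact ⟨A', B', D', rfl, h3, h4, h2⟩

lemma cpl_done : Cpl G τ Finset.univ [] 0 := by
  refine ⟨0, ?_⟩
  intro L Y pos C β b s _ h _ _ _ _
  exact h.finish

/-- Adding a vertex with two, three or four lower neighbours. -/
lemma cpl_single (hτ : ∀ u w, |τ u w| ≤ 1) {S : Finset V} {A C : List (V × V)} {v : V}
    {us ts : List V} {k c : ℕ} (hv : v ∉ S) (hus : us.Nodup)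
    (hmem : ∀ x, x ∈ us ↔ x ∈ S ∧ G.Adj v x)
    (hk : us.length = 2 ∧ k = 1 ∨ us.length = 3 ∧ k = 2 ∨ us.length = 4 ∧ k = 4)
    (hτ0 : ∀ u ∈ us, τ u v = 0) (hts : ts.Nodup)
    (htm : ∀ x ∈ ts, G.Adj v x ∧ x ∉ insert v S) (htl : ts.length ≤ 3)
    (hne : ts ≠ [] ∨ A = [] ∧ C = [])
    (h : Cpl G τ (insert v S) (A ++ outL [v] (fun _ => ts) ++ C) c) :
    Cpl G τ S (A ++ us.map (fun u => (u, v)) ++ C) (c + k) := by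
  obtain ⟨J, hJ, hJe, hM⟩ := h.large
  refine ⟨3 * J, ?_⟩
  intro L Y pos Cu β b s hL hSt hg hinv hev hs
  obtain ⟨A', B', D', rfl, rfl, hB', rfl⟩ := map_split hL
  have hsrc : B'.map Ln.src = us := by
    have := congrArg (List.map Prod.fst) hB'
    simp only [List.map_map] at this
    simpa [Function.comp_def, Ln.pr] using this
  have hBm : ∀ l ∈ B', l.src ∈ us ∧ l.tgt = v := by
    intro l hl
    have : l.pr ∈ us.map fun u => (u, v) := hB' ▸ List.mem_map.2 ⟨l, hl, rfl⟩
    obtain ⟨u, hu, h1⟩ := List.mem_map.1 this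
    have h2 := congrArg Prod.fst h1
    have h3 := congrArg Prod.snd h1
    simp only [Ln.pr] at h2 h3
    rw [← h2, ← h3]; exact ⟨hu, rfl⟩
  have hgB : B'.Pairwise (Gap pos τ Y s) :=
    (List.pairwise_append.1 (List.pairwise_append.1 hg).1).2.1
  have hiB : B'.IsChain LInv := (List.isChain_append.1 (List.isChain_append.1 hinv).1).2.1
  obtain ⟨B, rfl, l, hl, h1, h2, h3, h4, h5⟩ := shapes hτ (J := J) (v := v)
    (fun l hl => (hBm l hl).2) (fun l hl => by rw [(hBm l hl).2]; exact hτ0 _ (hBm l hl).1)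
    (by rw [hsrc]; exact hus) hiB hJ hs hgB (k := k) (by rw [← List.length_map Ln.src, hsrc]; exact hk)
  have hlS : l.src ∈ S := ((hmem _).1 (hBm l hl).1).1
  obtain ⟨pos', C', β', g1, g2, g3, g4⟩ := hSt.step hτ hev hv
    (fun t ht => (hBm t.1 (List.mem_map.2 ⟨t, ht, rfl⟩)).2)
    (by
      intro x hx hvx
      have : x ∈ (B.map Prod.fst).map Ln.src := by rw [hsrc]; exact (hmem x).2 ⟨hx, hvx⟩
      obtain ⟨l, hl, rfl⟩ := List.mem_map.1 this
      obtain ⟨t, ht, rfl⟩ := List.mem_map.1 hl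
      exact ⟨t, ht, rfl⟩)
    hJ hJe hs (tip_even hev (hev.2.add hJe) hlS) hg h1 h2 h3 h4 h5 hts htm htl
    (by simpa using hne) hinv
  have := hM (A' ++ mkLn v ts ++ D') (Y + J) pos' C' β' (b + k) J
    (by simp [mkLn_pr v htl]) g1 g2 g4 g3 le_rfl
  rwa [add_assoc, add_comm k c] at this

/-- Adding a chain costs no bends: it is placed horizontally between the two lines ending in its
first and last vertex. -/
lemma cpl_chain (hτ : ∀ u w, |τ u w| ≤ 1) {S : Finset V} {A C : List (V × V)} {zs : List V}
    {u1 u2 z1 zr : V} {ts : V → List V} {c : ℕ} (hlen : 2 ≤ zs.length) (hnd : zs.Nodup)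
    (hzS : ∀ z ∈ zs, z ∉ S) (hz1 : zs.head? = some z1) (hzr : zs.getLast? = some zr)
    (hadj : ∀ z ∈ zs, ∀ x ∈ S, G.Adj z x ↔ (z = z1 ∧ x = u1) ∨ (z = zr ∧ x = u2))
    (hind : ∀ x ∈ zs, ∀ y ∈ zs, G.Adj x y → Consec zs x y ∨ Consec zs y x)
    (hts : ∀ z ∈ zs, (ts z).Nodup)
    (htm : ∀ z ∈ zs, ∀ x ∈ ts z, G.Adj z x ∧ x ∉ S ∪ zs.toFinset)
    (htl : ∀ z ∈ zs, ts z ≠ [] ∧ (ts z).length ≤ 3)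
    (h : Cpl G τ (S ∪ zs.toFinset) (A ++ outL zs ts ++ C) c) :
    Cpl G τ S (A ++ [(u1, z1), (u2, zr)] ++ C) c := by
  obtain ⟨M, hM4, hMe, hM⟩ := h.large
  obtain ⟨J, hJ⟩ : ∃ J, J = zs.length * M := ⟨_, rfl⟩
  have hJM : M ≤ J := by
    have : (2 : ℤ) ≤ zs.length := by exact_mod_cast hlen
    rw [hJ]; nlinarith
  have hJe : Even J := by rw [hJ]; exact hMe.mul_left _
  refine ⟨3 * J, ?_⟩
  intro L Y pos Cu β b s hL hSt hg hinv hev hs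
  obtain ⟨A', B', D', rfl, rfl, hB', rfl⟩ := map_split hL
  match B', hB' with
  | [l1, l2], hB' =>
  simp only [List.map_cons, List.map_nil, List.cons.injEq, Ln.pr, Prod.mk.injEq, and_true] at hB'
  obtain ⟨⟨rfl, rfl⟩, rfl, rfl⟩ := hB'
  have hz1m : l1.tgt ∈ zs := List.mem_of_mem_head? hz1
  have hzrm : l2.tgt ∈ zs := List.mem_of_getLast? hzr
  have hz0 : ∃ h : 0 < zs.length, zs[0] = l1.tgt := by
    rw [List.head?_eq_getElem?, List.getElem?_eq_some_iff] at hz1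
    exact hz1
  have hzl : ∃ h : zs.length - 1 < zs.length, zs[zs.length - 1] = l2.tgt := by
    rw [List.getLast?_eq_getElem?, List.getElem?_eq_some_iff] at hzr
    exact hzr
  obtain ⟨hz0', hz0⟩ := hz0
  obtain ⟨hzl', hzl⟩ := hzl
  have hidx : ∀ i (hi : i < zs.length), zs[i] = l2.tgt ↔ i = zs.length - 1 := by
    intro i hi
    rw [← hzl]
    exact hnd.getElem_inj_iff
  have hne12 : l1.tgt ≠ l2.tgt := by
    rw [← hz0]
    intro h1
    have := (hidx 0 hz0').1 h1
    omega
  have hw : (A' ++ [l1, l2] ++ D').Pairwise (Wide pos τ Y (Y + J) J) :=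
    hg.imp fun h => h.wide hτ (by omega) hs
  have hw' := hw
  rw [List.append_assoc, List.pairwise_append, List.pairwise_append] at hw'
  obtain ⟨hwA, ⟨hwB, hwD, hwBD⟩, hwAX⟩ := hw'
  have hw12 : Wide pos τ Y (Y + J) J l1 l2 := by simpa using hwB
  have hm1 : l1 ∈ A' ++ [l1, l2] ++ D' := by simp
  have hm2 : l2 ∈ A' ++ [l1, l2] ++ D' := by simp
  have hl1 := hSt.line l1 hm1
  have hl2 := hSt.line l2 hm2
  have hY : Y < Y + J := by omega
  have hYr : (Y : ℝ) < (Y + J : ℤ) := by exact_mod_cast hY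
  have hMr : (0 : ℝ) < M := by exact_mod_cast (by omega : 0 < M)
  have hMJr : (M : ℝ) ≤ J := by exact_mod_cast hJM
  let x : V → ℤ := fun z => if z = l2.tgt then tip pos τ l2 (Y + J) else
    tip pos τ l1 (Y + J) + (zs.idxOf z : ℤ) * M
  have hxr : x l2.tgt = tip pos τ l2 (Y + J) := by simp [x]
  have hx1 : x l1.tgt = tip pos τ l1 (Y + J) := by
    have : zs.idxOf l1.tgt = 0 := by rw [← hz0]; exact hnd.idxOf_getElem 0 _
    simp [x, hne12, this]
  have h12 : tip pos τ l1 (Y + J) + J ≤ tip pos τ l2 (Y + J) := by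
    have := hw12.2.2
    rw [rx_tip, rx_tip] at this
    exact_mod_cast this
  have hx : zs.Pairwise fun z z' => x z + M ≤ x z' := by
    rw [List.pairwise_iff_getElem]
    intro i j hi hj hij
    have e1 : x zs[i] = tip pos τ l1 (Y + J) + (i : ℤ) * M := by
      simp only [x]
      rw [if_neg (by rw [hidx]; omega), hnd.idxOf_getElem]
    rw [e1]
    by_cases hjl : j = zs.length - 1
    · have e2 : x zs[j] = tip pos τ l2 (Y + J) := by
        simp only [x]
        rw [if_pos (by rw [hidx]; exact hjl)]
      rw [e2]
      have : ((i : ℤ) + 1) * M ≤ J := by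
        rw [hJ]
        have : (i : ℤ) + 1 ≤ zs.length := by omega
        nlinarith
      linarith
    · have e2 : x zs[j] = tip pos τ l1 (Y + J) + (j : ℤ) * M := by
        simp only [x]
        rw [if_neg (by rw [hidx]; exact hjl), hnd.idxOf_getElem]
      rw [e2]
      have : (i : ℤ) + 1 ≤ j := by omega
      nlinarith
  have hxlo : ∀ z ∈ zs, tip pos τ l1 (Y + J) ≤ x z := by
    intro z hz
    simp only [x]
    split_ifs
    · omega
    · have : 0 ≤ (zs.idxOf z : ℤ) * M := by positivity
      linarith
  have hxhi : ∀ z ∈ zs, x z ≤ tip pos τ l2 (Y + J) := by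
    intro z hz
    by_cases h0 : z = l2.tgt
    · rw [h0, hxr]
    · obtain ⟨i, hi, rfl⟩ := List.getElem_of_mem hz
      have hi' : i ≠ zs.length - 1 := fun h => h0 ((hidx i hi).2 h)
      have := List.pairwise_iff_getElem.1 hx i (zs.length - 1) hi hzl' (by omega)
      rw [hzl, hxr] at this
      linarith
  have hxlo' : ∀ z ∈ zs, rx pos τ l1 (Y + J : ℤ) ≤ x z := by
    intro z hz; rw [rx_tip]; exact_mod_cast hxlo z hz
  have hxhi' : ∀ z ∈ zs, x z ≤ rx pos τ l2 (Y + J : ℤ) := by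
    intro z hz; rw [rx_tip]; exact_mod_cast hxhi z hz
  let Xl : Sym2 V → Set (ℝ × ℝ) := fun e =>
    {p | ∃ l, (l = l1 ∨ l = l2) ∧ e = l.e ∧ (Y : ℝ) < p.2 ∧ p.2 ≤ (Y + J : ℤ) ∧ p.1 = rx pos τ l p.2}
  have htip : ∀ l, (l = l1 ∨ l = l2) → l.tgt ∈ zs ∧ (x l.tgt : ℝ) = rx pos τ l (Y + J : ℤ) ∧
      l.src ∈ S ∧ Cu l.e = ray (toR (pos l.src)) (l.sl τ) Y ∧ l.src ∉ zs := by
    rintro l (rfl | rfl)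
    · rw [rx_tip, hx1]; exact ⟨hz1m, rfl, hl1.1, hl1.2.2.2, fun h => hzS _ h hl1.1⟩
    · rw [rx_tip, hxr]; exact ⟨hzrm, rfl, hl2.1, hl2.2.2.2, fun h => hzS _ h hl2.1⟩
  have harc : ∀ l, (l = l1 ∨ l = l2) → Arc (Cu s(l.src, l.tgt) ∪ Xl s(l.src, l.tgt))
      (toR (if l.src ∈ zs then (x l.src, Y + J) else pos l.src))
      ((x l.tgt : ℝ), ((Y + J : ℤ) : ℝ)) (β s(l.src, l.tgt)) := by
    intro l hl
    obtain ⟨t1, t2, t3, t4, t5⟩ := htip l hl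
    have hle : (toR (pos l.src)).2 ≤ (Y : ℝ) := by
      simp only [toR]; exact_mod_cast hSt.vY _ t3
    rw [if_neg t5, t2]
    have := (arc_r (a := toR (pos l.src)) (l.isSlope hτ) (y := (Y + J : ℤ))
      (by linarith)).mono (Nat.zero_le (β s(l.src, l.tgt)))
    convert this using 1
    swap
    · rfl
    change Cu l.e ∪ Xl l.e = _
    rw [t4]
    ext p
    constructor
    · rintro (⟨a1, a2, a3⟩ | ⟨l', hl', he, a1, a2, a3⟩)
      · exact ⟨a1, by linarith, a3⟩
      · have hd := Ln.e_inj t3 (fun hS => hzS _ (htip l' hl').1 hS) he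
        have : l = l' := by
          rcases hl with rfl | rfl <;> rcases hl' with rfl | rfl
          · rfl
          · exact absurd hd.2 hne12
          · exact absurd hd.2.symm hne12
          · rfl
        subst this
        exact ⟨by linarith, a2, a3⟩
    · rintro ⟨a1, a2, a3⟩
      rcases le_or_gt p.2 Y with h4 | h4
      · exact Or.inl ⟨a1, h4, a3⟩
      · exact Or.inr ⟨l, hl, rfl, h4, a2, a3⟩
  have hsA : ∀ l ∈ A', ∀ l', (l' = l1 ∨ l' = l2) → Wide pos τ Y (Y + J) J l l' := by
    intro l hl l' hl'
    exact hwAX l hl l' (by rcases hl' with rfl | rfl <;> simp)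
  have hsD : ∀ l ∈ D', ∀ l', (l' = l1 ∨ l' = l2) → Wide pos τ Y (Y + J) J l' l := by
    intro l hl l' hl'
    exact hwBD l' (by rcases hl' with rfl | rfl <;> simp) l hl
  have hxe : ∀ z, Even (x z) := by
    intro z
    have hYe := hev.2.add hJe
    simp only [x]
    split_ifs
    · exact tip_even hev hYe hl2.1
    · exact (tip_even hev hYe hl1.1).add (hMe.mul_left _)
  obtain ⟨pos', C', g1, g2, g3, g4⟩ := hSt.row hnd hzS (x := x) (Y' := Y + J) (s := M) hY (by omega)
    hx
    (by
      rw [List.pairwise_append]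
      have hm : ∀ l l', Wide pos τ Y (Y + J) J l l' → Wide pos τ Y (Y + J) M l l' :=
        fun l l' h => ⟨h.1, h.2.1, by linarith [h.2.2]⟩
      exact ⟨hwA.imp (hm _ _), hwD.imp (hm _ _),
        fun a ha d hd => hm _ _ (hwAX a ha d (List.mem_append_right _ hd))⟩)
    (by
      intro l hl z hz
      linarith [hxlo' z hz, (hsA l hl l1 (Or.inl rfl)).2.2])
    (by
      intro l hl z hz
      linarith [hxhi' z hz, (hsD l hl l2 (Or.inr rfl)).2.2])
    (by
      intro l hl hz
      have hml : l ∈ A' ++ [l1, l2] ++ D' := by simp only [List.mem_append] at hl ⊢; tauto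
      have hll := hSt.line l hml
      have : ∃ l', (l' = l1 ∨ l' = l2) ∧ l.src = l'.src ∧ l.tgt = l'.tgt := by
        rcases (hadj _ hz _ hll.1).1 hll.2.2.1.symm with h1 | h1
        · exact ⟨l1, Or.inl rfl, h1.2, h1.1⟩
        · exact ⟨l2, Or.inr rfl, h1.2, h1.1⟩
      obtain ⟨l', hl', h1, h2⟩ := this
      rcases List.mem_append.1 hl with hl | hl
      · exact (hsA l hl l' hl').1 ⟨h1, h2⟩
      · exact (hsD l hl l' hl').1 ⟨h1.symm, h2.symm⟩)
    Xl
    (by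
      rintro e p ⟨l, hl, rfl, a1, a2, a3⟩
      obtain ⟨t1, t2, t3, t4, t5⟩ := htip l hl
      refine ⟨a1, a2, ?_, ⟨l.tgt, by simp [Ln.e], t1⟩, ?_, ?_⟩
      · intro w hw
        rcases Sym2.mem_iff.1 hw with rfl | rfl
        · exact Or.inl t3
        · exact Or.inr t1
      · intro l' hl'
        rw [a3]; exact (hsA l' hl' l hl).2.1 _ a1 a2
      · intro l' hl'
        rw [a3]; exact (hsD l' hl' l hl).2.1 _ a1 a2)
    (by
      rintro e p ⟨l, hl, rfl, a1, a2, a3⟩ hy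
      obtain ⟨t1, t2, t3, t4, t5⟩ := htip l hl
      exact ⟨l.tgt, t1, by simp [Ln.e], Prod.ext (by rw [a3, hy, t2]) hy⟩)
    (by
      rintro e e' hne p ⟨l, hl, rfl, a1, a2, a3⟩ ⟨l', hl', rfl, _, _, a3'⟩
      exfalso
      have := hw12.2.1 p.2 a1 a2
      rcases hl with rfl | rfl <;> rcases hl' with rfl | rfl
      · exact hne rfl
      · linarith
      · linarith
      · exact hne rfl)
    (by
      intro a d hab
      rw [Set.eq_empty_iff_forall_notMem]
      rintro p ⟨l, hl, he, _⟩
      obtain ⟨t1, t2, t3, t4, t5⟩ := htip l hl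
      have : l.src ∈ s(a, d) := by rw [he]; simp [Ln.e]
      rcases Sym2.mem_iff.1 this with h1 | h1
      · exact t5 (h1 ▸ hab.mem.1)
      · exact t5 (h1 ▸ hab.mem.2))
    β (fun _ => le_rfl) b hSt.bend
    (by
      intro u v hu hv huv hc1 hc2
      rcases hu with hu | hu
      · rcases (hadj v hv u hu).1 huv.symm with ⟨rfl, rfl⟩ | ⟨rfl, rfl⟩
        · exact harc l1 (Or.inl rfl)
        · exact harc l2 (Or.inr rfl)
      · rcases hind u hu v hv huv with h1 | h1
        · exact absurd h1 hc1
        · exact absurd h1 hc2)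
    hts
    (by
      intro z hz w hw
      have := htm z hz w hw
      simpa using this)
  have hri := rowLn_inv htl (by rintro rfl; simp at hz1m)
  refine hM (A' ++ rowLn zs ts ++ D') (Y + J) pos' C' β b M ?_ g1 g2
    (inv_replace hinv hri.1 hri.2.1 hri.2.2.1 hri.2.2.2) ⟨?_, hev.2.add hJe⟩ le_rfl
  · simp [rowLn_pr fun z hz => (htl z hz).2]
  · intro w hw
    rcases Finset.mem_union.1 hw with hw | hw
    · rw [g4 w hw]; exact hev.1 w hw
    · rw [g3 w (by simpa using hw)]; exact ⟨hxe w, hev.2.add hJe⟩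

end State

/-! ### A last vertex of degree five -/

section State
variable {V : Type*} [DecidableEq V] [Fintype V] {G : SimpleGraph V} {τ : V → V → ℤ}

/-- Placing a last vertex of degree five. It lies at `(xv, T + H)`; the three edges in the middle
reach it with slopes `1`, `0`, `-1`, and the two outer edges horizontally. -/
lemma five_core (hτ : ∀ u w, |τ u w| ≤ 1) {S : Finset V} {t : V} {l1 l2 l3 l4 l5 : Ln V}
    {Y : ℤ} {pos : V → ℤ × ℤ} {C : Sym2 V → Set (ℝ × ℝ)} {β : Sym2 V → ℕ} {b : ℕ}
    (h : St G τ S [l1, l2, l3, l4, l5] Y pos C β b) (ht : t ∉ S) (hS : insert t S = Finset.univ)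
    (htg : ∀ l ∈ [l1, l2, l3, l4, l5], l.tgt = t)
    (hmem : ∀ x ∈ S, G.Adj t x → x ∈ [l1, l2, l3, l4, l5].map Ln.src)
    {T xv H : ℤ} (hT : Y < T) (hH : 0 < H)
    (hw : [l1, l2, l3, l4, l5].Pairwise (Wide pos τ Y T 4))
    (h2 : tip pos τ l2 T ≤ xv - H) (h4 : xv + H ≤ tip pos τ l4 T)
    (h3 : xv - H < tip pos τ l3 T) (h3' : tip pos τ l3 T < xv + H) {k2 k3 k4 : ℕ}
    (b2 : 2 ≤ k2 ∨ xv - H = tip pos τ l2 T ∧ (1 ≤ k2 ∨ l2.sl τ = 1))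
    (b3 : 2 ≤ k3 ∨ xv = tip pos τ l3 T ∧ (1 ≤ k3 ∨ l3.sl τ = 0))
    (b4 : 2 ≤ k4 ∨ xv + H = tip pos τ l4 T ∧ (1 ≤ k4 ∨ l4.sl τ = -1))
    (hk : k2 + k3 + k4 ≤ 3) : ∃ D : OctiDrawing G, D.IsPlanar ∧ D.totalBends ≤ b + 5 := by
  have hHr : (0 : ℝ) < H := by exact_mod_cast hH
  have r2 : (rx pos τ l2 T : ℝ) ≤ xv - H := by rw [rx_tip]; exact_mod_cast h2
  have r4 : (xv + H : ℝ) ≤ rx pos τ l4 T := by rw [rx_tip]; exact_mod_cast h4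
  have r3 : (xv - H : ℝ) < rx pos τ l3 T := by rw [rx_tip]; exact_mod_cast h3
  have r3' : (rx pos τ l3 T : ℝ) < xv + H := by rw [rx_tip]; exact_mod_cast h3'
  have e2 : xv - H = tip pos τ l2 T → (xv : ℝ) - H = rx pos τ l2 T := by
    intro h; rw [rx_tip]; exact_mod_cast h
  have e3 : xv = tip pos τ l3 T → (xv : ℝ) = rx pos τ l3 T := by
    intro h; rw [rx_tip]; exact_mod_cast h
  have e4 : xv + H = tip pos τ l4 T → (xv : ℝ) + H = rx pos τ l4 T := by
    intro h; rw [rx_tip]; exact_mod_cast h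
  have hTH : ((T + H : ℤ) : ℝ) - (T : ℝ) = H := by push_cast; ring
  have w12 : rx pos τ l1 T + 4 ≤ rx pos τ l2 T := by
    simp only [List.pairwise_cons, List.mem_cons, forall_eq_or_imp] at hw
    exact_mod_cast hw.1.1.2.2
  have w45 : rx pos τ l4 T + 4 ≤ rx pos τ l5 T := by
    simp only [List.pairwise_cons, List.mem_cons, forall_eq_or_imp] at hw
    exact_mod_cast hw.2.2.2.1.1.2.2
  have w15 : Wide pos τ Y T 4 l1 l5 := by
    simp only [List.pairwise_cons, List.mem_cons, forall_eq_or_imp] at hw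
    exact hw.1.2.2.2.1
  have s1 := slope_bound (l1.isSlope hτ)
  have s5 := slope_bound (l5.isSlope hτ)
  have u1 : ∀ y : ℝ, (T : ℝ) ≤ y → rx pos τ l1 y ≤ rx pos τ l1 T + (y - T) := by
    intro y hy
    rw [rx_shift pos l1 T y]; nlinarith
  have u5 : ∀ y : ℝ, (T : ℝ) ≤ y → rx pos τ l5 T - (y - T) ≤ rx pos τ l5 y := by
    intro y hy
    rw [rx_shift pos l5 T y]; nlinarith
  have u1' := u1 (T + H : ℤ) (by push_cast; linarith)
  have u5' := u5 (T + H : ℤ) (by push_cast; linarith)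
  rw [hTH] at u1' u5'
  obtain ⟨B, hB⟩ : ∃ B : List (Ln V × Option ℤ × ℕ), B = [(l1, none, 1), (l2, some 1, k2),
    (l3, some 0, k3), (l4, some (-1), k4), (l5, none, 1)] := ⟨_, rfl⟩
  have hBm : B.map Prod.fst = [l1, l2, l3, l4, l5] := by rw [hB]; rfl
  have hBf : (B.filter fun t => t.2.1.isNone).map Prod.fst = [l1, l5] := by rw [hB]; rfl
  have q1 : ∀ t' ∈ B, t'.1.tgt = t := fun t' ht' =>
    htg _ (hBm ▸ List.mem_map.2 ⟨t', ht', rfl⟩)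
  have q2 : ∀ x ∈ S, G.Adj t x → ∃ t' ∈ B, t'.1.src = x := by
    intro x hx hvx
    have := hmem x hx hvx
    rw [← hBm] at this
    obtain ⟨l, hl, rfl⟩ := List.mem_map.1 this
    obtain ⟨t', ht', rfl⟩ := List.mem_map.1 hl
    exact ⟨t', ht', rfl⟩
  have q3 : ∀ y : ℝ, (Y : ℝ) < y → y ≤ (T + H : ℤ) → rx pos τ l1 y < rx pos τ l5 y := by
    intro y hy hy'
    rcases le_or_gt y T with h6 | h6
    · exact w15.2.1 y hy h6
    · have := u1 y h6.le
      have := u5 y h6.le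
      push_cast at hy'
      linarith
  have q4 : B.Pairwise fun t t' => Spl pos τ T (T + H) xv t.1 t'.1 t.2.1 t'.2.1 := by
    rw [hB]
    simp only [List.pairwise_cons, List.forall_mem_cons, List.not_mem_nil, false_imp_iff,
      implies_true, and_true, List.Pairwise.nil, Spl, hTH]
    simp only [Int.cast_one, Int.cast_neg, Int.cast_zero]
    refine ⟨⟨⟨?_, ?_⟩, ⟨?_, ?_⟩, ⟨?_, ?_⟩, ?_, ?_⟩, ⟨⟨by norm_num, ?_, ?_⟩, ⟨by norm_num, ?_, ?_⟩,
      ?_, ?_⟩, ⟨⟨by norm_num, ?_, ?_⟩, ?_, ?_⟩, ?_, ?_⟩ <;> linarith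
  have q5 : ∀ t ∈ B, Bd pos τ T (T + H) xv t.1 t.2.1 t.2.2 := by
    rw [hB]
    simp only [List.forall_mem_cons, List.not_mem_nil, false_imp_iff,
      implies_true, and_true, Bd, hTH]
    simp only [Int.cast_one, Int.cast_neg, Int.cast_zero]
    refine ⟨le_rfl, ⟨by simp, b2.imp_right fun h => ⟨?_, h.2⟩⟩,
      ⟨by simp, b3.imp_right fun h => ⟨?_, h.2⟩⟩,
      ⟨by simp, b4.imp_right fun h => ⟨?_, h.2⟩⟩, le_rfl⟩
    · linarith [e2 h.1]
    · linarith [e3 h.1]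
    · linarith [e4 h.1]
  have q6 : (B.map fun t => t.2.2).sum ≤ 5 := by
    rw [hB]
    simp only [List.map_cons, List.map_nil, List.sum_cons, List.sum_nil]
    omega
  have h' : St G τ S ([] ++ B.map Prod.fst ++ []) Y pos C β b := by
    rw [hBm]; exact h
  obtain ⟨pos', C', β', g1, _⟩ := St.place hτ h' ht q1 q2 (s := 1) hT
    (show T < T + H by omega) one_pos
    (by
      rw [hBm]
      exact hw.imp fun hw => ⟨hw.1, hw.2.1⟩)
    (by
      rw [hBf]
      simpa using q3)
    (by simp) (by simp) (by simp) q4 q5 q6 (ts := []) (by simp) (by simp)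
  rw [hS] at g1
  exact g1.finish

set_option maxHeartbeats 1000000 in
/-- A last vertex of degree five takes five bends. If the third line is vertical, the vertex lies
on it, at the height where the diagonal from the closer of its two neighbours arrives. Otherwise it
lies on the diagonals from the second and the fourth line, one of which continues its line
without a bend; the even coordinates make the intersection point a grid point. -/
lemma cpl_five (hτ : ∀ u w, |τ u w| ≤ 1) {S : Finset V} {t u1 u2 u3 u4 u5 : V} (ht : t ∉ S)
    (hS : insert t S = Finset.univ) (hus : [u1, u2, u3, u4, u5].Nodup)
    (hmem : ∀ x, x ∈ [u1, u2, u3, u4, u5] ↔ x ∈ S ∧ G.Adj t x)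
    (h2 : τ u2 t = 1) (h3 : τ u3 t = 0) (h4 : τ u4 t = -1) :
    Cpl G τ S [(u1, t), (u2, t), (u3, t), (u4, t), (u5, t)] 5 := by
  refine ⟨12, ?_⟩
  intro L Y pos C β b s hL hSt hg hinv hev hs
  obtain ⟨l1, L1, rfl, p1, hL⟩ := List.map_eq_cons_iff.1 hL
  obtain ⟨l2, L2, rfl, p2, hL⟩ := List.map_eq_cons_iff.1 hL
  obtain ⟨l3, L3, rfl, p3, hL⟩ := List.map_eq_cons_iff.1 hL
  obtain ⟨l4, L4, rfl, p4, hL⟩ := List.map_eq_cons_iff.1 hL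
  obtain ⟨l5, L5, rfl, p5, hL⟩ := List.map_eq_cons_iff.1 hL
  obtain rfl := List.map_eq_nil_iff.1 hL
  simp only [Ln.pr, Prod.mk.injEq] at p1 p2 p3 p4 p5
  obtain ⟨rfl, rfl⟩ := p1
  obtain ⟨rfl, hl2⟩ := p2
  obtain ⟨rfl, hl3⟩ := p3
  obtain ⟨rfl, hl4⟩ := p4
  obtain ⟨rfl, hl5⟩ := p5
  have hw : [l1, l2, l3, l4, l5].Pairwise (Wide pos τ Y (Y + 4) 4) :=
    hg.imp fun h => h.wide hτ (by omega) (by omega)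
  have htg : ∀ l ∈ [l1, l2, l3, l4, l5], l.tgt = l1.tgt := by simp [hl2, hl3, hl4, hl5]
  have hm : ∀ x ∈ S, G.Adj l1.tgt x → x ∈ [l1, l2, l3, l4, l5].map Ln.src :=
    fun x hx hvx => (hmem x).2 ⟨hx, hvx⟩
  have hw' := hw
  simp only [List.pairwise_cons, List.mem_cons, forall_eq_or_imp] at hw'
  have w23 : tip pos τ l2 (Y + 4) + 4 ≤ tip pos τ l3 (Y + 4) := by
    have := hw'.2.1.1.2.2
    rw [rx_tip, rx_tip] at this
    exact_mod_cast this
  have w34 : tip pos τ l3 (Y + 4) + 4 ≤ tip pos τ l4 (Y + 4) := by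
    have := hw'.2.2.1.1.2.2
    rw [rx_tip, rx_tip] at this
    exact_mod_cast this
  have hYe : Even (Y + 4) := hev.2.add (by decide)
  have t2 : Even (tip pos τ l2 (Y + 4)) := tip_even hev hYe (hSt.line l2 (by simp)).1
  have t4 : Even (tip pos τ l4 (Y + 4)) := tip_even hev hYe (hSt.line l4 (by simp)).1
  have hsl : l3.sl τ = -1 ∨ l3.sl τ = 0 ∨ l3.sl τ = 1 := by
    rcases l3.isSlope hτ with h | h | h
    · left; exact_mod_cast h
    · right; left; exact_mod_cast h
    · right; right; exact_mod_cast h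
  have f2 : l2.lst = true → l2.sl τ = 1 := by
    intro h; cases hf : l2.fst <;> simp [Ln.sl, h, hf, hl2, h2]
  have f4 : l4.fst = true → l4.sl τ = -1 := by
    intro h; cases hf : l4.lst <;> simp [Ln.sl, h, hf, hl4, h4]
  have f3 : l3.lst = true → l3.sl τ ≠ -1 := by
    intro h; cases hf : l3.fst <;> simp [Ln.sl, h, hf, hl3, h3]
  have f3' : l3.fst = true → l3.sl τ ≠ 1 := by
    intro h; cases hf : l3.lst <;> simp [Ln.sl, h, hf, hl3, h3]
  simp only [List.isChain_cons_cons] at hinv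
  simp only [List.nodup_cons, List.mem_cons, not_or] at hus
  have n23 : l2.src ≠ l3.src := hus.2.1.1
  have n34 : l3.src ≠ l4.src := hus.2.2.1.1
  by_cases h0 : l3.sl τ = 0
  · rcases le_total (tip pos τ l3 (Y + 4) - tip pos τ l2 (Y + 4))
      (tip pos τ l4 (Y + 4) - tip pos τ l3 (Y + 4)) with hle | hle
    · exact five_core hτ hSt ht hS htg hm (T := Y + 4) (xv := tip pos τ l3 (Y + 4))
        (H := tip pos τ l3 (Y + 4) - tip pos τ l2 (Y + 4)) (k2 := 1) (k3 := 0) (k4 := 2)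
        (by omega) (by omega) hw (by omega) (by omega) (by omega) (by omega)
        (Or.inr ⟨by omega, Or.inl le_rfl⟩) (Or.inr ⟨rfl, Or.inr h0⟩) (Or.inl le_rfl) le_rfl
    · exact five_core hτ hSt ht hS htg hm (T := Y + 4) (xv := tip pos τ l3 (Y + 4))
        (H := tip pos τ l4 (Y + 4) - tip pos τ l3 (Y + 4)) (k2 := 2) (k3 := 0) (k4 := 1)
        (by omega) (by omega) hw (by omega) (by omega) (by omega) (by omega)
        (Or.inl le_rfl) (Or.inr ⟨rfl, Or.inr h0⟩) (Or.inr ⟨by omega, Or.inl le_rfl⟩) le_rfl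
  · obtain ⟨a, ha⟩ := t2
    obtain ⟨d, hd⟩ := t4
    -- the third line is not vertical, hence the line next to it on this side leads to the vertex
    have h24 : l2.sl τ = 1 ∨ l4.sl τ = -1 := by
      rcases hsl with h5 | h5 | h5
      · right
        rcases hinv.2.2.1 with h6 | h6 | h6
        · exact absurd h6 n34
        · exact absurd h5 (f3 h6)
        · exact f4 h6
      · exact absurd h5 h0
      · left
        rcases hinv.2.1 with h6 | h6 | h6
        · exact absurd h6 n23
        · exact f2 h6
        · exact absurd h5 (f3' h6)
    rcases h24 with h5 | h5
    · exact five_core hτ hSt ht hS htg hm (T := Y + 4) (xv := a + d) (H := d - a)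
        (k2 := 0) (k3 := 2) (k4 := 1)
        (by omega) (by omega) hw (by omega) (by omega) (by omega) (by omega)
        (Or.inr ⟨by omega, Or.inr h5⟩) (Or.inl le_rfl) (Or.inr ⟨by omega, Or.inl le_rfl⟩) le_rfl
    · exact five_core hτ hSt ht hS htg hm (T := Y + 4) (xv := a + d) (H := d - a)
        (k2 := 1) (k3 := 2) (k4 := 0)
        (by omega) (by omega) hw (by omega) (by omega) (by omega) (by omega)
        (Or.inr ⟨by omega, Or.inl le_rfl⟩) (Or.inl le_rfl) (Or.inr ⟨by omega, Or.inr h5⟩) le_rfl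

/-- Every combinatorial completion can be drawn. -/
theorem Comp.cpl (hτ : ∀ u w, |τ u w| ≤ 1) {S : Finset V} {Λ : List (V × V)} {c : ℕ}
    (h : Comp G τ S Λ c) : Cpl G τ S Λ c := by
  induction h with
  | done => exact cpl_done
  | single S A C v us ts k c hv hus hmem hk hτ0 hts htm htl hne h ih =>
    exact cpl_single hτ hv hus hmem hk hτ0 hts htm htl hne ih
  | chain S A C zs u1 u2 z1 zr ts c hlen hnd hzS hz1 hzr hu1 hu2 hadj hch hind hts htm htl h ih =>
    exact cpl_chain hτ hlen hnd hzS hz1 hzr hadj hind hts htm htl ih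
  | five S t u1 u2 u3 u4 u5 ht hS hus hmem h1 h2 h3 h4 h5 =>
    exact cpl_five hτ ht hS hus hmem h2 h3 h4

end State

/-! ### The start of the drawing -/

section State
variable {V : Type*} [DecidableEq V] [Fintype V] {G : SimpleGraph V} {τ : V → V → ℤ}

/-- The path `W` is drawn as a row at height `0`, and the edge joining its end vertices as a path
with one bend below it. -/
lemma base_row {W : List V} {v1 v2 : V} {f : V → List V} {c : ℕ}
    (h : StartData G W v1 v2 τ f c) {x : V → ℤ} {s : ℤ} (hs : 0 < s)
    (hx : W.Pairwise fun z z' => x z + s ≤ x z') :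
    ∃ pos C β, St G τ W.toFinset (rowLn W f) 0 pos C β 1 ∧
      (rowLn W f).Pairwise (Gap pos τ 0 s) ∧ ∀ z ∈ W, pos z = (x z, 0) := by
  obtain ⟨Wt, hWt⟩ : ∃ Wt, W = v1 :: Wt := by
    obtain ⟨l, hl⟩ := List.head?_eq_some_iff.1 h.head
    exact ⟨l, hl⟩
  obtain ⟨Wm, hWm⟩ : ∃ Wm, W = Wm ++ [v2] := by
    obtain ⟨l, hl⟩ := List.getLast?_eq_some_iff.1 h.last
    exact ⟨l, hl⟩
  have m1 : v1 ∈ W := by rw [hWt]; simp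
  have m2 : v2 ∈ W := by rw [hWm]; simp
  have hlt : x v1 < x v2 := by
    have hx' := hx
    rw [hWt, List.pairwise_cons] at hx'
    have : v2 ∈ Wt := by
      rw [hWt] at m2
      exact (List.mem_cons.1 m2).resolve_left h.base.ne'
    linarith [hx'.1 v2 this]
  have hltr : (x v1 : ℝ) < x v2 := by exact_mod_cast hlt
  have hnc : ∀ a b, Consec W a b → s(a, b) ≠ s(v1, v2) := by
    intro a b hab he
    have key := fun {w : V} (hw : w ∈ W) => hab.sep hs hx hw
    rcases Sym2.eq_iff.1 he with ⟨rfl, rfl⟩ | ⟨rfl, rfl⟩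
    · -- a third vertex of the path lies strictly between its ends
      obtain ⟨w, hw, hw1, hw2⟩ : ∃ w ∈ W, w ≠ a ∧ w ≠ b := by
        by_contra hcon
        push Not at hcon
        have : W.toFinset ⊆ {a, b} := by
          intro w hw
          simp only [List.mem_toFinset] at hw
          simp only [Finset.mem_insert, Finset.mem_singleton]
          by_cases hwa : w = a
          · exact Or.inl hwa
          · exact Or.inr (hcon w hw hwa)
        have h1 := (Finset.card_le_card this).trans Finset.card_le_two
        rw [List.toFinset_card_of_nodup h.nodup] at h1
        have := h.len
        omega
      have h1 : x a + s ≤ x w := by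
        have hx' := hx
        rw [hWt, List.pairwise_cons] at hx'
        rw [hWt] at hw
        exact hx'.1 w ((List.mem_cons.1 hw).resolve_left hw1)
      have h2 : x w + s ≤ x b := by
        have hx' := hx
        rw [hWm, List.pairwise_append] at hx'
        rw [hWm] at hw
        exact hx'.2.2 w ((List.mem_append.1 hw).resolve_right (by simpa using hw2)) b (by simp)
      have := (key hw).2
      omega
    · have := (key m1).1
      omega
  have h0 : St G τ ∅ ([] ++ [] ++ []) (x v1 - x v2 - 1) (fun _ => (0, 0)) (fun _ => ∅)
      (fun _ => 0) 0 := by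
    constructor <;> simp
  obtain ⟨pos, C, g1, g2, g3, _⟩ := h0.row h.nodup (by simp) (Y' := 0) (by omega) hs hx (by simp)
    (by simp) (by simp) (by simp)
    (fun e => if e = s(v1, v2) then vee (x v1) (x v2) else ∅)
    (by
      intro e p hp
      by_cases he : e = s(v1, v2)
      · subst he
        rw [if_pos rfl] at hp
        obtain ⟨p1, p2, p3⟩ := hp
        refine ⟨?_, ?_, ?_, ⟨v1, by simp, m1⟩, by simp, by simp⟩
        · push_cast
          rcases p3 with p3 | p3 <;> linarith [p3.1]
        · push_cast
          rcases p3 with p3 | p3 <;> linarith [p3.1]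
        · intro w hw
          right
          rcases Sym2.mem_iff.1 hw with rfl | rfl <;> assumption
      · rw [if_neg he] at hp
        exact hp.elim)
    (by
      intro e p hp hy
      by_cases he : e = s(v1, v2)
      · subst he
        rw [if_pos rfl] at hp
        obtain ⟨p1, p2, p3⟩ := hp
        push_cast at hy
        rcases p3 with p3 | p3
        · exact ⟨v1, m1, by simp, Prod.ext (by simp only; linarith [p3.1]) (by push_cast; exact hy)⟩
        · exact ⟨v2, m2, by simp, Prod.ext (by simp only; linarith [p3.1]) (by push_cast; exact hy)⟩
      · rw [if_neg he] at hp
        exact hp.elim)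
    (by
      intro e e' hne p hp hp'
      by_cases he : e = s(v1, v2)
      · have he' : e' ≠ s(v1, v2) := fun h => hne (he.trans h.symm)
        rw [if_neg he'] at hp'
        exact hp'.elim
      · rw [if_neg he] at hp
        exact hp.elim)
    (fun a b hab => if_neg (hnc a b hab))
    (fun e => if e = s(v1, v2) then 1 else 0) (by simp) 1 (by simp)
    (by
      intro u v hu hv huv n1 n2
      have hu' : u ∈ W := by simpa using hu
      have he : s(u, v) = s(v1, v2) := by
        rcases h.induced u hu' v hv huv with h1 | h1 | h1
        · exact absurd h1 n1
        · exact absurd h1 n2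
        · exact h1
      rw [if_pos he, if_pos he, if_pos hu', Set.empty_union]
      have := arc_vee hltr
      have hz : ((0 : ℤ) : ℝ) = 0 := Int.cast_zero
      simp only [toR, hz]
      rcases Sym2.eq_iff.1 he with ⟨rfl, rfl⟩ | ⟨rfl, rfl⟩
      · exact this
      · exact this.symm)
    (ts := f) h.out.nodup
    (by
      intro z hz w hw
      have := (h.out.mem z hz w).1 hw
      exact ⟨this.1, by simp, by simpa using this.2⟩)
  rw [Finset.empty_union, List.nil_append, List.append_nil] at g1
  rw [List.nil_append, List.append_nil] at g2
  exact ⟨pos, C, _, g1, g2, g3⟩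

lemma pairwise_idxOf {W : List V} (h : W.Nodup) :
    W.Pairwise fun a b => (W.idxOf a : ℤ) + 1 ≤ W.idxOf b := by
  rw [List.pairwise_iff_getElem]
  intro i j hi hj hij
  rw [h.idxOf_getElem, h.idxOf_getElem]
  omega

lemma mkLn_snoc {p z : V} {fp : List V} (hne : fp ≠ []) (hl : (fp ++ [z]).length ≤ 3) :
    ∃ A, mkLn p (fp ++ [z]) = A ++ [⟨p, z, false, true⟩] ∧ A.map Ln.pr = fp.map (fun x => (p, x)) ∧
      ∀ l ∈ A, l.src = p ∧ l.sl τ ≤ 0 := by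
  match fp, hne, hl with
  | [a], _, _ => exact ⟨[⟨p, a, true, false⟩], rfl, rfl, by simp [Ln.sl]⟩
  | [a, b], _, _ =>
    exact ⟨[⟨p, a, true, false⟩, ⟨p, b, false, false⟩], rfl, rfl, by simp [Ln.sl]⟩
  | a :: b :: d :: t, _, hl => simp at hl; omega

lemma mkLn_cons {q z : V} {fq : List V} (hne : fq ≠ []) (hl : (z :: fq).length ≤ 3) :
    ∃ D, mkLn q (z :: fq) = ⟨q, z, true, false⟩ :: D ∧ D.map Ln.pr = fq.map (fun x => (q, x)) ∧
      ∀ l ∈ D, l.src = q ∧ 0 ≤ l.sl τ := by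
  match fq, hne, hl with
  | [a], _, _ => exact ⟨[⟨q, a, false, true⟩], rfl, rfl, by simp [Ln.sl]⟩
  | [a, b], _, _ =>
    exact ⟨[⟨q, a, false, false⟩, ⟨q, b, false, true⟩], rfl, rfl, by simp [Ln.sl]⟩
  | a :: b :: d :: t, _, hl => simp at hl; omega

end State

/-! ### Placing the first vertex above the base path -/

section State
variable {V : Type*} [DecidableEq V] [Fintype V] {G : SimpleGraph V} {τ : V → V → ℤ}

/-- At the height of `z`, lines leaving a common vertex or two different vertices of the base row
are ordered from left to right. -/
lemma conv_wide (hτ : ∀ u w, |τ u w| ≤ 1) {pos : V → ℤ × ℤ} {x : V → ℤ} {J : ℤ} (hJ : 4 ≤ J)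
    {p q : V} {l l' : Ln V} (hl : pos l.src = (x l.src, 0)) (hl' : pos l'.src = (x l'.src, 0))
    (hlp : l.src = p → l.sl τ ≤ 0) (hlq : l'.src = q → 0 ≤ l'.sl τ)
    (h : Dif l l' ∧ (l.src = l'.src ∧ l.sl τ + 1 ≤ l'.sl τ ∨ (x l.src + 4 * J ≤ x l'.src ∨
      l.src = p ∧ l'.src = q ∧ x l.src + 2 * J ≤ x l'.src))) : Wide pos τ 0 J J l l' := by
  have hJr : (4 : ℝ) ≤ J := by exact_mod_cast hJ
  have s1 := slope_bound (l.isSlope hτ)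
  have s2 := slope_bound (l'.isSlope hτ)
  have key : ∀ y : ℝ, 0 < y → y ≤ J → rx pos τ l y + y ≤ rx pos τ l' y := by
    intro y h1 h2
    unfold rx
    rw [hl, hl']
    simp only [Int.cast_zero, sub_zero]
    rcases h.2 with ⟨h3, h4⟩ | h3 | ⟨h3, h4, h5⟩
    · rw [h3]
      have : (l.sl τ : ℝ) + 1 ≤ l'.sl τ := by exact_mod_cast h4
      nlinarith
    · have : (x l.src : ℝ) + 4 * J ≤ x l'.src := by exact_mod_cast h3
      nlinarith
    · have : (x l.src : ℝ) + 2 * J ≤ x l'.src := by exact_mod_cast h5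
      have h6 : (l.sl τ : ℝ) ≤ 0 := by exact_mod_cast hlp h3
      have h7 : (0 : ℝ) ≤ l'.sl τ := by exact_mod_cast hlq h4
      nlinarith
  refine ⟨h.1, ?_, key J (by linarith) le_rfl⟩
  intro y h1 h2
  simp only [Int.cast_zero] at h1
  linarith [key y h1 h2]

/-- Below the height of `z` the lines are in order, including the two lines leading to `z`. -/
lemma conv_below (hτ : ∀ u w, |τ u w| ≤ 1) {pos : V → ℤ × ℤ} {x : V → ℤ} {J : ℤ} (hJ : 4 ≤ J)
    {p q : V} {l l' : Ln V} (hl : pos l.src = (x l.src, 0)) (hl' : pos l'.src = (x l'.src, 0))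
    (h : Dif l l' ∧ (l.src = l'.src ∧ l.sl τ + 1 ≤ l'.sl τ ∨ (x l.src + 4 * J ≤ x l'.src ∨
      l.src = p ∧ l'.src = q ∧ x l.src + 2 * J ≤ x l'.src))) :
    Dif l l' ∧ ∀ y : ℝ, ((0 : ℤ) : ℝ) < y → y ≤ (J - 1 : ℤ) → rx pos τ l y < rx pos τ l' y := by
  have hJr : (4 : ℝ) ≤ J := by exact_mod_cast hJ
  have s1 := slope_bound (l.isSlope hτ)
  have s2 := slope_bound (l'.isSlope hτ)
  refine ⟨h.1, ?_⟩
  intro y h1 h2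
  push_cast at h1 h2
  unfold rx
  rw [hl, hl']
  simp only [Int.cast_zero, sub_zero]
  rcases h.2 with ⟨h3, h4⟩ | h3 | ⟨h3, h4, h5⟩
  · rw [h3]
    have : (l.sl τ : ℝ) + 1 ≤ l'.sl τ := by exact_mod_cast h4
    nlinarith
  · have : (x l.src : ℝ) + 4 * J ≤ x l'.src := by exact_mod_cast h3
    nlinarith
  · have : (x l.src : ℝ) + 2 * J ≤ x l'.src := by exact_mod_cast h5
    nlinarith

/-- Abscissas for the base row: `p` and `q` are at distance `2 * J`, all other pairs of vertices
at distance at least `4 * J`. -/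
lemma conv_abscissa {W W1 W2 : List V} {p q : V} (hW : W = W1 ++ p :: q :: W2) (hnd : W.Nodup)
    {J : ℤ} (hJ : 0 < J) (hJe : Even J) : ∃ x : V → ℤ, (∀ w, Even (x w)) ∧ x q = x p + 2 * J ∧
      W.Pairwise fun a b => x a + 4 * J ≤ x b ∨ a = p ∧ b = q ∧ x a + 2 * J ≤ x b := by
  have hpW : p ∈ W := by rw [hW]; simp
  have hqW : q ∈ W := by rw [hW]; simp
  have hpn : p ∉ W1 := by
    rw [hW, List.nodup_append] at hnd
    exact fun h => hnd.2.2 p h p (by simp) rfl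
  have hqn : q ∉ W1 := by
    rw [hW, List.nodup_append] at hnd
    exact fun h => hnd.2.2 q h q (by simp) rfl
  have hpq : p ≠ q := by
    rw [hW, List.nodup_append] at hnd
    intro h
    exact (List.nodup_cons.1 hnd.2.1).1 (by simp [h])
  have hip : W.idxOf p = W1.length := by
    rw [hW, List.idxOf_append_of_notMem hpn]; simp
  have hiq : W.idxOf q = W1.length + 1 := by
    rw [hW, List.idxOf_append_of_notMem hqn]; simp [List.idxOf_cons_ne _ hpq]
  refine ⟨fun w => 4 * J * W.idxOf w - if W1.length < W.idxOf w then 2 * J else 0, ?_, ?_, ?_⟩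
  · intro w
    obtain ⟨j, rfl⟩ := hJe
    refine Even.sub ⟨4 * j * W.idxOf w, by ring⟩ ?_
    split_ifs
    · exact ⟨2 * j, by ring⟩
    · exact ⟨0, rfl⟩
  · simp only [hip, hiq]
    rw [if_pos (by omega), if_neg (by omega)]
    push_cast
    ring
  · refine (pairwise_idxOf hnd).imp_of_mem ?_
    intro a b ha hb hab
    simp only
    have h1 : 4 * J * ((W.idxOf a : ℤ) + 1) ≤ 4 * J * W.idxOf b :=
      mul_le_mul_of_nonneg_left hab (by omega)
    by_cases hA : W1.length < W.idxOf a
    · rw [if_pos hA, if_pos (by omega)]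
      left; linarith
    · rw [if_neg hA]
      by_cases hB : W1.length < W.idxOf b
      · rw [if_pos hB]
        by_cases hab2 : (W.idxOf a : ℤ) + 2 ≤ W.idxOf b
        · have h2 : 4 * J * ((W.idxOf a : ℤ) + 2) ≤ 4 * J * W.idxOf b :=
            mul_le_mul_of_nonneg_left hab2 (by omega)
          left; linarith
        · right
          refine ⟨(List.idxOf_inj ha).1 (by omega), (List.idxOf_inj hb).1 (by omega), by linarith⟩
      · rw [if_neg hB]
        left; linarith

/-- A graph with start data has an octilinear drawing: the base row with the edge below it has one
bend, and the completion has `c` bends. -/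
theorem StartData.drawing {W : List V} {v1 v2 : V} {f : V → List V} {c : ℕ}
    (h : StartData G W v1 v2 τ f c) :
    ∃ D : OctiDrawing G, D.IsPlanar ∧ D.totalBends ≤ 1 + c := by
  have hne : W ≠ [] := by
    have := h.len
    rintro rfl
    simp at this
  have hinv := rowLn_inv (fun w hw => ⟨h.outne w hw, h.outle w hw⟩) hne
  rcases h.comp with hc | ⟨W1, p, q, W2, z, fp, fq, ts, hW, hfp, hfq, hfpn, hfqn, hzW, hzadj, htn,
    htm, hts, htl, hc⟩
  · obtain ⟨M, hM4, hMe, hM⟩ := (hc.cpl h.hτ).large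
    obtain ⟨pos, C, β, g1, g2, g3⟩ := base_row h (x := fun w => M * W.idxOf w) (s := M) (by omega)
      ((pairwise_idxOf h.nodup).imp fun {a b} hab => by nlinarith)
    refine hM _ 0 pos C β 1 M (rowLn_pr h.outle) g1 g2 hinv.1 ⟨?_, by simp⟩ le_rfl
    intro w hw
    rw [g3 w (by simpa using hw)]
    exact ⟨hMe.mul_right _, by simp⟩
  · obtain ⟨J, hJ4, hJe, hM⟩ := (hc.cpl h.hτ).large
    obtain ⟨x, hxe, hxq, hx⟩ := conv_abscissa hW h.nodup (by omega : 0 < J) hJe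
    obtain ⟨pos, C, β, g1, -, g3⟩ := base_row h (x := x) (s := 2 * J) (by omega)
      (hx.imp fun {a b} hab => by rcases hab with hab | hab <;> omega)
    have hpW : p ∈ W := by rw [hW]; simp
    have hqW : q ∈ W := by rw [hW]; simp
    obtain ⟨Ap, hAp, hApr, hAps⟩ := mkLn_snoc (τ := τ) (p := p) hfpn (hfp ▸ h.outle p hpW)
    obtain ⟨Dq, hDq, hDqr, hDqs⟩ := mkLn_cons (τ := τ) (q := q) hfqn (hfq ▸ h.outle q hqW)
    obtain ⟨lp, hlp⟩ : ∃ lp : Ln V, lp = ⟨p, z, false, true⟩ := ⟨_, rfl⟩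
    obtain ⟨lq, hlq⟩ : ∃ lq : Ln V, lq = ⟨q, z, true, false⟩ := ⟨_, rfl⟩
    rw [← hlp] at hAp
    rw [← hlq] at hDq
    obtain ⟨A, hA⟩ : ∃ A, A = rowLn W1 f ++ Ap := ⟨_, rfl⟩
    obtain ⟨D, hD⟩ : ∃ D, D = Dq ++ rowLn W2 f := ⟨_, rfl⟩
    obtain ⟨B, hB⟩ : ∃ B : List (Ln V × Option ℤ × ℕ), B = [(lp, some 1, 0), (lq, some (-1), 0)] :=
      ⟨_, rfl⟩
    have hBm : B.map Prod.fst = [lp, lq] := by rw [hB]; rfl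
    have hBf : (B.filter fun t => t.2.1.isNone).map Prod.fst = [] := by rw [hB]; rfl
    have hrow : rowLn W f = A ++ B.map Prod.fst ++ D := by
      have h1 : rowLn W f = rowLn W1 f ++ (mkLn p (f p) ++ (mkLn q (f q) ++ rowLn W2 f)) := by
        rw [hW, rowLn_append]; rfl
      rw [h1, hfp, hfq, hAp, hDq, hA, hD, hBm]
      simp
    rw [hrow] at g1 hinv
    have hR := rowLn_pairwise (τ := τ) (ts := f) h.nodup h.out.nodup hx
    rw [hrow] at hR
    have hpos : ∀ l ∈ A ++ B.map Prod.fst ++ D, pos l.src = (x l.src, 0) := by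
      intro l hl
      rw [← hrow] at hl
      exact g3 _ (rowLn_mem hl).1
    have hposA : ∀ l ∈ A, pos l.src = (x l.src, 0) := fun l hl => hpos l (by simp [hl])
    have hposD : ∀ l ∈ D, pos l.src = (x l.src, 0) := fun l hl => hpos l (by simp [hl])
    have hnd := h.nodup
    have hx' := hx
    rw [hW, List.nodup_append] at hnd
    rw [hW, List.pairwise_append] at hx'
    simp only [List.nodup_cons, List.mem_cons, not_or] at hnd
    simp only [List.pairwise_cons, List.mem_cons, forall_eq_or_imp] at hx'
    have hAs : ∀ l ∈ A, (x l.src + 4 * J ≤ x p ∧ l.src ≠ q ∧ l.src ≠ p) ∨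
        l.src = p ∧ l.sl τ ≤ 0 := by
      intro l hl
      rw [hA, List.mem_append] at hl
      rcases hl with hl | hl
      · left
        have h1 := (rowLn_mem hl).1
        have n1 : l.src ≠ p := hnd.2.2 _ h1 p (by simp)
        refine ⟨?_, hnd.2.2 _ h1 q (by simp), n1⟩
        rcases (hx'.2.2 _ h1).1 with h2 | h2
        · exact h2
        · exact absurd h2.1 n1
      · exact Or.inr (hAps l hl)
    have hDs : ∀ l ∈ D, (x q + 4 * J ≤ x l.src ∧ l.src ≠ p ∧ l.src ≠ q) ∨
        l.src = q ∧ 0 ≤ l.sl τ := by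
      intro l hl
      rw [hD, List.mem_append] at hl
      rcases hl with hl | hl
      · exact Or.inr (hDqs l hl)
      · left
        have h1 := (rowLn_mem hl).1
        have n1 : l.src ≠ q := fun he => hnd.2.1.2.1 (he ▸ h1)
        refine ⟨?_, fun he => hnd.2.1.1.2 (he ▸ h1), n1⟩
        rcases hx'.2.1.2.1 _ h1 with h2 | h2
        · exact h2
        · exact absurd h2.2.1 n1
    have hpq : p ≠ q := hnd.2.1.1.1
    have hsp : ∀ l ∈ A ++ D, l.src = p → l.sl τ ≤ 0 := by
      intro l hl he
      rcases List.mem_append.1 hl with hl | hl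
      · rcases hAs l hl with h1 | h1
        · exact absurd he h1.2.2
        · exact h1.2
      · rcases hDs l hl with h1 | h1
        · exact absurd he h1.2.1
        · exact absurd (he.symm.trans h1.1) hpq
    have hsq : ∀ l ∈ A ++ D, l.src = q → 0 ≤ l.sl τ := by
      intro l hl he
      rcases List.mem_append.1 hl with hl | hl
      · rcases hAs l hl with h1 | h1
        · exact absurd he h1.2.1
        · exact absurd (h1.1.symm.trans he) hpq
      · rcases hDs l hl with h1 | h1
        · exact absurd he h1.2.2
        · exact h1.2
    have hsub : (A ++ D).Sublist (A ++ B.map Prod.fst ++ D) := by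
      rw [List.append_assoc]
      exact List.Sublist.append_left (List.sublist_append_right _ _) _
    have hAD : (A ++ D).Pairwise (Wide pos τ 0 J J) := by
      refine (hR.sublist hsub).imp_of_mem ?_
      intro l l' hl hl' h1
      exact conv_wide h.hτ hJ4 (hpos _ (hsub.subset hl)) (hpos _ (hsub.subset hl')) (hsp l hl)
        (hsq l' hl') h1
    have hJr : (4 : ℝ) ≤ J := by exact_mod_cast hJ4
    have hxqr : (x q : ℝ) = x p + 2 * J := by exact_mod_cast hxq
    have hrp : ∀ y, rx pos τ lp y = x p + y := by
      intro y
      rw [hlp]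
      simp [rx, Ln.sl, g3 p hpW]
    have hrq : ∀ y, rx pos τ lq y = x q - y := by
      intro y
      rw [hlq]
      simp [rx, Ln.sl, g3 q hqW, sub_eq_add_neg]
    have hrA : ∀ l ∈ A, ∀ y : ℝ, 0 ≤ y → y ≤ J → rx pos τ l y ≤ x p := by
      intro l hl y h0 h1
      have s1 := slope_bound (l.isSlope h.hτ)
      unfold rx
      rw [hposA l hl]
      simp only [Int.cast_zero, sub_zero]
      rcases hAs l hl with h2 | h2
      · have : (x l.src : ℝ) + 4 * J ≤ x p := by exact_mod_cast h2.1
        nlinarith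
      · have : (l.sl τ : ℝ) ≤ 0 := by exact_mod_cast h2.2
        rw [h2.1]
        nlinarith
    have hrD : ∀ l ∈ D, ∀ y : ℝ, 0 ≤ y → y ≤ J → x q ≤ rx pos τ l y := by
      intro l hl y h0 h1
      have s1 := slope_bound (l.isSlope h.hτ)
      unfold rx
      rw [hposD l hl]
      simp only [Int.cast_zero, sub_zero]
      rcases hDs l hl with h2 | h2
      · have : (x q : ℝ) + 4 * J ≤ x l.src := by exact_mod_cast h2.1
        nlinarith
      · have : (0 : ℝ) ≤ (l.sl τ : ℝ) := by exact_mod_cast h2.2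
        rw [h2.1]
        nlinarith
    have hslp : lp.sl τ = 1 := by rw [hlp]; simp [Ln.sl]
    have hslq : lq.sl τ = -1 := by rw [hlq]; simp [Ln.sl]
    have hBr : ∀ t ∈ B, ∀ r, t.2.1 = some r → r = 1 ∨ r = -1 := by
      rw [hB]
      simp only [List.forall_mem_cons, Option.some.injEq, List.not_mem_nil, false_imp_iff,
        implies_true, and_true]
      exact ⟨fun r hr => Or.inl hr.symm, fun r hr => Or.inr hr.symm⟩
    have hBrr : ∀ t ∈ B, ∀ r, t.2.1 = some r → (-1 : ℝ) ≤ r ∧ (r : ℝ) ≤ 1 := by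
      intro t ht r hr
      rcases hBr t ht r hr with rfl | rfl <;> norm_num
    obtain ⟨pos', C', β', k1, k2, k3, k4⟩ := St.place h.hτ g1 (v := z) (by simpa using hzW)
      (by
        rw [hB]
        simp only [List.forall_mem_cons, List.not_mem_nil, false_imp_iff, implies_true, and_true]
        rw [hlp, hlq]
        exact ⟨rfl, rfl⟩)
      (by
        intro w hw hzw
        rcases (hzadj w (by simpa using hw)).1 hzw with rfl | rfl
        · exact ⟨(lp, some 1, 0), by rw [hB]; simp, by rw [hlp]⟩
        · exact ⟨(lq, some (-1), 0), by rw [hB]; simp, by rw [hlq]⟩)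
      (T := J - 1) (Y' := J) (xv := x p + J) (s := J) (by omega) (by omega) (by omega)
      (hR.imp_of_mem fun {l l'} hl hl' h1 => conv_below h.hτ hJ4 (hpos l hl) (hpos l' hl') h1)
      (by
        rw [hBf, List.append_nil]
        exact hAD.imp fun h1 => h1.2.1)
      hAD
      (by
        intro l hl
        push_cast
        refine ⟨by linarith [hrA l hl J (by linarith) le_rfl], ?_⟩
        intro t ht r hr
        linarith [hrA l hl (J - 1) (by linarith) (by linarith), hBrr t ht r hr])
      (by
        intro l hl
        push_cast
        refine ⟨by linarith [hrD l hl J (by linarith) le_rfl], ?_⟩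
        intro t ht r hr
        linarith [hrD l hl (J - 1) (by linarith) (by linarith), hBrr t ht r hr])
      (by
        rw [hB]
        simp only [List.pairwise_cons, List.forall_mem_cons, List.not_mem_nil, false_imp_iff,
          implies_true, and_true, List.Pairwise.nil, Spl]
        rw [hrp, hrq]
        push_cast
        refine ⟨by norm_num, by linarith, by linarith⟩)
      (by
        rw [hB]
        simp only [List.forall_mem_cons, List.not_mem_nil, false_imp_iff,
          implies_true, and_true, Bd]
        rw [hrp, hrq]
        push_cast
        refine ⟨⟨by norm_num, Or.inr ⟨by ring, Or.inr hslp⟩⟩,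
          ⟨by norm_num, Or.inr ⟨by linarith, Or.inr hslq⟩⟩⟩)
      (k := 0) (by rw [hB]; simp) htn htm
    refine hM _ J pos' C' β' 1 J ?_ k1 k2 ?_ ⟨?_, hJe⟩ le_rfl
    · rw [hA, hD]
      simp only [List.map_append, mkLn_pr z htl, hApr, hDqr]
      rw [rowLn_pr fun w hw => h.outle w (by rw [hW]; simp [hw]),
        rowLn_pr fun w hw => h.outle w (by rw [hW]; simp [hw])]
      simp
    · exact inv_replace hinv.1 (mkLn_inv z ts) (mkLn_ne hts htl) (fun l => mkLn_head)
        (fun l => mkLn_last)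
    · intro w hw
      rcases Finset.mem_insert.1 hw with rfl | hw
      · rw [k3]
        exact ⟨(hxe p).add hJe, hJe⟩
      · rw [k4 w hw, g3 w (by simpa using hw)]
        exact ⟨hxe w, by simp⟩

end State

/-- Every triconnected planar simple graph with maximum degree at most `5`
on `n` vertices admits a planar octilinear drawing with at most `2n - 2` bends in total. -/
theorem octilinear_bends_le_of_triconnected_deg5 {V : Type*} [Fintype V]
    (G : SimpleGraph V) (h3 : Triconnected G) (hp : GraphPlanar G) (hd : MaxDegLE G 5) :
    ∃ D : OctiDrawing G, D.IsPlanar ∧ D.totalBends ≤ 2 * Fintype.card V - 2 := by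
  classical
  obtain ⟨hn, hc⟩ := h3
  have hc' : ∀ T : Set V, T.ncard ≤ 2 → Conn G Tᶜ := fun T hT =>
    conn_of_induce (hc T hT).preconnected
  have : Nonempty V := Fintype.card_pos_iff.1 (by omega)
  obtain ⟨p⟩ := this
  obtain ⟨a, b, ha, hb, hab⟩ : ∃ a b, G.Adj p a ∧ G.Adj p b ∧ a ≠ b := by
    have h1 := three_le_deg hc' hn p (L := (G.neighborFinset p).toList) (by simp)
    rw [Finset.length_toList] at h1
    obtain ⟨a, ha, b, hb, hab⟩ := Finset.one_lt_card.1 (by omega : 1 < (G.neighborFinset p).card)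
    exact ⟨a, b, by simpa using ha, by simpa using hb, hab⟩
  obtain ⟨v, t, hvt, hpv, hpt, A, O, hvk⟩ := exists_star hp p hab ha hb
  obtain ⟨W, τ, f, c, hS⟩ := exists_startData hc' hn hd hvk hpv hpt.ne' hvt.symm
  obtain ⟨D, hD, hb⟩ := hS.drawing
  exact ⟨D, hD, hb.trans (by have := hS.bound; omega)⟩
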